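/- Let c ≥ 1 be an integer and suppose nonnegative integers (n, x, y), (n₁, x₁, y₁), (n₂, x₂, y₂), (n₃, x₃, y₃), each with first coordinate ≠ 1, satisfy c = T_n − 2^x·3^y = T_{n₁} − 2^{x₁}·3^{y₁} = T_{n₂} − 2^{x₂}·3^{y₂} = T_{n₃} − 2^{x₃}·3^{y₃} with n > n₁ > n₂ > n₃. Then n ≤ 962, x < 834 and y < 527. -/

import Mathlib

/-!
The four representations are put into a structure `Quad` with indices `n 0 > n 1 > n 2 > n 3`, and the index `n 0` is bounded
unconditionally. In the ring `ℤ[α]` (`Tri`) there is a linear functional `φ` with `φ (α ^ n) = T n`, and in the real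
embedding `T n = α ^ n / δ` up to a bounded error, where `δ = -α² + 4α - 1`.

*Bounding `n 0` in terms of the gap.* Since `c < T (n 3)`, the number `2 ^ x 3 ^ y δ / α ^ n` attached to the index `n 0` differs
from `1` by at most a constant times `α ^ (n 3 - n 0)`. A lower bound for linear forms in logarithms, proved here by Baker's
method (an auxiliary function from Siegel's lemma, a real Schwarz lemma, extrapolation by doubling the number of points,
and a Vandermonde determinant), therefore bounds the gap `n 0 - n 3` by a logarithm of `n 0`. If three of the exponents
`x i` (or of the `y i`) are at least `m`, then two independent relations `φ (α ^ n κ) ≡ 0` modulo `2 ^ m` (or `3 ^ m`)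
determine `α ^ n` up to a scalar, so that a power of `α` is close to a fixed element `p`-adically; an interpolation determinant
with a zero estimate bounds `m`. Hence at most two indices have a large `x i` and at most two a large `y i`, and in all
cases (`Quad.glue`) a second linear form in logarithms, made from one or two of the representations, bounds `n 0`.

*Reducing the bound.* A simultaneous rational approximation with denominator `q` to `log 2 / log α` and `log 3 / log α` for which
`q log δ / log α` is far from the integers bounds the gap (`Lg.Cert.gap`); the logarithms are evaluated by certified
integer arithmetic. Alternating this with the previous step gives `n 0 < 2 ^ 370` and a gap of at most `858`.

*The last step.* For each gap `g` the function `n ↦ T (n + g) - T n` is analytic in the `2`-adic and `3`-adic sense on residue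
classes, so Hensel lifting finds all `n` for which it is divisible by a high power of `2` or `3`. The function
`PAdic.check` carries this out for all gaps, and `PAdic.check_sound` shows that no such `n` exists below the bound. So among `n 0`,
`n 1`, `n 2` at most one has a large `x i` and at most one a large `y i`; the remaining one has both exponents small
(`Quad.round`), which makes all indices small. A second round with the new bound gives `n 0 ≤ 162`.
-/

/-- The Tribonacci sequence: `T 0 = 0`, `T 1 = T 2 = 1`,
`T (n+3) = T (n+2) + T (n+1) + T n`. -/
def T : ℕ → ℤ
  | 0 => 0
  | 1 => 1
  | 2 => 1
  | n + 3 => T (n + 2) + T (n + 1) + T n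

/-! ### The ring `ℤ[α]` -/

/-- The ring `ℤ[α]` with `α³ = α² + α + 1`; the triple `(a, b, c)` stands for `a + bα + cα²`. -/
@[ext] structure Tri where
  a : ℤ
  b : ℤ
  c : ℤ

namespace Tri

instance : Zero Tri := ⟨⟨0, 0, 0⟩⟩
instance : One Tri := ⟨⟨1, 0, 0⟩⟩
instance : Add Tri := ⟨fun x y => ⟨x.a + y.a, x.b + y.b, x.c + y.c⟩⟩
instance : Neg Tri := ⟨fun x => ⟨-x.a, -x.b, -x.c⟩⟩
instance : Sub Tri := ⟨fun x y => ⟨x.a - y.a, x.b - y.b, x.c - y.c⟩⟩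
instance : Mul Tri := ⟨fun x y =>
  ⟨x.a * y.a + (x.b * y.c + x.c * y.b) + x.c * y.c,
   x.a * y.b + x.b * y.a + (x.b * y.c + x.c * y.b) + 2 * (x.c * y.c),
   x.a * y.c + x.b * y.b + x.c * y.a + (x.b * y.c + x.c * y.b) + 2 * (x.c * y.c)⟩⟩
instance : NatCast Tri := ⟨fun n => ⟨n, 0, 0⟩⟩
instance : IntCast Tri := ⟨fun n => ⟨n, 0, 0⟩⟩

@[simp] lemma zero_a : (0 : Tri).a = 0 := rfl
@[simp] lemma zero_b : (0 : Tri).b = 0 := rfl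
@[simp] lemma zero_c : (0 : Tri).c = 0 := rfl
@[simp] lemma one_a : (1 : Tri).a = 1 := rfl
@[simp] lemma one_b : (1 : Tri).b = 0 := rfl
@[simp] lemma one_c : (1 : Tri).c = 0 := rfl
@[simp] lemma add_a (x y : Tri) : (x + y).a = x.a + y.a := rfl
@[simp] lemma add_b (x y : Tri) : (x + y).b = x.b + y.b := rfl
@[simp] lemma add_c (x y : Tri) : (x + y).c = x.c + y.c := rfl
@[simp] lemma neg_a (x : Tri) : (-x).a = -x.a := rfl
@[simp] lemma neg_b (x : Tri) : (-x).b = -x.b := rfl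
@[simp] lemma neg_c (x : Tri) : (-x).c = -x.c := rfl
@[simp] lemma sub_a (x y : Tri) : (x - y).a = x.a - y.a := rfl
@[simp] lemma sub_b (x y : Tri) : (x - y).b = x.b - y.b := rfl
@[simp] lemma sub_c (x y : Tri) : (x - y).c = x.c - y.c := rfl
@[simp] lemma mul_a (x y : Tri) :
    (x * y).a = x.a * y.a + (x.b * y.c + x.c * y.b) + x.c * y.c := rfl
@[simp] lemma mul_b (x y : Tri) :
    (x * y).b = x.a * y.b + x.b * y.a + (x.b * y.c + x.c * y.b) + 2 * (x.c * y.c) := rfl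
@[simp] lemma mul_c (x y : Tri) :
    (x * y).c = x.a * y.c + x.b * y.b + x.c * y.a + (x.b * y.c + x.c * y.b) + 2 * (x.c * y.c) := rfl
@[simp] lemma natCast_a (n : ℕ) : (n : Tri).a = n := rfl
@[simp] lemma natCast_b (n : ℕ) : (n : Tri).b = 0 := rfl
@[simp] lemma natCast_c (n : ℕ) : (n : Tri).c = 0 := rfl
@[simp] lemma intCast_a (n : ℤ) : (n : Tri).a = n := rfl
@[simp] lemma intCast_b (n : ℤ) : (n : Tri).b = 0 := rfl
@[simp] lemma intCast_c (n : ℤ) : (n : Tri).c = 0 := rfl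

instance : CommRing Tri where
  add_assoc x y z := by ext <;> simp <;> ring
  zero_add x := by ext <;> simp
  add_zero x := by ext <;> simp
  add_comm x y := by ext <;> simp <;> ring
  left_distrib x y z := by ext <;> simp <;> ring
  right_distrib x y z := by ext <;> simp <;> ring
  zero_mul x := by ext <;> simp
  mul_zero x := by ext <;> simp
  mul_assoc x y z := by ext <;> simp <;> ring
  one_mul x := by ext <;> simp
  mul_one x := by ext <;> simp
  neg_add_cancel x := by ext <;> simp
  mul_comm x y := by ext <;> simp <;> ring
  sub_eq_add_neg x y := by ext <;> simp <;> ring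
  nsmul := nsmulRec
  zsmul := zsmulRec
  natCast_zero := by ext <;> simp
  natCast_succ n := by ext <;> simp
  intCast_ofNat n := by ext <;> simp
  intCast_negSucc n := by ext <;> simp [Int.negSucc_eq]

@[simp] lemma ofNat_a (n : ℕ) [n.AtLeastTwo] : (ofNat(n) : Tri).a = n := rfl
@[simp] lemma ofNat_b (n : ℕ) [n.AtLeastTwo] : (ofNat(n) : Tri).b = 0 := rfl
@[simp] lemma ofNat_c (n : ℕ) [n.AtLeastTwo] : (ofNat(n) : Tri).c = 0 := rfl

/-- Evaluation at a root of `X³ - X² - X - 1` in a commutative ring. -/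
def ev {R : Type*} [CommRing R] (x : R) (hx : x ^ 3 = 1 + x + x ^ 2) : Tri →+* R where
  toFun ξ := ξ.a + ξ.b * x + ξ.c * x ^ 2
  map_one' := by simp
  map_zero' := by simp
  map_add' u v := by simp; ring
  map_mul' u v := by
    simp only [mul_a, mul_b, mul_c]
    push_cast
    have h4 : x ^ 4 = 1 + 2 * x + 2 * x ^ 2 := by linear_combination (x + 1) * hx
    linear_combination (-(u.b * v.c + u.c * v.b : R)) * hx - (u.c * v.c : R) * h4

/-- The generator `α`. -/
def al : Tri := ⟨0, 1, 0⟩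

/-- The size `|a| + 2|b| + 4|c|`, a submultiplicative norm on `ℤ[α]`. -/
def nu (x : Tri) : ℤ := |x.a| + 2 * |x.b| + 4 * |x.c|

lemma nu_nonneg (x : Tri) : 0 ≤ nu x := by unfold nu; positivity

lemma nu_zero : nu 0 = 0 := by simp [nu]
lemma nu_one : nu 1 = 1 := by simp [nu]
lemma nu_al : nu al = 2 := by simp [nu, al]

lemma nu_intCast (n : ℤ) : nu (n : Tri) = |n| := by simp [nu]

lemma nu_pos {x : Tri} (h : x ≠ 0) : 1 ≤ nu x := by
  by_contra hc
  apply h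
  unfold nu at hc
  have h1 := abs_nonneg x.a
  have h2 := abs_nonneg x.b
  have h3 := abs_nonneg x.c
  ext
  · exact abs_eq_zero.mp (by omega)
  · exact abs_eq_zero.mp (by omega)
  · exact abs_eq_zero.mp (by omega)

lemma nu_add (x y : Tri) : nu (x + y) ≤ nu x + nu y := by
  unfold nu
  have h1 := abs_add_le x.a y.a
  have h2 := abs_add_le x.b y.b
  have h3 := abs_add_le x.c y.c
  simp only [add_a, add_b, add_c]
  linarith

lemma nu_neg (x : Tri) : nu (-x) = nu x := by simp [nu]

lemma nu_sub (x y : Tri) : nu (x - y) ≤ nu x + nu y := by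
  rw [sub_eq_add_neg, ← nu_neg y]; exact nu_add _ _

lemma nu_mul (x y : Tri) : nu (x * y) ≤ nu x * nu y := by
  unfold nu
  simp only [mul_a, mul_b, mul_c]
  have e : ∀ u v : ℤ, |u * v| = |u| * |v| := abs_mul
  have h1 : |x.a * y.a + (x.b * y.c + x.c * y.b) + x.c * y.c| ≤
      |x.a| * |y.a| + (|x.b| * |y.c| + |x.c| * |y.b|) + |x.c| * |y.c| := by
    simp only [← e]
    exact (abs_add_le _ _).trans (add_le_add ((abs_add_le _ _).trans
      (add_le_add le_rfl (abs_add_le _ _))) le_rfl)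
  have h2 : |x.a * y.b + x.b * y.a + (x.b * y.c + x.c * y.b) + 2 * (x.c * y.c)| ≤
      |x.a| * |y.b| + |x.b| * |y.a| + (|x.b| * |y.c| + |x.c| * |y.b|) + 2 * (|x.c| * |y.c|) := by
    simp only [← e]
    refine (abs_add_le _ _).trans (add_le_add ((abs_add_le _ _).trans
      (add_le_add (abs_add_le _ _) (abs_add_le _ _))) ?_)
    rw [abs_mul 2]; simp
  have h3 : |x.a * y.c + x.b * y.b + x.c * y.a + (x.b * y.c + x.c * y.b) + 2 * (x.c * y.c)| ≤
      |x.a| * |y.c| + |x.b| * |y.b| + |x.c| * |y.a| + (|x.b| * |y.c| + |x.c| * |y.b|)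
        + 2 * (|x.c| * |y.c|) := by
    simp only [← e]
    refine (abs_add_le _ _).trans (add_le_add ((abs_add_le _ _).trans
      (add_le_add ((abs_add_le _ _).trans (add_le_add (abs_add_le _ _) le_rfl))
        (abs_add_le _ _))) ?_)
    rw [abs_mul 2]; simp
  have p1 : 0 ≤ |x.b| * |y.c| := by positivity
  have p2 : 0 ≤ |x.c| * |y.b| := by positivity
  have p3 : 0 ≤ |x.c| * |y.c| := by positivity
  nlinarith

lemma nu_pow (x : Tri) (n : ℕ) : nu (x ^ n) ≤ nu x ^ n := by
  induction n with
  | zero => simp [nu_one]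
  | succ n ih =>
    rw [pow_succ, pow_succ]
    exact (nu_mul _ _).trans (mul_le_mul_of_nonneg_right ih (nu_nonneg _))

lemma nu_prod {ι : Type*} (s : Finset ι) (f : ι → Tri) : nu (∏ i ∈ s, f i) ≤ ∏ i ∈ s, nu (f i) := by
  classical
  induction s using Finset.induction_on with
  | empty => simp [nu_one]
  | insert i s hi ih =>
    rw [Finset.prod_insert hi, Finset.prod_insert hi]
    exact (nu_mul _ _).trans (mul_le_mul_of_nonneg_left ih (nu_nonneg _))

lemma nu_sum {ι : Type*} (s : Finset ι) (f : ι → Tri) : nu (∑ i ∈ s, f i) ≤ ∑ i ∈ s, nu (f i) := by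
  classical
  induction s using Finset.induction_on with
  | empty => simp [nu_zero]
  | insert i s hi ih =>
    rw [Finset.sum_insert hi, Finset.sum_insert hi]
    exact (nu_add _ _).trans (add_le_add le_rfl ih)

/-- The product of the two conjugates of `x`; see `mul_adj`. -/
def adj (x : Tri) : Tri :=
  ⟨(x.a + x.c) * (x.a + x.b + 2 * x.c) - (x.b + 2 * x.c) * (x.b + x.c),
   -(x.b * (x.a + x.b + 2 * x.c) - x.c * (x.b + 2 * x.c)),
   x.b * (x.b + x.c) - x.c * (x.a + x.c)⟩

/-- The norm from `ℚ(α)` to `ℚ`. -/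
def norm (x : Tri) : ℤ := x.a * (adj x).a + x.c * (adj x).b + (x.b + x.c) * (adj x).c

lemma mul_adj (x : Tri) : x * adj x = (norm x : Tri) := by
  ext <;> simp [norm, adj] <;> ring

lemma norm_mul (x y : Tri) : norm (x * y) = norm x * norm y := by
  simp [norm, adj]; ring

lemma norm_one : norm 1 = 1 := by simp [norm, adj]

lemma norm_pow (x : Tri) (n : ℕ) : norm (x ^ n) = norm x ^ n := by
  induction n with
  | zero => simp [norm_one]
  | succ n ih => rw [pow_succ, norm_mul, ih, pow_succ]

lemma norm_intCast (n : ℤ) : norm (n : Tri) = n ^ 3 := by simp [norm, adj]; ring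

lemma norm_al : norm al = 1 := by simp [norm, adj, al]

lemma nu_adj (x : Tri) : nu (adj x) ≤ 7 * nu x ^ 2 := by
  have key : ∀ u v w : ℤ, |u * v| = |u| * |v| := fun u v _ => abs_mul u v
  set A := |x.a| with hA
  set B := |x.b| with hB
  set C := |x.c| with hC
  have a0 : 0 ≤ A := abs_nonneg _
  have b0 : 0 ≤ B := abs_nonneg _
  have c0 : 0 ≤ C := abs_nonneg _
  have h1 : |(adj x).a| ≤ (A + C) * (A + B + 2 * C) + (B + 2 * C) * (B + C) := by
    have e1 : |x.a + x.c| ≤ A + C := abs_add_le _ _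
    have e2 : |x.a + x.b + 2 * x.c| ≤ A + B + 2 * C := by
      refine (abs_add_le _ _).trans (add_le_add (abs_add_le _ _) ?_); rw [abs_mul]; simp [hC]
    have e3 : |x.b + 2 * x.c| ≤ B + 2 * C := by
      refine (abs_add_le _ _).trans (add_le_add le_rfl ?_); rw [abs_mul]; simp [hC]
    have e4 : |x.b + x.c| ≤ B + C := abs_add_le _ _
    refine (abs_sub _ _).trans ?_
    rw [abs_mul, abs_mul]
    gcongr
  have h2 : |(adj x).b| ≤ B * (A + B + 2 * C) + C * (B + 2 * C) := by
    have e2 : |x.a + x.b + 2 * x.c| ≤ A + B + 2 * C := by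
      refine (abs_add_le _ _).trans (add_le_add (abs_add_le _ _) ?_); rw [abs_mul]; simp [hC]
    have e3 : |x.b + 2 * x.c| ≤ B + 2 * C := by
      refine (abs_add_le _ _).trans (add_le_add le_rfl ?_); rw [abs_mul]; simp [hC]
    show |-(_)| ≤ _
    rw [abs_neg]
    refine (abs_sub _ _).trans ?_
    rw [abs_mul, abs_mul]
    gcongr
  have h3 : |(adj x).c| ≤ B * (B + C) + C * (A + C) := by
    have e1 : |x.a + x.c| ≤ A + C := abs_add_le _ _
    have e4 : |x.b + x.c| ≤ B + C := abs_add_le _ _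
    refine (abs_sub _ _).trans ?_
    rw [abs_mul, abs_mul]
    gcongr
  unfold nu
  rw [← hA, ← hB, ← hC]
  have := mul_nonneg a0 b0
  have := mul_nonneg a0 c0
  have := mul_nonneg b0 c0
  nlinarith [sq_nonneg A, sq_nonneg B, sq_nonneg C]

/-- `X³ - X² - X - 1` is irreducible modulo `3`, so `3` is inert: a norm divisible by `3` comes
from an element divisible by `3`. -/
lemma three_dvd_of_norm {x : Tri} (h : (3 : ℤ) ∣ norm x) : 3 ∣ x.a ∧ 3 ∣ x.b ∧ 3 ∣ x.c := by
  have key : ∀ a b c : ZMod 3,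
      a * ((a + c) * (a + b + 2 * c) - (b + 2 * c) * (b + c)) +
        c * (-(b * (a + b + 2 * c) - c * (b + 2 * c))) +
        (b + c) * (b * (b + c) - c * (a + c)) = 0 → a = 0 ∧ b = 0 ∧ c = 0 := by decide
  have h' : ((norm x : ℤ) : ZMod 3) = 0 := (ZMod.intCast_zmod_eq_zero_iff_dvd _ 3).2 h
  simp only [norm, adj] at h'
  push_cast at h'
  obtain ⟨h1, h2, h3⟩ := key _ _ _ h'
  exact ⟨(ZMod.intCast_zmod_eq_zero_iff_dvd _ 3).1 h1, (ZMod.intCast_zmod_eq_zero_iff_dvd _ 3).1 h2,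
    (ZMod.intCast_zmod_eq_zero_iff_dvd _ 3).1 h3⟩

lemma eq_zero_of_norm {x : Tri} (h : norm x = 0) : x = 0 := by
  have main : ∀ n : ℕ, ∀ x : Tri, norm x = 0 → nu x < n → x = 0 := by
    intro n
    induction n with
    | zero => intro x _ hx; have := nu_nonneg x; simp at hx; omega
    | succ n ih =>
      intro x hx hn
      by_contra hne
      obtain ⟨⟨a, ha⟩, ⟨b, hb⟩, ⟨c, hc⟩⟩ := three_dvd_of_norm (x := x) (by rw [hx]; exact dvd_zero _)
      have hxy : x = ((3 : ℤ) : Tri) * ⟨a, b, c⟩ := by ext <;> simp [ha, hb, hc]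
      have hnorm : norm ⟨a, b, c⟩ = 0 := by
        rw [hxy, norm_mul, norm_intCast] at hx
        simpa using hx
      have hnu : nu x = 3 * nu ⟨a, b, c⟩ := by
        simp only [nu, ha, hb, hc, abs_mul]; simp; ring
      have h1 := nu_pos hne
      have h0 : (⟨a, b, c⟩ : Tri) = 0 := ih _ hnorm (by push_cast at hn; omega)
      rw [h0] at hxy
      exact hne (by rw [hxy]; simp)
  exact main (nu x).toNat.succ x h (by have := nu_nonneg x; push_cast; omega)

instance : IsDomain Tri := by
  have : Nontrivial Tri := ⟨0, 1, fun h => by have := congrArg Tri.a h; simp at this⟩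
  have : NoZeroDivisors Tri := ⟨by
    intro x y h
    have : norm x * norm y = 0 := by rw [← norm_mul, h]; simp [norm, adj]
    rcases mul_eq_zero.mp this with h | h
    · exact Or.inl (eq_zero_of_norm h)
    · exact Or.inr (eq_zero_of_norm h)⟩
  exact NoZeroDivisors.to_isDomain _

/-- The functional with `φ(αⁿ) = Tₙ`. -/
def phi (x : Tri) : ℤ := x.b + x.c

lemma phi_rec (x : Tri) : phi (al ^ 3 * x) = phi (al ^ 2 * x) + phi (al * x) + phi x := by
  simp [phi, al, pow_succ]; ring

lemma phi_al_pow (n : ℕ) : phi (al ^ n) = T n := by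
  induction n using Nat.strong_induction_on with
  | _ n ih =>
    match n with
    | 0 => simp [phi, T]
    | 1 => simp [phi, T, al]
    | 2 => simp [phi, T, al, pow_succ]
    | m + 3 =>
      have := phi_rec (al ^ m)
      rw [← pow_add, ← pow_add, ← pow_succ', add_comm 3, add_comm 2, ih (m+2) (by omega), ih (m+1) (by omega),
        ih m (by omega)] at this
      rw [this, T]

lemma phi_add (x y : Tri) : phi (x + y) = phi x + phi y := by simp [phi]; ring
lemma phi_sub (x y : Tri) : phi (x - y) = phi x - phi y := by simp [phi]; ring
lemma phi_intMul (n : ℤ) (y : Tri) : phi (n * y) = n * phi y := by simp [phi]; ring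

end Tri

/-! ### The real embedding -/

lemma exists_alpha : ∃ x : ℝ, x ^ 3 = 1 + x + x ^ 2 ∧ 1.8392 < x ∧ x < 1.8393 := by
  have hc : ContinuousOn (fun x : ℝ => x ^ 3 - (1 + x + x ^ 2)) (Set.Icc 1.8392 1.8393) := by fun_prop
  obtain ⟨x, ⟨h1, h2⟩, h⟩ := intermediate_value_Ioo (by norm_num) hc
    (show (0 : ℝ) ∈ Set.Ioo _ _ by constructor <;> norm_num)
  exact ⟨x, by simp only at h; linarith, h1, h2⟩

/-- The real root of `X³ - X² - X - 1`. -/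
noncomputable def rα : ℝ := exists_alpha.choose

lemma rα_cube : rα ^ 3 = 1 + rα + rα ^ 2 := exists_alpha.choose_spec.1
lemma rα_gt : 1.8392 < rα := exists_alpha.choose_spec.2.1
lemma rα_lt : rα < 1.8393 := exists_alpha.choose_spec.2.2
lemma rα_pos : 0 < rα := by linarith [rα_gt]

/-- The real embedding of `ℤ[α]`. -/
noncomputable def sg : Tri →+* ℝ := Tri.ev rα rα_cube

lemma sg_apply (x : Tri) : sg x = x.a + x.b * rα + x.c * rα ^ 2 := rfl
lemma sg_al : sg Tri.al = rα := by simp [sg_apply, Tri.al]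

lemma abs_sg_le (x : Tri) : |sg x| ≤ Tri.nu x := by
  rw [sg_apply, Tri.nu]
  push_cast
  have h1 := rα_pos
  have h2 : rα ≤ 2 := by linarith [rα_lt]
  refine (abs_add_le _ _).trans (add_le_add ((abs_add_le _ _).trans (add_le_add le_rfl ?_)) ?_)
  · rw [abs_mul, abs_of_pos h1, mul_comm]
    gcongr
  · rw [abs_mul, abs_of_pos (pow_pos h1 2), mul_comm]
    gcongr
    nlinarith

lemma sg_inj {x : Tri} (h : sg x = 0) : x = 0 := by
  apply Tri.eq_zero_of_norm
  have := congrArg sg (Tri.mul_adj x)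
  rw [map_mul, h, zero_mul, map_intCast] at this
  exact_mod_cast this.symm

/-- Liouville's inequality in `ℤ[α]`. -/
lemma liouville {x : Tri} (h : x ≠ 0) : 1 ≤ |sg x| * (7 * (Tri.nu x : ℝ) ^ 2) := by
  have h1 : (1 : ℝ) ≤ |(Tri.norm x : ℝ)| := by
    have : Tri.norm x ≠ 0 := fun h0 => h (Tri.eq_zero_of_norm h0)
    exact_mod_cast Int.one_le_abs this
  have h2 := congrArg sg (Tri.mul_adj x)
  rw [map_mul, map_intCast] at h2
  rw [← h2, abs_mul] at h1
  refine h1.trans (mul_le_mul_of_nonneg_left ?_ (abs_nonneg _))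
  refine (abs_sg_le _).trans ?_
  exact_mod_cast Tri.nu_adj x

/-- `δ = -α² + 4α - 1`, the inverse of the leading coefficient in Binet's formula for `Tₙ`. -/
def Tri.de : Tri := ⟨-1, 4, -1⟩

/-- The real value of `δ`. -/
noncomputable def rδ : ℝ := -1 + 4 * rα - rα ^ 2

lemma sg_de : sg Tri.de = rδ := by simp [sg_apply, Tri.de, rδ]; ring

lemma rδ_bounds : 2.973 < rδ ∧ rδ < 2.975 := by
  have h1 := rα_gt
  have h2 := rα_lt
  unfold rδ
  constructor <;> nlinarith

/-- The error sequence `δTₙ - αⁿ` satisfies the recurrence of the quadratic factor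
`X² + (α-1)X + 1/α`, whose norm form contracts by `1/α` at each step. -/
lemma binet (n : ℕ) : |rδ * T n - rα ^ n| ≤ 2 := by
  have h1 := rα_gt
  have h2 := rα_lt
  have h0 := rα_pos
  have hc := rα_cube
  set e : ℕ → ℝ := fun n => rδ * T n - rα ^ n with he
  have hrec3 : ∀ n, e (n + 3) = e (n + 2) + e (n + 1) + e n := by
    intro n
    simp only [he, T]
    push_cast
    have : rα ^ (n + 3) = rα ^ (n+2) + rα ^ (n+1) + rα ^ n := by
      rw [pow_add, hc]; ring
    rw [this]; ring
  have hrec : ∀ n, rα * e (n + 2) = -(rα * (rα - 1)) * e (n + 1) - e n := by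
    intro n
    induction n with
    | zero => 
      simp only [he, T, rδ]
      norm_num
      linear_combination (1 - rα) * hc
    | succ n ih =>
      have h3 := hrec3 n
      rw [show n + 1 + 2 = n + 3 from rfl, h3, show n + 1 + 1 = n + 2 from rfl]
      have : rα * (rα * (e (n+2) + e (n+1) + e n)) = rα * (-(rα * (rα - 1)) * e (n + 2) - e (n+1)) := by
        linear_combination rα ^ 2 * ih - rα * e (n+1) * hc
      exact mul_left_cancel₀ h0.ne' this
  have hQ : ∀ n, rα * e (n + 1) ^ 2 + rα * (rα - 1) * e n * e (n + 1) + e n ^ 2 ≤ 2 := by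
    intro n
    induction n with
    | zero =>
      simp only [he, T, rδ]
      norm_num
      nlinarith
    | succ n ih =>
      have h := hrec n
      have : rα * (rα * e (n + 2) ^ 2 + rα * (rα - 1) * e (n + 1) * e (n + 2) + e (n + 1) ^ 2) =
          rα * e (n + 1) ^ 2 + rα * (rα - 1) * e n * e (n + 1) + e n ^ 2 := by
        have h' : rα * e (n + 2) + rα * (rα - 1) * e (n + 1) = - e n := by linarith
        have : rα * (rα * e (n + 2) ^ 2 + rα * (rα - 1) * e (n + 1) * e (n + 2) + e (n + 1) ^ 2) =
          (rα * e (n + 2)) * (rα * e (n + 2) + rα * (rα - 1) * e (n + 1)) + rα * e (n + 1) ^ 2 := by ring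
        rw [this, h', h]; ring
      nlinarith
  have hn := hQ n
  have : e n ^ 2 ≤ 4 := by
    have q1 : 0 ≤ rα * (e (n+1) + (rα - 1) / 2 * e n) ^ 2 := by positivity
    have q2 : 0 ≤ (1 / 2 - rα * (rα - 1) ^ 2 / 4) * e n ^ 2 :=
      mul_nonneg (by nlinarith) (sq_nonneg _)
    nlinarith
  exact abs_le_of_sq_le_sq (by simpa [he] using (by linarith : e n ^ 2 ≤ 2 ^ 2)) (by norm_num)

/-! ### A real Schwarz lemma for exponential sums -/

section Schwarz

open PowerSeries

/-- The geometric series `∑ xⁿXⁿ = 1 / (1 - xX)`. -/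
noncomputable def geo (x : ℝ) : PowerSeries ℝ := PowerSeries.mk (fun n => x ^ n)

lemma geo_mul (x : ℝ) : (1 - PowerSeries.C x * X) * geo x = 1 := by
  ext n
  rw [sub_mul, one_mul, map_sub, mul_assoc]
  cases n with
  | zero => simp [geo]
  | succ n => 
    rw [coeff_C_mul, coeff_succ_X_mul]
    simp [geo, coeff_one, pow_succ, mul_comm]

lemma geo_mul_eq (x : ℝ) (P : PowerSeries ℝ) : geo x * P = P + PowerSeries.C x * (X * (geo x * P)) := by
  linear_combination P * geo_mul x

lemma geo_sub (x y : ℝ) : geo y - geo x = PowerSeries.C (y - x) * (X * (geo x * geo y)) := by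
  have h1 := geo_mul x
  have h2 := geo_mul y
  have : PowerSeries.C (y - x) = PowerSeries.C y - PowerSeries.C x := map_sub _ _ _
  rw [this]
  linear_combination (geo x) * h2 - (geo y) * h1

lemma coeff_zero_geo_mul (x : ℝ) (P : PowerSeries ℝ) : coeff 0 (geo x * P) = coeff 0 P := by
  simp [geo]

lemma coeff_succ_geo_mul (x : ℝ) (P : PowerSeries ℝ) (m : ℕ) :
    coeff (m + 1) (geo x * P) = coeff (m + 1) P + x * coeff m (geo x * P) := by
  conv_lhs => rw [geo_mul_eq]
  rw [map_add, coeff_C_mul, coeff_succ_X_mul]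

/-- Coefficientwise domination by the complete homogeneous polynomial of `k + 1` variables
equal to `R`. -/
def Dom (R : ℝ) (k : ℕ) (P : PowerSeries ℝ) : Prop :=
  ∀ m, |coeff m P| ≤ (m + k).choose k * R ^ m

lemma dom_geo_mul {R x : ℝ} (hx : 0 ≤ x) (hR : x ≤ R) {k : ℕ} {P : PowerSeries ℝ} (h : Dom R k P) :
    Dom R (k + 1) (geo x * P) := by
  intro m
  induction m with
  | zero =>
    rw [coeff_zero_geo_mul]
    have := h 0
    simpa using this
  | succ m ih =>
    rw [coeff_succ_geo_mul]
    refine (abs_add_le _ _).trans ?_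
    rw [abs_mul, abs_of_nonneg hx]
    have hR0 : 0 ≤ R := hx.trans hR
    have e : (m + 1 + (k + 1)).choose (k + 1) = (m + 1 + k).choose k + (m + (k + 1)).choose (k + 1) := by
      rw [show m + 1 + (k + 1) = (m + 1 + k) + 1 by ring, Nat.choose_succ_succ,
        show m + 1 + k = m + (k+1) by ring]
    rw [e]
    push_cast
    rw [add_mul]
    refine add_le_add (h (m + 1)) ?_
    calc x * |coeff m (geo x * P)| ≤ R * ((m + (k + 1)).choose (k + 1) * R ^ m) :=
          mul_le_mul hR ih (abs_nonneg _) hR0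
      _ = _ := by ring

lemma dom_geo {R x : ℝ} (hx : 0 ≤ x) (hR : x ≤ R) : Dom R 0 (geo x) := by
  intro m
  simp only [geo, coeff_mk, add_zero, Nat.choose_zero_right, Nat.cast_one, one_mul]
  rw [abs_of_nonneg (pow_nonneg hx m)]
  gcongr

/-- The divided difference of `exp (ψz)` at the `k + 1` nodes encoded by `P = ∏ 1 / (1 - xᵢX)`. -/
noncomputable def dd (ψ : ℝ) (k : ℕ) (P : PowerSeries ℝ) : ℝ :=
  ∑' m : ℕ, ψ ^ (m + k) / (m + k).factorial * coeff m P

lemma dd_term_le {R Ψ ψ : ℝ} (hR : 0 ≤ R) (hψ : |ψ| ≤ Ψ) {k : ℕ} {P : PowerSeries ℝ} (h : Dom R k P) (m : ℕ) :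
    ‖ψ ^ (m + k) / (m + k).factorial * coeff m P‖ ≤
      Ψ ^ k / k.factorial * ((Ψ * R) ^ m / m.factorial) := by
  have hΨ : 0 ≤ Ψ := (abs_nonneg _).trans hψ
  rw [Real.norm_eq_abs, abs_mul, abs_div, abs_pow, Nat.abs_cast]
  calc |ψ| ^ (m + k) / (m + k).factorial * |coeff m P|
      ≤ Ψ ^ (m + k) / (m + k).factorial * ((m + k).choose k * R ^ m) := by
        gcongr
        exact h m
    _ = _ := by
      have e := Nat.add_choose_mul_factorial_mul_factorial m k
      have e' : ((m + k).choose k : ℝ) * m.factorial * k.factorial = (m + k).factorial := by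
        exact_mod_cast e
      have := Nat.cast_ne_zero (R := ℝ).2 (Nat.factorial_ne_zero (m + k))
      have := Nat.cast_ne_zero (R := ℝ).2 (Nat.factorial_ne_zero m)
      have := Nat.cast_ne_zero (R := ℝ).2 (Nat.factorial_ne_zero k)
      field_simp
      rw [mul_pow, ← e', pow_add]; ring

lemma dd_majorant (R Ψ : ℝ) (k : ℕ) :
    HasSum (fun m : ℕ => Ψ ^ k / k.factorial * ((Ψ * R) ^ m / m.factorial))
      (Ψ ^ k / k.factorial * Real.exp (Ψ * R)) := by
  apply HasSum.mul_left
  rw [Real.exp_eq_exp_ℝ]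
  exact NormedSpace.expSeries_div_hasSum_exp (Ψ * R)

lemma dd_summable {R : ℝ} (hR : 0 ≤ R) (ψ : ℝ) {k : ℕ} {P : PowerSeries ℝ} (h : Dom R k P) :
    Summable (fun m : ℕ => ψ ^ (m + k) / (m + k).factorial * coeff m P) :=
  Summable.of_norm_bounded (dd_majorant R |ψ| k).summable (dd_term_le hR le_rfl h)

lemma dd_abs_le {R Ψ ψ : ℝ} (hR : 0 ≤ R) (hψ : |ψ| ≤ Ψ) {k : ℕ} {P : PowerSeries ℝ} (h : Dom R k P) :
    |dd ψ k P| ≤ Ψ ^ k / k.factorial * Real.exp (Ψ * R) :=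
  tsum_of_norm_bounded (dd_majorant R Ψ k) (dd_term_le hR hψ h)

lemma dd_rec {R x y : ℝ} (hx : 0 ≤ x) (hxR : x ≤ R) (ψ : ℝ) {k : ℕ}
    {P : PowerSeries ℝ} (h : Dom R k (geo x * P)) (h' : Dom R k (geo y * P)) :
    dd ψ k (geo y * P) - dd ψ k (geo x * P) =
      (y - x) * dd ψ (k + 1) (geo x * (geo y * P)) := by
  have hR := hx.trans hxR
  have h2 : Dom R (k + 1) (geo x * (geo y * P)) := dom_geo_mul hx hxR h'
  unfold dd
  rw [← (dd_summable hR ψ h').tsum_sub (dd_summable hR ψ h), ← tsum_mul_left]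
  have e : ∀ m : ℕ, coeff m (geo y * P) - coeff m (geo x * P) =
      coeff m (PowerSeries.C (y - x) * (X * (geo x * (geo y * P)))) := by
    intro m
    rw [← map_sub, ← sub_mul, geo_sub]
    congr 1; ring
  have hsum : Summable (fun m : ℕ => ψ ^ (m + k) / (m + k).factorial * coeff m (geo y * P) -
      ψ ^ (m + k) / (m + k).factorial * coeff m (geo x * P)) :=
    (dd_summable hR ψ h').sub (dd_summable hR ψ h)
  rw [hsum.tsum_eq_zero_add, coeff_zero_geo_mul, coeff_zero_geo_mul, sub_self, zero_add]
  congr 1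
  ext m
  rw [← mul_sub, e, coeff_C_mul, coeff_succ_X_mul, show m + 1 + k = m + (k + 1) by ring]
  ring

lemma dd_geo (ψ x : ℝ) : dd ψ 0 (geo x) = Real.exp (ψ * x) := by
  unfold dd
  rw [Real.exp_eq_exp_ℝ, ← (NormedSpace.expSeries_div_hasSum_exp (ψ * x)).tsum_eq]
  congr 1
  ext m
  simp [geo, mul_pow]; ring

lemma coeff_geo_pow (x : ℝ) (t m : ℕ) : coeff m (geo x ^ (t + 1)) = (m + t).choose t * x ^ m := by
  induction t generalizing m with
  | zero => simp [geo]
  | succ t ih =>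
    rw [pow_succ']
    induction m with
    | zero => rw [coeff_zero_geo_mul, ih]; simp
    | succ m ihm =>
      rw [coeff_succ_geo_mul, ih, ihm, show m + 1 + (t + 1) = (m + 1 + t) + 1 by ring,
        Nat.choose_succ_succ, show m + (t + 1) = m + 1 + t by ring]
      push_cast; ring

lemma dd_geo_pow (ψ x : ℝ) (t : ℕ) :
    dd ψ t (geo x ^ (t + 1)) = ψ ^ t / t.factorial * Real.exp (ψ * x) := by
  unfold dd
  rw [Real.exp_eq_exp_ℝ, ← (NormedSpace.expSeries_div_hasSum_exp (ψ * x)).tsum_eq, ← tsum_mul_left]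
  congr 1
  ext m
  rw [coeff_geo_pow]
  have e' : ((m + t).choose t : ℝ) * m.factorial * t.factorial = (m + t).factorial := by
    exact_mod_cast Nat.add_choose_mul_factorial_mul_factorial m t
  have := Nat.cast_ne_zero (R := ℝ).2 (Nat.factorial_ne_zero (m + t))
  have := Nat.cast_ne_zero (R := ℝ).2 (Nat.factorial_ne_zero m)
  have := Nat.cast_ne_zero (R := ℝ).2 (Nat.factorial_ne_zero t)
  rw [← e']
  have : ((m + t).choose t : ℝ) ≠ 0 := Nat.cast_ne_zero.2 (Nat.choose_pos (by omega)).ne'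
  field_simp
  rw [mul_pow, pow_add]; ring

/-- The series encoding the nodes `⌊t / s⌋`, `i ≤ t < j`. -/
noncomputable def seg (s i j : ℕ) : PowerSeries ℝ := ∏ t ∈ Finset.Ico i j, geo ((t / s : ℕ) : ℝ)

lemma seg_right {s i j : ℕ} (h : i ≤ j) : seg s i (j + 1) = geo ((j / s : ℕ) : ℝ) * seg s i j := by
  unfold seg; rw [Finset.prod_Ico_succ_top h, mul_comm]

lemma seg_left {s i j : ℕ} (h : i < j) : seg s i j = geo ((i / s : ℕ) : ℝ) * seg s (i + 1) j := by
  unfold seg; rw [Finset.prod_eq_prod_Ico_succ_bot h]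

lemma dom_seg {R : ℝ} {s i k : ℕ} (hR : (((i + k) / s : ℕ) : ℝ) ≤ R) : Dom R k (seg s i (i + k + 1)) := by
  induction k with
  | zero => 
    have : seg s i (i + 0 + 1) = geo ((i / s : ℕ) : ℝ) := by
      rw [add_zero, seg_right le_rfl]; simp [seg]
    rw [this]; exact dom_geo (by positivity) hR
  | succ k ih =>
    rw [seg_right (by omega)]
    refine dom_geo_mul (by positivity) hR (ih (le_trans ?_ hR))
    exact_mod_cast Nat.div_le_div_right (by omega)

variable {ι : Type*} [Fintype ι]

/-- Divided differences at consecutive integer nodes are small if the data are: the denominators in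
the recursion are differences of distinct integers. -/
lemma dd_small (c ψ : ι → ℝ) {ε R : ℝ} {s h : ℕ} (hs : 0 < s) (hR : (h : ℝ) ≤ R)
    (hε : ∀ l < h, ∀ t < s, |∑ i, c i * (ψ i ^ t * Real.exp (ψ i * l))| ≤ ε) (k : ℕ) :
    ∀ i, i + k < h * s → |∑ j, c j * dd (ψ j) k (seg s i (i + k + 1))| ≤ 2 ^ k * ε := by
  induction k with
  | zero =>
    intro i hi
    have : seg s i (i + 0 + 1) = geo ((i / s : ℕ) : ℝ) := by
      rw [add_zero, seg_right le_rfl]; simp [seg]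
    rw [this]
    simp only [dd_geo]
    have := hε (i / s) (Nat.div_lt_of_lt_mul (by rw [mul_comm]; simpa using hi)) 0 hs
    simpa using this
  | succ k ih =>
    intro i hi
    have hε0 : 0 ≤ ε := (abs_nonneg _).trans (hε (i / s)
      (Nat.div_lt_of_lt_mul (by rw [mul_comm]; omega)) 0 hs)
    by_cases heq : i / s = (i + (k + 1)) / s
    · have hseg : seg s i (i + (k + 1) + 1) = geo ((i / s : ℕ) : ℝ) ^ (k + 1 + 1) := by
        unfold seg
        rw [Finset.prod_congr rfl (g := fun _ => geo ((i / s : ℕ) : ℝ))]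
        · simp; congr 1; omega
        · intro t ht
          rw [Finset.mem_Ico] at ht
          have h1 : i / s ≤ t / s := Nat.div_le_div_right ht.1
          have h2 : t / s ≤ (i + (k + 1)) / s := Nat.div_le_div_right (by omega)
          rw [show t / s = i / s by omega]
      rw [hseg]
      simp only [dd_geo_pow]
      have hk : k + 1 < s := by
        have h1 := Nat.div_add_mod i s
        have h2 := Nat.div_add_mod (i + (k+1)) s
        have h3 := Nat.mod_lt (i + (k+1)) hs
        rw [← heq] at h2
        omega
      have hd := hε (i / s) (Nat.div_lt_of_lt_mul (by rw [mul_comm]; omega)) (k + 1) hk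
      have e : ∑ j, c j * (ψ j ^ (k + 1) / (k + 1).factorial * Real.exp (ψ j * (i / s : ℕ))) =
          (∑ j, c j * (ψ j ^ (k + 1) * Real.exp (ψ j * (i / s : ℕ)))) / (k + 1).factorial := by
        rw [Finset.sum_div]
        refine Finset.sum_congr rfl fun j _ => by ring
      rw [e, abs_div, Nat.abs_cast]
      have h1 : (1 : ℝ) ≤ (k + 1).factorial := by exact_mod_cast Nat.factorial_pos _
      calc _ ≤ |∑ j, c j * (ψ j ^ (k + 1) * Real.exp (ψ j * (i / s : ℕ)))| := div_le_self (abs_nonneg _) h1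
        _ ≤ ε := hd
        _ ≤ 2 ^ (k + 1) * ε := le_mul_of_one_le_left hε0 (one_le_pow₀ (by norm_num))
    · have hlt : i / s < (i + (k + 1)) / s := lt_of_le_of_ne (Nat.div_le_div_right (by omega)) heq
      have hnode : ∀ t, t < h * s → ((t / s : ℕ) : ℝ) ≤ R := fun t ht => by
        refine le_trans ?_ hR
        exact_mod_cast (Nat.div_lt_of_lt_mul (by rw [mul_comm]; exact ht)).le
      have h1 := ih i (by omega)
      have h2 := ih (i + 1) (by omega)
      have e3 : seg s i (i + (k + 1) + 1) = geo ((i / s : ℕ) : ℝ) * (geo (((i + (k + 1)) / s : ℕ) : ℝ) *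
          seg s (i + 1) (i + (k + 1))) := by
        rw [seg_left (by omega), seg_right (by omega)]
      have key : ∀ j, dd (ψ j) k (seg s (i + 1) (i + 1 + k + 1)) - dd (ψ j) k (seg s i (i + k + 1)) =
          ((((i + (k + 1)) / s : ℕ) : ℝ) - ((i / s : ℕ) : ℝ)) *
            dd (ψ j) (k + 1) (seg s i (i + (k + 1) + 1)) := by
        intro j
        have e1 : seg s (i + 1) (i + 1 + k + 1) = geo (((i + (k + 1)) / s : ℕ) : ℝ) *
            seg s (i + 1) (i + (k + 1)) := by
          rw [show i + 1 + k + 1 = (i + (k + 1)) + 1 by ring, seg_right (by omega)]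
        have e2 : seg s i (i + k + 1) = geo ((i / s : ℕ) : ℝ) * seg s (i + 1) (i + (k + 1)) := by
          rw [seg_left (by omega)]; rfl
        rw [e1, e2, e3]
        refine dd_rec (R := R) (by positivity) (hnode _ (by omega)) _ ?_ ?_
        · rw [← e2]; exact dom_seg (hnode _ (by omega))
        · rw [← e1]; exact dom_seg (hnode _ (by omega))
      set d : ℝ := (((i + (k + 1)) / s : ℕ) : ℝ) - ((i / s : ℕ) : ℝ) with hd
      have hd1 : 1 ≤ d := by
        have : ((i / s : ℕ) : ℝ) + 1 ≤ (((i + (k + 1)) / s : ℕ) : ℝ) := by exact_mod_cast hlt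
        linarith
      have esum : d * ∑ j, c j * dd (ψ j) (k + 1) (seg s i (i + (k + 1) + 1)) =
          ∑ j, c j * dd (ψ j) k (seg s (i + 1) (i + 1 + k + 1)) -
          ∑ j, c j * dd (ψ j) k (seg s i (i + k + 1)) := by
        rw [← Finset.sum_sub_distrib, Finset.mul_sum]
        refine Finset.sum_congr rfl fun j _ => ?_
        rw [← mul_sub, key]; ring
      calc |∑ j, c j * dd (ψ j) (k + 1) (seg s i (i + (k + 1) + 1))|
          ≤ d * |∑ j, c j * dd (ψ j) (k + 1) (seg s i (i + (k + 1) + 1))| :=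
            le_mul_of_one_le_left (abs_nonneg _) hd1
        _ = |d * ∑ j, c j * dd (ψ j) (k + 1) (seg s i (i + (k + 1) + 1))| := by
            rw [abs_mul, abs_of_nonneg (a := d) (by linarith)]
        _ ≤ 2 ^ k * ε + 2 ^ k * ε := by
            rw [esum]; exact (abs_sub _ _).trans (add_le_add h2 h1)
        _ = 2 ^ (k + 1) * ε := by ring

lemma newton {R x : ℝ} {s n : ℕ} (hx : 0 ≤ x) (hxR : x ≤ R)
    (hnode : ∀ t < n, ((t / s : ℕ) : ℝ) ≤ R) (ψ : ℝ) :
    Real.exp (ψ * x) = ∑ i ∈ Finset.range n, dd ψ i (seg s 0 (i + 1)) *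
        ∏ j ∈ Finset.range i, (x - ((j / s : ℕ) : ℝ)) +
      dd ψ n (geo x * seg s 0 n) * ∏ j ∈ Finset.range n, (x - ((j / s : ℕ) : ℝ)) := by
  induction n with
  | zero => simp [seg, dd_geo]
  | succ n ih =>
    rw [ih (fun t ht => hnode t (by omega)), Finset.sum_range_succ, Finset.prod_range_succ]
    have hdom : Dom R n (geo x * seg s 0 n) := by
      cases n with
      | zero => simpa [seg] using dom_geo hx hxR
      | succ k =>
        refine dom_geo_mul hx hxR ?_
        have := dom_seg (R := R) (s := s) (i := 0) (k := k) (by rw [zero_add]; exact hnode k (by omega))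
        simpa using this
    have hdom' : Dom R n (geo ((n / s : ℕ) : ℝ) * seg s 0 n) := by
      rw [← seg_right (by omega)]
      have := dom_seg (R := R) (s := s) (i := 0) (k := n) (by rw [zero_add]; exact hnode n (by omega))
      simpa using this
    have := dd_rec (R := R) (x := ((n / s : ℕ) : ℝ)) (y := x) (by positivity) (hnode n (by omega)) ψ
      hdom' hdom
    rw [seg_right (by omega : 0 ≤ n)]
    have e : geo ((n / s : ℕ) : ℝ) * (geo x * seg s 0 n) = geo x * (geo ((n / s : ℕ) : ℝ) * seg s 0 n) := by
      ring
    rw [e] at this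
    linear_combination (∏ j ∈ Finset.range n, (x - ((j / s : ℕ) : ℝ))) * this

/-- An exponential sum of low frequency whose Taylor coefficients of order `< s` at
`0, …, h - 1` are at most `ε` is small on `[0, R]`. -/
theorem schwarz (c ψ : ι → ℝ) {ε R Ψ C x : ℝ} {s h : ℕ} (hs : 0 < s) (hR : (h : ℝ) ≤ R) (hR1 : 1 ≤ R)
    (hψ : ∀ i, |ψ i| ≤ Ψ) (hC : ∑ i, |c i| ≤ C) (hε0 : 0 ≤ ε)
    (hε : ∀ l < h, ∀ t < s, |∑ i, c i * (ψ i ^ t * Real.exp (ψ i * l))| ≤ ε)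
    (hx : 0 ≤ x) (hxR : x ≤ R) (hΨ : 0 ≤ Ψ) :
    |∑ i, c i * Real.exp (ψ i * x)| ≤ ε * (h * s : ℕ) * (2 * R) ^ (h * s) +
      C * (Real.exp (Ψ * R) * (Ψ * R) ^ (h * s) / (h * s).factorial) := by
  set n := h * s with hn
  have hnode : ∀ t, t < h * s → ((t / s : ℕ) : ℝ) ≤ R := fun t ht => by
    refine le_trans ?_ hR
    exact_mod_cast (Nat.div_lt_of_lt_mul (by rw [mul_comm]; exact ht)).le
  have hprod : ∀ i ≤ n, |∏ j ∈ Finset.range i, (x - ((j / s : ℕ) : ℝ))| ≤ R ^ i := by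
    intro i hi
    rw [Finset.abs_prod]
    calc _ ≤ ∏ j ∈ Finset.range i, R := by
          refine Finset.prod_le_prod (fun _ _ => abs_nonneg _) fun j hj => ?_
          have h1 := hnode j (by rw [Finset.mem_range] at hj; omega)
          have h2 : (0 : ℝ) ≤ ((j / s : ℕ) : ℝ) := by positivity
          rw [abs_le]; constructor <;> linarith
      _ = R ^ i := by simp
  have e : ∑ i, c i * Real.exp (ψ i * x) =
      ∑ k ∈ Finset.range n, (∑ i, c i * dd (ψ i) k (seg s 0 (k + 1))) *
        ∏ j ∈ Finset.range k, (x - ((j / s : ℕ) : ℝ)) +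
      ∑ i, c i * (dd (ψ i) n (geo x * seg s 0 n) * ∏ j ∈ Finset.range n, (x - ((j / s : ℕ) : ℝ))) := by
    simp_rw [Finset.sum_mul]
    rw [Finset.sum_comm, ← Finset.sum_add_distrib]
    refine Finset.sum_congr rfl fun i _ => ?_
    rw [newton hx hxR hnode (ψ i), mul_add, Finset.mul_sum]
    congr 1
    refine Finset.sum_congr rfl fun k _ => by ring
  rw [e]
  refine (abs_add_le _ _).trans (add_le_add ?_ ?_)
  · refine (Finset.abs_sum_le_sum_abs _ _).trans ?_
    calc _ ≤ ∑ k ∈ Finset.range n, ε * (2 * R) ^ n := by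
          refine Finset.sum_le_sum fun k hk => ?_
          rw [Finset.mem_range] at hk
          rw [abs_mul]
          have h1 := dd_small c ψ hs hR hε k 0 (by omega)
          rw [zero_add] at h1
          calc _ ≤ (2 ^ k * ε) * R ^ k := mul_le_mul h1 (hprod k hk.le) (abs_nonneg _) (by positivity)
            _ = ε * (2 * R) ^ k := by rw [mul_pow]; ring
            _ ≤ ε * (2 * R) ^ n := by
              gcongr
              linarith
      _ = _ := by simp; ring
  · refine (Finset.abs_sum_le_sum_abs _ _).trans ?_
    have hdom : Dom R n (geo x * seg s 0 n) := by
      rcases Nat.eq_zero_or_pos n with h0 | h0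
      · rw [h0]; simpa [seg] using dom_geo hx hxR
      · obtain ⟨k, hk⟩ := Nat.exists_eq_succ_of_ne_zero h0.ne'
        rw [hk]
        refine dom_geo_mul hx hxR ?_
        have := dom_seg (R := R) (s := s) (i := 0) (k := k) (by rw [zero_add]; exact hnode k (by omega))
        simpa using this
    calc _ ≤ ∑ i, |c i| * (Ψ ^ n / n.factorial * Real.exp (Ψ * R) * R ^ n) := by
          refine Finset.sum_le_sum fun i _ => ?_
          rw [abs_mul, abs_mul]
          gcongr
          · exact dd_abs_le (by linarith) (hψ i) hdom
          · exact hprod n le_rfl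
      _ = (∑ i, |c i|) * (Real.exp (Ψ * R) * (Ψ * R) ^ n / n.factorial) := by
          rw [← Finset.sum_mul, mul_pow]; ring
      _ ≤ _ := by gcongr

end Schwarz

/-! ### Baker's method: the auxiliary function -/

section Baker

variable {r L L4 : ℕ}

/-- The index set of the auxiliary function. -/
abbrev Idx (r L L4 : ℕ) := (Fin r → Fin L) × Fin L4

/-- The integers `γᵢ(λ) = b₀λᵢ - bᵢλ₄` arising from differentiation. -/
def gam (b : Fin r → ℤ) (b0 : ℤ) (lam : Idx r L L4) (i : Fin r) : ℤ :=
  b0 * (lam.1 i : ℕ) - b i * (lam.2 : ℕ)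

/-- The monomial `∏ γᵢ ^ mᵢ`. -/
def mono (b : Fin r → ℤ) (b0 : ℤ) (lam : Idx r L L4) (m : Fin r → ℕ) : ℤ := ∏ i, gam b b0 lam i ^ m i

/-- The value at `l` of the exponential monomial of index `λ`, with its denominator cleared. -/
def trm (th : Fin r → Tri) (ze ze' : Tri) (lam : Idx r L L4) (l : ℕ) : Tri :=
  (∏ i, th i ^ ((lam.1 i : ℕ) * l)) * ze ^ ((lam.2 : ℕ) * l) * ze' ^ ((L4 - 1 - lam.2) * l)

/-- The (mixed derivative of the) auxiliary function at the integer `l`, as an element of `ℤ[α]`. -/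
def xi (th : Fin r → Tri) (ze ze' : Tri) (b : Fin r → ℤ) (b0 : ℤ) (p : Idx r L L4 → ℤ)
    (m : Fin r → ℕ) (l : ℕ) : Tri :=
  ∑ lam, ((p lam * mono b b0 lam m : ℤ) : Tri) * trm th ze ze' lam l

/-- The frequencies of the auxiliary function. -/
noncomputable def psi (a : Fin r → ℝ) (as : ℝ) (lam : Idx r L L4) : ℝ :=
  ∑ i, ((lam.1 i : ℕ) : ℝ) * a i + ((lam.2 : ℕ) : ℝ) * as

lemma sg_trm (th : Fin r → Tri) (ze ze' : Tri) (hth : ∀ i, 0 < sg (th i)) (h : 0 < sg ze) (h' : 0 < sg ze')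
    (lam : Idx r L L4) (l : ℕ) :
    sg (trm th ze ze' lam l) = sg ze' ^ ((L4 - 1) * l) *
      Real.exp (psi (fun i => Real.log (sg (th i))) (Real.log (sg ze) - Real.log (sg ze')) lam * l) := by
  have e1 : ∀ (x : ℝ) (n : ℕ), 0 < x → x ^ n = Real.exp (n * Real.log x) := fun x n hx => by
    rw [Real.exp_nat_mul, Real.exp_log hx]
  unfold trm psi
  rw [map_mul, map_mul, map_prod]
  simp only [map_pow]
  rw [e1 _ _ h, e1 _ _ h', e1 _ ((L4 - 1) * l) h', Finset.prod_congr rfl (fun i _ => e1 _ _ (hth i)),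
    ← Real.exp_sum, ← Real.exp_add, ← Real.exp_add, ← Real.exp_add]
  congr 1
  have hl : (lam.2 : ℕ) ≤ L4 - 1 := by have := lam.2.isLt; omega
  obtain ⟨q, hq⟩ := Nat.exists_eq_add_of_le hl
  rw [hq, Nat.add_sub_cancel_left]
  push_cast
  have : ∑ i, ((lam.1 i : ℕ) : ℝ) * (l : ℝ) * Real.log (sg (th i)) =
      (∑ i, ((lam.1 i : ℕ) : ℝ) * Real.log (sg (th i))) * l := by
    rw [Finset.sum_mul]; exact Finset.sum_congr rfl fun i _ => by ring
  rw [this]; ring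

lemma sg_xi (th : Fin r → Tri) (ze ze' : Tri) (hth : ∀ i, 0 < sg (th i)) (h : 0 < sg ze) (h' : 0 < sg ze')
    (b : Fin r → ℤ) (b0 : ℤ) (p : Idx r L L4 → ℤ) (m : Fin r → ℕ) (l : ℕ) :
    sg (xi th ze ze' b b0 p m l) = sg ze' ^ ((L4 - 1) * l) * ∑ lam, (p lam * mono b b0 lam m : ℝ) *
      Real.exp (psi (fun i => Real.log (sg (th i))) (Real.log (sg ze) - Real.log (sg ze')) lam * l) := by
  unfold xi
  rw [map_sum, Finset.mul_sum]
  refine Finset.sum_congr rfl fun lam _ => ?_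
  rw [map_mul, sg_trm th ze ze' hth h h', map_intCast]
  push_cast; ring

lemma gam_le {b : Fin r → ℤ} {b0 B : ℤ} (hb : ∀ i, |b i| ≤ B) (hb0 : |b0| ≤ B) (hL : L4 ≤ L)
    (lam : Idx r L L4) (i : Fin r) : |gam b b0 lam i| ≤ 2 * L * B := by
  unfold gam
  refine (abs_sub _ _).trans ?_
  rw [abs_mul, abs_mul, Nat.abs_cast, Nat.abs_cast]
  have h1 : ((lam.1 i : ℕ) : ℤ) ≤ L := by exact_mod_cast (lam.1 i).isLt.le
  have h2 : ((lam.2 : ℕ) : ℤ) ≤ L := by exact_mod_cast lam.2.isLt.le.trans hL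
  have hB : 0 ≤ B := (abs_nonneg _).trans hb0
  calc _ ≤ B * L + B * L := by gcongr; exact hb i
    _ = _ := by ring

lemma mono_le {b : Fin r → ℤ} {b0 B : ℤ} (hb : ∀ i, |b i| ≤ B) (hb0 : |b0| ≤ B) (hL : L4 ≤ L)
    (lam : Idx r L L4) {m : Fin r → ℕ} {k : ℕ} (hm : ∑ i, m i ≤ k) (hLB : 1 ≤ 2 * L * B) :
    |mono b b0 lam m| ≤ (2 * L * B) ^ k := by
  unfold mono
  rw [Finset.abs_prod]
  calc _ ≤ ∏ i, (2 * L * B : ℤ) ^ m i := by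
        refine Finset.prod_le_prod (fun _ _ => abs_nonneg _) fun i _ => ?_
        rw [abs_pow]
        exact pow_le_pow_left₀ (abs_nonneg _) (gam_le hb hb0 hL lam i) _
    _ = (2 * L * B : ℤ) ^ (∑ i, m i) := by rw [Finset.prod_pow_eq_pow_sum]
    _ ≤ _ := pow_le_pow_right₀ hLB hm

lemma trm_le {th : Fin r → Tri} {ze ze' : Tri} {A V : ℕ} (hth : ∀ i, 1 ≤ Tri.nu (th i))
    (hV : ((∏ i, Tri.nu (th i) : ℤ) : ℝ) ≤ Real.exp (V - 1)) 
    (hze : (Tri.nu ze : ℝ) ≤ Real.exp A) (hze' : (Tri.nu ze' : ℝ) ≤ Real.exp A)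
    (hL : L = A * L4) (lam : Idx r L L4) (l : ℕ) :
    (Tri.nu (trm th ze ze' lam l) : ℝ) ≤ Real.exp (V * L * l) := by
  have h0 : ∀ x, (0 : ℝ) ≤ Tri.nu x := fun x => by exact_mod_cast Tri.nu_nonneg x
  have h1 : (Tri.nu (∏ i, th i ^ ((lam.1 i : ℕ) * l)) : ℝ) ≤ Real.exp ((V - 1) * (L * l)) := by
    calc (Tri.nu (∏ i, th i ^ ((lam.1 i : ℕ) * l)) : ℝ) ≤ ((∏ i, Tri.nu (th i) ^ (L * l) : ℤ) : ℝ) := by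
          refine Int.cast_le.2 ((Tri.nu_prod _ _).trans (Finset.prod_le_prod (fun _ _ => Tri.nu_nonneg _)
            fun i _ => (Tri.nu_pow _ _).trans (pow_le_pow_right₀ (hth i) ?_)))
          exact Nat.mul_le_mul_right _ (lam.1 i).isLt.le
      _ = ((∏ i, Tri.nu (th i) : ℤ) : ℝ) ^ (L * l) := by rw [Finset.prod_pow]; push_cast; ring
      _ ≤ (Real.exp (V - 1)) ^ (L * l) := by
          refine pow_le_pow_left₀ ?_ hV _
          exact_mod_cast Finset.prod_nonneg fun i _ => Tri.nu_nonneg _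
      _ = _ := by rw [← Real.exp_nat_mul]; congr 1; push_cast; ring
  have h2 : ∀ (x : Tri) (n : ℕ), (Tri.nu x : ℝ) ≤ Real.exp A → (Tri.nu (x ^ n) : ℝ) ≤ Real.exp (A * n) := by
    intro x n hx
    calc (Tri.nu (x ^ n) : ℝ) ≤ (Tri.nu x : ℝ) ^ n := by exact_mod_cast Tri.nu_pow x n
      _ ≤ (Real.exp A) ^ n := pow_le_pow_left₀ (h0 _) hx _
      _ = _ := by rw [← Real.exp_nat_mul]; congr 1; ring
  unfold trm
  calc (Tri.nu _ : ℝ) ≤ (Tri.nu (∏ i, th i ^ ((lam.1 i : ℕ) * l)) : ℝ) * Tri.nu (ze ^ ((lam.2 : ℕ) * l)) *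
        Tri.nu (ze' ^ ((L4 - 1 - lam.2) * l)) := by
        have := (Tri.nu_mul ((∏ i, th i ^ ((lam.1 i : ℕ) * l)) * ze ^ ((lam.2 : ℕ) * l))
          (ze' ^ ((L4 - 1 - lam.2) * l))).trans
            (mul_le_mul_of_nonneg_right (Tri.nu_mul _ _) (Tri.nu_nonneg _))
        exact_mod_cast this
    _ ≤ Real.exp ((V - 1) * (L * l)) * Real.exp (A * ((lam.2 : ℕ) * l : ℕ)) *
        Real.exp (A * ((L4 - 1 - lam.2) * l : ℕ)) := by
        gcongr
        · exact h0 _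
        · exact h0 _
        · exact h2 _ _ hze
        · exact h2 _ _ hze'
    _ ≤ _ := by
        rw [← Real.exp_add, ← Real.exp_add]
        apply Real.exp_le_exp.2
        have hl : (lam.2 : ℕ) + (L4 - 1 - lam.2) ≤ L4 := by have := lam.2.isLt; omega
        have : (A : ℝ) * (((lam.2 : ℕ) + (L4 - 1 - lam.2) : ℕ) * l) ≤ L * l := by
          have e : (L : ℝ) = A * L4 := by rw [hL]; push_cast; rfl
          rw [e, mul_assoc]
          gcongr
        push_cast at this ⊢
        linarith

lemma psi_le {a : Fin r → ℝ} {as : ℝ} {A V : ℕ} (ha : ∀ i, 0 ≤ a i) (hV : ∑ i, a i ≤ V - 1) (has : |as| ≤ A)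
    (hL : L = A * L4) (lam : Idx r L L4) : |psi a as lam| ≤ V * L := by
  unfold psi
  refine (abs_add_le _ _).trans ?_
  have h1 : |∑ i, ((lam.1 i : ℕ) : ℝ) * a i| ≤ L * (V - 1) := by
    rw [abs_of_nonneg (Finset.sum_nonneg fun i _ => mul_nonneg (by positivity) (ha i))]
    calc _ ≤ ∑ i, (L : ℝ) * a i := Finset.sum_le_sum fun i _ =>
          mul_le_mul_of_nonneg_right (by exact_mod_cast (lam.1 i).isLt.le) (ha i)
      _ = L * ∑ i, a i := by rw [Finset.mul_sum]
      _ ≤ _ := by gcongr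
  have h2 : |((lam.2 : ℕ) : ℝ) * as| ≤ L := by
    have e : (L : ℝ) = L4 * A := by rw [hL]; push_cast; ring
    rw [abs_mul, Nat.abs_cast, e]
    gcongr
    exact lam.2.isLt.le
  linarith

/-- All derivatives of total order `≤ k` of the auxiliary function vanish at `l`. -/
def Van (th : Fin r → Tri) (ze ze' : Tri) (b : Fin r → ℤ) (b0 : ℤ) (p : Idx r L L4 → ℤ) (k l : ℕ) : Prop :=
  ∀ m : Fin r → ℕ, ∑ i, m i ≤ k → xi th ze ze' b b0 p m l = 0

/-- Vanishing in `ℤ[α]` gives the vanishing of the exact directional derivatives. -/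
lemma van_real {th : Fin r → Tri} {ze ze' : Tri} (hth : ∀ i, 0 < sg (th i)) (h : 0 < sg ze) (h' : 0 < sg ze')
    {b : Fin r → ℤ} {b0 : ℤ} {p : Idx r L L4 → ℤ} {k l : ℕ} (hv : Van th ze ze' b b0 p k l) (w : Fin r → ℝ) (t : ℕ) :
    ∀ m : Fin r → ℕ, ∑ i, m i + t ≤ k → ∑ lam, (p lam * mono b b0 lam m : ℝ) *
      ((∑ i, gam b b0 lam i * w i) ^ t *
      Real.exp (psi (fun i => Real.log (sg (th i))) (Real.log (sg ze) - Real.log (sg ze')) lam * l)) = 0 := by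
  induction t with
  | zero =>
    intro m hm
    have h1 := sg_xi th ze ze' hth h h' b b0 p m l
    rw [hv m hm, map_zero] at h1
    simpa [h'.ne'] using h1.symm
  | succ t ih =>
    intro m hm
    have key : ∀ i : Fin r, ∑ lam, (p lam * (gam b b0 lam i * mono b b0 lam m) : ℝ) *
      ((∑ i, gam b b0 lam i * w i) ^ t *
      Real.exp (psi (fun i => Real.log (sg (th i))) (Real.log (sg ze) - Real.log (sg ze')) lam * l)) = 0 := by
      intro i
      have h2 := ih (Function.update m i (m i + 1)) (by
        rw [Finset.sum_update_of_mem (Finset.mem_univ i)]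
        have := Finset.add_sum_erase Finset.univ m (Finset.mem_univ i)
        rw [← Finset.sdiff_singleton_eq_erase] at this
        omega)
      rw [← h2]
      refine Finset.sum_congr rfl fun lam _ => ?_
      have : mono b b0 lam (Function.update m i (m i + 1)) = gam b b0 lam i * mono b b0 lam m := by
        unfold mono
        rw [← Finset.mul_prod_erase Finset.univ _ (Finset.mem_univ i),
          ← Finset.mul_prod_erase Finset.univ (fun j => gam b b0 lam j ^ m j) (Finset.mem_univ i)]
        rw [Function.update_self, pow_succ', mul_assoc]
        congr 2
        refine Finset.prod_congr rfl fun j hj => ?_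
        rw [Function.update_of_ne (Finset.ne_of_mem_erase hj)]
      rw [this]; push_cast; ring
    have : ∑ i, w i * ∑ lam, (p lam * (gam b b0 lam i * mono b b0 lam m) : ℝ) *
      ((∑ i, gam b b0 lam i * w i) ^ t *
      Real.exp (psi (fun i => Real.log (sg (th i))) (Real.log (sg ze) - Real.log (sg ze')) lam * l)) = 0 :=
      Finset.sum_eq_zero fun i _ => by rw [key i, mul_zero]
    rw [← this]
    simp_rw [Finset.mul_sum]
    rw [Finset.sum_comm]
    refine Finset.sum_congr rfl fun lam _ => ?_
    rw [pow_succ', Finset.sum_mul, Finset.sum_mul, Finset.mul_sum]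
    refine Finset.sum_congr rfl fun i _ => by ring

end Baker

/-! ### Baker's method: extrapolation -/

section Baker

variable {r : ℕ}

/-- The data of a linear form `∑ bᵢ log θᵢ + b₀ log (ζ/ζ')`, with bounds for heights and
coefficients. -/
structure BHyp (th : Fin r → Tri) (ze ze' : Tri) (b : Fin r → ℤ) (b0 : ℤ) (A V : ℕ) (B : ℤ) : Prop where
  th_one : ∀ i, 1 ≤ sg (th i)
  hV : ((∏ i, Tri.nu (th i) : ℤ) : ℝ) ≤ Real.exp (V - 1)
  pos : 0 < sg ze
  pos' : 0 < sg ze'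
  hze : (Tri.nu ze : ℝ) ≤ Real.exp A
  hze' : (Tri.nu ze' : ℝ) ≤ Real.exp A
  has : |Real.log (sg ze) - Real.log (sg ze')| ≤ A
  hb : ∀ i, |b i| ≤ B
  hb0 : |b0| ≤ B
  b0_ne : b0 ≠ 0
  hA : 1 ≤ A
  hV1 : 1 ≤ V

/-- The linear form in logarithms. -/
noncomputable def linForm (th : Fin r → Tri) (ze ze' : Tri) (b : Fin r → ℤ) (b0 : ℤ) : ℝ :=
  ∑ i, b i * Real.log (sg (th i)) + b0 * (Real.log (sg ze) - Real.log (sg ze'))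

variable {th : Fin r → Tri} {ze ze' : Tri} {b : Fin r → ℤ} {b0 : ℤ} {A V : ℕ} {B : ℤ}

lemma BHyp.one_le_B (H : BHyp th ze ze' b b0 A V B) : 1 ≤ B :=
  (Int.one_le_abs H.b0_ne).trans H.hb0

lemma BHyp.nu_one (H : BHyp th ze ze' b b0 A V B) (i : Fin r) : 1 ≤ Tri.nu (th i) := by
  apply Tri.nu_pos
  intro h0
  have := H.th_one i
  rw [h0, map_zero] at this
  linarith

lemma BHyp.sum_log (H : BHyp th ze ze' b b0 A V B) : ∑ i, Real.log (sg (th i)) ≤ V - 1 := by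
  have h1 : ∑ i, Real.log (sg (th i)) ≤ ∑ i, Real.log (Tri.nu (th i)) :=
    Finset.sum_le_sum fun i _ => Real.log_le_log (by linarith [H.th_one i])
      ((le_abs_self _).trans (abs_sg_le _))
  refine h1.trans ?_
  have h2 := H.hV
  push_cast at h2
  rw [← Real.log_prod (fun i _ => by have := H.nu_one i; positivity)]
  rw [Real.log_le_iff_le_exp (Finset.prod_pos fun i _ => by
    have := H.nu_one i; positivity)]
  exact h2

lemma BHyp.psi_eq (H : BHyp th ze ze' b b0 A V B) {L L4 : ℕ} (lam : Idx r L L4) :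
    psi (fun i => Real.log (sg (th i))) (Real.log (sg ze) - Real.log (sg ze')) lam =
      ∑ i, gam b b0 lam i * (Real.log (sg (th i)) / b0) +
        ((lam.2 : ℕ) : ℝ) * linForm th ze ze' b b0 / b0 := by
  have hb : (b0 : ℝ) ≠ 0 := by exact_mod_cast H.b0_ne
  unfold psi linForm gam
  push_cast
  rw [eq_comm, mul_add, Finset.mul_sum, add_div, Finset.sum_div, ← add_assoc, ← Finset.sum_add_distrib]
  congr 1
  · refine Finset.sum_congr rfl fun i _ => ?_
    field_simp; ring
  · field_simp

/-- The extrapolation step: vanishing to order `k` at `0, …, h - 1` implies vanishing to order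
`k - s` at `0, …, 2h - 1`. -/
lemma step (H : BHyp th ze ze' b b0 A V B) {L4 : ℕ} {p : Idx r (A * L4) L4 → ℤ} {k s h : ℕ} {C Ψ : ℝ}
    (hΨ : Ψ = (V * (A * L4) : ℕ)) (hL4 : 1 ≤ L4)
    (hC : ∀ m : Fin r → ℕ, ∑ i, m i ≤ k → ∑ lam, |(p lam * mono b b0 lam m : ℝ)| ≤ C) (hC1 : 1 ≤ C)
    (hs : 0 < s) (hsk : s ≤ k) (hh : 1 ≤ h)
    (hv : ∀ l < h, Van th ze ze' b b0 p k l)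
    (hX2 : C ^ 3 * (14 * (Real.exp (8 * Ψ * h) * (2 * Ψ * h) ^ (h * s) / (h * s).factorial)) ≤ 1)
    (hLam1 : |linForm th ze ze' b b0| * L4 ≤ 1)
    (hX1 : C ^ 3 * (|linForm th ze ze' b b0| * (14 * L4 * s * (Ψ + 1) ^ s * Real.exp (7 * Ψ * h) *
      (h * s : ℕ) * (4 * h) ^ (h * s))) < 1) :
    ∀ l < 2 * h, Van th ze ze' b b0 p (k - s) l := by
  intro l hl m hm
  by_contra hne
  have hΨ1 : 1 ≤ Ψ := by
    rw [hΨ]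
    exact_mod_cast Nat.mul_pos H.hV1 (Nat.mul_pos H.hA hL4)
  have hthp : ∀ i, 0 < sg (th i) := fun i => by linarith [H.th_one i]
  set Lam := linForm th ze ze' b b0 with hLam
  set a : Fin r → ℝ := fun i => Real.log (sg (th i)) with ha
  set as : ℝ := Real.log (sg ze) - Real.log (sg ze') with has
  set c : Idx r (A * L4) L4 → ℝ := fun lam => (p lam * mono b b0 lam m : ℝ) with hc
  have hcC : ∑ lam, |c lam| ≤ C := hC m (by omega)
  have hψ : ∀ lam : Idx r (A * L4) L4, |psi a as lam| ≤ Ψ := by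
    intro lam
    have := psi_le (a := a) (as := as) (fun i => Real.log_nonneg (H.th_one i)) H.sum_log H.has rfl lam
    rw [hΨ]; push_cast at this ⊢; exact this
  set ε : ℝ := C * (|Lam| * L4 * s * (Ψ + 1) ^ s) * Real.exp (Ψ * h) with hε
  have hε0 : 0 ≤ ε := by positivity
  have hb0r : (1 : ℝ) ≤ |(b0 : ℝ)| := by exact_mod_cast Int.one_le_abs H.b0_ne
  have hsmall : ∀ l < h, ∀ t < s, |∑ lam, c lam * (psi a as lam ^ t * Real.exp (psi a as lam * l))| ≤ ε := by
    intro l hl t ht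
    have h0 := van_real hthp H.pos H.pos' (hv l hl) (fun i => a i / b0) t m (by omega)
    have e : ∑ lam, c lam * (psi a as lam ^ t * Real.exp (psi a as lam * l)) =
        ∑ lam, c lam * ((psi a as lam ^ t - (∑ i, gam b b0 lam i * (a i / b0)) ^ t) *
          Real.exp (psi a as lam * l)) := by
      rw [← sub_eq_zero, ← Finset.sum_sub_distrib, ← h0]
      refine Finset.sum_congr rfl fun lam _ => ?_
      simp only [hc]; ring
    rw [e]
    refine (Finset.abs_sum_le_sum_abs _ _).trans ?_
    calc _ ≤ ∑ lam, |c lam| * ((|Lam| * L4 * s * (Ψ + 1) ^ s) * Real.exp (Ψ * h)) := by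
          refine Finset.sum_le_sum fun lam _ => ?_
          rw [abs_mul (c lam), abs_mul (_ - _), Real.abs_exp]
          have hlam : ((lam.2 : ℕ) : ℝ) ≤ L4 := by exact_mod_cast lam.2.isLt.le
          have hdiff : |psi a as lam - ∑ i, gam b b0 lam i * (a i / b0)| ≤ |Lam| * L4 := by
            rw [H.psi_eq, add_sub_cancel_left, abs_div, abs_mul, Nat.abs_cast]
            calc _ ≤ ((lam.2 : ℕ) : ℝ) * |linForm th ze ze' b b0| := div_le_self (by positivity) hb0r
              _ ≤ _ := by rw [mul_comm]; gcongr
          have hS : |∑ i, gam b b0 lam i * (a i / b0)| ≤ Ψ + 1 := by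
            have := abs_sub_abs_le_abs_sub (∑ i, gam b b0 lam i * (a i / b0)) (psi a as lam)
            rw [abs_sub_comm] at this
            linarith [hψ lam]
          gcongr
          · refine (abs_pow_sub_pow_le _ _ t).trans ?_
            have hmax : max |psi a as lam| |∑ i, gam b b0 lam i * (a i / b0)| ≤ Ψ + 1 :=
              max_le (by linarith [hψ lam]) hS
            calc _ ≤ (|Lam| * L4) * s * (Ψ + 1) ^ (t - 1) := by gcongr
              _ ≤ _ := by
                gcongr
                · linarith
                · omega
          · exact (le_abs_self _).trans (hψ lam)
      _ = (∑ lam, |c lam|) * ((|Lam| * L4 * s * (Ψ + 1) ^ s) * Real.exp (Ψ * h)) := by rw [Finset.sum_mul]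
      _ ≤ C * ((|Lam| * L4 * s * (Ψ + 1) ^ s) * Real.exp (Ψ * h)) := by gcongr
      _ = ε := by rw [hε]; ring
  have hh1 : (1 : ℝ) ≤ h := by exact_mod_cast hh
  have hlh : (l : ℝ) ≤ 2 * h := by exact_mod_cast hl.le
  have hF := schwarz c (psi a as) (R := 2 * h) hs (by linarith) (by linarith) hψ hcC hε0 hsmall
    (x := l) (by positivity) hlh (by linarith)
  set F := ∑ lam, c lam * Real.exp (psi a as lam * l) with hFdef
  have hsgxi := sg_xi th ze ze' hthp H.pos H.pos' b b0 p m l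
  have hsgle : |sg (xi th ze ze' b b0 p m l)| ≤ Real.exp (2 * Ψ * h) * |F| := by
    rw [hsgxi, abs_mul]
    gcongr
    rw [abs_pow]
    calc |sg ze'| ^ ((L4 - 1) * l) ≤ (Real.exp A) ^ ((L4 - 1) * l) :=
          pow_le_pow_left₀ (abs_nonneg _) ((abs_sg_le _).trans H.hze') _
      _ = Real.exp (((L4 - 1) * l : ℕ) * A) := by rw [Real.exp_nat_mul]
      _ ≤ _ := by
        apply Real.exp_le_exp.2
        have h1 : (((L4 - 1) * l * A : ℕ)) ≤ V * (A * L4) * (2 * h) := by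
          calc (L4 - 1) * l * A ≤ L4 * (2 * h) * A := by gcongr; omega
            _ = 1 * (A * L4) * (2 * h) := by ring
            _ ≤ _ := by gcongr; exact H.hV1
        have h2 : (((L4 - 1) * l * A : ℕ) : ℝ) ≤ (V * (A * L4) * (2 * h) : ℕ) := by exact_mod_cast h1
        rw [hΨ]; push_cast at h2 ⊢; linarith
  have hnu : (Tri.nu (xi th ze ze' b b0 p m l) : ℝ) ≤ C * Real.exp (2 * Ψ * h) := by
    calc (Tri.nu (xi th ze ze' b b0 p m l) : ℝ) ≤ ∑ lam, |c lam| * Real.exp (2 * Ψ * h) := by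
          unfold xi
          refine (Int.cast_le.2 (Tri.nu_sum _ _)).trans ?_
          rw [Int.cast_sum]
          refine Finset.sum_le_sum fun lam _ => ?_
          refine (Int.cast_le.2 (Tri.nu_mul _ _)).trans ?_
          rw [Int.cast_mul, Tri.nu_intCast]
          simp only [hc]
          push_cast
          gcongr
          refine (trm_le H.nu_one H.hV H.hze H.hze' rfl lam l).trans ?_
          apply Real.exp_le_exp.2
          calc (V : ℝ) * (A * L4 : ℕ) * l = Ψ * l := by rw [hΨ]; push_cast; ring
            _ ≤ Ψ * (2 * h) := by gcongr
            _ = _ := by ring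
      _ = (∑ lam, |c lam|) * Real.exp (2 * Ψ * h) := by rw [Finset.sum_mul]
      _ ≤ _ := by gcongr
  have hli := liouville hne
  have hfin : (1 : ℝ) ≤ Real.exp (2 * Ψ * h) * |F| * (7 * (C * Real.exp (2 * Ψ * h)) ^ 2) := by
    refine hli.trans ?_
    gcongr
    exact_mod_cast Tri.nu_nonneg _
  have e6 : Real.exp (2 * Ψ * h) * (Real.exp (2 * Ψ * h)) ^ 2 = Real.exp (6 * Ψ * h) := by
    rw [← Real.exp_nat_mul, ← Real.exp_add]; congr 1; push_cast; ring
  have hfin2 : (1 : ℝ) ≤ 7 * C ^ 2 * Real.exp (6 * Ψ * h) * |F| := by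
    rw [← e6]; linarith [hfin]
  have hfin3 : (1 : ℝ) ≤ 7 * C ^ 2 * Real.exp (6 * Ψ * h) * (ε * (h * s : ℕ) * (2 * (2 * h)) ^ (h * s) +
      C * (Real.exp (Ψ * (2 * h)) * (Ψ * (2 * h)) ^ (h * s) / (h * s).factorial)) :=
    hfin2.trans (by gcongr)
  have g1 : 7 * C ^ 2 * Real.exp (6 * Ψ * h) * (ε * (h * s : ℕ) * (2 * (2 * h)) ^ (h * s)) =
      (C ^ 3 * (|Lam| * (14 * L4 * s * (Ψ + 1) ^ s * Real.exp (7 * Ψ * h) *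
      (h * s : ℕ) * (4 * h) ^ (h * s)))) / 2 := by
    rw [hε, show (7 : ℝ) * Ψ * h = 6 * Ψ * h + Ψ * h by ring, Real.exp_add,
      show (2 : ℝ) * (2 * h) = 4 * h by ring]
    ring
  have g2 : 7 * C ^ 2 * Real.exp (6 * Ψ * h) *
      (C * (Real.exp (Ψ * (2 * h)) * (Ψ * (2 * h)) ^ (h * s) / (h * s).factorial)) =
      (C ^ 3 * (14 * (Real.exp (8 * Ψ * h) * (2 * Ψ * h) ^ (h * s) / (h * s).factorial))) / 2 := by
    rw [show (8 : ℝ) * Ψ * h = 6 * Ψ * h + Ψ * (2 * h) by ring, Real.exp_add,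
      show Ψ * (2 * h) = 2 * Ψ * h by ring]
    ring
  rw [mul_add, g1, g2] at hfin3
  linarith

end Baker

/-! ### Baker's method: the auxiliary polynomial and the conclusion -/

/-- The coordinates of an element of `ℤ[α]`. -/
def Tri.co (i : Fin 3) : Tri →+ ℤ where
  toFun x := ![x.a, x.b, x.c] i
  map_zero' := by fin_cases i <;> rfl
  map_add' x y := by fin_cases i <;> rfl

lemma Tri.co_le (i : Fin 3) (x : Tri) : |Tri.co i x| ≤ Tri.nu x := by
  have h1 := abs_nonneg x.a
  have h2 := abs_nonneg x.b
  have h3 := abs_nonneg x.c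
  fin_cases i <;> simp [Tri.co, Tri.nu] <;> linarith

lemma Tri.co_intMul (i : Fin 3) (n : ℤ) (x : Tri) : Tri.co i (n * x) = n * Tri.co i x := by
  fin_cases i <;> simp [Tri.co]

lemma Tri.eq_zero_of_co {x : Tri} (h : ∀ i, Tri.co i x = 0) : x = 0 := by
  ext
  · exact h 0
  · exact h 1
  · exact h 2

section Baker

variable {r : ℕ} {th : Fin r → Tri} {ze ze' : Tri} {b : Fin r → ℤ} {b0 : ℤ} {A V : ℕ} {B : ℤ}

attribute [local instance] Matrix.seminormedAddCommGroup

/-- Siegel's lemma provides the coefficients of the auxiliary function. -/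
lemma siegel (H : BHyp th ze ze' b b0 A V B) {L4 k h0 : ℕ} {M : ℝ} (hL4 : 1 ≤ L4) (hh : 1 ≤ h0)
    (hrows : 2 * (3 * h0 * (k + 1) ^ r) ≤ (A * L4) ^ r * L4) (hM1 : 1 ≤ M)
    (hM : ((2 * (A * L4 : ℕ) * B : ℤ) : ℝ) ^ k * Real.exp (V * (A * L4 : ℕ) * h0) ≤ M) :
    ∃ p : Idx r (A * L4) L4 → ℤ, p ≠ 0 ∧ (∀ l < h0, Van th ze ze' b b0 p k l) ∧
      ∀ lam, |(p lam : ℝ)| ≤ ((A * L4) ^ r * L4 : ℕ) * M := by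
  classical
  set R := (Fin r → Fin (k + 1)) × Fin h0 × Fin 3
  set Mt : Matrix R (Idx r (A * L4) L4) ℤ := fun i lam =>
    if ∑ j, (i.1 j : ℕ) ≤ k then
      Tri.co i.2.2 ((mono b b0 lam (fun j => (i.1 j : ℕ)) : Tri) * trm th ze ze' lam i.2.1) else 0 with hMt
  have hcR : Fintype.card R = 3 * h0 * (k + 1) ^ r := by
    simp [R]; ring
  have hcI : Fintype.card (Idx r (A * L4) L4) = (A * L4) ^ r * L4 := by simp [Idx]
  have hpos : 0 < 3 * h0 * (k + 1) ^ r := by positivity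
  obtain ⟨p, hp0, hp1, hp2⟩ := Int.Matrix.exists_ne_zero_int_vec_norm_le Mt
    (by rw [hcR, hcI]; omega) (by rw [hcR]; exact hpos)
  have hB := H.one_le_B
  have hLB : (1 : ℤ) ≤ 2 * (A * L4 : ℕ) * B := by
    have : (1 : ℤ) ≤ (A * L4 : ℕ) := by exact_mod_cast Nat.mul_pos H.hA hL4
    nlinarith
  have hLL : L4 ≤ A * L4 := Nat.le_mul_of_pos_left _ H.hA
  have hMtn : max 1 ‖Mt‖ ≤ M := by
    refine max_le hM1 ((Matrix.norm_le_iff (by linarith)).2 fun i lam => ?_)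
    rw [Int.norm_eq_abs]
    simp only [hMt]
    split_ifs with hc
    · refine le_trans ?_ hM
      calc _ ≤ ((|mono b b0 lam (fun j => (i.1 j : ℕ))| * Tri.nu (trm th ze ze' lam i.2.1) : ℤ) : ℝ) := by
            rw [Tri.co_intMul, ← Int.cast_abs, abs_mul]
            refine Int.cast_le.2 ?_
            exact mul_le_mul_of_nonneg_left (Tri.co_le _ _) (abs_nonneg _)
        _ ≤ _ := by
            rw [Int.cast_mul]
            have h1 := mono_le H.hb H.hb0 hLL lam hc hLB
            have h2 := trm_le H.nu_one H.hV H.hze H.hze' rfl lam i.2.1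
            have h3 : Real.exp (V * (A * L4 : ℕ) * (i.2.1 : ℕ)) ≤ Real.exp (V * (A * L4 : ℕ) * h0) := by
              gcongr
              exact i.2.1.isLt.le
            have h1' : ((|mono b b0 lam (fun j => (i.1 j : ℕ))| : ℤ) : ℝ) ≤
                ((2 * (A * L4 : ℕ) * B : ℤ) : ℝ) ^ k := by exact_mod_cast h1
            refine mul_le_mul h1' (h2.trans h3) ?_ (by
              have : (0 : ℝ) ≤ ((2 * (A * L4 : ℕ) * B : ℤ) : ℝ) := Int.cast_nonneg (by omega)
              positivity)
            exact_mod_cast Tri.nu_nonneg _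
    · simp; linarith
  refine ⟨p, hp0, ?_, ?_⟩
  · intro l hl m hm
    apply Tri.eq_zero_of_co
    intro i
    have hmj : ∀ j, m j < k + 1 := fun j =>
      Nat.lt_succ_of_le ((Finset.single_le_sum (fun _ _ => Nat.zero_le _) (Finset.mem_univ j)).trans hm)
    have := congrFun hp1 ((fun j => ⟨m j, hmj j⟩), ⟨l, hl⟩, i)
    simp only [Matrix.mulVec, dotProduct, hMt, hm, if_true, Pi.zero_apply] at this
    unfold xi
    rw [map_sum, ← this]
    refine Finset.sum_congr rfl fun lam _ => ?_
    rw [Tri.co_intMul, Tri.co_intMul]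
    ring
  · intro lam
    have h1 : |(p lam : ℝ)| ≤ ‖p‖ := by
      have := norm_le_pi_norm p lam
      rwa [Int.norm_eq_abs] at this
    have hN : (1 : ℝ) ≤ ((A * L4) ^ r * L4 : ℕ) := by
      exact_mod_cast (by omega : 1 ≤ (A * L4) ^ r * L4)
    refine h1.trans (hp2.trans ?_)
    rw [hcR, hcI]
    have hbase : (1 : ℝ) ≤ ((A * L4) ^ r * L4 : ℕ) * max 1 ‖Mt‖ := by
      have := le_max_left 1 ‖Mt‖
      nlinarith
    calc _ ≤ (((A * L4) ^ r * L4 : ℕ) * max 1 ‖Mt‖ : ℝ) ^ (1 : ℝ) := by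
          refine Real.rpow_le_rpow_of_exponent_le hbase ?_
          have h2 : (2 : ℝ) * ((3 * h0 * (k + 1) ^ r : ℕ) : ℝ) ≤ ((A * L4) ^ r * L4 : ℕ) := by
            exact_mod_cast hrows
          have h3 : (0 : ℝ) < ((3 * h0 * (k + 1) ^ r : ℕ) : ℝ) := by exact_mod_cast hpos
          rw [div_le_one (by linarith)]
          linarith
      _ ≤ _ := by
          rw [Real.rpow_one]
          gcongr

lemma core_arith {Ψ Hn h0 h w : ℝ} (hΨ1 : 1 ≤ Ψ) (h0p : 0 ≤ h0) (hhr : h0 ≤ h) (h2hr : 2 * h ≤ Hn) (hwr : 2 ≤ w)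
    (hHr : 17 ≤ Hn) : 9 * Ψ * h0 + (-(20 * w * Ψ * Hn) + (7 + 4 * w + 16 * Ψ * w + 7 * Ψ * h +
      16 * Ψ * h * w)) < 0 := by
  have q0 : 17 ≤ Ψ * Hn := by nlinarith
  have q1 : 9 * Ψ * h0 ≤ 9 * (Ψ * Hn) := by
    rw [mul_assoc]; gcongr; linarith
  have q7 : Ψ * h * 2 ≤ Ψ * Hn := by rw [mul_assoc]; gcongr; linarith
  have q3 : 16 * Ψ * h * w ≤ 8 * (w * (Ψ * Hn)) := by
    have := mul_le_mul_of_nonneg_right q7 (by linarith : 0 ≤ w)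
    linarith
  have q4 : 16 * Ψ * w ≤ w * (Ψ * Hn) := by
    have : 16 * Ψ ≤ Ψ * Hn := by rw [mul_comm]; gcongr; linarith
    have := mul_le_mul_of_nonneg_right this (by linarith : 0 ≤ w)
    linarith
  have q5 : 2 * (Ψ * Hn) ≤ w * (Ψ * Hn) := by gcongr
  have q6 : w * 17 ≤ w * (Ψ * Hn) := by gcongr
  linarith

set_option maxHeartbeats 1600000 in
/-- The lower bound for linear forms in logarithms, in the case where the frequencies of the
auxiliary function are pairwise distinct. -/
theorem core (H : BHyp th ze ze' b b0 A V B) {J h0 L4 g w : ℕ} (hJ1 : 1 ≤ J) (hg1 : 1 ≤ g)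
    (hL4 : 6 * h0 * (16 * (V * (A * L4)) * J + 1) ^ r ≤ (A * L4) ^ r * L4)
    (hg : (2 * (A * L4 : ℕ) * B : ℝ) ≤ Real.exp g)
    (hh0 : 16 * J * g + 1 ≤ h0)
    (hN : (((A * L4) ^ r * L4 : ℕ) : ℝ) ≤ Real.exp ((V * (A * L4) : ℕ) - 1))
    (hJ : (A * L4) ^ r * L4 ≤ h0 * 2 ^ J)
    (hw1 : (4 * (h0 * 2 ^ J) : ℝ) ≤ Real.exp w) (hw2 : ((V * (A * L4) : ℕ) + 1 : ℝ) ≤ Real.exp w)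
    (hinj : Function.Injective (psi (r := r) (L := A * L4) (L4 := L4) (fun i => Real.log (sg (th i)))
      (Real.log (sg ze) - Real.log (sg ze'))))
    (hLam : |linForm th ze ze' b b0| ≤ Real.exp (-(20 * w * (V * (A * L4)) * (h0 * 2 ^ J) : ℕ))) : False := by
  have hL4p : 1 ≤ L4 := by
    rcases Nat.eq_zero_or_pos L4 with h | h
    · subst h
      have : 0 < 6 * h0 * (16 * (V * (A * 0)) * J + 1) ^ r := by
        have : 0 < h0 := by omega
        positivity
      omega
    · exact h
  set Ψn : ℕ := V * (A * L4) with hΨn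
  set Ψ : ℝ := (Ψn : ℝ) with hΨ
  set s : ℕ := 16 * Ψn with hs
  set k : ℕ := s * J with hk
  set N : ℕ := (A * L4) ^ r * L4 with hNdef
  have hΨ1n : 1 ≤ Ψn := Nat.mul_pos H.hV1 (Nat.mul_pos H.hA hL4p)
  have hΨ1 : 1 ≤ Ψ := by rw [hΨ]; exact_mod_cast hΨ1n
  have hh01 : 17 ≤ h0 := by nlinarith
  have hB := H.one_le_B
  have hLB : (1 : ℤ) ≤ 2 * (A * L4 : ℕ) * B := by
    have : (1 : ℤ) ≤ (A * L4 : ℕ) := by exact_mod_cast Nat.mul_pos H.hA hL4p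
    nlinarith
  have hLBr : (1 : ℝ) ≤ ((2 * (A * L4 : ℕ) * B : ℤ) : ℝ) := by exact_mod_cast hLB
  have hLBk : ((2 * (A * L4 : ℕ) * B : ℤ) : ℝ) ^ k ≤ Real.exp (Ψ * (h0 - 1)) := by
    calc _ ≤ (Real.exp g) ^ k := by
          refine pow_le_pow_left₀ (by linarith) ?_ _
          push_cast at hg ⊢; exact hg
      _ = Real.exp (k * g) := by rw [Real.exp_nat_mul]
      _ ≤ _ := by
          apply Real.exp_le_exp.2
          have : (16 * J * g + 1 : ℝ) ≤ h0 := by exact_mod_cast hh0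
          have e : (k : ℝ) = 16 * Ψ * J := by rw [hk, hs]; push_cast; ring
          rw [e]
          calc 16 * Ψ * J * g = Ψ * (16 * J * g) := by ring
            _ ≤ _ := by gcongr; linarith
  have hLLe : L4 ≤ A * L4 := Nat.le_mul_of_pos_left _ H.hA
  obtain ⟨p, hp0, hpV, hpB⟩ := siegel H (k := k) (h0 := h0) (M := Real.exp (Ψ * (h0 - 1)) * Real.exp (Ψ * h0))
    hL4p (by omega) (by
      have e : 2 * (3 * h0 * (k + 1) ^ r) = 6 * h0 * (k + 1) ^ r := by ring
      rw [e]; exact hL4) (by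
        rw [← Real.exp_add]
        apply Real.one_le_exp
        have : (17 : ℝ) ≤ h0 := by exact_mod_cast hh01
        have : 0 ≤ Ψ * (h0 - 1) := mul_nonneg (by linarith) (by linarith)
        have : 0 ≤ Ψ * h0 := by positivity
        linarith) (by
        have e : Real.exp (V * (A * L4 : ℕ) * h0) = Real.exp (Ψ * h0) := by
          rw [hΨ, hΨn]; push_cast; rfl
        rw [e]
        gcongr)
  set C : ℝ := Real.exp (3 * Ψ * h0 - 2) with hCdef
  have hh0r : (17 : ℝ) ≤ h0 := by exact_mod_cast hh01
  have hC1 : 1 ≤ C := by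
    apply Real.one_le_exp
    have : 1 * 17 ≤ Ψ * h0 := by gcongr
    linarith
  have hcard : Fintype.card (Idx r (A * L4) L4) = N := by simp [Idx, hNdef]
  have hCb : ∀ m : Fin r → ℕ, ∑ i, m i ≤ k → ∑ lam, |(p lam * mono b b0 lam m : ℝ)| ≤ C := by
    intro m hm
    calc ∑ lam, |(p lam * mono b b0 lam m : ℝ)| ≤ ∑ _lam : Idx r (A * L4) L4, (N : ℝ) * (Real.exp (Ψ * (h0 - 1)) *
          Real.exp (Ψ * h0)) * Real.exp (Ψ * (h0 - 1)) := by
          refine Finset.sum_le_sum fun lam _ => ?_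
          rw [abs_mul]
          refine mul_le_mul (hpB lam) ?_ (abs_nonneg _) (by positivity)
          refine le_trans ?_ hLBk
          exact_mod_cast mono_le H.hb H.hb0 hLLe lam hm hLB
      _ = N * (N * (Real.exp (Ψ * (h0 - 1)) * Real.exp (Ψ * h0)) * Real.exp (Ψ * (h0 - 1))) := by
          rw [Finset.sum_const, Finset.card_univ, hcard, nsmul_eq_mul]
      _ ≤ Real.exp (Ψ - 1) * (Real.exp (Ψ - 1) * (Real.exp (Ψ * (h0 - 1)) * Real.exp (Ψ * h0)) *
            Real.exp (Ψ * (h0 - 1))) := by gcongr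
      _ = C := by
          rw [hCdef, ← Real.exp_add, ← Real.exp_add, ← Real.exp_add, ← Real.exp_add]
          congr 1; ring
  have hC3 : C ^ 3 * 14 ≤ Real.exp (9 * Ψ * h0) := by
    have h14 : (14 : ℝ) ≤ Real.exp 6 := by
      have h2 : (2 : ℝ) ≤ Real.exp 1 := by linarith [Real.add_one_le_exp 1]
      calc (14 : ℝ) ≤ 2 ^ 6 := by norm_num
        _ ≤ (Real.exp 1) ^ 6 := by gcongr
        _ = _ := by rw [← Real.exp_nat_mul]; norm_num
    calc C ^ 3 * 14 ≤ C ^ 3 * Real.exp 6 := by gcongr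
      _ = _ := by rw [hCdef, ← Real.exp_nat_mul, ← Real.exp_add]; congr 1; push_cast; ring
  set Hn : ℕ := h0 * 2 ^ J with hHn
  have hHh0 : h0 ≤ Hn := Nat.le_mul_of_pos_right _ (by positivity)
  have hL4Ψ : L4 ≤ Ψn := hLLe.trans (Nat.le_mul_of_pos_left _ H.hV1)
  have hL4Ψr : (L4 : ℝ) ≤ Ψ := by rw [hΨ]; exact_mod_cast hL4Ψ
  have hHr : (17 : ℝ) ≤ Hn := by exact_mod_cast hh01.trans hHh0
  have hw1' : (4 * Hn : ℝ) ≤ Real.exp w := by rw [hHn]; push_cast; exact hw1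
  have hwpos : 2 ≤ w := by
    by_contra hlt
    have hw' : (w : ℝ) ≤ 1 := by exact_mod_cast (by omega : w ≤ 1)
    have : Real.exp w ≤ Real.exp 1 := Real.exp_le_exp.2 hw'
    have := Real.exp_one_lt_d9
    linarith
  have hwr : (2 : ℝ) ≤ w := by exact_mod_cast hwpos
  have hUr : ((20 * w * Ψn * Hn : ℕ) : ℝ) = 20 * w * Ψ * Hn := by push_cast; rfl
  rw [hUr] at hLam
  have hΨH : 17 ≤ Ψ * Hn := by
    calc (17 : ℝ) = 1 * 17 := by norm_num
      _ ≤ _ := by gcongr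
  -- the extrapolation, step by step
  have hind : ∀ j ≤ J, ∀ l < h0 * 2 ^ j, Van th ze ze' b b0 p (s * (J - j)) l := by
    intro j
    induction j with
    | zero => intro _ l hl; simpa using hpV l (by simpa using hl)
    | succ j ih =>
      intro hj l hl
      set h : ℕ := h0 * 2 ^ j with hh
      have hhh0 : h0 ≤ h := Nat.le_mul_of_pos_right _ (by positivity)
      have h2h : 2 * h ≤ Hn := by
        rw [hh, hHn]
        calc 2 * (h0 * 2 ^ j) = h0 * 2 ^ (j + 1) := by rw [pow_succ]; ring
          _ ≤ _ := by gcongr; norm_num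
      have hhr : (h0 : ℝ) ≤ h := by exact_mod_cast hhh0
      have h2hr : (2 * h : ℝ) ≤ Hn := by exact_mod_cast h2h
      have hhs : ((h * s : ℕ) : ℝ) = 16 * Ψ * h := by rw [hs]; push_cast; ring
      have e1 : s * (J - (j + 1)) = s * (J - j) - s := by
        have : J - j = J - (j + 1) + 1 := by omega
        rw [this, mul_add, mul_one]; omega
      rw [e1]
      have hle : s * (J - j) ≤ k := Nat.mul_le_mul_left _ (Nat.sub_le _ _)
      refine step H (Ψ := Ψ) (h := h) (C := C) (by rw [hΨ, hΨn]) hL4p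
        (fun m hm => hCb m (hm.trans hle)) hC1 (by omega) ?_ (by omega) (ih (by omega)) ?_ ?_ ?_ l
        (by rw [hh]; rw [pow_succ] at hl; linarith)
      · exact Nat.le_mul_of_pos_right _ (by omega)
      · have hfac : (2 * Ψ * h) ^ (h * s) / ((h * s).factorial : ℝ) ≤ Real.exp (-(17 * Ψ * h)) := by
          have h1 := Real.pow_div_factorial_le_exp (((h * s : ℕ) : ℝ)) (by positivity) (h * s)
          have e : 2 * Ψ * h = ((h * s : ℕ) : ℝ) * (1 / 8) := by rw [hhs]; ring
          rw [e, mul_pow, mul_div_right_comm]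
          have h8 : (1 / 8 : ℝ) ≤ Real.exp (-(2079 / 1000)) := by
            rw [Real.exp_neg, one_div]
            apply inv_anti₀ (Real.exp_pos _)
            rw [← Real.le_log_iff_exp_le (by norm_num)]
            have : Real.log 8 = 3 * Real.log 2 := by
              rw [show (8 : ℝ) = 2 ^ 3 by norm_num, Real.log_pow]; norm_num
            rw [this]
            linarith [Real.log_two_gt_d9]
          calc _ ≤ Real.exp ((h * s : ℕ) : ℝ) * (Real.exp (-(2079 / 1000))) ^ (h * s) := by gcongr
            _ = Real.exp (((h * s : ℕ) : ℝ) - 2079 / 1000 * ((h * s : ℕ) : ℝ)) := by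
                rw [← Real.exp_nat_mul, ← Real.exp_add]; congr 1; ring
            _ ≤ _ := by
                apply Real.exp_le_exp.2
                rw [hhs]
                have : 0 ≤ Ψ * h := by positivity
                linarith
        calc C ^ 3 * (14 * (Real.exp (8 * Ψ * h) * (2 * Ψ * h) ^ (h * s) / ((h * s).factorial : ℝ)))
            = (C ^ 3 * 14) * (Real.exp (8 * Ψ * h) * ((2 * Ψ * h) ^ (h * s) / ((h * s).factorial : ℝ))) := by
              ring
          _ ≤ Real.exp (9 * Ψ * h0) * (Real.exp (8 * Ψ * h) * Real.exp (-(17 * Ψ * h))) := by gcongr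
          _ ≤ 1 := by
              rw [← Real.exp_add, ← Real.exp_add, Real.exp_le_one_iff]
              have : 9 * Ψ * h0 ≤ 9 * Ψ * h := by gcongr
              linarith
      · calc _ ≤ Real.exp (-(20 * w * Ψ * Hn)) * Real.exp w := by
              gcongr
              linarith
          _ ≤ 1 := by
              rw [← Real.exp_add, Real.exp_le_one_iff]
              have : (w : ℝ) * 17 ≤ w * (Ψ * Hn) := by gcongr
              linarith
      · have hpoly : (L4 * s * (h * s : ℕ) : ℝ) ≤ Real.exp (7 + 4 * w) := by
          have h7 : (256 : ℝ) ≤ Real.exp 7 := by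
            have h2 : (2.7 : ℝ) ≤ Real.exp 1 := by linarith [Real.exp_one_gt_d9]
            calc (256 : ℝ) ≤ 2.7 ^ 7 := by norm_num
              _ ≤ (Real.exp 1) ^ 7 := by gcongr
              _ = _ := by rw [← Real.exp_nat_mul]; norm_num
          have hL : (L4 : ℝ) ≤ Real.exp w := by linarith
          have hΨe : Ψ ≤ Real.exp w := by linarith
          have hhe : (h : ℝ) ≤ Real.exp w := by linarith
          calc (L4 * s * (h * s : ℕ) : ℝ) = 256 * (L4 * Ψ * Ψ * h) := by
                rw [hhs, hs]; push_cast; ring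
            _ ≤ Real.exp 7 * (Real.exp w * Real.exp w * Real.exp w * Real.exp w) := by gcongr
            _ = _ := by
                rw [← Real.exp_add, ← Real.exp_add, ← Real.exp_add, ← Real.exp_add]; congr 1; ring
        have hpw1 : (Ψ + 1) ^ s ≤ Real.exp (16 * Ψ * w) := by
          calc _ ≤ (Real.exp w) ^ s := by gcongr
            _ = _ := by rw [← Real.exp_nat_mul, hs]; congr 1; push_cast; ring
        have hpw2 : (4 * h : ℝ) ^ (h * s) ≤ Real.exp (16 * Ψ * h * w) := by
          calc _ ≤ (Real.exp w) ^ (h * s) := by gcongr; linarith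
            _ = _ := by rw [← Real.exp_nat_mul, hhs]
        calc C ^ 3 * (|linForm th ze ze' b b0| * (14 * L4 * s * (Ψ + 1) ^ s * Real.exp (7 * Ψ * h) *
              (h * s : ℕ) * (4 * h) ^ (h * s)))
            = (C ^ 3 * 14) * (|linForm th ze ze' b b0| * ((L4 * s * (h * s : ℕ)) * (Ψ + 1) ^ s *
                Real.exp (7 * Ψ * h) * (4 * h) ^ (h * s))) := by ring
          _ ≤ Real.exp (9 * Ψ * h0) * (Real.exp (-(20 * w * Ψ * Hn)) * (Real.exp (7 + 4 * w) *
                Real.exp (16 * Ψ * w) * Real.exp (7 * Ψ * h) * Real.exp (16 * Ψ * h * w))) := by gcongr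
          _ < 1 := by
              rw [← Real.exp_add, ← Real.exp_add, ← Real.exp_add, ← Real.exp_add, ← Real.exp_add,
                Real.exp_lt_one_iff]
              exact core_arith hΨ1 (by linarith) hhr h2hr hwr hHr
  have hvan : ∀ l < N, Van th ze ze' b b0 p 0 l := by
    intro l hl
    have := hind J le_rfl l (lt_of_lt_of_le hl hJ)
    simpa using this
  apply hp0
  -- the vanishing of the sums `∑ p(λ) exp(ψ(λ) l)` for `l < N` contradicts Vandermonde
  set ps : Idx r (A * L4) L4 → ℝ := psi (fun i => Real.log (sg (th i))) (Real.log (sg ze) - Real.log (sg ze')) with hps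
  let e : Fin N ≃ Idx r (A * L4) L4 := (Fintype.equivFinOfCardEq hcard).symm
  have hv0 : (fun i => (p (e i) : ℝ)) = 0 := by
    refine Matrix.eq_zero_of_forall_pow_sum_mul_pow_eq_zero (f := fun i => Real.exp (ps (e i))) ?_ ?_
    · intro i j hij
      exact e.injective (hinj (Real.exp_injective hij))
    · intro i
      have h1 := sg_xi th ze ze' (fun i => by linarith [H.th_one i]) H.pos H.pos' b b0 p (fun _ => 0) i
      rw [hvan i i.isLt (fun _ => 0) (by simp), map_zero] at h1
      have h2 : sg ze' ^ ((L4 - 1) * (i : ℕ)) ≠ 0 := pow_ne_zero _ H.pos'.ne'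
      have h3 := (mul_eq_zero.1 h1.symm).resolve_left h2
      rw [← h3, ← Equiv.sum_comp e]
      refine Finset.sum_congr rfl fun j _ => ?_
      rw [← Real.exp_nat_mul, hps, mul_comm ((i : ℕ) : ℝ)]
      simp [mono]
  funext lam
  have := congrFun hv0 (e.symm lam)
  simpa using this

end Baker

/-! ### Explicit lower bounds for linear forms in logarithms -/

section Baker

variable {r : ℕ} {th : Fin r → Tri} {ze ze' : Tri} {b : Fin r → ℤ} {b0 : ℤ} {A V : ℕ} {B : ℤ}

/-- The number of starting points of the extrapolation. -/
def bh (J g : ℕ) : ℕ := 16 * J * g + 1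

/-- The range of the exponent of the distinguished logarithm. -/
def bL (r V J g : ℕ) : ℕ := 6 * bh J g * (17 * V * J) ^ r

/-- The exponent in the lower bound `exp (-bU)`. -/
def bU (r A V J g : ℕ) : ℕ := 20 * (2 * J) * (V * (A * bL r V J g)) * (bh J g * 2 ^ J)

lemma pow_le_exp_aux {x : ℝ} (hx : 100 ≤ x) : x ^ 4 ≤ Real.exp (x - 1) := by
  have h := Real.pow_div_factorial_le_exp (x - 1) (by linarith) 6
  refine le_trans ?_ h
  rw [le_div_iff₀ (by positivity)]
  have h1 : (0.99 * x) ^ 6 ≤ (x - 1) ^ 6 := by gcongr; linarith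
  refine le_trans ?_ h1
  have e : (Nat.factorial 6 : ℝ) = 720 := by norm_num [Nat.factorial]
  rw [e, mul_pow, show x ^ 6 = x ^ 4 * x ^ 2 by ring]
  have h2 : (100 : ℝ) ^ 2 ≤ x ^ 2 := by gcongr
  have h3 : 0 ≤ x ^ 4 := by positivity
  nlinarith

theorem core' (H : BHyp th ze ze' b b0 A V B) {J g : ℕ} (hr : 1 ≤ r) (hr3 : r ≤ 3) (hJ1 : 1 ≤ J) (hg1 : 1 ≤ g)
    (hg : 2 * (A * bL r V J g : ℕ) * B ≤ 2 ^ g)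
    (hJ : (A * bL r V J g) ^ r * bL r V J g ≤ bh J g * 2 ^ J)
    (hw : 4 * bh J g ≤ 3 ^ J)
    (hinj : Function.Injective (psi (r := r) (L := A * bL r V J g) (L4 := bL r V J g)
      (fun i => Real.log (sg (th i))) (Real.log (sg ze) - Real.log (sg ze')))) :
    Real.exp (-(bU r A V J g : ℕ)) < |linForm th ze ze' b b0| := by
  by_contra hcon
  have hV := H.hV1
  have hA := H.hA
  have hh0 : 17 ≤ bh J g := by unfold bh; nlinarith
  have h17 : 17 * V ≤ (17 * V * J) ^ r := by
    calc 17 * V ≤ 17 * V * J := Nat.le_mul_of_pos_right _ hJ1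
      _ ≤ _ := Nat.le_self_pow (by omega) _
  have hLV : 102 * (17 * V) ≤ bL r V J g := by
    unfold bL
    calc 102 * (17 * V) ≤ (6 * bh J g) * (17 * V * J) ^ r := Nat.mul_le_mul (by omega) h17
      _ = _ := rfl
  set L4 := bL r V J g with hL4
  have hALp : 1 ≤ A * L4 := Nat.mul_pos hA (by omega)
  have hLA : L4 ≤ A * L4 := Nat.le_mul_of_pos_left _ hA
  have hNN : (A * L4) * L4 ≤ (A * L4) ^ r * L4 := Nat.mul_le_mul_right _ (Nat.le_self_pow (by omega) _)
  have hΨN : V * (A * L4) + 1 ≤ bh J g * 2 ^ J := by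
    refine le_trans ?_ hJ
    refine le_trans ?_ hNN
    have : 17 * V ≤ L4 := by omega
    calc V * (A * L4) + 1 ≤ V * (A * L4) + V * (A * L4) := by
          gcongr; exact Nat.mul_pos hV hALp
      _ = (A * L4) * (2 * V) := by ring
      _ ≤ _ := by gcongr; omega
  have hew : (4 * (bh J g * 2 ^ J) : ℝ) ≤ Real.exp ((2 * J : ℕ) : ℝ) := by
    have h1 : (4 * bh J g : ℝ) ≤ 3 ^ J := by exact_mod_cast hw
    calc (4 * (bh J g * 2 ^ J) : ℝ) = (4 * bh J g) * 2 ^ J := by ring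
      _ ≤ 3 ^ J * 2 ^ J := by gcongr
      _ = (6 : ℝ) ^ J := by rw [← mul_pow]; norm_num
      _ ≤ (Real.exp 2) ^ J := by
          gcongr
          have h2 : (2.7 : ℝ) ≤ Real.exp 1 := by linarith [Real.exp_one_gt_d9]
          calc (6 : ℝ) ≤ 2.7 ^ 2 := by norm_num
            _ ≤ (Real.exp 1) ^ 2 := by gcongr
            _ = _ := by rw [← Real.exp_nat_mul]; norm_num
      _ = _ := by rw [← Real.exp_nat_mul]; congr 1; push_cast; ring
  refine core H (J := J) (h0 := bh J g) (L4 := L4) (g := g) (w := 2 * J) hJ1 hg1 ?_ ?_ le_rfl ?_ hJ hew ?_ hinj ?_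
  · calc 6 * bh J g * (16 * (V * (A * L4)) * J + 1) ^ r ≤ 6 * bh J g * ((17 * V * J) * (A * L4)) ^ r := by
          gcongr
          have : 1 ≤ V * (A * L4) * J := Nat.mul_pos (Nat.mul_pos hV hALp) hJ1
          linarith
      _ = (A * L4) ^ r * L4 := by rw [mul_pow, hL4, bL]; ring
  · calc (2 * (A * L4 : ℕ) * B : ℝ) ≤ 2 ^ g := by exact_mod_cast hg
      _ ≤ (Real.exp 1) ^ g := by
        gcongr
        linarith [Real.exp_one_gt_d9]
      _ = _ := by rw [← Real.exp_nat_mul]; norm_num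
  · have hx : (100 : ℝ) ≤ (A * L4 : ℕ) := by exact_mod_cast (by omega : 100 ≤ A * L4)
    calc (((A * L4) ^ r * L4 : ℕ) : ℝ) ≤ ((A * L4 : ℕ) : ℝ) ^ 4 := by
          have : (A * L4) ^ r * L4 ≤ (A * L4) ^ 4 := by
            calc (A * L4) ^ r * L4 ≤ (A * L4) ^ 3 * (A * L4) := by gcongr
              _ = _ := by ring
          exact_mod_cast this
      _ ≤ Real.exp (((A * L4 : ℕ) : ℝ) - 1) := pow_le_exp_aux hx
      _ ≤ _ := by
        have : ((A * L4 : ℕ) : ℝ) ≤ (V * (A * L4) : ℕ) := by exact_mod_cast Nat.le_mul_of_pos_left _ hV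
        gcongr
  · have : ((V * (A * L4) : ℕ) + 1 : ℝ) ≤ bh J g * 2 ^ J := by exact_mod_cast hΨN
    have h0 : (0 : ℝ) ≤ bh J g * 2 ^ J := by positivity
    linarith
  · rw [bU, ← hL4] at hcon
    exact not_lt.1 hcon

end Baker

/-! ### Multiplicative independence -/

lemma norm_de : Tri.norm Tri.de = 44 := by decide

lemma norm_nat (n : ℕ) : Tri.norm (n : Tri) = (n : ℤ) ^ 3 := by
  have := Tri.norm_intCast n
  simpa using this

/-- The numbers `α`, `2`, `3` and `δ` are multiplicatively independent, by comparing norms. -/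
lemma indep4 {i j k l i' j' k' l' : ℕ}
    (h : (Tri.al ^ i * 2 ^ j * 3 ^ k * Tri.de ^ l : Tri) = Tri.al ^ i' * 2 ^ j' * 3 ^ k' * Tri.de ^ l') :
    i = i' ∧ j = j' ∧ k = k' ∧ l = l' := by
  have hn := congrArg Tri.norm h
  have h2 : Tri.norm 2 = 8 := by have := norm_nat 2; norm_num at this; exact this
  have h3 : Tri.norm 3 = 27 := by have := norm_nat 3; norm_num at this; exact this
  simp only [Tri.norm_mul, Tri.norm_pow, norm_de, h2, h3, Tri.norm_al, one_pow, one_mul] at hn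
  have hnn : 8 ^ j * 27 ^ k * 44 ^ l = 8 ^ j' * 27 ^ k' * 44 ^ l' := by exact_mod_cast hn
  have key : ∀ a b c : ℕ, 8 ^ a * 27 ^ b * 44 ^ c = 2 ^ (3 * a + 2 * c) * (3 ^ (3 * b) * 11 ^ c) := by
    intro a b c
    rw [show (44 : ℕ) = 2 ^ 2 * 11 by norm_num, mul_pow, pow_add, pow_mul, pow_mul, pow_mul]
    norm_num; ring
  rw [key, key] at hnn
  have e2 := congrArg (padicValNat 2) hnn
  have e3 := congrArg (padicValNat 3) hnn
  have e11 := congrArg (padicValNat 11) hnn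
  have : Fact (Nat.Prime 11) := ⟨by norm_num⟩
  have : Fact (Nat.Prime 3) := ⟨by norm_num⟩
  have z : ∀ p q n : ℕ, p.Prime → q.Prime → p ≠ q → padicValNat p (q ^ n) = 0 := by
    intro p q n hp hq hne
    have := Fact.mk hp
    apply padicValNat.eq_zero_of_not_dvd
    intro hd
    exact hne ((Nat.prime_dvd_prime_iff_eq hp hq).1 (hp.dvd_of_dvd_pow hd))
  have v2 : ∀ a b c : ℕ, padicValNat 2 (2 ^ a * (3 ^ b * 11 ^ c)) = a := by
    intro a b c
    rw [padicValNat.mul (by positivity) (by positivity), padicValNat.mul (by positivity) (by positivity),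
      padicValNat.prime_pow, z 2 3 b (by norm_num) (by norm_num) (by norm_num),
      z 2 11 c (by norm_num) (by norm_num) (by norm_num)]; omega
  have v3 : ∀ a b c : ℕ, padicValNat 3 (2 ^ a * (3 ^ b * 11 ^ c)) = b := by
    intro a b c
    rw [padicValNat.mul (by positivity) (by positivity), padicValNat.mul (by positivity) (by positivity),
      padicValNat.prime_pow, z 3 2 a (by norm_num) (by norm_num) (by norm_num),
      z 3 11 c (by norm_num) (by norm_num) (by norm_num)]; omega
  have v11 : ∀ a b c : ℕ, padicValNat 11 (2 ^ a * (3 ^ b * 11 ^ c)) = c := by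
    intro a b c
    rw [padicValNat.mul (by positivity) (by positivity), padicValNat.mul (by positivity) (by positivity),
      padicValNat.prime_pow, z 11 3 b (by norm_num) (by norm_num) (by norm_num),
      z 11 2 a (by norm_num) (by norm_num) (by norm_num)]; omega
  rw [v2, v2] at e2
  rw [v3, v3] at e3
  rw [v11, v11] at e11
  obtain rfl : l = l' := e11
  obtain rfl : j = j' := by omega
  obtain rfl : k = k' := by omega
  refine ⟨?_, rfl, rfl, rfl⟩
  have hs := congrArg sg h
  simp only [map_mul, map_pow, sg_al, map_ofNat, sg_de] at hs
  have hd : 0 < rδ := by linarith [rδ_bounds.1]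
  have hne : (2 : ℝ) ^ j * (3 ^ k * rδ ^ l) ≠ 0 := by positivity
  have hp : rα ^ i = rα ^ i' := by
    apply mul_right_cancel₀ hne
    rw [← mul_assoc, ← mul_assoc, ← mul_assoc, ← mul_assoc]
    exact hs
  exact (pow_right_strictMono₀ (by linarith [rα_gt])).injective hp

/-! ### The two linear forms -/

lemma exp_three_gt : (20 : ℝ) ≤ Real.exp 3 := by
  have h2 : (2.718 : ℝ) ≤ Real.exp 1 := by linarith [Real.exp_one_gt_d9]
  calc (20 : ℝ) ≤ 2.718 ^ 3 := by norm_num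
    _ ≤ (Real.exp 1) ^ 3 := by gcongr
    _ = _ := by rw [← Real.exp_nat_mul]; norm_num

lemma exp_two_gt : (7.38 : ℝ) ≤ Real.exp 2 := by
  have h2 : (2.718 : ℝ) ≤ Real.exp 1 := by linarith [Real.exp_one_gt_d9]
  calc (7.38 : ℝ) ≤ 2.718 ^ 2 := by norm_num
    _ ≤ (Real.exp 1) ^ 2 := by gcongr
    _ = _ := by rw [← Real.exp_nat_mul]; norm_num

lemma sg_two : sg 2 = 2 := map_ofNat sg 2

lemma sg_three : sg 3 = 3 := map_ofNat sg 3

lemma sg_eq {x y : Tri} (h : sg x = sg y) : x = y :=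
  sub_eq_zero.1 (sg_inj (by rw [map_sub, h, sub_self]))

lemma rα_one : 1 < rα := by linarith [rα_gt]

lemma rδ_pos : 0 < rδ := by linarith [rδ_bounds.1]

lemma log_rα_pos : 0 < Real.log rα := Real.log_pos rα_one

/-- Lower bound for `x log 2 + y log 3 + log δ - n log α`. -/
theorem baker3 {n x y J g B : ℕ} (hn : n ≤ B) (hx : x ≤ B) (hy : y ≤ B) (hB : 1 ≤ B) (hJ1 : 1 ≤ J) (hg1 : 1 ≤ g)
    (hg : 2 * (3 * bL 3 4 J g) * B ≤ 2 ^ g)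
    (hJ : (3 * bL 3 4 J g) ^ 3 * bL 3 4 J g ≤ bh J g * 2 ^ J)
    (hw : 4 * bh J g ≤ 3 ^ J) :
    Real.exp (-(bU 3 3 4 J g : ℕ)) <
      |x * Real.log 2 + y * Real.log 3 + Real.log rδ - n * Real.log rα| := by
  have H : BHyp ![Tri.al, 2, 3] Tri.de 1 ![-(n : ℤ), x, y] 1 3 4 (B : ℤ) := by
    have hnde : Tri.nu Tri.de = 13 := by decide
    refine ⟨?_, ?_, ?_, ?_, ?_, ?_, ?_, ?_, ?_, by norm_num, by norm_num, by norm_num⟩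
    · intro i; fin_cases i
      · simpa [sg_al] using rα_one.le
      · simp [sg_two]
      · simp [sg_three]
    · have e : ∏ i, Tri.nu (![Tri.al, 2, 3] i) = 12 := by
        rw [Fin.prod_univ_three]; decide
      rw [e]
      norm_num
      linarith [exp_three_gt]
    · rw [sg_de]; exact rδ_pos
    · simp
    · rw [hnde]; push_cast; linarith [exp_three_gt]
    · rw [Tri.nu_one]; push_cast; linarith [exp_three_gt]
    · rw [sg_de, map_one, Real.log_one, sub_zero, abs_of_nonneg (Real.log_nonneg (by linarith [rδ_bounds.1]))]
      push_cast
      rw [Real.log_le_iff_le_exp rδ_pos]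
      linarith [exp_three_gt, rδ_bounds.2]
    · intro i; fin_cases i
      · simpa using hn
      · simpa using hx
      · simpa using hy
    · simpa using hB
  have hmain := core' H (J := J) (g := g) (by norm_num) (by norm_num) hJ1 hg1 (by exact_mod_cast hg) hJ hw ?_
  · have e : linForm ![Tri.al, 2, 3] Tri.de 1 ![-(n : ℤ), x, y] 1 =
        x * Real.log 2 + y * Real.log 3 + Real.log rδ - n * Real.log rα := by
      unfold linForm
      rw [Fin.sum_univ_three]
      simp [sg_al, sg_de, sg_two, sg_three]
      ring
    rwa [e] at hmain
  · intro lam lam' h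
    have key : ∀ mu : Idx 3 (3 * bL 3 4 J g) (bL 3 4 J g),
        sg (Tri.al ^ (mu.1 0 : ℕ) * 2 ^ (mu.1 1 : ℕ) * 3 ^ (mu.1 2 : ℕ) * Tri.de ^ (mu.2 : ℕ)) =
        Real.exp (psi (fun i => Real.log (sg ((![Tri.al, 2, 3] : Fin 3 → Tri) i)))
          (Real.log (sg Tri.de) - Real.log (sg 1)) mu) := by
      intro mu
      unfold psi
      rw [Fin.sum_univ_three]
      simp only [map_mul, map_pow, sg_al, sg_de, sg_two, sg_three, map_one, Real.log_one, sub_zero,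
        Matrix.cons_val]
      rw [Real.exp_add, Real.exp_add, Real.exp_add, Real.exp_nat_mul, Real.exp_nat_mul, Real.exp_nat_mul,
        Real.exp_nat_mul, Real.exp_log rα_pos, Real.exp_log two_pos, Real.exp_log three_pos,
        Real.exp_log rδ_pos]
    have h1 : sg (Tri.al ^ (lam.1 0 : ℕ) * 2 ^ (lam.1 1 : ℕ) * 3 ^ (lam.1 2 : ℕ) * Tri.de ^ (lam.2 : ℕ)) =
        sg (Tri.al ^ (lam'.1 0 : ℕ) * 2 ^ (lam'.1 1 : ℕ) * 3 ^ (lam'.1 2 : ℕ) * Tri.de ^ (lam'.2 : ℕ)) := by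
      rw [key, key]; exact congrArg _ h
    obtain ⟨e0, e1, e2, e3⟩ := indep4 (sg_eq h1)
    refine Prod.ext ?_ (Fin.ext e3)
    funext i
    fin_cases i
    · exact Fin.ext e0
    · exact Fin.ext e1
    · exact Fin.ext e2

/-- `α` and `q ∈ {2, 3}` are multiplicatively independent, in additive form. -/
lemma indep_q {q : ℕ} (hq : q = 2 ∨ q = 3) {c d : ℤ} (h : c * Real.log rα + d * Real.log q = 0) : c = 0 ∧ d = 0 := by
  have hqp : (0 : ℝ) < q := by rcases hq with rfl | rfl <;> norm_num
  have key : ∀ i j i' j' : ℕ, (i : ℝ) * Real.log rα + j * Real.log q = i' * Real.log rα + j' * Real.log q →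
      i = i' ∧ j = j' := by
    intro i j i' j' hh
    have h1 : sg (Tri.al ^ i * (q : Tri) ^ j) = sg (Tri.al ^ i' * (q : Tri) ^ j') := by
      have := congrArg Real.exp hh
      rw [Real.exp_add, Real.exp_add, Real.exp_nat_mul, Real.exp_nat_mul, Real.exp_nat_mul,
        Real.exp_nat_mul, Real.exp_log rα_pos, Real.exp_log hqp] at this
      simpa [sg_al] using this
    have h2 := sg_eq h1
    rcases hq with rfl | rfl
    · have := indep4 (i := i) (j := j) (k := 0) (l := 0) (i' := i') (j' := j') (k' := 0) (l' := 0)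
        (by simpa using h2)
      exact ⟨this.1, this.2.1⟩
    · have := indep4 (i := i) (k := j) (j := 0) (l := 0) (i' := i') (k' := j') (j' := 0) (l' := 0)
        (by simpa using h2)
      exact ⟨this.1, this.2.2.1⟩
  have hc : ((c.toNat : ℤ) : ℝ) - ((-c).toNat : ℤ) = c := by exact_mod_cast Int.toNat_sub_toNat_neg c
  have hd : ((d.toNat : ℤ) : ℝ) - ((-d).toNat : ℤ) = d := by exact_mod_cast Int.toNat_sub_toNat_neg d
  have := key c.toNat d.toNat (-c).toNat (-d).toNat (by
    rw [← hc, ← hd] at h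
    push_cast at h
    linarith)
  omega

lemma BHyp_one {q : ℕ} (hq : q = 2 ∨ q = 3) {c d B : ℤ} (hc : |c| ≤ B) (hd : |d| ≤ B) (hd0 : d ≠ 0) :
    BHyp ![Tri.al] (q : Tri) 1 ![c] d 2 2 B := by
  have hq3 : (q : ℝ) ≤ 3 := by rcases hq with rfl | rfl <;> norm_num
  have hq1 : (1 : ℝ) ≤ q := by rcases hq with rfl | rfl <;> norm_num
  refine ⟨?_, ?_, ?_, ?_, ?_, ?_, ?_, ?_, hd, hd0, by norm_num, by norm_num⟩
  · intro i; fin_cases i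
    simpa [sg_al] using rα_one.le
  · simp [Tri.nu_al]
    norm_num
    linarith [Real.exp_one_gt_d9]
  · rw [map_natCast]; linarith
  · simp
  · have : Tri.nu (q : Tri) = q := by simpa using Tri.nu_intCast q
    rw [this]; push_cast; linarith [exp_two_gt]
  · rw [Tri.nu_one]; push_cast; linarith [exp_two_gt]
  · simp only [map_natCast, map_one, Real.log_one, sub_zero]
    rw [abs_of_nonneg (Real.log_nonneg hq1)]
    push_cast
    rw [Real.log_le_iff_le_exp (by linarith)]
    linarith [exp_two_gt]
  · intro i; fin_cases i
    simpa using hc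

lemma bh_two_mul (J g : ℕ) : bh J g ≤ bh J (2 * g) ∧ bh J (2 * g) ≤ 2 * bh J g := by
  unfold bh
  constructor <;> nlinarith [Nat.zero_le (J * g)]

lemma bL_one_le {J : ℕ} (hJ1 : 1 ≤ J) (g : ℕ) : bL 1 2 J (2 * g) * 32 ≤ bL 2 3 J g := by
  unfold bL
  have hb := (bh_two_mul J g).2
  calc 6 * bh J (2 * g) * (17 * 2 * J) ^ 1 * 32 ≤ 6 * (2 * bh J g) * (17 * 2 * J) ^ 1 * 32 := by gcongr
    _ = 6 * bh J g * (2176 * J) := by ring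
    _ ≤ 6 * bh J g * (17 * 3 * J) ^ 2 := by
      gcongr
      nlinarith

set_option maxHeartbeats 800000 in
/-- Lower bound for a linear form in `log α`, `log q` and `log (ζ/ζ')`, where `q ∈ {2, 3}`. -/
theorem baker2 {q : ℕ} (hq : q = 2 ∨ q = 3) {ze ze' : Tri} {b : Fin 2 → ℤ} {b0 : ℤ} {A J g : ℕ} {B : ℤ}
    (H : BHyp ![Tri.al, (q : Tri)] ze ze' b b0 A 3 B) (hA3 : 3 ≤ A) (hJ1 : 1 ≤ J) (hg1 : 1 ≤ g)
    (hg : 2 * (A * bL 2 3 J g : ℕ) * B ≤ 2 ^ g)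
    (hJ : (A * bL 2 3 J g) ^ 2 * bL 2 3 J g ≤ bh J g * 2 ^ J)
    (hw : 8 * bh J g ≤ 3 ^ J)
    (hne : linForm ![Tri.al, (q : Tri)] ze ze' b b0 ≠ 0) :
    Real.exp (-(bU 2 A 3 J g : ℕ)) < |linForm ![Tri.al, (q : Tri)] ze ze' b b0| := by
  by_cases hinj : Function.Injective (psi (r := 2) (L := A * bL 2 3 J g) (L4 := bL 2 3 J g)
      (fun i => Real.log (sg ((![Tri.al, (q : Tri)] : Fin 2 → Tri) i))) (Real.log (sg ze) - Real.log (sg ze')))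
  · exact core' H (by norm_num) (by norm_num) hJ1 hg1 hg hJ (by omega) hinj
  set Lam := linForm ![Tri.al, (q : Tri)] ze ze' b b0 with hLam
  unfold Function.Injective at hinj
  push Not at hinj
  set L := bL 2 3 J g with hL
  obtain ⟨lam, lam', heq, hlne⟩ := hinj
  set as := Real.log (sg ze) - Real.log (sg ze') with has
  have hB := H.one_le_B
  set d1 : ℤ := ((lam.1 0 : ℕ) : ℤ) - (lam'.1 0 : ℕ) with hd1
  set d2 : ℤ := ((lam.1 1 : ℕ) : ℤ) - (lam'.1 1 : ℕ) with hd2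
  set e : ℤ := ((lam.2 : ℕ) : ℤ) - (lam'.2 : ℕ) with he
  have hrel : d1 * Real.log rα + d2 * Real.log q + e * as = 0 := by
    unfold psi at heq
    rw [Fin.sum_univ_two, Fin.sum_univ_two] at heq
    simp [sg_al] at heq
    rw [hd1, hd2, he]
    push_cast
    linarith
  have he0 : e ≠ 0 := by
    intro h0
    rw [h0, Int.cast_zero, zero_mul, add_zero] at hrel
    obtain ⟨h1, h2⟩ := indep_q hq hrel
    apply hlne
    refine Prod.ext ?_ (Fin.ext (by omega))
    funext i
    fin_cases i
    · exact Fin.ext (by simp; omega)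
    · exact Fin.ext (by simp; omega)
  have hLA : L ≤ A * L := Nat.le_mul_of_pos_left _ H.hA
  have hd1b : |d1| ≤ (A * L : ℕ) := by
    have h1 := (lam.1 0).isLt
    have h2 := (lam'.1 0).isLt
    rw [abs_le]; constructor <;> omega
  have hd2b : |d2| ≤ (A * L : ℕ) := by
    have h1 := (lam.1 1).isLt
    have h2 := (lam'.1 1).isLt
    rw [abs_le]; constructor <;> omega
  have heb : |e| ≤ L := by
    have h1 := lam.2.isLt
    have h2 := lam'.2.isLt
    rw [abs_le]; constructor <;> omega
  have heb' : |e| ≤ (A * L : ℕ) := heb.trans (by exact_mod_cast hLA)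
  set c1 : ℤ := e * b 0 - b0 * d1 with hc1
  set c2 : ℤ := e * b 1 - b0 * d2 with hc2
  have hlam : e * Lam = c1 * Real.log rα + c2 * Real.log q := by
    rw [hLam]
    unfold linForm
    rw [Fin.sum_univ_two, ← has, hc1, hc2]
    simp [sg_al]
    linear_combination (b0 : ℝ) * hrel
  have hcb : ∀ i (d : ℤ), |d| ≤ (A * L : ℕ) → |e * b i - b0 * d| ≤ 2 * (A * L : ℕ) * B := by
    intro i d hd
    refine (abs_sub _ _).trans ?_
    rw [abs_mul, abs_mul]
    have h1 : |e| * |b i| ≤ (A * L : ℕ) * B := mul_le_mul heb' (H.hb i) (abs_nonneg _) (by positivity)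
    have h2 : |b0| * |d| ≤ B * (A * L : ℕ) := mul_le_mul H.hb0 hd (abs_nonneg _) (by omega)
    linarith
  have hLpos : 1 ≤ L := by
    rw [hL, bL]
    have : 1 ≤ bh J g := by unfold bh; omega
    exact Nat.mul_pos (by omega) (by positivity)
  have hLr : (1 : ℝ) ≤ L := by exact_mod_cast hLpos
  -- it suffices to bound `e * Lam`
  have hU : ∀ W : ℕ, 2 * W ≤ bU 2 A 3 J g → Real.exp (-(W : ℝ)) ≤ |e * Lam| →
      Real.exp (-(bU 2 A 3 J g : ℕ)) < |Lam| := by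
    intro W hW hlow
    have hUL : 4 * L ≤ bU 2 A 3 J g := by
      unfold bU
      rw [← hL]
      have : 1 ≤ bh J g * 2 ^ J := Nat.mul_pos (by unfold bh; omega) (by positivity)
      calc 4 * L ≤ 20 * (2 * J) * (3 * (A * L)) := by nlinarith
        _ ≤ _ := Nat.le_mul_of_pos_right _ this
    have hWr : (2 * W : ℝ) ≤ (bU 2 A 3 J g : ℕ) := by exact_mod_cast hW
    have hULr : (4 * L : ℝ) ≤ (bU 2 A 3 J g : ℕ) := by exact_mod_cast hUL
    have h1 : |e * Lam| ≤ L * |Lam| := by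
      rw [abs_mul]
      gcongr
      exact_mod_cast heb
    have h2 : (L : ℝ) < Real.exp L := by linarith [Real.add_one_le_exp (L : ℝ)]
    by_contra hcon
    push Not at hcon
    have h3 : Real.exp (-(W : ℝ)) < Real.exp (L + (-(bU 2 A 3 J g : ℕ))) := by
      calc _ ≤ L * |Lam| := hlow.trans h1
        _ ≤ L * Real.exp (-(bU 2 A 3 J g : ℕ)) := by gcongr
        _ < Real.exp L * Real.exp (-(bU 2 A 3 J g : ℕ)) := by gcongr
        _ = _ := by rw [Real.exp_add]
    have h4 := Real.exp_lt_exp.1 h3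
    have : (0 : ℝ) ≤ W := by positivity
    linarith
  rcases eq_or_ne c2 0 with h20 | h20
  · have hc10 : c1 ≠ 0 := by
      intro h10
      rw [h10, h20] at hlam
      simp at hlam
      rcases hlam with h | h
      · exact he0 h
      · exact hne h
    refine hU 1 ?_ ?_
    · unfold bU
      have : 1 ≤ bh J g * 2 ^ J := Nat.mul_pos (by unfold bh; omega) (by positivity)
      rw [← hL]
      calc 2 * 1 ≤ 20 * (2 * J) * (3 * (A * L)) := by nlinarith
        _ ≤ _ := Nat.le_mul_of_pos_right _ this
    · rw [hlam, h20, Int.cast_zero, zero_mul, add_zero, abs_mul, abs_of_pos log_rα_pos]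
      have h1 : (1 : ℝ) ≤ |(c1 : ℝ)| := by exact_mod_cast Int.one_le_abs hc10
      have h2 : Real.exp (-((1 : ℕ) : ℝ)) ≤ 1 / 2 := by
        rw [Real.exp_neg, one_div]
        apply inv_anti₀ two_pos
        push_cast
        linarith [Real.exp_one_gt_d9]
      have h3 : 1 / 2 ≤ Real.log rα := by
        have := Real.one_sub_inv_le_log_of_pos rα_pos
        have h4 : rα⁻¹ ≤ (1.8 : ℝ)⁻¹ := inv_anti₀ (by norm_num) (by linarith [rα_gt])
        by_contra hc
        have h5 : Real.log 2 < 0.6932 := by linarith [Real.log_two_lt_d9]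
        have h6 : Real.log 2 = Real.log rα + Real.log (2 / rα) := by
          rw [← Real.log_mul rα_pos.ne' (by have := rα_pos; positivity)]
          congr 1; field_simp [rα_pos.ne']
        have h7 : Real.log (2 / rα) ≤ 2 / rα - 1 := Real.log_le_sub_one_of_pos (by have := rα_pos; positivity)
        have h8 : 2 / rα ≤ 1.09 := by
          rw [div_le_iff₀ rα_pos]; linarith [rα_gt]
        linarith [Real.log_two_gt_d9]
      calc _ ≤ 1 / 2 := h2
        _ ≤ Real.log rα := h3
        _ ≤ _ := le_mul_of_one_le_left log_rα_pos.le h1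
  · have H1 := BHyp_one hq (B := 2 * (A * L : ℕ) * B) (hcb 0 d1 hd1b) (hcb 1 d2 hd2b) h20
    have hL1 : bL 1 2 J (2 * g) * 32 ≤ L := bL_one_le hJ1 g
    obtain ⟨hb1, hb2⟩ := bh_two_mul J g
    have h1 := core' H1 (J := J) (g := 2 * g) (by norm_num) (by norm_num) hJ1 (by omega) ?_ ?_ (by omega) ?_
    · refine hU (bU 1 2 2 J (2 * g)) ?_ ?_
      · unfold bU
        rw [← hL]
        set L1 := bL 1 2 J (2 * g)
        calc 2 * (20 * (2 * J) * (2 * (2 * L1)) * (bh J (2 * g) * 2 ^ J))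
            ≤ 2 * (20 * (2 * J) * (2 * (2 * L1)) * ((2 * bh J g) * 2 ^ J)) := by gcongr
          _ = 20 * (2 * J) * (16 * L1) * (bh J g * 2 ^ J) := by ring
          _ ≤ 20 * (2 * J) * (3 * (A * L)) * (bh J g * 2 ^ J) := by
            have : 16 * L1 ≤ 3 * (A * L) := by omega
            gcongr
      · refine h1.le.trans (le_of_eq ?_)
        rw [hlam]
        unfold linForm
        rw [hc1, hc2]
        simp [sg_al]
    · set L1 := bL 1 2 J (2 * g)
      have h2 : (4 * L1 : ℤ) ≤ 2 ^ g := by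
        refine le_trans ?_ hg
        have : (L1 : ℤ) * 32 ≤ L := by exact_mod_cast hL1
        have h3 : (L : ℤ) ≤ (A * L : ℕ) := by exact_mod_cast hLA
        nlinarith
      calc 2 * ((2 * L1 : ℕ) : ℤ) * (2 * (A * L : ℕ) * B) = (4 * L1 : ℤ) * (2 * (A * L : ℕ) * B) := by push_cast; ring
        _ ≤ 2 ^ g * 2 ^ g := mul_le_mul h2 hg (by positivity) (by positivity)
        _ = _ := by rw [two_mul, pow_add]
    · set L1 := bL 1 2 J (2 * g)
      calc (2 * L1) ^ 1 * L1 ≤ (A * L) ^ 2 * L := by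
            have hAL : L1 ≤ A * L := by omega
            have : 2 * L1 ≤ A * L := by omega
            calc (2 * L1) ^ 1 * L1 ≤ (A * L) * L := by rw [pow_one]; exact Nat.mul_le_mul this (by omega)
              _ ≤ _ := Nat.mul_le_mul_right _ (Nat.le_self_pow (by norm_num) _)
        _ ≤ bh J g * 2 ^ J := hJ
        _ ≤ _ := by gcongr
    · intro mu mu' h
      unfold psi at h
      simp [sg_al] at h
      have := indep_q hq (c := ((mu.1 0 : ℕ) : ℤ) - (mu'.1 0 : ℕ)) (d := ((mu.2 : ℕ) : ℤ) - (mu'.2 : ℕ)) (by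
        push_cast; linarith)
      refine Prod.ext ?_ (Fin.ext (by omega))
      funext i
      fin_cases i
      exact Fin.ext (by simp; omega)

/-! ### A zero estimate -/

open Polynomial in
lemma coeff_prod_sum {s : ℕ} (f : Fin s → ℝ[X]) (d : Fin s → ℕ) (h : ∀ i, (f i).natDegree ≤ d i) :
    (∏ i, f i).coeff (∑ i, d i) = ∏ i, (f i).coeff (d i) ∧ (∏ i, f i).natDegree ≤ ∑ i, d i := by
  induction s with
  | zero => simp
  | succ s ih =>
    obtain ⟨h1, h2⟩ := ih (fun i => f i.succ) (fun i => d i.succ) (fun i => h _)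
    rw [Fin.prod_univ_succ, Fin.sum_univ_succ, Fin.prod_univ_succ]
    refine ⟨?_, natDegree_mul_le.trans (add_le_add (h 0) h2)⟩
    rw [coeff_mul_add_eq_of_natDegree_le (h 0) h2, h1]

open Polynomial in
/-- The determinant of `P_l (X + i) t_l ^ i` is a nonzero polynomial: its top coefficient is the product
of the leading coefficients with a Vandermonde determinant. -/
lemma polyDet {s : ℕ} (P : Fin s → ℝ[X]) (hP : ∀ l, P l ≠ 0) (t : Fin s → ℝ) (ht : Function.Injective t) :
    ∃ D : ℝ[X], D ≠ 0 ∧ D.natDegree ≤ ∑ l, (P l).natDegree ∧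
      ∀ z : ℝ, D.eval z = (Matrix.of fun l i : Fin s => (P l).eval (z + i) * t l ^ (i : ℕ)).det := by
  set Q : Fin s → Fin s → ℝ[X] := fun l i => (P l).comp (X + C (i : ℝ)) * C (t l ^ (i : ℕ)) with hQ
  have hdeg : ∀ l i, (Q l i).natDegree ≤ (P l).natDegree := by
    intro l i
    refine natDegree_mul_le.trans ?_
    rw [natDegree_C, add_zero, natDegree_comp, natDegree_X_add_C, mul_one]
  have hco : ∀ l i, (Q l i).coeff (P l).natDegree = (P l).leadingCoeff * t l ^ (i : ℕ) := by
    intro l i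
    rw [hQ]
    simp only [coeff_mul_C]
    congr 1
    have := leadingCoeff_comp (p := P l) (q := X + C (i : ℝ)) (by rw [natDegree_X_add_C]; norm_num)
    rw [leadingCoeff_X_add_C, one_pow, mul_one, leadingCoeff, natDegree_comp, natDegree_X_add_C, mul_one] at this
    exact this
  refine ⟨(Matrix.of Q).det, ?_, ?_, ?_⟩
  · intro h0
    have h1 : (Matrix.of Q).det.coeff (∑ l, (P l).natDegree) =
        (Matrix.of fun l i : Fin s => (P l).leadingCoeff * t l ^ (i : ℕ)).det := by
      rw [← Matrix.det_transpose, ← Matrix.det_transpose (Matrix.of fun l i : Fin s => _), Matrix.det_apply',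
        Matrix.det_apply', finsetSum_coeff]
      refine Finset.sum_congr rfl fun σ _ => ?_
      rw [coeff_intCast_mul]
      congr 1
      simp only [Matrix.transpose_apply, Matrix.of_apply]
      rw [(coeff_prod_sum (fun l => Q l (σ l)) _ (fun l => hdeg l _)).1]
      exact Finset.prod_congr rfl fun l _ => hco l _
    rw [h0, coeff_zero] at h1
    have h2 : (Matrix.of fun l i : Fin s => (P l).leadingCoeff * t l ^ (i : ℕ)).det =
        (∏ l, (P l).leadingCoeff) * (Matrix.vandermonde t).det := Matrix.det_mul_column _ _
    rw [h2] at h1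
    rcases mul_eq_zero.1 h1.symm with h3 | h3
    · obtain ⟨l, -, hl⟩ := Finset.prod_eq_zero_iff.1 h3
      exact hP l (leadingCoeff_eq_zero.1 hl)
    · exact Matrix.det_vandermonde_ne_zero_iff.2 ht h3
  · rw [← Matrix.det_transpose, Matrix.det_apply']
    refine natDegree_sum_le_of_forall_le _ _ fun σ _ => ?_
    refine natDegree_mul_le.trans ?_
    rw [natDegree_intCast, zero_add]
    exact (coeff_prod_sum (fun l => Q l (σ l)) _ (fun l => hdeg l _)).2
  · intro z
    rw [← coe_evalRingHom, RingHom.map_det]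
    congr 1
    ext l i
    simp [hQ]

open Polynomial in
/-- The rows `z ^ k θ ^ (l x) w(l, y)`, with `z = x + Y y`, are linearly independent functions on the box of
points `(x, y)`. -/
lemma zero_estimate {K L X2 S Y : ℕ} (hY : X2 ≤ Y) (hXS : K * L ≤ X2 * S) (th : ℝ) (hth : 1 < th)
    (w : Fin L → ℕ → ℝ) (hw : ∀ l y, w l y ≠ 0) (a : Fin K × Fin L → ℝ)
    (h : ∀ x < L + X2, ∀ y < S, ∑ kl : Fin K × Fin L,
      a kl * (((x + Y * y : ℕ) : ℝ) ^ (kl.1 : ℕ) * th ^ ((kl.2 : ℕ) * x) * w kl.2 y) = 0) : a = 0 := by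
  classical
  set P : Fin L → ℝ[X] := fun l => ∑ k : Fin K, C (a (k, l)) * X ^ (k : ℕ) with hPdef
  have hcoef : ∀ k l, (P l).coeff (k : Fin K) = a (k, l) := by
    intro k l
    rw [hPdef]
    simp only [finsetSum_coeff, coeff_C_mul, coeff_X_pow]
    rw [Finset.sum_eq_single k]
    · simp
    · intro b _ hb
      have : (k : ℕ) ≠ b := fun h => hb (Fin.ext h.symm)
      simp [this]
    · simp
  have hev : ∀ l z, (P l).eval z = ∑ k : Fin K, a (k, l) * z ^ (k : ℕ) := by
    intro l z
    simp [hPdef, eval_finsetSum]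
  have h' : ∀ x < L + X2, ∀ y < S, ∑ l : Fin L,
      (P l).eval (((x + Y * y : ℕ) : ℝ)) * (th ^ ((l : ℕ) * x) * w l y) = 0 := by
    intro x hx y hy
    rw [← h x hx y hy, Fintype.sum_prod_type, Finset.sum_comm]
    refine Finset.sum_congr rfl fun l _ => ?_
    rw [hev, Finset.sum_mul]
    refine Finset.sum_congr rfl fun k _ => ?_
    ring
  by_contra hne
  have hsupp : ∃ l, P l ≠ 0 := by
    by_contra hcon
    push Not at hcon
    apply hne
    funext kl
    rw [← hcoef kl.1 kl.2, hcon]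
    simp
  set F : Finset (Fin L) := Finset.univ.filter fun l => P l ≠ 0 with hF
  set s := F.card with hs
  have hs1 : 1 ≤ s := by
    obtain ⟨l, hl⟩ := hsupp
    exact Finset.card_pos.2 ⟨l, by simp [hF, hl]⟩
  have hsL : s ≤ L := by
    have := Finset.card_le_univ F
    simpa using this
  let e : Fin s ≃ F := F.equivFin.symm
  have heP : ∀ i, P (e i) ≠ 0 := fun i => by
    have := (e i).2
    simp only [hF, Finset.mem_filter] at this
    exact this.2
  have htinj : Function.Injective fun i : Fin s => th ^ ((e i : Fin L) : ℕ) := by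
    intro i j hij
    have := (pow_right_injective₀ (by linarith) hth.ne') hij
    exact e.injective (Subtype.ext (Fin.ext this))
  obtain ⟨D, hD0, hDdeg, hDev⟩ := polyDet (fun i => P (e i)) heP _ htinj
  apply hD0
  have hK : 1 ≤ K := by
    rcases Nat.eq_zero_or_pos K with hK | hK
    · subst hK
      obtain ⟨l, hl⟩ := hsupp
      exact absurd (by simp [hPdef]) hl
    · exact hK
  have hdegP : ∀ l, (P l).natDegree ≤ K - 1 := by
    intro l
    refine natDegree_sum_le_of_forall_le _ _ fun k _ => ?_
    refine (natDegree_C_mul_X_pow_le _ _).trans ?_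
    omega
  have hinj : Function.Injective fun q : Fin X2 × Fin S => (((q.1 : ℕ) + Y * q.2 : ℕ) : ℝ) := by
    rintro ⟨x, y⟩ ⟨x', y'⟩ hq
    have hq' : (x : ℕ) + Y * y = x' + Y * y' := by
      simp only at hq
      exact_mod_cast hq
    have hx := x.isLt
    have hx' := x'.isLt
    have hyy : (y : ℕ) = y' := by
      rcases lt_trichotomy (y : ℕ) y' with h | h | h
      · have : Y * (y + 1) ≤ Y * y' := Nat.mul_le_mul_left _ h
        rw [mul_add, mul_one] at this
        omega
      · exact h
      · have : Y * (y' + 1) ≤ Y * y := Nat.mul_le_mul_left _ h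
        rw [mul_add, mul_one] at this
        omega
    have hxx : (x : ℕ) = x' := by rw [hyy] at hq'; omega
    exact Prod.ext (Fin.ext hxx) (Fin.ext hyy)
  refine eq_zero_of_natDegree_lt_card_of_eval_eq_zero D hinj ?_ ?_
  · rintro ⟨x, y⟩
    rw [hDev]
    refine Matrix.exists_vecMul_eq_zero_iff.1 ⟨fun i => th ^ (((e i : Fin L) : ℕ) * x) * w (e i) y, ?_, ?_⟩
    · intro h0
      have := congrFun h0 ⟨0, hs1⟩
      simp only [Pi.zero_apply, mul_eq_zero] at this
      rcases this with h | h
      · exact absurd h (pow_pos (by linarith) _).ne'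
      · exact hw _ _ h
    · funext i
      have := h' (x + i) (by have := x.isLt; have := i.isLt; omega) y y.isLt
      rw [← Finset.sum_filter_of_ne (p := fun l => P l ≠ 0)] at this
      · rw [← hF, ← Finset.sum_coe_sort F, ← e.sum_comp] at this
        simp only [Matrix.vecMul, dotProduct, Matrix.of_apply, Pi.zero_apply]
        rw [← this]
        refine Finset.sum_congr rfl fun j _ => ?_
        have e1 : ((x : ℕ) + Y * y : ℕ) + ((i : ℕ) : ℝ) = (((x : ℕ) + i + Y * y : ℕ) : ℝ) := by
          push_cast; ring
        rw [e1, mul_add, pow_add, pow_mul]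
        ring
      · intro l _ hl hP0
        rw [hP0] at hl
        simp at hl
  · calc D.natDegree ≤ ∑ l : Fin s, (P (e l)).natDegree := hDdeg
      _ ≤ ∑ l : Fin s, (K - 1) := Finset.sum_le_sum fun l _ => hdegP _
      _ = s * (K - 1) := by simp
      _ < s * K := Nat.mul_lt_mul_of_pos_left (by omega) hs1
      _ ≤ K * L := by rw [mul_comm]; gcongr
      _ ≤ X2 * S := hXS
      _ = _ := by simp

/-- A matrix with independent rows has a nonvanishing maximal minor. -/
lemma exists_minor {ι κ : Type} [Fintype ι] [DecidableEq ι] [Fintype κ] (M : Matrix ι κ ℝ)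
    (h : LinearIndependent ℝ M.row) : ∃ f : ι → κ, (M.submatrix id f).det ≠ 0 := by
  obtain ⟨κ', a, hinj, hspan, hli⟩ := exists_linearIndependent' (K := ℝ) M.col
  have : Fintype κ' := Fintype.ofInjective a hinj
  have hr := h.rank_matrix
  have hcard : Fintype.card κ' = Fintype.card ι := by
    rw [← hr, Matrix.rank_eq_finrank_span_cols, ← hspan, finrank_span_eq_card hli]
  let e : ι ≃ κ' := (Fintype.equivOfCardEq hcard).symm
  refine ⟨a ∘ e, ?_⟩
  have h2 : LinearIndependent ℝ (M.submatrix id (a ∘ e)).col := hli.comp e e.injective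
  have := Matrix.linearIndependent_cols_iff_isUnit.1 h2
  exact ((Matrix.isUnit_iff_isUnit_det _).1 this).ne_zero

/-! ### Interpolation determinants and congruences -/

/-- The Mahler coefficients of `z ↦ p ^ k z ^ k (1 + p τ) ^ z` are divisible by the corresponding powers of `p`. -/
lemma mahler_coeff (p : ℕ) (τ : Tri) (N k : ℕ) :
    ∃ c : ℕ → Tri, ∀ z : ℕ, (p : Tri) ^ N ∣
      (p : Tri) ^ k * (z : Tri) ^ k * (1 + p * τ) ^ z -
        ∑ n ∈ Finset.range N, (p : Tri) ^ n * c n * (z.choose n : Tri) := by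
  induction k with
  | zero =>
    refine ⟨fun n => τ ^ n, fun z => ?_⟩
    have h1 : (1 + (p : Tri) * τ) ^ z =
        ∑ n ∈ Finset.range (N + (z + 1)), (p : Tri) ^ n * τ ^ n * (z.choose n : Tri) := by
      rw [add_comm 1, add_pow]
      have hsub : Finset.range (z + 1) ⊆ Finset.range (N + (z + 1)) := Finset.range_mono (by omega)
      rw [← Finset.sum_subset hsub]
      · refine Finset.sum_congr rfl fun n _ => ?_
        rw [mul_pow]; ring
      · intro n _ hn
        rw [Nat.choose_eq_zero_of_lt (by simpa using hn)]
        simp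
    rw [pow_zero, pow_zero, one_mul, one_mul, h1, Finset.sum_range_add, add_sub_cancel_left]
    refine Finset.dvd_sum fun n _ => ?_
    rw [pow_add, mul_assoc, mul_assoc]
    exact dvd_mul_right _ _
  | succ k ih =>
    obtain ⟨c, hc⟩ := ih
    refine ⟨fun n => n * (if n = 0 then 0 else c (n - 1)) + p * n * c n, fun z => ?_⟩
    have hz : ∀ n : ℕ, (z : Tri) * (z.choose n : Tri) = (n + 1 : ℕ) * (z.choose (n + 1) : Tri) + n * (z.choose n : Tri) := by
      intro n
      have h1 : z * z.choose n = (n + 1) * z.choose (n + 1) + n * z.choose n := by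
        have := Nat.choose_succ_right_eq z n
        rcases le_or_gt n z with h | h
        · obtain ⟨d, rfl⟩ := Nat.exists_eq_add_of_le h
          rw [Nat.add_sub_cancel_left] at this
          linarith
        · simp [Nat.choose_eq_zero_of_lt h, Nat.choose_eq_zero_of_lt (Nat.lt_succ_of_lt h)]
      exact_mod_cast congrArg (Nat.cast (R := Tri)) h1
    have key : ∀ N : ℕ, (p : Tri) * z * ∑ n ∈ Finset.range N, (p : Tri) ^ n * c n * (z.choose n : Tri) =
        ∑ n ∈ Finset.range N, (p : Tri) ^ n * (n * (if n = 0 then 0 else c (n - 1)) + p * n * c n) * (z.choose n : Tri)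
        + p ^ N * (N * (if N = 0 then 0 else c (N - 1)) * (z.choose N : Tri)) := by
      intro N
      induction N with
      | zero => simp
      | succ N ihN =>
        rw [Finset.sum_range_succ, mul_add, ihN, Finset.sum_range_succ]
        have := hz N
        simp only [Nat.add_sub_cancel, Nat.succ_ne_zero, if_false]
        linear_combination (p : Tri) ^ (N + 1) * c N * this
    have h2 := (hc z).mul_left ((p : Tri) * z)
    rw [mul_sub, key N] at h2
    have h3 := h2.add (dvd_mul_right ((p : Tri) ^ N) (N * (if N = 0 then 0 else c (N - 1)) * (z.choose N : Tri)))
    convert h3 using 1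
    ring

/-- A weight on `N` slots with the weights `< N` used at most once is at least `0 + 1 + ⋯ + (N - 1)`. -/
lemma sum_weight {ι : Type} [Fintype ι] [DecidableEq ι] {N : ℕ} (hN : Fintype.card ι = N) (s : ι → Fin (N + 1))
    (h : ∀ i j, s i = s j → (s i : ℕ) < N → i = j) : ∑ n ∈ Finset.range N, n ≤ ∑ i, (s i : ℕ) := by
  classical
  set F : Finset ι := Finset.univ.filter fun i => (s i : ℕ) < N with hF
  set G : Finset ℕ := F.image fun i => (s i : ℕ) with hG
  have hinj : Set.InjOn (fun i => (s i : ℕ)) F := by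
    intro i hi j _ hij
    refine h i j (Fin.ext hij) ?_
    simpa [hF] using hi
  have hGN : G ⊆ Finset.range N := by
    intro x hx
    simp only [hG, Finset.mem_image, hF, Finset.mem_filter] at hx
    obtain ⟨i, hi, rfl⟩ := hx
    exact Finset.mem_range.2 hi.2
  have h1 : ∑ x ∈ G, x = ∑ i ∈ F, (s i : ℕ) := Finset.sum_image hinj
  have hcard : G.card = F.card := Finset.card_image_of_injOn hinj
  rw [← Finset.sum_filter_add_sum_filter_not Finset.univ (fun i => (s i : ℕ) < N) (fun i => (s i : ℕ)), ← hF, ← h1,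
    ← Finset.sum_sdiff hGN, add_comm]
  refine Nat.add_le_add_left ?_ _
  have h2 : ∑ x ∈ Finset.range N \ G, x ≤ (N - F.card) * N := by
    calc _ ≤ ∑ x ∈ Finset.range N \ G, N := Finset.sum_le_sum fun x hx => by
          have := (Finset.mem_sdiff.1 hx).1; exact (Finset.mem_range.1 this).le
      _ = _ := by rw [Finset.sum_const, Finset.card_sdiff_of_subset hGN, hcard, Finset.card_range, smul_eq_mul]
  refine h2.trans ?_
  have h3 : (Finset.univ.filter fun i => ¬ (s i : ℕ) < N).card = N - F.card := by
    have := Finset.card_filter_add_card_filter_not (s := (Finset.univ : Finset ι)) (fun i => (s i : ℕ) < N)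
    rw [← hF, Finset.card_univ, hN] at this
    omega
  rw [← h3, ← smul_eq_mul, ← Finset.sum_const]
  refine Finset.sum_le_sum fun i hi => ?_
  simpa using hi

/-- If all columns lie in `∑ n < N, p ^ n R e n + p ^ N R ^ ι`, the determinant is divisible by `p ^ (0 + ⋯ + (N - 1))`. -/
lemma det_dvd {ι : Type} [Fintype ι] [DecidableEq ι] {N : ℕ} (hN : Fintype.card ι = N) (p : Tri)
    (M : Matrix ι ι Tri) (e : ℕ → ι → Tri) (c : ι → ℕ → Tri) (f : ι → ι → Tri)
    (hM : ∀ j i, M j i = ∑ n ∈ Finset.range N, p ^ n * c j n * e n i + p ^ N * f j i) :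
    p ^ (∑ n ∈ Finset.range N, n) ∣ M.det := by
  classical
  set u : ι → Fin (N + 1) → ι → Tri := fun j n i => p ^ (n : ℕ) * (if (n : ℕ) < N then c j n * e n i else f j i) with hu
  have hrow : M = Matrix.of fun j => ∑ n, u j n := by
    refine Matrix.ext fun j i => ?_
    rw [hM, Matrix.of_apply, Finset.sum_apply, Fin.sum_univ_castSucc, Finset.sum_range]
    simp [hu, mul_assoc]
  have hdet : M.det = ∑ s : ι → Fin (N + 1), Matrix.det (Matrix.of fun j => u j (s j)) := by
    rw [hrow]
    exact (Matrix.detRowAlternating (R := Tri) (n := ι)).toMultilinearMap.map_sum u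
  rw [hdet]
  refine Finset.dvd_sum fun s _ => ?_
  by_cases hs : ∀ i j, s i = s j → (s i : ℕ) < N → i = j
  · have h1 : (Matrix.of fun j => u j (s j)).det =
        (∏ j, p ^ (s j : ℕ)) * (Matrix.of fun j i => (if (s j : ℕ) < N then c j (s j) * e (s j) i else f j i)).det :=
      Matrix.det_mul_column _ _
    rw [h1, Finset.prod_pow_eq_pow_sum]
    exact (pow_dvd_pow _ (sum_weight hN s hs)).mul_right _
  · push Not at hs
    obtain ⟨i, j, hij, hlt, hne⟩ := hs
    have h1 : (Matrix.of fun j => u j (s j)).det =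
        (∏ j, p ^ (s j : ℕ) * (if (s j : ℕ) < N then c j (s j) else 1)) *
          (Matrix.of fun j i => (if (s j : ℕ) < N then e (s j) i else f j i)).det := by
      rw [← Matrix.det_mul_column]
      congr 1
      refine Matrix.ext fun j i => ?_
      simp only [Matrix.of_apply, hu]
      split_ifs <;> ring
    rw [h1, Matrix.det_zero_of_row_eq hne, mul_zero]
    · exact dvd_zero _
    · funext k
      simp only [Matrix.of_apply, ← hij, if_pos hlt]

lemma Tri.nu_intMul (n : ℤ) (x : Tri) : Tri.nu (n * x) = |n| * Tri.nu x := by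
  simp [Tri.nu, abs_mul]; ring

lemma Tri.nu_det {ι : Type} [Fintype ι] [DecidableEq ι] {B : ℤ} (M : Matrix ι ι Tri)
    (h : ∀ i j, Tri.nu (M i j) ≤ B) : Tri.nu M.det ≤ (Fintype.card ι).factorial * B ^ Fintype.card ι := by
  rw [Matrix.det_apply]
  refine (Tri.nu_sum _ _).trans ?_
  have : ∀ σ : Equiv.Perm ι, Tri.nu (Equiv.Perm.sign σ • ∏ i, M (σ i) i) ≤ B ^ Fintype.card ι := by
    intro σ
    have h1 : Tri.nu (∏ i, M (σ i) i) ≤ B ^ Fintype.card ι := by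
      refine (Tri.nu_prod _ _).trans ?_
      refine (Finset.prod_le_prod (fun i _ => Tri.nu_nonneg _) fun i _ => h (σ i) i).trans ?_
      simp
    rcases Int.units_eq_one_or (Equiv.Perm.sign σ) with hs | hs
    · rw [hs, one_smul]; exact h1
    · rw [hs, Units.neg_smul, one_smul, Tri.nu_neg]; exact h1
  refine (Finset.sum_le_sum fun σ _ => this σ).trans ?_
  rw [Finset.sum_const, Finset.card_univ, Fintype.card_perm]
  simp

/-- If `r θ ^ Y` and `ζ` agree modulo `p ^ m`, where `θ ≡ 1` modulo `p`, then `m` is bounded in terms of the sizes of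
`r`, `ζ` and of `log Y`. -/
theorem padic {p K L X2 S Y m Z A : ℕ} {th ta r ze ep : Tri} (hp : 2 ≤ p) (hth : th = 1 + p * ta)
    (hth1 : 1 < sg th) (hnth : Tri.nu th ≤ 2 ^ 13) (hrel : r * th ^ Y = ze + p ^ m * ep) (hr : r ≠ 0) (hze : ze ≠ 0)
    (hnr : Tri.nu r ≤ 2 ^ A) (hnze : Tri.nu ze ≤ 2 ^ A) (hY : X2 ≤ Y) (hXS : K * L ≤ X2 * S) (hK : 1 ≤ K) (hL : 1 ≤ L)
    (hZ : L + X2 + Y * S ≤ 2 ^ Z) (hZ' : K * L ≤ 2 ^ Z)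
    (hcond : 2 * (Z + K * Z + 13 * (L * (L + X2)) + A * (L * S)) + K < K * L) : m < K * L := by
  by_contra hm
  push Not at hm
  set N := K * L with hN
  set E : Fin K × Fin L → ℕ × ℕ → Tri := fun i q =>
    ((q.1 + Y * q.2 : ℕ) : Tri) ^ (i.1 : ℕ) * th ^ ((i.2 : ℕ) * q.1) *
      (ze ^ ((i.2 : ℕ) * q.2) * r ^ ((L - 1 - i.2) * q.2)) with hE
  have hminor : ∃ f : Fin K × Fin L → Fin (L + X2) × Fin S,
      (Matrix.of fun j i => E i (((f j).1 : ℕ), ((f j).2 : ℕ))).det ≠ 0 := by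
    have hsr : sg r ≠ 0 := fun h => hr (sg_inj h)
    have hsz : sg ze ≠ 0 := fun h => hze (sg_inj h)
    obtain ⟨f, hf⟩ := exists_minor (Matrix.of fun (i : Fin K × Fin L) (q : Fin (L + X2) × Fin S) =>
      sg (E i ((q.1 : ℕ), (q.2 : ℕ)))) (by
        rw [Fintype.linearIndependent_iff]
        intro a ha
        have := zero_estimate hY hXS (sg th) hth1
          (fun l y => sg ze ^ ((l : ℕ) * y) * sg r ^ ((L - 1 - l) * y))
          (fun l y => mul_ne_zero (pow_ne_zero _ hsz) (pow_ne_zero _ hsr)) a (by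
            intro x hx y hy
            have h1 := congrFun ha (⟨x, hx⟩, ⟨y, hy⟩)
            rw [Finset.sum_apply] at h1
            rw [Pi.zero_apply] at h1
            rw [← h1]
            refine Finset.sum_congr rfl fun i _ => ?_
            simp [hE, Matrix.row])
        intro i
        rw [this]; rfl)
    refine ⟨f, fun h0 => hf ?_⟩
    have h1 := congrArg sg h0
    rw [RingHom.map_det, map_zero, ← Matrix.det_transpose] at h1
    rw [← h1]
    congr 1
  obtain ⟨f, hf⟩ := hminor
  set Δ := (Matrix.of fun j i => E i (((f j).1 : ℕ), ((f j).2 : ℕ))).det with hΔ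
  have hcard : Fintype.card (Fin K × Fin L) = N := by simp [hN]
  -- divisibility
  have hdiv : (p : Tri) ^ (∑ n ∈ Finset.range N, n) ∣ (p : Tri) ^ (∑ i : Fin K × Fin L, (i.1 : ℕ)) * Δ := by
    have hta : ∀ l : ℕ, ∃ t : Tri, th ^ l = 1 + p * t := by
      intro l
      have h1 : (p : Tri) ∣ th ^ l - 1 := by
        have h2 : (p : Tri) ∣ th - 1 := ⟨ta, by rw [hth]; ring⟩
        exact h2.trans (by simpa using sub_dvd_pow_sub_pow th 1 l)
      obtain ⟨t, ht⟩ := h1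
      exact ⟨t, by rw [← ht]; ring⟩
    choose t ht using hta
    choose c hc using fun (i : Fin K × Fin L) => mahler_coeff p (t i.2) N i.1
    have hq : ∀ (j i : Fin K × Fin L), ∃ g : Tri,
        (p : Tri) ^ (i.1 : ℕ) * E i (((f j).1 : ℕ), ((f j).2 : ℕ)) =
        ∑ n ∈ Finset.range N, (p : Tri) ^ n *
          (r ^ ((L - 1) * ((f j).2 : ℕ)) * ((((f j).1 : ℕ) + Y * ((f j).2 : ℕ)).choose n : Tri)) * c i n
          + (p : Tri) ^ N * g := by
      intro j i
      generalize ((f j).1 : ℕ) = x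
      generalize ((f j).2 : ℕ) = y
      have hl := i.2.isLt
      have h1 : (p : Tri) ^ N ∣ ze ^ ((i.2 : ℕ) * y) - (r * th ^ Y) ^ ((i.2 : ℕ) * y) := by
        refine Dvd.dvd.trans ?_ (sub_dvd_pow_sub_pow _ _ _)
        rw [hrel]
        refine (pow_dvd_pow (p : Tri) hm).trans ⟨-ep, by ring⟩
      have h2 := hc i (x + Y * y)
      obtain ⟨g1, hg1⟩ := h1
      obtain ⟨g2, hg2⟩ := h2
      rw [← ht] at hg2
      have e1 : r ^ ((L - 1) * y) = r ^ ((i.2 : ℕ) * y) * r ^ ((L - 1 - i.2) * y) := by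
        rw [← pow_add, ← add_mul]; congr 2; omega
      have e2 : (th ^ (i.2 : ℕ)) ^ (x + Y * y) = th ^ ((i.2 : ℕ) * x) * (th ^ Y) ^ ((i.2 : ℕ) * y) := by
        rw [← pow_mul, ← pow_mul, ← pow_add]; congr 1; ring
      refine ⟨(p : Tri) ^ (i.1 : ℕ) * ((x + Y * y : ℕ) : Tri) ^ (i.1 : ℕ) * th ^ ((i.2 : ℕ) * x) *
        r ^ ((L - 1 - i.2) * y) * g1 + r ^ ((L - 1) * y) * g2, ?_⟩
      have e3 : ∑ n ∈ Finset.range N, (p : Tri) ^ n * (r ^ ((L - 1) * y) * ((x + Y * y).choose n : Tri)) * c i n =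
          r ^ ((L - 1) * y) * ∑ n ∈ Finset.range N, (p : Tri) ^ n * c i n * ((x + Y * y).choose n : Tri) := by
        rw [Finset.mul_sum]
        refine Finset.sum_congr rfl fun n _ => ?_
        ring
      rw [e3]
      rw [e2] at hg2
      rw [mul_pow] at hg1
      rw [e1]
      simp only [hE]
      linear_combination (p : Tri) ^ (i.1 : ℕ) * ((x + Y * y : ℕ) : Tri) ^ (i.1 : ℕ) * th ^ ((i.2 : ℕ) * x) *
        r ^ ((L - 1 - i.2) * y) * hg1 + r ^ ((i.2 : ℕ) * y) * r ^ ((L - 1 - i.2) * y) * hg2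
    choose g hg using hq
    have h3 := det_dvd hcard (p : Tri) (Matrix.of fun j i : Fin K × Fin L =>
      (p : Tri) ^ (i.1 : ℕ) * E i (((f j).1 : ℕ), ((f j).2 : ℕ))) (fun n i => c i n)
      (fun j n => (r ^ ((L - 1) * ((f j).2 : ℕ)) * ((((f j).1 : ℕ) + Y * ((f j).2 : ℕ)).choose n : Tri))) g hg
    have h4 : (Matrix.of fun j i : Fin K × Fin L =>
      (p : Tri) ^ (i.1 : ℕ) * E i (((f j).1 : ℕ), ((f j).2 : ℕ))).det = (∏ i : Fin K × Fin L, (p : Tri) ^ (i.1 : ℕ)) * Δ :=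
      Matrix.det_mul_row _ _
    rwa [h4, Finset.prod_pow_eq_pow_sum] at h3
  have hs1 : 2 * ∑ n ∈ Finset.range N, n = N * (N - 1) := by
    rw [mul_comm]; exact Finset.sum_range_id_mul_two N
  have hs2 : 2 * ∑ i : Fin K × Fin L, (i.1 : ℕ) = N * (K - 1) := by
    rw [Fintype.sum_prod_type]
    simp only [Finset.sum_const, Finset.card_univ, Fintype.card_fin, smul_eq_mul]
    rw [← Finset.mul_sum, Fin.sum_univ_eq_sum_range (fun k => k), hN]
    have := Finset.sum_range_id_mul_two K
    linear_combination L * this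
  set s1 := ∑ n ∈ Finset.range N, n
  set s2 := ∑ i : Fin K × Fin L, (i.1 : ℕ)
  have hKN : K ≤ N := Nat.le_mul_of_pos_right _ hL
  have hN1 : 1 ≤ N := hK.trans hKN
  have hV : 2 * (s1 - s2) = N * (N - K) := by
    have e : N * (N - 1) = N * (K - 1) + N * (N - K) := by rw [← mul_add]; congr 1; omega
    omega
  have hs12 : s2 ≤ s1 := by
    have : N * (K - 1) ≤ N * (N - 1) := Nat.mul_le_mul_left _ (by omega)
    omega
  have hp0 : (p : Tri) ≠ 0 := by
    intro h
    have := congrArg Tri.a h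
    simp at this
    omega
  obtain ⟨x, hx⟩ : (p : Tri) ^ (s1 - s2) ∣ Δ := by
    rw [← Nat.sub_add_cancel hs12, pow_add, mul_comm] at hdiv
    exact (mul_dvd_mul_iff_left (pow_ne_zero _ hp0)).1 hdiv
  have hx0 : x ≠ 0 := by
    rintro rfl
    exact hf (by rw [hx, mul_zero])
  have hlow : (2 : ℤ) ^ (s1 - s2) ≤ Tri.nu Δ := by
    have e : (p : Tri) ^ (s1 - s2) = (((p : ℤ) ^ (s1 - s2) : ℤ) : Tri) := by push_cast; rfl
    rw [hx, e, Tri.nu_intMul, abs_of_nonneg (by positivity)]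
    have h1 := Tri.nu_pos hx0
    have h2 : (2 : ℤ) ^ (s1 - s2) ≤ (p : ℤ) ^ (s1 - s2) := by
      gcongr; exact_mod_cast hp
    nlinarith [pow_pos (show (0 : ℤ) < 2 by norm_num) (s1 - s2)]
  have hent : ∀ j i, Tri.nu ((Matrix.of fun j i => E i (((f j).1 : ℕ), ((f j).2 : ℕ))) j i) ≤
      2 ^ (K * Z + 13 * (L * (L + X2)) + A * (L * S)) := by
    intro j i
    simp only [Matrix.of_apply, hE]
    have hxx := (f j).1.isLt
    have hyy := (f j).2.isLt
    generalize ((f j).1 : ℕ) = x at hxx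
    generalize ((f j).2 : ℕ) = y at hyy
    have hi1 := i.1.isLt
    have hi2 := i.2.isLt
    have hz : ((x + Y * y : ℕ) : ℤ) ≤ 2 ^ Z := by
      have : x + Y * y ≤ L + X2 + Y * S := by gcongr
      exact_mod_cast this.trans hZ
    have b1 : Tri.nu (((x + Y * y : ℕ) : Tri) ^ (i.1 : ℕ)) ≤ 2 ^ (K * Z) := by
      refine (Tri.nu_pow _ _).trans ?_
      have e : Tri.nu ((x + Y * y : ℕ) : Tri) = ((x + Y * y : ℕ) : ℤ) := by
        have := Tri.nu_intCast ((x + Y * y : ℕ) : ℤ)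
        rw [Int.cast_natCast, abs_of_nonneg (by positivity)] at this
        exact this
      rw [e]
      calc _ ≤ ((2 : ℤ) ^ Z) ^ (i.1 : ℕ) := by gcongr
        _ = 2 ^ (i.1 * Z : ℕ) := by rw [← pow_mul, mul_comm]
        _ ≤ _ := by gcongr; norm_num
    have b2 : Tri.nu (th ^ ((i.2 : ℕ) * x)) ≤ 2 ^ (13 * (L * (L + X2))) := by
      refine (Tri.nu_pow _ _).trans ?_
      calc _ ≤ ((2 : ℤ) ^ 13) ^ ((i.2 : ℕ) * x) := pow_le_pow_left₀ (Tri.nu_nonneg _) hnth _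
        _ = 2 ^ (13 * ((i.2 : ℕ) * x)) := by rw [← pow_mul]
        _ ≤ _ := by gcongr; norm_num
    have b3 : Tri.nu (ze ^ ((i.2 : ℕ) * y)) ≤ 2 ^ (A * ((i.2 : ℕ) * y)) := by
      refine (Tri.nu_pow _ _).trans ?_
      calc _ ≤ ((2 : ℤ) ^ A) ^ ((i.2 : ℕ) * y) := pow_le_pow_left₀ (Tri.nu_nonneg _) hnze _
        _ = _ := by rw [← pow_mul]
    have b4 : Tri.nu (r ^ ((L - 1 - i.2) * y)) ≤ 2 ^ (A * ((L - 1 - i.2) * y)) := by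
      refine (Tri.nu_pow _ _).trans ?_
      calc _ ≤ ((2 : ℤ) ^ A) ^ ((L - 1 - i.2) * y) := pow_le_pow_left₀ (Tri.nu_nonneg _) hnr _
        _ = _ := by rw [← pow_mul]
    have b5 : Tri.nu (ze ^ ((i.2 : ℕ) * y) * r ^ ((L - 1 - i.2) * y)) ≤ 2 ^ (A * (L * S)) := by
      refine (Tri.nu_mul _ _).trans ((mul_le_mul b3 b4 (Tri.nu_nonneg _) (by positivity)).trans ?_)
      rw [← pow_add, ← mul_add, ← add_mul]
      gcongr
      · norm_num
      · omega
    refine (Tri.nu_mul _ _).trans ?_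
    rw [pow_add, pow_add]
    refine mul_le_mul ((Tri.nu_mul _ _).trans (mul_le_mul b1 b2 (Tri.nu_nonneg _) (by positivity))) b5 (Tri.nu_nonneg _)
      (by positivity)
  have hup := Tri.nu_det _ hent
  rw [hcard, ← hΔ] at hup
  have hfac : (N.factorial : ℤ) ≤ (2 ^ Z) ^ N := by
    have h1 : N.factorial ≤ N ^ N := Nat.factorial_le_pow N
    have h2 : N ^ N ≤ (2 ^ Z) ^ N := Nat.pow_le_pow_left hZ' N
    exact_mod_cast h1.trans h2
  have hfin : (2 : ℤ) ^ (s1 - s2) ≤ 2 ^ (N * (Z + (K * Z + 13 * (L * (L + X2)) + A * (L * S)))) := by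
    refine hlow.trans (hup.trans ?_)
    refine (mul_le_mul_of_nonneg_right hfac (by positivity)).trans (le_of_eq ?_)
    rw [← mul_pow, ← pow_add, ← pow_mul, mul_comm]
  have h5 : s1 - s2 ≤ N * (Z + (K * Z + 13 * (L * (L + X2)) + A * (L * S))) :=
    (pow_le_pow_iff_right₀ (by norm_num : (1 : ℤ) < 2)).1 hfin
  have h6 : N * (N - K) ≤ N * (2 * (Z + (K * Z + 13 * (L * (L + X2)) + A * (L * S)))) := by
    rw [← hV]
    calc 2 * (s1 - s2) ≤ 2 * (N * (Z + (K * Z + 13 * (L * (L + X2)) + A * (L * S)))) := by omega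
      _ = _ := by ring
  have h7 := Nat.le_of_mul_le_mul_left h6 hN1
  omega

lemma padic_cond {A Z : ℕ} (hA : 1 ≤ A) (hZ1 : 1 ≤ Z) :
    2 * (Z + (24336 * A * Z) * Z + 13 * ((8 * Z + 1) * ((8 * Z + 1) + 468 * A * Z)) + A * ((8 * Z + 1) * (468 * Z)))
      + 24336 * A * Z < 24336 * A * Z * (8 * Z + 1) := by
  obtain ⟨a, rfl⟩ := Nat.exists_eq_add_of_le hA
  obtain ⟨z, rfl⟩ := Nat.exists_eq_add_of_le hZ1
  ring_nf
  nlinarith [Nat.zero_le (a * z), Nat.zero_le (a * z ^ 2), Nat.zero_le (z ^ 2)]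

theorem padic' {p Y m Z A : ℕ} {th ta r ze ep : Tri} (hp : 2 ≤ p) (hth : th = 1 + p * ta)
    (hth1 : 1 < sg th) (hnth : Tri.nu th ≤ 2 ^ 13) (hrel : r * th ^ Y = ze + p ^ m * ep) (hr : r ≠ 0) (hze : ze ≠ 0)
    (hnr : Tri.nu r ≤ 2 ^ A) (hnze : Tri.nu ze ≤ 2 ^ A) (hA : 1 ≤ A) (hZ1 : 1 ≤ Z)
    (hY : 468 * A * Z ≤ Y) (hZ : 468 * Z * (A + Y + 1) ≤ 2 ^ Z) : m < 219024 * A * Z ^ 2 := by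
  have hKL : 24336 * A * Z * (8 * Z + 1) ≤ 219024 * A * Z ^ 2 := by
    calc 24336 * A * Z * (8 * Z + 1) ≤ 24336 * A * Z * (9 * Z) := by gcongr; omega
      _ = _ := by ring
  have hKL2 : 219024 * A * Z ^ 2 = 468 * Z * (468 * A * Z) := by ring
  refine lt_of_lt_of_le (padic (K := 24336 * A * Z) (L := 8 * Z + 1) (X2 := 468 * A * Z) (S := 468 * Z) hp hth hth1 hnth hrel hr hze hnr
    hnze hY ?_ ?_ (by omega) ?_ ?_ (padic_cond hA hZ1)) hKL
  · calc _ ≤ _ := hKL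
      _ = 468 * A * Z * (468 * Z) := by ring
  · have : 1 ≤ A * Z := Nat.mul_pos hA hZ1
    rw [mul_assoc]; omega
  · refine le_trans ?_ hZ
    have e : 468 * Z * (A + Y + 1) = 468 * A * Z + Y * (468 * Z) + 468 * Z := by ring
    omega
  · refine (hKL.trans ?_).trans hZ
    rw [hKL2]
    gcongr
    omega

/-! ### Three members of the sequence in a residue class -/

/-- The complex root of `X ^ 3 - X ^ 2 - X - 1` in the upper half plane. -/
noncomputable def cβ : ℂ := ⟨(1 - rα) / 2, √(1 / rα - (1 - rα) ^ 2 / 4)⟩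

lemma inv_rα : 1 / rα = rα ^ 2 - rα - 1 := by
  rw [div_eq_iff rα_pos.ne']; linear_combination -rα_cube

lemma cβ_disc : 0 ≤ 1 / rα - (1 - rα) ^ 2 / 4 := by
  rw [inv_rα]
  nlinarith [rα_gt, rα_lt]

lemma cβ_cube : cβ ^ 3 = 1 + cβ + cβ ^ 2 := by
  have h1 : cβ ^ 2 + (rα - 1 : ℝ) * cβ + (1 / rα : ℝ) = 0 := by
    have hs := Real.mul_self_sqrt cβ_disc
    apply Complex.ext
    · simp [cβ, pow_two]
      rw [one_div, pow_two (1 - rα)] at hs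
      linear_combination -hs
    · simp [cβ, pow_two]
      ring
  have h2 : (cβ - (rα : ℝ)) * (cβ ^ 2 + (rα - 1 : ℝ) * cβ + (1 / rα : ℝ)) = 0 := by rw [h1, mul_zero]
  have h3 : ((rα : ℝ) : ℂ) ^ 3 = 1 + rα + (rα : ℂ) ^ 2 := by exact_mod_cast congrArg (fun x : ℝ => (x : ℂ)) rα_cube
  rw [inv_rα] at h2
  push_cast at h2
  linear_combination h2 + h3

lemma cβ_normSq : ‖cβ‖ ^ 2 = 1 / rα := by
  have hs := Real.mul_self_sqrt cβ_disc
  rw [Complex.sq_norm, Complex.normSq_apply]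
  simp only [cβ]
  linear_combination hs

lemma cβ_norm_lt : ‖cβ‖ < 0.74 := by
  have h := cβ_normSq
  have h2 : 1 / rα < 0.5438 := by
    rw [div_lt_iff₀ rα_pos]; linarith [rα_gt]
  by_contra hc
  push Not at hc
  nlinarith [norm_nonneg cβ]

noncomputable def sβ : Tri →+* ℂ := Tri.ev cβ cβ_cube

lemma sβ_al : sβ Tri.al = cβ := by simp [sβ, Tri.ev, Tri.al]

lemma dep_real {g d : ℕ} (hg : 1 ≤ g) (hd : 1 ≤ d) (hsmall : ¬ (g ≤ 3 ∧ d ≤ 2)) {k l : ℤ} (hk : k ≠ 0)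
    (h : (l : Tri) * (Tri.al ^ g - 1) = k * (Tri.al ^ (g + d) - 1)) : False := by
  have h1 := congrArg sg h
  have h2 := congrArg sβ h
  simp only [map_mul, map_sub, map_pow, map_one, map_intCast, sg_al, sβ_al] at h1 h2
  have hA : 1 < rα := rα_one
  have hag : rα ≤ rα ^ g := le_self_pow₀ hA.le (by omega)
  set x := rα ^ g with hx
  set b := ‖cβ‖ with hb
  have hb0 : 0 ≤ b := norm_nonneg _
  have hb1 : b < 0.74 := cβ_norm_lt
  have hl : (l : ℝ) = k * ((rα ^ d * x - 1) / (x - 1)) := by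
    rw [mul_div_assoc', eq_div_iff (by linarith), h1, pow_add]; ring
  set ρ := (rα ^ d * x - 1) / (x - 1) with hρ
  have hρd : rα ^ d ≤ ρ := by
    rw [hρ, le_div_iff₀ (by linarith)]
    have : 1 ≤ rα ^ d := one_le_pow₀ hA.le
    linarith
  have hkabs : 0 < |(k : ℝ)| := abs_pos.2 (by exact_mod_cast hk)
  have h3 := congrArg norm h2
  rw [norm_mul, norm_mul, Complex.norm_intCast, Complex.norm_intCast, hl, abs_mul, mul_assoc] at h3
  have h4 := mul_left_cancel₀ hkabs.ne' h3
  have hρ0 : 0 ≤ ρ := (pow_nonneg rα_pos.le d).trans hρd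
  rw [abs_of_nonneg hρ0] at h4
  have h5 : 1 - b ^ g ≤ ‖cβ ^ g - 1‖ := by
    have := norm_sub_norm_le (1 : ℂ) (cβ ^ g)
    rw [norm_one, norm_pow, norm_sub_rev] at this
    exact this
  have h6 : ‖cβ ^ (g + d) - 1‖ ≤ b ^ (g + d) + 1 := by
    have := norm_sub_le (cβ ^ (g + d)) (1 : ℂ)
    rwa [norm_one, norm_pow] at this
  have hρ1 : rα ^ d * (1 - b ^ g) ≤ b ^ (g + d) + 1 := by
    have hbg : b ^ g ≤ 1 := pow_le_one₀ hb0 (by linarith)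
    calc rα ^ d * (1 - b ^ g) ≤ ρ * (1 - b ^ g) := by gcongr
      _ ≤ ρ * ‖cβ ^ g - 1‖ := by gcongr
      _ = _ := h4
      _ ≤ _ := h6
  by_cases hg4 : 4 ≤ g
  · have e1 : b ^ g ≤ 0.74 ^ 4 := by
      calc b ^ g ≤ b ^ 4 := pow_le_pow_of_le_one hb0 (by linarith) hg4
        _ ≤ _ := by gcongr
    have e2 : b ^ (g + d) ≤ 0.74 ^ 5 := by
      calc b ^ (g + d) ≤ b ^ 5 := pow_le_pow_of_le_one hb0 (by linarith) (by omega)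
        _ ≤ _ := by gcongr
    have e3 : 1.8392 ≤ rα ^ d := rα_gt.le.trans (le_self_pow₀ hA.le (by omega))
    have e4 : 1.8392 * (1 - 0.74 ^ 4) ≤ rα ^ d * (1 - b ^ g) := by
      apply mul_le_mul e3 (by linarith) (by norm_num) (by linarith)
    norm_num at e1 e2 e4
    linarith
  · have hd3 : 3 ≤ d := by omega
    have e1 : b ^ g ≤ 0.74 := (pow_le_of_le_one hb0 (by linarith) (by omega)).trans hb1.le
    have e2 : b ^ (g + d) ≤ 0.74 ^ 4 := by
      calc b ^ (g + d) ≤ b ^ 4 := pow_le_pow_of_le_one hb0 (by linarith) (by omega)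
        _ ≤ _ := by gcongr
    have e3 : 1.8392 ^ 3 ≤ rα ^ d := by
      calc (1.8392 : ℝ) ^ 3 ≤ rα ^ 3 := by gcongr; exact rα_gt.le
        _ ≤ _ := pow_le_pow_right₀ hA.le hd3
    have e4 : 1.8392 ^ 3 * (1 - 0.74) ≤ rα ^ d * (1 - b ^ g) := by
      apply mul_le_mul e3 (by linarith) (by norm_num) (by positivity)
    norm_num at e1 e2 e4
    linarith

/-- The element `ω` with `φ(α ^ j ω) = w_j` for `j = 0, 1, 2`. -/
def omg (w : Fin 3 → ℤ) : Tri := ⟨2 * w 1 - w 2, 2 * w 0 + w 1 - w 2, w 2 - w 1 - w 0⟩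

/-- The cross product of the coordinate vectors. -/
def crs (k l : Tri) : Fin 3 → ℤ := ![k.b * l.c - k.c * l.b, k.c * l.a - k.a * l.c, k.a * l.b - k.b * l.a]

/-- The pair `(3, 4)` is a genuine exception: `α ^ 4 - 1 = 2 (α ^ 3 - 1)`. -/
lemma crs_ne {g d : ℕ} (hg : 1 ≤ g) (hd : 1 ≤ d) (hne : ¬ (g = 3 ∧ d = 1)) : crs (Tri.al ^ g - 1) (Tri.al ^ (g + d) - 1) ≠ 0 := by
  by_cases hsmall : g ≤ 3 ∧ d ≤ 2
  · obtain ⟨h1, h2⟩ := hsmall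
    interval_cases g <;> interval_cases d <;> first | decide | omega
  intro h0
  set k := Tri.al ^ g - 1 with hk
  set l := Tri.al ^ (g + d) - 1 with hl
  have hk0 : k ≠ 0 := by
    intro h
    have := congrArg sg h
    rw [hk, map_sub, map_pow, map_one, map_zero, sg_al] at this
    have h2 := one_lt_pow₀ rα_one (show g ≠ 0 by omega)
    linarith
  have c0 : k.b * l.c - k.c * l.b = 0 := congrFun h0 0
  have c1 : k.c * l.a - k.a * l.c = 0 := congrFun h0 1
  have c2 : k.a * l.b - k.b * l.a = 0 := congrFun h0 2
  by_cases ha : k.a = 0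
  · by_cases hb : k.b = 0
    · by_cases hc : k.c = 0
      · exact hk0 (Tri.ext ha hb hc)
      · refine dep_real hg hd hsmall (k := k.c) (l := l.c) hc ?_
        ext <;> simp [← hk, ← hl] <;> linarith
    · refine dep_real hg hd hsmall (k := k.b) (l := l.b) hb ?_
      ext <;> simp [← hk, ← hl] <;> linarith
  · refine dep_real hg hd hsmall (k := k.a) (l := l.a) ha ?_
    ext <;> simp [← hk, ← hl] <;> linarith

lemma omg_ne {w : Fin 3 → ℤ} (h : w ≠ 0) : omg w ≠ 0 := by
  intro h0
  apply h
  have h1 : 2 * w 1 - w 2 = 0 := congrArg Tri.a h0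
  have h2 : 2 * w 0 + w 1 - w 2 = 0 := congrArg Tri.b h0
  have h3 : w 2 - w 1 - w 0 = 0 := congrArg Tri.c h0
  funext i
  fin_cases i <;> simp <;> omega

/-- If `φ(xκ)` and `φ(xλ)` vanish modulo `q`, then `w_j x` is congruent to an integer multiple of `ω`. -/
lemma crs_congr {q : ℤ} {x k l : Tri} (hk : q ∣ Tri.phi (x * k)) (hl : q ∣ Tri.phi (x * l)) (j : Fin 3) :
    ∃ (t : ℤ) (e : Tri), (crs k l j : Tri) * x = t * omg (crs k l) + q * e := by
  obtain ⟨s, hs⟩ := hk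
  obtain ⟨t, ht⟩ := hl
  simp [Tri.phi] at hs ht
  -- coordinates of the error: `κ(τ·λ) - λ(τ·κ)` read through the inverse of `y ↦ (φ(α ^ i y))`
  fin_cases j
  · refine ⟨Tri.phi x, omg ![0, -(t * k.c - s * l.c), t * k.b - s * l.b], ?_⟩
    ext <;> simp [crs, omg, Tri.phi]
    · linear_combination -2 * (k.c * ht - l.c * hs) - (k.b * ht - l.b * hs)
    · linear_combination -(k.c * ht - l.c * hs) - (k.b * ht - l.b * hs)
    · linear_combination (k.c * ht - l.c * hs) + (k.b * ht - l.b * hs)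
  · refine ⟨Tri.phi (Tri.al * x), omg ![t * k.c - s * l.c, 0, -(t * k.a - s * l.a)], ?_⟩
    ext <;> simp [crs, omg, Tri.phi, Tri.al]
    · linear_combination (k.a * ht - l.a * hs)
    · linear_combination 2 * (k.c * ht - l.c * hs) + (k.a * ht - l.a * hs)
    · linear_combination -(k.c * ht - l.c * hs) - (k.a * ht - l.a * hs)
  · refine ⟨Tri.phi (Tri.al ^ 2 * x), omg ![-(t * k.b - s * l.b), t * k.a - s * l.a, 0], ?_⟩
    ext <;> simp [crs, omg, Tri.phi, Tri.al, pow_two]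
    · linear_combination 2 * (k.a * ht - l.a * hs)
    · linear_combination -2 * (k.b * ht - l.b * hs) + (k.a * ht - l.a * hs)
    · linear_combination (k.b * ht - l.b * hs) - (k.a * ht - l.a * hs)

lemma norm_congr {q : ℤ} {x y e : Tri} (h : x = y + q * e) : ∃ t : ℤ, Tri.norm x = Tri.norm y + q * t := by
  have ha : x.a ≡ y.a [ZMOD q] := by rw [h]; simp [Int.ModEq]
  have hb : x.b ≡ y.b [ZMOD q] := by rw [h]; simp [Int.ModEq]
  have hc : x.c ≡ y.c [ZMOD q] := by rw [h]; simp [Int.ModEq]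
  have : Tri.norm x ≡ Tri.norm y [ZMOD q] := by
    simp only [Tri.norm, Tri.adj]
    gcongr
  obtain ⟨t, ht⟩ := this.symm.dvd
  exact ⟨t, by linarith⟩

/-- Elimination of the unknown integer factor: `N(ω) w ^ 3 x ^ 3 ≡ w ^ 3 ω ^ 3` if `w x ≡ t ω` and `N(x) = 1`. -/
lemma elim_congr {q w t : ℤ} {x om e : Tri} (h : (w : Tri) * x = t * om + q * e) (hx : Tri.norm x = 1) :
    ∃ e' : Tri, (Tri.norm om * w ^ 3 : ℤ) * x ^ 3 = (w ^ 3 : ℤ) * om ^ 3 + q * e' := by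
  obtain ⟨s, hs⟩ := norm_congr h
  rw [Tri.norm_mul, Tri.norm_mul, Tri.norm_intCast, Tri.norm_intCast, hx, mul_one] at hs
  have h3 : ∃ f : Tri, ((w : Tri) * x) ^ 3 = (t * om) ^ 3 + q * f := by
    refine ⟨e * (3 * (t * om) ^ 2 + 3 * (t * om) * (q * e) + (q * e) ^ 2), ?_⟩
    rw [h]; ring
  obtain ⟨f, hf⟩ := h3
  have hs' : (w : Tri) ^ 3 = t ^ 3 * (Tri.norm om : Tri) + q * s := by exact_mod_cast congrArg (Int.cast (R := Tri)) hs
  refine ⟨Tri.norm om * f - s * om ^ 3, ?_⟩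
  push_cast
  linear_combination (Tri.norm om : Tri) * hf - om ^ 3 * hs'

lemma tri_intCast_ne {k : ℤ} (h : k ≠ 0) : (k : Tri) ≠ 0 := fun h0 => h (by simpa using congrArg Tri.a h0)

lemma nu_coord (x : Tri) : |x.a| ≤ x.nu ∧ |x.b| ≤ x.nu ∧ |x.c| ≤ x.nu := by
  have h1 := abs_nonneg x.a
  have h2 := abs_nonneg x.b
  have h3 := abs_nonneg x.c
  simp only [Tri.nu]
  refine ⟨?_, ?_, ?_⟩ <;> linarith

lemma abs_norm_le (x : Tri) : |Tri.norm x| ≤ 7 * x.nu ^ 3 := by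
  have h := congrArg Tri.nu (Tri.mul_adj x)
  rw [Tri.nu_intCast] at h
  rw [← h]
  have h0 := Tri.nu_nonneg x
  calc _ ≤ x.nu * (Tri.adj x).nu := Tri.nu_mul _ _
    _ ≤ x.nu * (7 * x.nu ^ 2) := by gcongr; exact Tri.nu_adj x
    _ = _ := by ring

lemma nu_al_pow_sub {g G : ℕ} (h : g ≤ G) : (Tri.al ^ g - 1).nu ≤ 2 ^ (G + 1) := by
  have h1 := Tri.nu_sub (Tri.al ^ g) 1
  have h2 := Tri.nu_pow Tri.al g
  rw [Tri.nu_al] at h2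
  rw [Tri.nu_one] at h1
  have h3 : (2 : ℤ) ^ g ≤ 2 ^ G := pow_le_pow_right₀ (by norm_num) h
  have h4 : (1 : ℤ) ≤ 2 ^ G := one_le_pow₀ (by norm_num)
  rw [pow_succ]; linarith

lemma abs_sub_mul_le {a b c d K : ℤ} (ha : |a| ≤ K) (hb : |b| ≤ K) (hc : |c| ≤ K) (hd : |d| ≤ K) :
    |a * b - c * d| ≤ 2 * K ^ 2 := by
  have h1 := abs_sub (a * b) (c * d)
  rw [abs_mul, abs_mul] at h1
  have h2 : |a| * |b| ≤ K * K := mul_le_mul ha hb (abs_nonneg _) ((abs_nonneg _).trans ha)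
  have h3 : |c| * |d| ≤ K * K := mul_le_mul hc hd (abs_nonneg _) ((abs_nonneg _).trans hc)
  linarith [sq K]

lemma crs_le {k l : Tri} {K : ℤ} (hk : k.nu ≤ K) (hl : l.nu ≤ K) (j : Fin 3) : |crs k l j| ≤ 2 * K ^ 2 := by
  obtain ⟨a1, a2, a3⟩ := nu_coord k
  obtain ⟨b1, b2, b3⟩ := nu_coord l
  fin_cases j <;> exact abs_sub_mul_le (by linarith) (by linarith) (by linarith) (by linarith)

lemma nu_omg_le {w : Fin 3 → ℤ} {W : ℤ} (h : ∀ j, |w j| ≤ W) : (omg w).nu ≤ 23 * W := by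
  have h0 := abs_le.1 (h 0)
  have h1 := abs_le.1 (h 1)
  have h2 := abs_le.1 (h 2)
  simp only [omg, Tri.nu]
  have e1 : |2 * w 1 - w 2| ≤ 3 * W := abs_le.2 ⟨by linarith, by linarith⟩
  have e2 : |2 * w 0 + w 1 - w 2| ≤ 4 * W := abs_le.2 ⟨by linarith, by linarith⟩
  have e3 : |w 2 - w 1 - w 0| ≤ 3 * W := abs_le.2 ⟨by linarith, by linarith⟩
  linarith

/-- Three of the numbers `T n - c` with close indices cannot all be divisible by a high power of `p`. -/
lemma three_large {p e : ℕ} {ta : Tri} (hp : 2 ≤ p) (he : Tri.al ^ e = 1 + p * ta) (he3 : 3 ≤ e) (he13 : e ≤ 13)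
    {a b c m G Z : ℕ} {cc : ℤ} (hcb : c < b) (hba : b < a) (hG : a ≤ c + G) (hne : ¬ (b = c + 3 ∧ a = c + 4))
    (ha : (p : ℤ) ^ m ∣ T a - cc) (hb : (p : ℤ) ^ m ∣ T b - cc) (hc : (p : ℤ) ^ m ∣ T c - cc) (hZ1 : 1 ≤ Z)
    (hY : 2028 * (12 * G + 48) * Z + 13 ≤ c) (hZ : 468 * Z * ((12 * G + 48) + c + 1) ≤ 2 ^ Z) :
    m < 219024 * (12 * G + 48) * Z ^ 2 := by
  obtain ⟨g, hg⟩ : ∃ g, b = c + g := ⟨b - c, by omega⟩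
  obtain ⟨d, hd⟩ : ∃ d, a = c + (g + d) := ⟨a - b, by omega⟩
  set k := Tri.al ^ g - 1 with hk
  set l := Tri.al ^ (g + d) - 1 with hl
  have hw := crs_ne (g := g) (d := d) (by omega) (by omega) (by omega)
  rw [← hk, ← hl] at hw
  have hphi : ∀ i, Tri.phi (Tri.al ^ c * (Tri.al ^ i - 1)) = T (c + i) - T c := fun i => by
    rw [mul_sub, mul_one, ← pow_add, Tri.phi_sub, Tri.phi_al_pow, Tri.phi_al_pow]
  have hk1 : (p : ℤ) ^ m ∣ Tri.phi (Tri.al ^ c * k) := by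
    rw [hk, hphi, ← hg]
    have := dvd_sub hb hc
    rwa [sub_sub_sub_cancel_right] at this
  have hl1 : (p : ℤ) ^ m ∣ Tri.phi (Tri.al ^ c * l) := by
    rw [hl, hphi, ← hd]
    have := dvd_sub ha hc
    rwa [sub_sub_sub_cancel_right] at this
  obtain ⟨j, hj⟩ : ∃ j, crs k l j ≠ 0 := by
    by_contra! h
    exact hw (funext h)
  obtain ⟨t, e1, h1⟩ := crs_congr hk1 hl1 j
  obtain ⟨e2, h2⟩ := elim_congr h1 (by rw [Tri.norm_pow, Tri.norm_al, one_pow])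
  have hom := omg_ne hw
  have hbk : k.nu ≤ 2 ^ (G + 1) := nu_al_pow_sub (by omega)
  have hbl : l.nu ≤ 2 ^ (G + 1) := nu_al_pow_sub (by omega)
  have hbw : ∀ j, |crs k l j| ≤ 2 ^ (2 * G + 3) := fun j => by
    refine (crs_le hbk hbl j).trans (le_of_eq ?_)
    rw [← pow_mul]; ring
  set w := crs k l j with hwdef
  set om := omg (crs k l) with homdef
  have hbom : om.nu ≤ 2 ^ (2 * G + 8) := by
    refine (nu_omg_le hbw).trans ?_
    have : (2 : ℤ) ^ (2 * G + 8) = 32 * 2 ^ (2 * G + 3) := by ring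
    rw [this]; gcongr; norm_num
  have hbN : |Tri.norm om| ≤ 2 ^ (6 * G + 27) := by
    refine (abs_norm_le om).trans ?_
    calc 7 * om.nu ^ 3 ≤ 8 * (2 ^ (2 * G + 8)) ^ 3 := by
          have := Tri.nu_nonneg om
          gcongr; norm_num
      _ = _ := by rw [← pow_mul]; ring
  have hbw3 : |w ^ 3| ≤ 2 ^ (6 * G + 9) := by
    rw [abs_pow]
    calc |w| ^ 3 ≤ (2 ^ (2 * G + 3)) ^ 3 := by gcongr; exact hbw j
      _ = _ := by rw [← pow_mul]; ring
  set Y := 3 * c / e with hYd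
  set s := 3 * c % e with hsd
  have hYs : e * Y + s = 3 * c := Nat.div_add_mod _ _
  have hs : s < e := Nat.mod_lt _ (by omega)
  refine padic' (p := p) (Y := Y) (m := m) (Z := Z) (A := 12 * G + 48) (th := Tri.al ^ e) (ta := ta)
    (r := (Tri.norm om * w ^ 3 : ℤ) * Tri.al ^ s) (ze := (w ^ 3 : ℤ) * om ^ 3) (ep := e2) hp he ?_ ?_ ?_ ?_ ?_ ?_ ?_ ?_ hZ1 ?_ ?_
  · rw [map_pow, sg_al]; exact one_lt_pow₀ rα_one (by omega)
  · refine (Tri.nu_pow _ _).trans ?_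
    rw [Tri.nu_al]
    exact pow_le_pow_right₀ (by norm_num) he13
  · rw [mul_assoc, ← pow_mul, ← pow_add, add_comm s, hYs, mul_comm 3 c, pow_mul, h2]
    push_cast; ring
  · refine mul_ne_zero ?_ (pow_ne_zero _ ?_)
    · exact tri_intCast_ne (mul_ne_zero (fun h => hom (Tri.eq_zero_of_norm h)) (pow_ne_zero _ hj))
    · exact fun h => by simpa [Tri.al] using congrArg Tri.b h
  · exact mul_ne_zero (tri_intCast_ne (pow_ne_zero _ hj)) (pow_ne_zero _ hom)
  · refine (Tri.nu_mul _ _).trans ?_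
    rw [Tri.nu_intCast, abs_mul]
    have : (Tri.al ^ s).nu ≤ 2 ^ 12 := by
      refine (Tri.nu_pow _ _).trans ?_
      rw [Tri.nu_al]
      exact pow_le_pow_right₀ (by norm_num) (by omega)
    calc _ ≤ (2 ^ (6 * G + 27) * 2 ^ (6 * G + 9)) * (2 : ℤ) ^ 12 := by
          have := Tri.nu_nonneg (Tri.al ^ s)
          gcongr
      _ = _ := by rw [← pow_add, ← pow_add]; ring_nf
  · refine (Tri.nu_mul _ _).trans ?_
    rw [Tri.nu_intCast]
    calc _ ≤ (2 : ℤ) ^ (6 * G + 9) * (2 ^ (2 * G + 8)) ^ 3 := by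
          have h1 := Tri.nu_nonneg om
          have h2 := Tri.nu_nonneg (om ^ 3)
          gcongr
          exact (Tri.nu_pow _ _).trans (by gcongr)
      _ = 2 ^ (12 * G + 33) := by rw [← pow_mul, ← pow_add]; ring_nf
      _ ≤ _ := pow_le_pow_right₀ (by norm_num) (by omega)
  · omega
  · have : 13 * Y + 13 ≥ 3 * c := by
      have : e * Y ≤ 13 * Y := Nat.mul_le_mul_right _ he13
      omega
    rw [show 468 * (12 * G + 48) * Z = 468 * ((12 * G + 48) * Z) by ring]
    rw [show 2028 * (12 * G + 48) * Z = 2028 * ((12 * G + 48) * Z) by ring] at hY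
    omega
  · refine le_trans ?_ hZ
    have : Y ≤ c := by
      have : 3 * Y ≤ e * Y := Nat.mul_le_mul_right _ he3
      omega
    gcongr

lemma al_four : ∃ ta : Tri, Tri.al ^ 4 = 1 + (2 : ℕ) * ta := by
  refine ⟨⟨0, 1, 1⟩, ?_⟩
  ext <;> simp [Tri.al, pow_succ]

lemma al_thirteen : ∃ ta : Tri, Tri.al ^ 13 = 1 + (3 : ℕ) * ta := by
  refine ⟨⟨91, 141, 168⟩, ?_⟩
  ext <;> simp [Tri.al, pow_succ]

/-! ### Elementary facts on Tribonacci numbers and sums of two `{2, 3}`-units -/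

lemma T_rec (n : ℕ) : T (n + 3) = T (n + 2) + T (n + 1) + T n := rfl

lemma T_nonneg_le (n : ℕ) : 0 ≤ T n ∧ T n ≤ T (n + 1) ∧ T (n + 1) ≤ T (n + 2) ∧ 1 ≤ T (n + 1) := by
  induction n with
  | zero => decide
  | succ n ih =>
    have := T_rec n
    simp only [add_assoc, Nat.reduceAdd] at *
    omega

lemma T_nonneg (n : ℕ) : 0 ≤ T n := (T_nonneg_le n).1

lemma T_mono : Monotone T := monotone_nat_of_le_succ fun n => (T_nonneg_le n).2.1

lemma T_pos {n : ℕ} (h : 1 ≤ n) : 1 ≤ T n := by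
  obtain ⟨m, rfl⟩ : ∃ m, n = m + 1 := ⟨n - 1, by omega⟩
  exact (T_nonneg_le m).2.2.2

lemma T_succ_le {n : ℕ} (h : 1 ≤ n) : T (n + 1) ≤ 2 * T n := by
  obtain ⟨m, rfl⟩ : ∃ m, n = m + 1 := ⟨n - 1, by omega⟩
  rcases m with _ | _ | m
  · decide
  · decide
  · have h1 := T_rec m
    have h2 := T_rec (m + 1)
    have h3 := T_nonneg m
    rw [show m + 1 + 3 = m + 4 from rfl, show m + 1 + 2 = m + 3 from rfl, show m + 1 + 1 = m + 2 from rfl] at h2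
    rw [show m + 1 + 1 + 1 = m + 3 from rfl, show m + 3 + 1 = m + 4 from rfl]
    linarith

lemma T_add_le {n : ℕ} (h : 1 ≤ n) (k : ℕ) : T (n + k) ≤ 2 ^ k * T n := by
  induction k with
  | zero => simp
  | succ k ih =>
    have := T_succ_le (n := n + k) (by omega)
    rw [pow_succ, ← add_assoc]; linarith

lemma T_le_two_pow (n : ℕ) : T n ≤ 2 ^ n := by
  rcases n with _ | n
  · decide
  · have := T_add_le (n := 1) le_rfl n
    rw [add_comm 1 n] at this
    have h1 : T 1 = 1 := rfl
    rw [h1, mul_one] at this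
    exact this.trans (pow_le_pow_right₀ (by norm_num) (by omega))

lemma T_sub_ge {m n : ℕ} (h : m < n) (h3 : 2 ≤ n) : T (n - 2) ≤ T n - T m := by
  rcases Nat.lt_or_ge n 3 with h4 | h4
  · obtain rfl : n = 2 := by omega
    have : m = 0 ∨ m = 1 := by omega
    rcases this with rfl | rfl <;> decide
  obtain ⟨k, rfl⟩ : ∃ k, n = k + 3 := ⟨n - 3, by omega⟩
  have h1 := T_mono (show m ≤ k + 2 by omega)
  have h2 := T_rec k
  have h5 := T_nonneg k
  rw [show k + 3 - 2 = k + 1 by omega]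
  linarith

lemma T_four {n : ℕ} (h : 3 ≤ n) : 8 * T n ≤ T (n + 4) := by
  obtain ⟨m, rfl⟩ : ∃ m, n = m + 1 := ⟨n - 1, by omega⟩
  have h1 := T_rec m
  have h2 := T_rec (m + 1)
  have h3 := T_rec (m + 2)
  have h4 := T_succ_le (n := m) (by omega)
  have h5 := T_mono (show m + 1 ≤ m + 2 by omega)
  have h6 := (T_nonneg m)
  have h7 : T m ≤ T (m + 1) := T_mono (by omega)
  obtain ⟨k, rfl⟩ : ∃ k, m = k + 1 := ⟨m - 1, by omega⟩
  have h8 := T_rec k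
  have h9 := T_nonneg k
  simp only [add_assoc] at *
  norm_num at *
  linarith

lemma six_smooth_coprime {w e f : ℕ} (h : w ∣ 2 ^ e * 3 ^ f) (h2 : ¬ 2 ∣ w) (h3 : ¬ 3 ∣ w) : w = 1 := by
  have c2 : Nat.Coprime w (2 ^ e) := by
    apply Nat.Coprime.pow_right
    exact ((Nat.Prime.coprime_iff_not_dvd Nat.prime_two).2 h2).symm
  have c3 : Nat.Coprime w (3 ^ f) := by
    apply Nat.Coprime.pow_right
    exact ((Nat.Prime.coprime_iff_not_dvd Nat.prime_three).2 h3).symm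
  exact Nat.Coprime.eq_one_of_dvd (c2.mul_right c3) h

lemma not_dvd_prod {j e f : ℕ} (hj : 1 ≤ j) : ¬ 3 ^ j + 1 = 2 ^ e * 3 ^ (f + 1) := by
  intro h
  have h1 : 3 ∣ 3 ^ j := dvd_pow_self 3 (by omega)
  have h2 : 3 ∣ 2 ^ e * 3 ^ (f + 1) := Dvd.dvd.mul_left (dvd_pow_self 3 (by omega)) _
  omega

lemma three_pow_add_one {j e f : ℕ} (h : 3 ^ j + 1 = 2 ^ e * 3 ^ f) : j ≤ 1 := by
  by_contra hj
  have hf : f = 0 := by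
    rcases f with _ | f
    · rfl
    · exact absurd h (not_dvd_prod (by omega))
  subst hf
  rw [pow_zero, mul_one] at h
  have h8 : 3 ^ j % 8 = 1 ∨ 3 ^ j % 8 = 3 := by
    clear h hj
    induction j with
    | zero => simp
    | succ j ih => rw [pow_succ]; omega
  have h9 : 3 ^ 2 ≤ 3 ^ j := Nat.pow_le_pow_right (by norm_num) (by omega)
  have he : 3 ≤ e := by
    by_contra he
    have : 2 ^ e ≤ 2 ^ 2 := Nat.pow_le_pow_right (by norm_num) (by omega)
    omega
  have : 2 ^ 3 ∣ 2 ^ e := Nat.pow_dvd_pow 2 he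
  omega

lemma two_pow_add_one {i e f : ℕ} (h : 2 ^ i + 1 = 2 ^ e * 3 ^ f) : i ≤ 3 := by
  by_contra hi
  have he : e = 0 := by
    rcases e with _ | e
    · rfl
    · have h1 : 2 ∣ 2 ^ i := dvd_pow_self 2 (by omega)
      have h2 : 2 ∣ 2 ^ (e + 1) * 3 ^ f := Dvd.dvd.mul_right (dvd_pow_self 2 (by omega)) _
      omega
  subst he
  rw [pow_zero, one_mul] at h
  have h16 : 2 ^ 4 ∣ 2 ^ i := Nat.pow_dvd_pow 2 (by omega)
  -- `3 ^ f ≡ 1 (mod 16)` forces `3 ^ f ≡ 1 (mod 5)`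
  have h80 : 3 ^ f % 80 = 1 ∨ 3 ^ f % 80 = 3 ∨ 3 ^ f % 80 = 9 ∨ 3 ^ f % 80 = 27 := by
    clear h
    induction f with
    | zero => simp
    | succ f ih => rw [pow_succ]; omega
  have h5 : 5 ∣ 2 ^ i := by omega
  have := Nat.Prime.dvd_of_dvd_pow Nat.prime_five h5
  omega

/-- If the sum of two numbers `2 ^ a 3 ^ b` is again of this form, they differ by a factor at most `8`. -/
lemma sunit {a b c d e f : ℕ} (h : 2 ^ a * 3 ^ b + 2 ^ c * 3 ^ d = 2 ^ e * 3 ^ f) :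
    2 ^ a * 3 ^ b ≤ 8 * (2 ^ c * 3 ^ d) := by
  have p2 : ∀ {i : ℕ}, 1 ≤ i → 2 ∣ 2 ^ i := fun hi => dvd_pow_self 2 (by omega)
  have p3 : ∀ {i : ℕ}, 1 ≤ i → 3 ∣ 3 ^ i := fun hi => dvd_pow_self 3 (by omega)
  have n2 : ∀ i : ℕ, ¬ 2 ∣ 3 ^ i := fun i hi => by
    have := Nat.Prime.dvd_of_dvd_pow Nat.prime_two hi
    omega
  have n3 : ∀ i : ℕ, ¬ 3 ∣ 2 ^ i := fun i hi => by
    have := Nat.Prime.dvd_of_dvd_pow Nat.prime_three hi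
    omega
  rcases Nat.lt_or_ge a c with hac | hac
  · obtain ⟨i, rfl⟩ := Nat.exists_eq_add_of_lt hac
    rcases Nat.lt_or_ge d b with hbd | hbd
    · obtain ⟨j, rfl⟩ := Nat.exists_eq_add_of_lt hbd
      have hw : 3 ^ (j + 1) + 2 ^ (i + 1) ∣ 2 ^ e * 3 ^ f :=
        ⟨2 ^ a * 3 ^ d, by rw [← h]; ring⟩
      have h2 := p2 (show 1 ≤ i + 1 by omega)
      have h3 := p3 (show 1 ≤ j + 1 by omega)
      have := six_smooth_coprime hw (fun h' => n2 (j + 1) (by omega)) (fun h' => n3 (i + 1) (by omega))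
      have := Nat.pos_of_ne_zero (pow_ne_zero (i + 1) (show 2 ≠ 0 by norm_num))
      have := Nat.pos_of_ne_zero (pow_ne_zero (j + 1) (show 3 ≠ 0 by norm_num))
      omega
    · have h1 : 2 ^ a ≤ 2 ^ (a + i + 1) := Nat.pow_le_pow_right (by norm_num) (by omega)
      have h2 : 3 ^ b ≤ 3 ^ d := Nat.pow_le_pow_right (by norm_num) hbd
      have := Nat.mul_le_mul h1 h2
      omega
  · obtain ⟨i, rfl⟩ := Nat.exists_eq_add_of_le hac
    rcases Nat.lt_or_ge b d with hbd | hbd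
    · obtain ⟨j, rfl⟩ := Nat.exists_eq_add_of_lt hbd
      rcases Nat.eq_zero_or_pos i with rfl | hi
      · have h2 : 3 ^ b ≤ 3 ^ (b + j + 1) := Nat.pow_le_pow_right (by norm_num) (by omega)
        have := Nat.mul_le_mul_left (2 ^ c) h2
        simp only [add_zero]
        omega
      have hw : 2 ^ i + 3 ^ (j + 1) ∣ 2 ^ e * 3 ^ f :=
        ⟨2 ^ c * 3 ^ b, by rw [← h]; ring⟩
      have h2 := p2 hi
      have h3 := p3 (show 1 ≤ j + 1 by omega)
      have := six_smooth_coprime hw (fun h' => n2 (j + 1) (by omega)) (fun h' => n3 i (by omega))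
      have := Nat.pos_of_ne_zero (pow_ne_zero i (show 2 ≠ 0 by norm_num))
      have := Nat.pos_of_ne_zero (pow_ne_zero (j + 1) (show 3 ≠ 0 by norm_num))
      omega
    · obtain ⟨j, rfl⟩ := Nat.exists_eq_add_of_le hbd
      have hw : 2 ^ i * 3 ^ j + 1 ∣ 2 ^ e * 3 ^ f :=
        ⟨2 ^ c * 3 ^ d, by rw [← h]; ring⟩
      have key : 2 ^ i * 3 ^ j ≤ 8 := by
        obtain ⟨e', f', he', h1, h2⟩ := (Nat.dvd_mul).1 hw
        obtain ⟨e1, -, rfl⟩ := (Nat.dvd_prime_pow Nat.prime_two).1 he'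
        obtain ⟨f1, -, rfl⟩ := (Nat.dvd_prime_pow Nat.prime_three).1 h1
        have h3 := h2.symm
        rcases Nat.eq_zero_or_pos i with rfl | hi
        · rw [pow_zero, one_mul] at h3 ⊢
          have := three_pow_add_one h3
          interval_cases j <;> norm_num
        · rcases Nat.eq_zero_or_pos j with rfl | hj
          · rw [pow_zero, mul_one] at h3 ⊢
            have := two_pow_add_one h3
            interval_cases i <;> norm_num
          · have a2 := Dvd.dvd.mul_right (p2 hi) (3 ^ j)
            have a3 := Dvd.dvd.mul_left (p3 hj) (2 ^ i)
            have := six_smooth_coprime hw (by omega) (by omega)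
            omega
      calc _ = (2 ^ i * 3 ^ j) * (2 ^ c * 3 ^ d) := by ring
        _ ≤ _ := Nat.mul_le_mul_right _ key

/-- The exceptional triple of indices `m, m + 3, m + 4` does not occur. -/
lemma no_exception {cc : ℤ} (hc : 1 ≤ cc) {m x y x1 y1 x2 y2 : ℕ} (hm : 3 ≤ m) (h0 : T m - 2 ^ x * 3 ^ y = cc)
    (h1 : T (m + 3) - 2 ^ x1 * 3 ^ y1 = cc) (h2 : T (m + 4) - 2 ^ x2 * 3 ^ y2 = cc) : False := by
  have hT : T (m + 4) + T m = 2 * T (m + 3) := by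
    have := T_rec m
    have := T_rec (m + 1)
    simp only [add_assoc] at *
    norm_num at *
    linarith
  have hs : 2 ^ x2 * 3 ^ y2 + 2 ^ x * 3 ^ y = 2 ^ (x1 + 1) * 3 ^ y1 := by
    have : (2 ^ x2 * 3 ^ y2 + 2 ^ x * 3 ^ y : ℤ) = 2 ^ (x1 + 1) * 3 ^ y1 := by
      rw [pow_succ]; linarith
    exact_mod_cast this
  have h8 : (2 ^ x2 * 3 ^ y2 : ℤ) ≤ 8 * (2 ^ x * 3 ^ y) := by exact_mod_cast sunit hs
  have := T_four hm
  linarith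

/-! ### Upper bounds for the linear forms -/

lemma abs_log_le {z t : ℝ} (h : |z - 1| ≤ t) (ht : t ≤ 1 / 2) : |Real.log z| ≤ 2 * t := by
  have h1 := abs_le.1 h
  have hz : 0 < z := by linarith
  have h2 := Real.log_le_sub_one_of_pos hz
  have h3 := Real.one_sub_inv_le_log_of_pos hz
  have h4 : -(2 * t) ≤ 1 - z⁻¹ := by
    have : z⁻¹ ≤ 1 + 2 * t := by
      rw [inv_le_comm₀ hz (by linarith), inv_le_iff_one_le_mul₀ (by linarith)]
      nlinarith
    linarith
  exact abs_le.2 ⟨by linarith, by linarith⟩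

lemma half_le_log_rα : 1 / 2 ≤ Real.log rα := by
  rw [Real.le_log_iff_exp_le rα_pos]
  have h1 : Real.exp (1 / 2) ^ 2 = Real.exp 1 := by rw [← Real.exp_nat_mul]; norm_num
  nlinarith [Real.exp_one_lt_d9, Real.exp_pos (1 / 2), rα_gt]

lemma le_of_rα_pow {a : ℕ} {t : ℝ} (h : rα ^ a ≤ Real.exp t) : (a : ℝ) ≤ 2 * t := by
  have h1 := Real.log_le_log (pow_pos rα_pos a) h
  rw [Real.log_exp, Real.log_pow] at h1
  have h2 := half_le_log_rα
  have h3 : (0 : ℝ) ≤ a := by positivity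
  nlinarith

/-- The linear form attached to a representation `T n = 2 ^ x 3 ^ y + c`. -/
noncomputable def lam0 (n x y : ℕ) : ℝ := x * Real.log 2 + y * Real.log 3 + Real.log rδ - n * Real.log rα

lemma lam0_eq (n x y : ℕ) : lam0 n x y = Real.log (rδ * (2 ^ x * 3 ^ y) / rα ^ n) := by
  have := rδ_pos
  have := rα_pos
  rw [lam0, Real.log_div (by positivity) (by positivity), Real.log_mul (by positivity) (by positivity),
    Real.log_mul (by positivity) (by positivity), Real.log_pow, Real.log_pow, Real.log_pow]
  ring

lemma lam0_le {cc : ℤ} (hc : 1 ≤ cc) {m n x y d : ℕ} (hm : 3 ≤ m) (hcm : cc < T m) (hn : n = m + d) (hd : 3 ≤ d)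
    (h : T n - 2 ^ x * 3 ^ y = cc) : |lam0 n x y| * rα ^ d ≤ 3.4 := by
  have hα := rα_pos
  have h1 := abs_le.1 (binet n)
  have h2 := abs_le.1 (binet m)
  have hδ := rδ_pos
  have hu : (2 ^ x * 3 ^ y : ℝ) = T n - cc := by
    have : (2 ^ x * 3 ^ y : ℤ) = T n - cc := by linarith
    exact_mod_cast congrArg (Int.cast (R := ℝ)) this
  have hc0 : (1 : ℝ) ≤ cc := by exact_mod_cast hc
  have hc1 : (cc : ℝ) ≤ T m := by exact_mod_cast hcm.le
  have hm6 : 6.2 ≤ rα ^ m := by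
    calc (6.2 : ℝ) ≤ 1.8392 ^ 3 := by norm_num
      _ ≤ rα ^ 3 := by gcongr; exact rα_gt.le
      _ ≤ _ := pow_le_pow_right₀ rα_one.le hm
  have hd6 : 6.2 ≤ rα ^ d := by
    calc (6.2 : ℝ) ≤ 1.8392 ^ 3 := by norm_num
      _ ≤ rα ^ 3 := by gcongr; exact rα_gt.le
      _ ≤ _ := pow_le_pow_right₀ rα_one.le hd
  have hnm : rα ^ n = rα ^ m * rα ^ d := by rw [hn, pow_add]
  have hnum : |rδ * (2 ^ x * 3 ^ y) - rα ^ n| ≤ 1.7 * rα ^ m := by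
    have e1 : rδ * cc ≤ rδ * T m := by gcongr
    have e2 : 0 ≤ rδ * cc := by positivity
    rw [hu, mul_sub]
    exact abs_le.2 ⟨by linarith, by linarith⟩
  have ht : |rδ * (2 ^ x * 3 ^ y) / rα ^ n - 1| ≤ 1.7 / rα ^ d := by
    have hn0 : 0 < rα ^ n := pow_pos hα n
    rw [div_sub_one hn0.ne', abs_div, abs_of_pos hn0, div_le_div_iff₀ hn0 (by positivity)]
    calc _ ≤ 1.7 * rα ^ m * rα ^ d := by gcongr
      _ = _ := by rw [hnm]; ring
  have := abs_log_le ht (by rw [div_le_iff₀ (by positivity)]; linarith)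
  rw [← lam0_eq] at this
  calc _ ≤ (2 * (1.7 / rα ^ d)) * rα ^ d := by gcongr
    _ = 3.4 := by field_simp; norm_num

lemma gap_of_baker {L : ℝ} {d : ℕ} {U : ℕ} (h1 : |L| * rα ^ d ≤ 3.4) (h2 : Real.exp (-U) < |L|) : d ≤ 2 * U + 3 := by
  have hα := pow_pos rα_pos d
  have h3 : rα ^ d ≤ Real.exp (U + 1.5) := by
    have e1 : Real.exp (-U) * rα ^ d ≤ 3.4 := (mul_le_mul_of_nonneg_right h2.le hα.le).trans h1
    have e2 : (3.4 : ℝ) ≤ Real.exp 1.5 := by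
      have : Real.exp 1.5 ^ 2 = Real.exp 3 := by rw [← Real.exp_nat_mul]; norm_num
      nlinarith [exp_three_gt, Real.exp_pos 1.5]
    have e3 : rα ^ d = Real.exp U * (Real.exp (-U) * rα ^ d) := by
      rw [← mul_assoc, ← Real.exp_add]; simp
    rw [e3, Real.exp_add]
    gcongr
    linarith
  have := le_of_rα_pow h3
  have : (d : ℝ) ≤ (2 * U + 3 : ℕ) := by push_cast; linarith
  exact_mod_cast this

lemma nat_nu (k : ℕ) : Tri.nu (k : Tri) = k := by simpa using Tri.nu_intCast k

lemma two_pow_le_exp (M : ℕ) : (2 : ℝ) ^ M ≤ Real.exp M := by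
  rw [← Real.exp_one_pow]
  gcongr
  linarith [Real.exp_one_gt_d9]

lemma BHyp_R {q : ℕ} (hq : q = 2 ∨ q = 3) {k y a g M G B : ℕ} (hk1 : 1 ≤ k) (hk : k ≤ 2 ^ M) (hg1 : 1 ≤ g) (hg : g ≤ G)
    (hyB : y ≤ B) (haB : a ≤ B) (hB : 1 ≤ B) :
    BHyp ![Tri.al, (q : Tri)] (k * Tri.de) (Tri.al ^ g - 1) ![-(a : ℤ), y] 1 (M + G + 5) 3 B := by
  have hq3 : (q : ℝ) ≤ 3 := by rcases hq with rfl | rfl <;> norm_num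
  have hq1 : (1 : ℝ) ≤ q := by rcases hq with rfl | rfl <;> norm_num
  have hkR : (1 : ℝ) ≤ k := by exact_mod_cast hk1
  have hkR2 : (k : ℝ) ≤ 2 ^ M := by exact_mod_cast hk
  have hδ := rδ_bounds
  have hze : sg (k * Tri.de) = k * rδ := by rw [map_mul, map_natCast, sg_de]
  have hze' : sg (Tri.al ^ g - 1) = rα ^ g - 1 := by rw [map_sub, map_pow, map_one, sg_al]
  have hαg : 1.8 ≤ rα ^ g := by
    have := le_self_pow₀ rα_one.le (show g ≠ 0 by omega)
    linarith [rα_gt]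
  have hαG : rα ^ g ≤ 2 ^ G := by
    calc rα ^ g ≤ 2 ^ g := by
          have := rα_pos
          gcongr; linarith [rα_lt]
      _ ≤ _ := pow_le_pow_right₀ (by norm_num) hg
  have hM := two_pow_le_exp (M + 4)
  have hG := two_pow_le_exp (G + 1)
  have lM : Real.exp (M + 4 : ℕ) ≤ Real.exp (M + G + 5 : ℕ) := by
    exact Real.exp_le_exp.2 (by exact_mod_cast (by omega))
  have lG : Real.exp (G + 1 : ℕ) ≤ Real.exp (M + G + 5 : ℕ) := by
    exact Real.exp_le_exp.2 (by exact_mod_cast (by omega))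
  have hM2 : (2 : ℝ) ^ (M + 4) = 16 * 2 ^ M := by ring
  have hG2 : (2 : ℝ) ^ (G + 1) = 2 * 2 ^ G := by ring
  refine ⟨?_, ?_, ?_, ?_, ?_, ?_, ?_, ?_, ?_, by norm_num, by omega, by norm_num⟩
  · intro i; fin_cases i
    · simpa [sg_al] using rα_one.le
    · simpa using hq1
  · simp only [Fin.prod_univ_two, Matrix.cons_val_zero, Matrix.cons_val_one, Tri.nu_al, nat_nu]
    push_cast
    have := exp_two_gt
    norm_num
    linarith
  · rw [hze]; exact mul_pos (by linarith) (by linarith)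
  · rw [hze']; linarith
  · have h1 : Tri.nu (k * Tri.de) ≤ k * 13 := by
      refine (Tri.nu_mul _ _).trans (le_of_eq ?_)
      rw [nat_nu]; rfl
    have h2 : (Tri.nu (k * Tri.de) : ℝ) ≤ k * 13 := by exact_mod_cast h1
    linarith
  · have h1 : (Tri.nu (Tri.al ^ g - 1) : ℝ) ≤ 2 ^ (G + 1) := by exact_mod_cast nu_al_pow_sub hg
    linarith
  · rw [hze, hze']
    have u1 : Real.log (k * rδ) ≤ (M + 4 : ℕ) := by
      rw [Real.log_le_iff_le_exp (mul_pos (by linarith) (by linarith))]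
      nlinarith
    have u2 : Real.log (rα ^ g - 1) ≤ (G + 1 : ℕ) := by
      rw [Real.log_le_iff_le_exp (by linarith)]
      have : (0 : ℝ) < 2 ^ G := by positivity
      linarith
    have l1 : 0 ≤ Real.log (k * rδ) := Real.log_nonneg (by nlinarith)
    have l2 : -1 ≤ Real.log (rα ^ g - 1) := by
      rw [Real.le_log_iff_exp_le (by linarith)]
      have := Real.exp_neg_one_lt_d9
      linarith
    push_cast at *
    have hM0 : (0 : ℝ) ≤ M := by positivity
    have hG0 : (0 : ℝ) ≤ G := by positivity
    exact abs_le.2 ⟨by linarith, by linarith⟩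
  · intro i; fin_cases i <;> simp <;> assumption
  · simpa using hB

/-- Bounding `a` when `k q ^ y` is close to `T (a + g) - T a`, by the two-logarithm estimate. -/
lemma lemR {q : ℕ} (hq : q = 2 ∨ q = 3) {k y a g M G B mm J gg : ℕ} (hk1 : 1 ≤ k) (hk : k ≤ 2 ^ M) (hg1 : 1 ≤ g) (hg : g ≤ G)
    (hyB : y ≤ B) (haB : a ≤ B) (hB : 1 ≤ B)
    (hE : |(k * q ^ y : ℤ) - (T (a + g) - T a)| ≤ 6 ^ mm) (hJ1 : 1 ≤ J) (hgg1 : 1 ≤ gg)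
    (hgg : 2 * ((M + G + 5) * bL 2 3 J gg) * B ≤ 2 ^ gg)
    (hJ : ((M + G + 5) * bL 2 3 J gg) ^ 2 * bL 2 3 J gg ≤ bh J gg * 2 ^ J)
    (hw : 8 * bh J gg ≤ 3 ^ J) :
    a ≤ 2 * bU 2 (M + G + 5) 3 J gg + 4 * mm + 2 * G + 10 := by
  have hδ := rδ_bounds
  have hα := rα_pos
  have hαg : 1.8392 ≤ rα ^ g := by
    have := le_self_pow₀ rα_one.le (show g ≠ 0 by omega)
    linarith [rα_gt]
  have hδ0 := rδ_pos
  have hkR : (1 : ℝ) ≤ k := by exact_mod_cast hk1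
  have hkR0 : (0 : ℝ) < k := by linarith
  have hqR : (0 : ℝ) < q := by rcases hq with rfl | rfl <;> norm_num
  have hlf : linForm ![Tri.al, (q : Tri)] (k * Tri.de) (Tri.al ^ g - 1) ![-(a : ℤ), y] 1
      = Real.log (k * q ^ y * rδ / (rα ^ a * (rα ^ g - 1))) := by
    rw [Real.log_div (by positivity) (mul_ne_zero (by positivity) (by linarith)),
      Real.log_mul (by positivity) (by linarith), Real.log_mul (by positivity) (by positivity),
      Real.log_mul (by positivity) (by linarith), Real.log_pow, Real.log_pow]
    simp only [linForm, Fin.sum_univ_two, Matrix.cons_val_zero, Matrix.cons_val_one, map_mul, map_natCast, sg_de, sg_al,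
      map_sub, map_pow, map_one]
    rw [Real.log_mul (by positivity) (by linarith)]
    push_cast
    ring
  by_cases hne : linForm ![Tri.al, (q : Tri)] (k * Tri.de) (Tri.al ^ g - 1) ![-(a : ℤ), y] 1 = 0
  · -- the form vanishes only if `k q ^ y δ = α ^ a (α ^ g - 1)`, and then norms bound `k q ^ y`
    have hpos : 0 < k * q ^ y * rδ / (rα ^ a * (rα ^ g - 1)) :=
      div_pos (by have := rδ_pos; positivity) (mul_pos (by positivity) (by linarith))
    rw [hlf] at hne
    have h1 : k * q ^ y * rδ / (rα ^ a * (rα ^ g - 1)) = 1 := Real.eq_one_of_pos_of_log_eq_zero hpos hne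
    rw [div_eq_one_iff_eq (mul_ne_zero (by positivity) (by linarith))] at h1
    have h2 : ((k * q ^ y : ℕ) : Tri) * Tri.de = Tri.al ^ a * (Tri.al ^ g - 1) := by
      apply sg_eq
      simp only [map_mul, map_natCast, sg_de, sg_al, map_sub, map_pow, map_one]
      push_cast; exact h1
    have h3 := congrArg Tri.norm h2
    rw [Tri.norm_mul, norm_nat, norm_de, Tri.norm_mul, Tri.norm_pow, Tri.norm_al, one_pow, one_mul] at h3
    have h4 := (le_abs_self _).trans (abs_norm_le (Tri.al ^ g - 1))
    rw [← h3] at h4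
    have h5 := nu_al_pow_sub hg
    have h6 : ((k * q ^ y : ℕ) : ℤ) ≤ 2 ^ (G + 1) := by
      by_contra hcon
      push Not at hcon
      have e1 := pow_lt_pow_left₀ hcon (by positivity) (show 3 ≠ 0 by norm_num)
      have e2 := pow_le_pow_left₀ (Tri.nu_nonneg _) h5 3
      linarith [pow_pos (show (0 : ℤ) < 2 by norm_num) (G + 1), Tri.nu_nonneg (Tri.al ^ g - 1),
        pow_nonneg (Tri.nu_nonneg (Tri.al ^ g - 1)) 3]
    have h7 : (k * q ^ y : ℝ) ≤ 2 ^ (G + 1) := by exact_mod_cast h6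
    have h8 : rα ^ a ≤ Real.exp (G + 4 : ℕ) := by
      refine le_trans ?_ (two_pow_le_exp (G + 4))
      have e0 : 0 < rα ^ a := by positivity
      have e1 : rα ^ a * 0.8 ≤ 2 ^ (G + 1) * 3 := by
        calc rα ^ a * 0.8 ≤ rα ^ a * (rα ^ g - 1) := by gcongr; linarith
          _ = _ := h1.symm
          _ ≤ _ := mul_le_mul h7 (by linarith) hδ0.le (by positivity)
      have e2 : (2 : ℝ) ^ (G + 4) = 8 * 2 ^ (G + 1) := by ring
      have e3 : (0 : ℝ) < 2 ^ (G + 1) := by positivity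
      linarith
    have h9 := le_of_rα_pow h8
    have : a ≤ 2 * (G + 4) := by exact_mod_cast h9
    omega
  have hb := baker2 hq (BHyp_R hq hk1 hk hg1 hg hyB haB hB) (by omega) hJ1 hgg1 (by exact_mod_cast hgg) hJ hw hne
  rw [hlf] at hb
  set U := bU 2 (M + G + 5) 3 J gg with hU
  have hER : |(k * q ^ y : ℝ) - (T (a + g) - T a)| ≤ 6 ^ mm := by exact_mod_cast hE
  have hden : 0 < rα ^ a * (rα ^ g - 1) := mul_pos (by positivity) (by linarith)
  have h6 : (1 : ℝ) ≤ 6 ^ mm := one_le_pow₀ (by norm_num)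
  have hnum : |k * q ^ y * rδ - rα ^ a * (rα ^ g - 1)| ≤ 7 * 6 ^ mm := by
    have b1 := abs_le.1 (binet (a + g))
    have b2 := abs_le.1 (binet a)
    have e1 : |((k * q ^ y : ℝ) - (T (a + g) - T a)) * rδ| ≤ 6 ^ mm * 2.975 := by
      rw [abs_mul, abs_of_pos rδ_pos]
      exact mul_le_mul hER hδ.2.le hδ0.le (by positivity)
    have e2 := abs_le.1 e1
    have e3 : k * q ^ y * rδ - rα ^ a * (rα ^ g - 1) = ((k * q ^ y : ℝ) - (T (a + g) - T a)) * rδ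
      + (rδ * T (a + g) - rα ^ (a + g)) - (rδ * T a - rα ^ a) := by rw [pow_add]; ring
    rw [e3]
    exact abs_le.2 ⟨by linarith, by linarith⟩
  have hz : |k * q ^ y * rδ / (rα ^ a * (rα ^ g - 1)) - 1| ≤ 9 * 6 ^ mm / rα ^ a := by
    rw [div_sub_one hden.ne', abs_div, abs_of_pos hden, div_le_div_iff₀ hden (by positivity)]
    calc _ ≤ 7 * 6 ^ mm * rα ^ a := by gcongr
      _ ≤ 9 * 6 ^ mm * (rα ^ a * 0.8) := by
        have : 0 < (6 : ℝ) ^ mm * rα ^ a := by positivity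
        linarith
      _ ≤ _ := by gcongr; linarith
  have hfin : rα ^ a ≤ 18 * 6 ^ mm * Real.exp U := by
    by_cases hs : 9 * 6 ^ mm / rα ^ a ≤ 1 / 2
    · have h1 := hb.trans_le (abs_log_le hz hs)
      rw [Real.exp_neg, ← mul_div_assoc, inv_lt_iff_one_lt_mul₀ (Real.exp_pos _), div_mul_eq_mul_div,
        lt_div_iff₀ (by positivity)] at h1
      linarith
    · push Not at hs
      rw [lt_div_iff₀ (by positivity)] at hs
      have : 1 ≤ Real.exp U := Real.one_le_exp (by positivity)
      nlinarith
  have h20 := exp_three_gt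
  have h66 : (6 : ℝ) ^ mm ≤ Real.exp (2 * mm) := by
    rw [mul_comm, Real.exp_nat_mul]
    gcongr
    linarith [exp_two_gt]
  have hfin2 : rα ^ a ≤ Real.exp (3 + 2 * mm + U) := by
    rw [Real.exp_add, Real.exp_add]
    refine hfin.trans ?_
    gcongr
    linarith
  have := le_of_rα_pow hfin2
  have : (a : ℝ) ≤ (2 * U + 4 * mm + 6 : ℕ) := by push_cast; linarith
  have : a ≤ 2 * U + 4 * mm + 6 := by exact_mod_cast this
  omega

/-! ### From a bound for the gap to a bound for the largest index -/

/-- Four representations `c = T (n i) - 2 ^ (x i) 3 ^ (y i)` with decreasing indices. -/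
structure Quad (cc : ℤ) (n x y : Fin 4 → ℕ) : Prop where
  pos : 1 ≤ cc
  anti : StrictAnti n
  eq : ∀ i, T (n i) - 2 ^ x i * 3 ^ y i = cc

namespace Quad

variable {cc : ℤ} {n x y : Fin 4 → ℕ}

lemma u_pos (i : Fin 4) : (1 : ℤ) ≤ 2 ^ x i * 3 ^ y i := by
  have h1 : (1 : ℤ) ≤ 2 ^ x i := one_le_pow₀ (by norm_num)
  have h2 : (1 : ℤ) ≤ 3 ^ y i := one_le_pow₀ (by norm_num)
  nlinarith

lemma three_le (H : Quad cc n x y) (i : Fin 4) : 3 ≤ n i := by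
  by_contra hcon
  have h1 := T_mono (show n i ≤ 2 by omega)
  have h2 : T 2 = 1 := rfl
  have h3 := H.eq i
  have h4 := H.pos
  have h5 := u_pos (x := x) (y := y) i
  linarith

lemma lt_T (H : Quad cc n x y) (i : Fin 4) : cc < T (n i) := by
  have h3 := H.eq i
  have h5 := u_pos (x := x) (y := y) i
  linarith

lemma x_le (H : Quad cc n x y) (i : Fin 4) : x i ≤ n i := by
  have h1 := T_le_two_pow (n i)
  have h2 : (1 : ℤ) ≤ 3 ^ y i := one_le_pow₀ (by norm_num)
  have h3 : (2 : ℤ) ^ x i ≤ 2 ^ n i := by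
    have := H.eq i
    have := H.pos
    have : (0 : ℤ) ≤ 2 ^ x i := by positivity
    nlinarith
  exact (Nat.pow_le_pow_iff_right (by norm_num : 1 < 2)).1 (by exact_mod_cast h3)

lemma y_le (H : Quad cc n x y) (i : Fin 4) : y i ≤ n i := by
  have h1 := T_le_two_pow (n i)
  have h2 : (1 : ℤ) ≤ 2 ^ x i := one_le_pow₀ (by norm_num)
  have h4 : (2 : ℤ) ^ y i ≤ 3 ^ y i := by gcongr; norm_num
  have h3 : (2 : ℤ) ^ y i ≤ 2 ^ n i := by
    have := H.eq i
    have := H.pos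
    have : (0 : ℤ) ≤ 3 ^ y i := by positivity
    nlinarith
  exact (Nat.pow_le_pow_iff_right (by norm_num : 1 < 2)).1 (by exact_mod_cast h3)

lemma sub_eq (H : Quad cc n x y) (i j : Fin 4) :
    T (n i) - T (n j) = 2 ^ x i * 3 ^ y i - 2 ^ x j * 3 ^ y j := by
  linarith [H.eq i, H.eq j]

lemma gap (H : Quad cc n x y) : ∃ d, n 0 = n 3 + d ∧ 3 ≤ d := by
  have h1 := H.anti (show (0 : Fin 4) < 1 by decide)
  have h2 := H.anti (show (1 : Fin 4) < 2 by decide)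
  have h3 := H.anti (show (2 : Fin 4) < 3 by decide)
  exact ⟨n 0 - n 3, by omega, by omega⟩

lemma lam0_le (H : Quad cc n x y) {d : ℕ} (hd : n 0 = n 3 + d) (hd3 : 3 ≤ d) : |lam0 (n 0) (x 0) (y 0)| * rα ^ d ≤ 3.4 :=
  _root_.lam0_le H.pos (H.three_le 3) (H.lt_T 3) hd hd3 (H.eq 0)

lemma le_gap (H : Quad cc n x y) {G : ℕ} (hG : n 0 ≤ n 3 + G) (i j : Fin 4) : n i ≤ n j + G := by
  have h1 : n i ≤ n 0 := H.anti.antitone (Fin.zero_le i)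
  have h2 : n 3 ≤ n j := H.anti.antitone (Fin.le_last j)
  omega

/-- Among any three indices, one exponent of `2` is small, and one exponent of `3` is small. -/
lemma small_of_three (H : Quad cc n x y) {G Z : ℕ} (hG : n 0 ≤ n 3 + G) (hZ1 : 1 ≤ Z)
    (hY : 2028 * (12 * G + 48) * Z + 13 ≤ n 3) (hZ : 468 * Z * ((12 * G + 48) + n 0 + 1) ≤ 2 ^ Z)
    {i j k : Fin 4} (hij : i < j) (hjk : j < k) {m : ℕ} (hm : 219024 * (12 * G + 48) * Z ^ 2 ≤ m) :
    (x i < m ∨ x j < m ∨ x k < m) ∧ (y i < m ∨ y j < m ∨ y k < m) := by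
  have hne : ¬ (n j = n k + 3 ∧ n i = n k + 4) := fun ⟨h1, h2⟩ =>
    no_exception H.pos (H.three_le k) (H.eq k) (h1 ▸ H.eq j) (h2 ▸ H.eq i)
  have h0k : n k ≤ n 0 := H.anti.antitone (Fin.zero_le k)
  have h3k : n 3 ≤ n k := H.anti.antitone (Fin.le_last k)
  have hZ' : 468 * Z * ((12 * G + 48) + n k + 1) ≤ 2 ^ Z := le_trans (by gcongr) hZ
  have hd2 : ∀ l, m ≤ x l → ((2 : ℕ) : ℤ) ^ m ∣ T (n l) - cc := fun l hl => by
    rw [show T (n l) - cc = 2 ^ x l * 3 ^ y l by linarith [H.eq l]]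
    exact Dvd.dvd.mul_right (pow_dvd_pow _ hl) _
  have hd3 : ∀ l, m ≤ y l → ((3 : ℕ) : ℤ) ^ m ∣ T (n l) - cc := fun l hl => by
    rw [show T (n l) - cc = 2 ^ x l * 3 ^ y l by linarith [H.eq l]]
    exact Dvd.dvd.mul_left (pow_dvd_pow _ hl) _
  constructor
  · by_contra! hcon
    obtain ⟨a1, a2, a3⟩ := hcon
    obtain ⟨ta, hta⟩ := al_four
    have := three_large (by norm_num) hta (by norm_num) (by norm_num) (H.anti hjk) (H.anti hij) (H.le_gap hG i k) hne
      (hd2 i a1) (hd2 j a2) (hd2 k a3) hZ1 (hY.trans h3k) hZ'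
    omega
  · by_contra! hcon
    obtain ⟨a1, a2, a3⟩ := hcon
    obtain ⟨ta, hta⟩ := al_thirteen
    have := three_large (by norm_num) hta (by norm_num) (by norm_num) (H.anti hjk) (H.anti hij) (H.le_gap hG i k) hne
      (hd3 i a1) (hd3 j a2) (hd3 k a3) hZ1 (hY.trans h3k) hZ'
    omega

/-- An index other than the last, with both exponents small, is itself small. -/
lemma le_of_small (H : Quad cc n x y) {i : Fin 4} (hi : i < 3) {m : ℕ} (hx : x i ≤ m) (hy : y i ≤ m) : n i ≤ 4 * m + 6 := by
  have h1 := T_sub_ge (H.anti hi) (by have := H.three_le i; omega)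
  rw [H.sub_eq] at h1
  have h2 : (2 : ℤ) ^ x i * 3 ^ y i ≤ 6 ^ m := by
    calc (2 : ℤ) ^ x i * 3 ^ y i ≤ 2 ^ m * 3 ^ m := by gcongr <;> norm_num
      _ = 6 ^ m := by rw [← mul_pow]; norm_num
  have h3 : T (n i - 2) ≤ 6 ^ m := by linarith [u_pos (x := x) (y := y) 3]
  have h4 : (T (n i - 2) : ℝ) ≤ 6 ^ m := by exact_mod_cast h3
  have h5 := abs_le.1 (binet (n i - 2))
  have h6 : (1 : ℝ) ≤ 6 ^ m := one_le_pow₀ (by norm_num)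
  have h66 : (6 : ℝ) ^ m ≤ Real.exp (2 * m) := by
    rw [mul_comm, Real.exp_nat_mul]
    gcongr
    linarith [exp_two_gt]
  have h7 : rα ^ (n i - 2) ≤ Real.exp (2 + 2 * m) := by
    rw [Real.exp_add]
    have e1 : rδ * T (n i - 2) ≤ 2.975 * 6 ^ m := by
      have := rδ_bounds
      have := rδ_pos
      have : (0 : ℝ) ≤ T (n i - 2) := by exact_mod_cast T_nonneg _
      apply mul_le_mul <;> linarith
    have e2 : 7.38 * (6 : ℝ) ^ m ≤ Real.exp 2 * Real.exp (2 * m) := by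
      have := exp_two_gt
      gcongr
    linarith
  have h8 := le_of_rα_pow h7
  have h9 : ((n i - 2 : ℕ) : ℝ) ≤ (4 + 4 * m : ℕ) := by push_cast; linarith
  have : n i - 2 ≤ 4 + 4 * m := by exact_mod_cast h9
  omega

end Quad

/-- Writing the difference of two numbers `s ^ x q ^ y` as `k q ^ min y y'` with `k` bounded. -/
lemma sub_factor {s q x y x' y' m R : ℕ} (hs : 1 ≤ s) (hs4 : s ≤ 4) (hq : 1 ≤ q) (hx : x ≤ m) (hx' : x' ≤ m)
    (hlt : s ^ x' * q ^ y' < s ^ x * q ^ y) (hR : s ^ x * q ^ y ≤ 2 ^ R * (s ^ x' * q ^ y')) :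
    ∃ k t, 1 ≤ k ∧ k ≤ 2 ^ (4 * m + R) ∧ t ≤ max y y' ∧ k * q ^ t + s ^ x' * q ^ y' = s ^ x * q ^ y := by
  have h4 : ∀ z, z ≤ m → s ^ z ≤ 2 ^ (2 * m) := fun z hz => by
    calc s ^ z ≤ s ^ m := Nat.pow_le_pow_right hs hz
      _ ≤ (2 ^ 2) ^ m := Nat.pow_le_pow_left (by omega) m
      _ = _ := by rw [← pow_mul]
  have hbig : 2 ^ (2 * m) ≤ 2 ^ (4 * m + R) := Nat.pow_le_pow_right (by norm_num) (by omega)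
  rcases Nat.le_total y' y with h | h
  · obtain ⟨d, rfl⟩ := Nat.exists_eq_add_of_le h
    have hqy : 0 < q ^ y' := Nat.pow_pos hq
    have e1 : s ^ x * q ^ (y' + d) = (s ^ x * q ^ d) * q ^ y' := by rw [pow_add]; ring
    rw [e1] at hlt hR
    have hlt' := Nat.lt_of_mul_lt_mul_right hlt
    have hR' : s ^ x * q ^ d ≤ 2 ^ R * s ^ x' := by
      rw [← mul_assoc] at hR
      exact Nat.le_of_mul_le_mul_right hR hqy
    refine ⟨s ^ x * q ^ d - s ^ x', y', by omega, ?_, by omega, ?_⟩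
    · calc _ ≤ s ^ x * q ^ d := Nat.sub_le _ _
        _ ≤ 2 ^ R * s ^ x' := hR'
        _ ≤ 2 ^ R * 2 ^ (2 * m) := Nat.mul_le_mul_left _ (h4 _ hx')
        _ ≤ _ := by rw [← pow_add]; exact Nat.pow_le_pow_right (by norm_num) (by omega)
    · rw [e1, ← add_mul, Nat.sub_add_cancel hlt'.le]
  · obtain ⟨d, rfl⟩ := Nat.exists_eq_add_of_le h
    have e1 : s ^ x' * q ^ (y + d) = (s ^ x' * q ^ d) * q ^ y := by rw [pow_add]; ring
    rw [e1] at hlt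
    have hlt' := Nat.lt_of_mul_lt_mul_right hlt
    refine ⟨s ^ x - s ^ x' * q ^ d, y, by omega, ?_, by omega, ?_⟩
    · exact (Nat.sub_le _ _).trans ((h4 _ hx).trans hbig)
    · rw [e1, ← add_mul, Nat.sub_add_cancel hlt'.le]

namespace Quad

variable {cc : ℤ} {n x y : Fin 4 → ℕ}

/-- The numerical conditions under which the two-logarithm estimate applies. -/
structure Num2 (A J gg B : ℕ) : Prop where
  hJ1 : 1 ≤ J
  hgg1 : 1 ≤ gg
  hgg : 2 * (A * bL 2 3 J gg) * B ≤ 2 ^ gg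
  hJ : (A * bL 2 3 J gg) ^ 2 * bL 2 3 J gg ≤ bh J gg * 2 ^ J
  hw : 8 * bh J gg ≤ 3 ^ J

lemma case_two (H : Quad cc n x y) {G : ℕ} (hG : n 0 ≤ n 3 + G) {s q : ℕ} (hs : 1 ≤ s) (hs4 : s ≤ 4) (hq : q = 2 ∨ q = 3)
    {X Y : Fin 4 → ℕ} (hu : ∀ i, 2 ^ x i * 3 ^ y i = s ^ X i * q ^ Y i) (hYn : ∀ i, Y i ≤ n i) {m J gg : ℕ}
    (hN : Num2 (4 * m + (G + 2) + G + 5) J gg (n 0)) {i j : Fin 4} (hij : i < j) (hj : j < 3)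
    (hi1 : X i ≤ m) (hj1 : X j ≤ m) :
    n j ≤ 2 * bU 2 (4 * m + (G + 2) + G + 5) 3 J gg + 4 * m + 2 * G + 10 := by
  have hlt := H.anti hij
  obtain ⟨g, hg⟩ : ∃ g, n i = n j + g := ⟨n i - n j, by omega⟩
  have hgG := H.le_gap hG i j
  have h3 := H.three_le j
  have hT : T (n j) < T (n i) := by
    have := T_sub_ge hlt (by omega)
    have := T_pos (show 1 ≤ n i - 2 by omega)
    linarith
  have hui : (2 ^ x i * 3 ^ y i : ℤ) = ((s ^ X i * q ^ Y i : ℕ) : ℤ) := by exact_mod_cast hu i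
  have huj : (2 ^ x j * 3 ^ y j : ℤ) = ((s ^ X j * q ^ Y j : ℕ) : ℤ) := by exact_mod_cast hu j
  have hsub := H.sub_eq i j
  rw [hui, huj] at hsub
  have hR : s ^ X i * q ^ Y i ≤ 2 ^ (G + 2) * (s ^ X j * q ^ Y j) := by
    have e1 := T_sub_ge (H.anti hj) (by omega)
    rw [H.sub_eq j 3, huj] at e1
    have e2 := T_add_le (n := n j - 2) (by omega) (g + 2)
    rw [show n j - 2 + (g + 2) = n i by omega] at e2
    have e3 := H.eq i
    rw [hui] at e3
    have e4 : (2 : ℤ) ^ (g + 2) ≤ 2 ^ (G + 2) := pow_le_pow_right₀ (by norm_num) (by omega)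
    have e5 := u_pos (x := x) (y := y) 3
    have e6 := H.pos
    have e7 : (0 : ℤ) ≤ T (n j - 2) := T_nonneg _
    have : ((s ^ X i * q ^ Y i : ℕ) : ℤ) ≤ 2 ^ (G + 2) * ((s ^ X j * q ^ Y j : ℕ) : ℤ) := by
      calc _ ≤ T (n i) := by linarith
        _ ≤ 2 ^ (g + 2) * T (n j - 2) := e2
        _ ≤ 2 ^ (G + 2) * ((s ^ X j * q ^ Y j : ℕ) : ℤ) := by
          apply mul_le_mul e4 (by linarith) e7 (by positivity)
    exact_mod_cast this
  obtain ⟨k, t, hk1, hk, ht, hkt⟩ := sub_factor hs hs4 (show 1 ≤ q by omega) hi1 hj1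
    (by have : ((s ^ X j * q ^ Y j : ℕ) : ℤ) < ((s ^ X i * q ^ Y i : ℕ) : ℤ) := by linarith
        exact_mod_cast this) hR
  have h0 : ∀ l, n l ≤ n 0 := fun l => H.anti.antitone (Fin.zero_le l)
  refine lemR hq (y := t) (a := n j) (g := g) (B := n 0) hk1 hk (by omega) (by omega) ?_ (h0 j) ?_ ?_ hN.hJ1 hN.hgg1 hN.hgg hN.hJ hN.hw
  · refine ht.trans (max_le ((hYn i).trans (h0 i)) ((hYn j).trans (h0 j)))
  · have := H.three_le 0; omega
  · rw [← hg]
    have : (k * q ^ t : ℤ) = T (n i) - T (n j) := by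
      rw [hsub, ← hkt]; push_cast; ring
    rw [this, sub_self, abs_zero]; positivity

lemma case_last (H : Quad cc n x y) {G : ℕ} (hG : n 0 ≤ n 3 + G) {s q : ℕ} (hs : 1 ≤ s) (hs4 : s ≤ 4) (hq : q = 2 ∨ q = 3)
    {X Y : Fin 4 → ℕ} (hu : ∀ i, 2 ^ x i * 3 ^ y i = s ^ X i * q ^ Y i) (hYn : ∀ i, Y i ≤ n i) {m J gg : ℕ}
    (hN : Num2 (4 * m + (G + 2) + G + 5) J gg (n 0)) {i : Fin 4} (hi : i < 3)
    (hi1 : X i ≤ m) (hx3 : x 3 ≤ m) (hy3 : y 3 ≤ m) :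
    n 3 ≤ 2 * bU 2 (4 * m + (G + 2) + G + 5) 3 J gg + 4 * m + 2 * G + 10 := by
  have hlt := H.anti hi
  obtain ⟨g, hg⟩ : ∃ g, n i = n 3 + g := ⟨n i - n 3, by omega⟩
  have hgG := H.le_gap hG i 3
  have h0 : ∀ l, n l ≤ n 0 := fun l => H.anti.antitone (Fin.zero_le l)
  have hk : s ^ X i ≤ 2 ^ (4 * m + (G + 2)) := by
    calc s ^ X i ≤ s ^ m := Nat.pow_le_pow_right hs hi1
      _ ≤ (2 ^ 2) ^ m := Nat.pow_le_pow_left (by omega) m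
      _ = 2 ^ (2 * m) := by rw [← pow_mul]
      _ ≤ _ := Nat.pow_le_pow_right (by norm_num) (by omega)
  refine lemR hq (y := Y i) (a := n 3) (g := g) (B := n 0) (Nat.one_le_pow _ _ hs) hk (by omega) (by omega)
    ((hYn i).trans (h0 i)) (h0 3) ?_ ?_ hN.hJ1 hN.hgg1 hN.hgg hN.hJ hN.hw
  · have := H.three_le 0; omega
  · rw [← hg, H.sub_eq i 3]
    have : (2 ^ x i * 3 ^ y i : ℤ) = ((s ^ X i : ℕ) * q ^ Y i : ℤ) := by exact_mod_cast hu i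
    rw [this, sub_sub_cancel, abs_of_nonneg (by positivity)]
    calc (2 : ℤ) ^ x 3 * 3 ^ y 3 ≤ 2 ^ m * 3 ^ m := by gcongr <;> norm_num
      _ = 6 ^ m := by rw [← mul_pow]; norm_num

lemma pigeon {a b c d : Prop} (h1 : a ∨ b ∨ c) (h2 : a ∨ b ∨ d) (h3 : a ∨ c ∨ d) (h4 : b ∨ c ∨ d) :
    (a ∧ b) ∨ (a ∧ c) ∨ (b ∧ c) ∨ (d ∧ (a ∨ b ∨ c)) := by tauto

/-- A bound for the gap yields a bound for all the indices. -/
theorem glue (H : Quad cc n x y) {G Z J gg m : ℕ} (hG : n 0 ≤ n 3 + G) (hZ1 : 1 ≤ Z)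
    (hZ : 468 * Z * ((12 * G + 48) + n 0 + 1) ≤ 2 ^ Z) (hm : 219024 * (12 * G + 48) * Z ^ 2 ≤ m)
    (hN : Num2 (4 * m + (G + 2) + G + 5) J gg (n 0)) :
    n 0 ≤ 2 * bU 2 (4 * m + (G + 2) + G + 5) 3 J gg + 10 * m := by
  have hZZ : Z ≤ Z ^ 2 := Nat.le_self_pow (by norm_num) Z
  have hmb : 219024 * (12 * G + 48) * Z ≤ m := le_trans (by gcongr) hm
  have hmb2 : 219024 * (12 * G + 48) ≤ m := le_trans (Nat.le_mul_of_pos_right _ hZ1) hmb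
  by_cases hY : 2028 * (12 * G + 48) * Z + 13 ≤ n 3
  · have S := fun {i j k : Fin 4} (hij : i < j) (hjk : j < k) => H.small_of_three hG hZ1 hY hZ hij hjk hm
    obtain ⟨a1, b1⟩ := S (show (0 : Fin 4) < 1 by decide) (show (1 : Fin 4) < 2 by decide)
    obtain ⟨a2, b2⟩ := S (show (0 : Fin 4) < 1 by decide) (show (1 : Fin 4) < 3 by decide)
    obtain ⟨a3, b3⟩ := S (show (0 : Fin 4) < 2 by decide) (show (2 : Fin 4) < 3 by decide)
    obtain ⟨a4, b4⟩ := S (show (1 : Fin 4) < 2 by decide) (show (2 : Fin 4) < 3 by decide)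
    have hC : ∀ i j : Fin 4, i < j → j < 3 → x i < m → x j < m → n 3 ≤ 2 * bU 2 (4 * m + (G + 2) + G + 5) 3 J gg + 4 * m + 2 * G + 10 :=
      fun i j hij hj h1 h2 => (H.anti hj).le.trans
        (H.case_two hG (s := 2) (q := 3) (by norm_num) (by norm_num) (by norm_num) (fun _ => rfl) H.y_le hN hij hj h1.le h2.le)
    have hC' : ∀ i j : Fin 4, i < j → j < 3 → y i < m → y j < m → n 3 ≤ 2 * bU 2 (4 * m + (G + 2) + G + 5) 3 J gg + 4 * m + 2 * G + 10 :=
      fun i j hij hj h1 h2 => (H.anti hj).le.trans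
        (H.case_two hG (s := 3) (q := 2) (by norm_num) (by norm_num) (by norm_num) (fun _ => mul_comm _ _) H.x_le hN hij hj h1.le h2.le)
    have hB : ∀ i : Fin 4, i < 3 → x i < m → x 3 < m → y 3 < m → n 3 ≤ 2 * bU 2 (4 * m + (G + 2) + G + 5) 3 J gg + 4 * m + 2 * G + 10 :=
      fun i hi h1 h2 h3 => H.case_last hG (s := 2) (q := 3) (by norm_num) (by norm_num) (by norm_num) (fun _ => rfl) H.y_le hN hi h1.le h2.le h3.le
    have h3 : n 3 ≤ 2 * bU 2 (4 * m + (G + 2) + G + 5) 3 J gg + 4 * m + 2 * G + 10 := by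
      rcases pigeon a1 a2 a3 a4 with h | h | h | ⟨h3, h⟩
      · exact hC 0 1 (by decide) (by decide) h.1 h.2
      · exact hC 0 2 (by decide) (by decide) h.1 h.2
      · exact hC 1 2 (by decide) (by decide) h.1 h.2
      rcases pigeon b1 b2 b3 b4 with h' | h' | h' | ⟨h3', -⟩
      · exact hC' 0 1 (by decide) (by decide) h'.1 h'.2
      · exact hC' 0 2 (by decide) (by decide) h'.1 h'.2
      · exact hC' 1 2 (by decide) (by decide) h'.1 h'.2
      rcases h with h | h | h
      · exact hB 0 (by decide) h h3 h3'
      · exact hB 1 (by decide) h h3 h3'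
      · exact hB 2 (by decide) h h3 h3'
    omega
  · have e1 : 2028 * (12 * G + 48) * Z ≤ m := le_trans (by gcongr; norm_num) hmb
    omega

end Quad

/-! ### The first explicit bound for the indices -/

lemma t_bounds {t : ℕ} (h : 12 ≤ t) : t ^ 2 ≤ 2 ^ t ∧ 340 * t ≤ 2 ^ t ∧ 2 ^ 12 ≤ 2 ^ t := by
  refine ⟨?_, ?_, Nat.pow_le_pow_right (by norm_num) h⟩
  all_goals
    induction t, h using Nat.le_induction with
    | base => norm_num
    | succ t ht ih => rw [pow_succ 2 t]; nlinarith

lemma two_pow_le_u {u : ℕ} (h12 : 2 ^ 12 ≤ u) {a k : ℕ} (h : a ≤ 12 * k) : 2 ^ a ≤ u ^ k := by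
  calc 2 ^ a ≤ 2 ^ (12 * k) := Nat.pow_le_pow_right (by norm_num) h
    _ = (2 ^ 12) ^ k := pow_mul _ _ _
    _ ≤ _ := Nat.pow_le_pow_left h12 k

lemma pass_bh {t u K w : ℕ} (h1 : 1 ≤ t) (hu : 1 ≤ u) (hK : 32 * K + 1 ≤ w) : bh (K * t) (2 * u) ≤ w * (t * u) := by
  have : 1 ≤ t * u := Nat.mul_pos h1 hu
  calc bh (K * t) (2 * u) = 32 * K * (t * u) + 1 := by unfold bh; ring
    _ ≤ 32 * K * (t * u) + t * u := by omega
    _ = (32 * K + 1) * (t * u) := by ring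
    _ ≤ _ := Nat.mul_le_mul_right _ hK

lemma pass_bL3 {t u : ℕ} (h1 : 1 ≤ t) (h2 : t ^ 2 ≤ u) (h12 : 2 ^ 12 ≤ u) : bL 3 4 (28 * t) (2 * u) ≤ u ^ 7 := by
  have hb := pass_bh (K := 28) (w := 2 ^ 10) h1 (by omega : 1 ≤ u) (by norm_num)
  calc bL 3 4 (28 * t) (2 * u) ≤ 6 * (2 ^ 10 * (t * u)) * (2 ^ 11 * t) ^ 3 := by
        exact Nat.mul_le_mul (Nat.mul_le_mul_left _ hb) (Nat.pow_le_pow_left (by omega) _)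
    _ = (6 * 2 ^ 43) * (t ^ 2) ^ 2 * u := by ring
    _ ≤ u ^ 4 * u ^ 2 * u := by
        gcongr
        exact le_trans (by norm_num) (two_pow_le_u h12 (show 46 ≤ 12 * 4 by norm_num))
    _ = _ := by ring

lemma pass_bL2 {t u : ℕ} (h1 : 1 ≤ t) (h2 : t ^ 2 ≤ u) (h12 : 2 ^ 12 ≤ u) : bL 2 3 (112 * t) (2 * u) ≤ u ^ 7 := by
  have hb := pass_bh (K := 112) (w := 2 ^ 12) h1 (by omega : 1 ≤ u) (by norm_num)
  calc bL 2 3 (112 * t) (2 * u) ≤ 6 * (2 ^ 12 * (t * u)) * (2 ^ 13 * t) ^ 2 := by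
        exact Nat.mul_le_mul (Nat.mul_le_mul_left _ hb) (Nat.pow_le_pow_left (by omega) _)
    _ = (6 * 2 ^ 38) * (t ^ 2 * t) * u := by ring
    _ ≤ u ^ 4 * (u * u) * u := by
        have : t ≤ u := by nlinarith
        gcongr
        exact le_trans (by norm_num) (two_pow_le_u h12 (show 46 ≤ 12 * 4 by norm_num))
    _ = _ := by ring

lemma pass_bU3 {t u : ℕ} (hu : u = 2 ^ t) (h1 : 1 ≤ t) (h2 : t ^ 2 ≤ u) (h12 : 2 ^ 12 ≤ u) :
    bU 3 3 4 (28 * t) (2 * u) ≤ u ^ 39 := by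
  have hb := pass_bh (K := 28) (w := 2 ^ 10) h1 (by omega : 1 ≤ u) (by norm_num)
  have hL := pass_bL3 h1 h2 h12
  have e : 2 ^ (28 * t) = u ^ 28 := by rw [hu, ← pow_mul, mul_comm]
  calc bU 3 3 4 (28 * t) (2 * u) ≤ 20 * (2 * (28 * t)) * (4 * (3 * u ^ 7)) * (2 ^ 10 * (t * u) * u ^ 28) := by
        unfold bU
        rw [e]
        gcongr
    _ = (20 * 2 * 28 * 4 * 3 * 2 ^ 10) * t ^ 2 * u ^ 36 := by ring
    _ ≤ u ^ 2 * u * u ^ 36 := by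
        gcongr
        exact le_trans (by norm_num) (two_pow_le_u h12 (show 24 ≤ 12 * 2 by norm_num))
    _ = _ := by ring

lemma pass_bU2 {t u A : ℕ} (hu : u = 2 ^ t) (h1 : 1 ≤ t) (h2 : t ^ 2 ≤ u) (h12 : 2 ^ 12 ≤ u) (hA : A ≤ u ^ 45) :
    bU 2 A 3 (112 * t) (2 * u) ≤ u ^ 169 := by
  have hb := pass_bh (K := 112) (w := 2 ^ 12) h1 (by omega : 1 ≤ u) (by norm_num)
  have hL := pass_bL2 h1 h2 h12
  have e : 2 ^ (112 * t) = u ^ 112 := by rw [hu, ← pow_mul, mul_comm]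
  calc bU 2 A 3 (112 * t) (2 * u) ≤ 20 * (2 * (112 * t)) * (3 * (u ^ 45 * u ^ 7)) * (2 ^ 12 * (t * u) * u ^ 112) := by
        unfold bU
        rw [e]
        gcongr
    _ = (20 * 2 * 112 * 3 * 2 ^ 12) * t ^ 2 * u ^ 165 := by ring
    _ ≤ u ^ 3 * u * u ^ 165 := by
        gcongr
        exact le_trans (by norm_num) (two_pow_le_u h12 (show 26 ≤ 12 * 3 by norm_num))
    _ = _ := by ring

lemma pass_num2 {t u A B : ℕ} (hu : u = 2 ^ t) (h1 : 12 ≤ t) (h2 : t ^ 2 ≤ u) (h3 : 340 * t ≤ u) (h12 : 2 ^ 12 ≤ u)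
    (hA : A ≤ u ^ 45) (hB : B < 2 ^ u) : Quad.Num2 A (112 * t) (2 * u) B := by
  have hb := pass_bh (K := 112) (w := 2 ^ 12) (by omega : 1 ≤ t) (by omega : 1 ≤ u) (by norm_num)
  have hL := pass_bL2 (by omega) h2 h12
  have htu : t ≤ u := by nlinarith
  have e : 2 ^ (112 * t) = u ^ 112 := by rw [hu, ← pow_mul, mul_comm]
  refine ⟨by omega, by omega, ?_, ?_, ?_⟩
  · calc _ ≤ u * (u ^ 45 * u ^ 7) * 2 ^ u := by gcongr; omega
      _ = u ^ 53 * 2 ^ u := by ring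
      _ = 2 ^ (53 * t) * 2 ^ u := by rw [show u ^ 53 = 2 ^ (53 * t) by rw [hu, ← pow_mul, mul_comm]]
      _ ≤ 2 ^ u * 2 ^ u := by gcongr <;> omega
      _ = _ := by rw [← pow_add]; ring_nf
  · calc _ ≤ (u ^ 45 * u ^ 7) ^ 2 * u ^ 7 := by gcongr
      _ = 1 * u ^ 111 := by ring
      _ ≤ bh (112 * t) (2 * u) * u ^ 112 := by
        apply Nat.mul_le_mul
        · unfold bh; omega
        · exact Nat.pow_le_pow_right (by omega) (by norm_num)
      _ = _ := by rw [e]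
  · calc _ ≤ 8 * (2 ^ 12 * (u * u)) :=
        Nat.mul_le_mul_left _ (hb.trans (Nat.mul_le_mul_left _ (Nat.mul_le_mul_right _ htu)))
      _ = 2 ^ 15 * u ^ 2 := by ring
      _ ≤ u ^ 2 * u ^ 2 := Nat.mul_le_mul_right _ (two_pow_le_u h12 (show 15 ≤ 12 * 2 by norm_num))
      _ ≤ u ^ 112 := by rw [← pow_add]; exact Nat.pow_le_pow_right (by omega) (by norm_num)
      _ = 2 ^ (112 * t) := e.symm
      _ ≤ _ := Nat.pow_le_pow_left (by norm_num) _

/-- The largest index of a quadruple is less than `2 ^ 2048`. -/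
theorem Quad.pass1 {cc : ℤ} {n x y : Fin 4 → ℕ} (H : Quad cc n x y) : n 0 < 2 ^ 2048 := by
  by_contra hcon
  push Not at hcon
  obtain ⟨t, ht, hlow, hhigh⟩ : ∃ t, 12 ≤ t ∧ 2 ^ 2 ^ (t - 1) ≤ n 0 ∧ n 0 < 2 ^ 2 ^ t := by
    have h0 : n 0 ≠ 0 := by have := H.three_le 0; omega
    have hL : 2048 ≤ Nat.log 2 (n 0) := Nat.le_log_of_pow_le (by norm_num) hcon
    refine ⟨Nat.log 2 (Nat.log 2 (n 0)) + 1, ?_, ?_, ?_⟩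
    · have : 11 ≤ Nat.log 2 (Nat.log 2 (n 0)) := Nat.le_log_of_pow_le (by norm_num) (by omega)
      omega
    · refine le_trans (Nat.pow_le_pow_right (by norm_num) ?_) (Nat.pow_log_le_self 2 h0)
      exact Nat.pow_log_le_self 2 (by omega)
    · refine (Nat.lt_pow_succ_log_self (by norm_num : 1 < 2) _).trans_le (Nat.pow_le_pow_right (by norm_num) ?_)
      exact Nat.lt_pow_succ_log_self (by norm_num : 1 < 2) _
  obtain ⟨h2, h3, h12⟩ := t_bounds ht
  obtain ⟨u, hu⟩ : ∃ u, u = 2 ^ t := ⟨_, rfl⟩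
  rw [← hu] at h2 h3 h12 hhigh
  have hn1 : ∀ i, n i ≤ n 0 := fun i => H.anti.antitone (Fin.zero_le i)
  have htu : t ≤ u := by nlinarith
  have pw : ∀ k, u ^ k = 2 ^ (k * t) := fun k => by rw [hu, ← pow_mul, mul_comm]
  have pwle : ∀ k, k ≤ 340 → u ^ k ≤ 2 ^ u := fun k hk => by
    rw [pw]
    apply Nat.pow_le_pow_right (by norm_num)
    calc k * t ≤ 340 * t := by gcongr
      _ ≤ u := h3
  have hbh := pass_bh (K := 28) (w := 2 ^ 10) (by omega : 1 ≤ t) (by omega : 1 ≤ u) (by norm_num)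
  have hL := pass_bL3 (by omega) h2 h12
  have hb := baker3 (n := n 0) (x := x 0) (y := y 0) (B := n 0) (J := 28 * t) (g := 2 * u) le_rfl (H.x_le 0) (H.y_le 0)
    (by have := H.three_le 0; omega) (by omega) (by omega)
    (by
      calc _ ≤ u * u ^ 7 * 2 ^ u := by
            rw [← mul_assoc]
            gcongr
            omega
        _ = u ^ 8 * 2 ^ u := by ring
        _ ≤ 2 ^ u * 2 ^ u := Nat.mul_le_mul_right _ (pwle 8 (by norm_num))
        _ = _ := by rw [← pow_add]; ring_nf)
    (by
      calc _ ≤ (3 * u ^ 7) ^ 3 * u ^ 7 := by gcongr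
        _ = 27 * u ^ 28 := by ring
        _ ≤ bh (28 * t) (2 * u) * u ^ 28 := by
          apply Nat.mul_le_mul_right
          unfold bh
          nlinarith
        _ = _ := by rw [pw])
    (by
      calc _ ≤ 4 * (2 ^ 10 * (u * u)) :=
            Nat.mul_le_mul_left _ (hbh.trans (Nat.mul_le_mul_left _ (Nat.mul_le_mul_right _ htu)))
        _ = 2 ^ 12 * u ^ 2 := by ring
        _ ≤ u * u ^ 2 := by gcongr
        _ = u ^ 3 := by ring
        _ ≤ u ^ 28 := Nat.pow_le_pow_right (by omega) (by norm_num)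
        _ = 2 ^ (28 * t) := pw 28
        _ ≤ _ := Nat.pow_le_pow_left (by norm_num) _)
  obtain ⟨d, hd, hd3⟩ := H.gap
  have hgap := gap_of_baker (H.lam0_le hd hd3) hb
  have hU3 := pass_bU3 hu (by omega) h2 h12
  have hG : n 0 ≤ n 3 + u ^ 40 := by
    have : u ^ 40 = u * u ^ 39 := by ring
    have h9 : 4096 * u ^ 39 ≤ u * u ^ 39 := Nat.mul_le_mul_right _ (by omega)
    have : 1 ≤ u ^ 39 := Nat.one_le_pow _ _ (by omega)
    omega
  have h40 : 12 * u ^ 40 + 48 ≤ 16 * u ^ 40 := by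
    have : u ≤ u ^ 40 := Nat.le_self_pow (by norm_num) u
    omega
  have hm : 219024 * (12 * u ^ 40 + 48) * (2 * u) ^ 2 ≤ u ^ 44 := by
    calc _ ≤ 219024 * (16 * u ^ 40) * (2 * u) ^ 2 := by gcongr
      _ = (219024 * 64) * u ^ 42 := by ring
      _ ≤ u ^ 2 * u ^ 42 := by
        gcongr
        exact le_trans (by norm_num) (two_pow_le_u h12 (show 24 ≤ 12 * 2 by norm_num))
      _ = _ := by ring
  have hA : 4 * u ^ 44 + (u ^ 40 + 2) + u ^ 40 + 5 ≤ u ^ 45 := by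
    have e1 : u ^ 45 = u * u ^ 44 := by ring
    have e2 : 4096 * u ^ 44 ≤ u * u ^ 44 := Nat.mul_le_mul_right _ (by omega)
    have e3 : u ^ 40 ≤ u ^ 44 := Nat.pow_le_pow_right (by omega) (by norm_num)
    have : 1 ≤ u ^ 44 := Nat.one_le_pow _ _ (by omega)
    omega
  have hZ : 468 * (2 * u) * ((12 * u ^ 40 + 48) + n 0 + 1) ≤ 2 ^ (2 * u) := by
    have e1 : 16 * u ^ 40 ≤ 2 ^ u := by
      calc 16 * u ^ 40 ≤ u * u ^ 40 := Nat.mul_le_mul_right _ (by omega)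
        _ = u ^ 41 := by ring
        _ ≤ _ := pwle 41 (by norm_num)
    calc _ ≤ 468 * (2 * u) * (2 * 2 ^ u) := by
          apply Nat.mul_le_mul_left
          omega
      _ = (468 * 4 * u) * 2 ^ u := by ring
      _ ≤ (u * u) * 2 ^ u := by gcongr; omega
      _ ≤ 2 ^ u * 2 ^ u := by
        gcongr
        rw [← pow_two]
        exact pwle 2 (by norm_num)
      _ = _ := by rw [← pow_add]; ring_nf
  have hfin := H.glue hG (by omega) hZ hm (pass_num2 hu ht h2 h3 h12 hA hhigh)
  have hU2 := pass_bU2 hu (by omega) h2 h12 hA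
  have hlast : n 0 < u ^ 170 := by
    have e1 : u ^ 170 = u * u ^ 169 := by ring
    have e2 : 4096 * u ^ 169 ≤ u * u ^ 169 := Nat.mul_le_mul_right _ (by omega)
    have e3 : u ^ 44 ≤ u ^ 169 := Nat.pow_le_pow_right (by omega) (by norm_num)
    have : 1 ≤ u ^ 169 := Nat.one_le_pow _ _ (by omega)
    omega
  rw [pw] at hlast
  have hexp : 170 * t ≤ 2 ^ (t - 1) := by
    have : u = 2 * 2 ^ (t - 1) := by rw [hu, ← pow_succ']; congr 1; omega
    omega
  have := Nat.pow_le_pow_right (show 0 < 2 by norm_num) hexp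
  omega

/-! ### Certified logarithms and the reduction of the gap -/

/-- Horner evaluation, rounded down, of `∑ z ^ j / (j + 1)` over `j < N` in fixed point with unit `one`. -/
noncomputable def horL (z one N f : ℕ) : ℕ := Nat.rec 0 (fun f r => one / (N - f) + z * r / one) f

/-- Horner evaluation, rounded up, of `∑ z ^ j / (j + 1)` over `j < N` in fixed point with unit `one`. -/
noncomputable def horU (z one N f : ℕ) : ℕ := Nat.rec 0 (fun f r => one / (N - f) + (z * r / one + 2)) f

lemma nat_div_le (a b : ℕ) : ((a / b : ℕ) : ℝ) ≤ (a : ℝ) / b := Nat.cast_div_le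

lemma le_nat_div (a : ℕ) {b : ℕ} (hb : 0 < b) : (a : ℝ) / b ≤ ((a / b : ℕ) : ℝ) + 1 := by
  rw [div_le_iff₀ (by exact_mod_cast hb)]
  have := Nat.lt_div_mul_add (a := a) hb
  have h : (a : ℝ) ≤ ((a / b * b + b : ℕ) : ℝ) := by exact_mod_cast this.le
  push_cast at h
  linarith

noncomputable def horR (z : ℝ) (N f : ℕ) : ℝ := ∑ j ∈ Finset.range f, z ^ j / ((N - f + 1 + j : ℕ) : ℝ)

lemma horR_succ (z : ℝ) {N f : ℕ} (hf : f < N) : horR z N (f + 1) = 1 / ((N - f : ℕ) : ℝ) + z * horR z N f := by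
  unfold horR
  rw [Finset.sum_range_succ', Finset.mul_sum, add_comm]
  congr 1
  · rw [pow_zero, show N - (f + 1) + 1 + 0 = N - f by omega]
  · apply Finset.sum_congr rfl
    intro j _
    rw [show N - (f + 1) + 1 + (j + 1) = N - f + 1 + j by omega]
    ring

lemma hor_bounds {z : ℝ} {one zl zh N : ℕ} (h1 : 0 < one) (hz : 0 ≤ z) (hl : (zl : ℝ) ≤ z * one) (hh : z * one ≤ zh) :
    ∀ f ≤ N, (horL zl one N f : ℝ) ≤ horR z N f * one ∧ horR z N f * one ≤ horU zh one N f := by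
  have ho : (0 : ℝ) < one := by exact_mod_cast h1
  intro f
  induction f with
  | zero => intro _; simp [horL, horU, horR]
  | succ f ih =>
    intro hf
    obtain ⟨i1, i2⟩ := ih (by omega)
    have hp : 0 ≤ horR z N f := Finset.sum_nonneg fun j _ => by positivity
    have e : horR z N (f + 1) * one = (one : ℝ) / ((N - f : ℕ) : ℝ) + z * one * (horR z N f * one) / one := by
      rw [horR_succ z (by omega)]
      field_simp
    rw [e]
    constructor
    · have : horL zl one N (f + 1) = one / (N - f) + zl * horL zl one N f / one := rfl
      rw [this]
      push_cast
      apply add_le_add (nat_div_le _ _)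
      refine (nat_div_le _ _).trans ?_
      push_cast
      gcongr
    · have : horU zh one N (f + 1) = one / (N - f) + (zh * horU zh one N f / one + 2) := rfl
      rw [this]
      have a1 := le_nat_div one (show 0 < N - f by omega)
      have a2 := le_nat_div (zh * horU zh one N f) h1
      have a3 : z * one * (horR z N f * one) / one ≤ ((zh * horU zh one N f : ℕ) : ℝ) / one := by
        push_cast
        gcongr
      push_cast at a1 a2 a3 ⊢
      linarith

lemma mlog_bounds {z : ℝ} {one zl zh k N : ℕ} (h1 : 0 < one) (hk : 2 ≤ k) (hz : 0 ≤ z) (hzk : z * k ≤ 1)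
    (hl : (zl : ℝ) ≤ z * one) (hh : z * one ≤ zh) (hN : one ≤ k ^ N) :
    ((zl * horL zl one N N / one : ℕ) : ℝ) ≤ -Real.log (1 - z) * one + 1 ∧
      -Real.log (1 - z) * one ≤ ((zh * horU zh one N N / one + 2 : ℕ) : ℝ) := by
  have ho : (0 : ℝ) < one := by exact_mod_cast h1
  have hk' : (2 : ℝ) ≤ k := by exact_mod_cast hk
  have hz2 : z ≤ 1 / 2 := by nlinarith
  obtain ⟨b1, b2⟩ := hor_bounds (N := N) h1 hz hl hh N le_rfl
  have hs := Real.abs_log_sub_add_sum_range_le (x := z) (by rw [abs_of_nonneg hz]; linarith) N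
  have e : ∑ i ∈ Finset.range N, z ^ (i + 1) / ((i : ℝ) + 1) = z * horR z N N := by
    unfold horR
    rw [Finset.mul_sum]
    apply Finset.sum_congr rfl
    intro j _
    rw [Nat.sub_self, zero_add]
    push_cast
    ring
  rw [e, abs_of_nonneg hz] at hs
  have ht : z ^ (N + 1) / (1 - z) * one ≤ 1 := by
    have i1 : z ^ (N + 1) / (1 - z) ≤ z ^ N := by
      rw [div_le_iff₀ (by linarith), pow_succ]
      gcongr
      linarith
    have i2 : (one : ℝ) ≤ (k : ℝ) ^ N := by exact_mod_cast hN
    calc z ^ (N + 1) / (1 - z) * one ≤ z ^ N * (k : ℝ) ^ N := by gcongr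
      _ = (z * k) ^ N := by rw [mul_pow]
      _ ≤ 1 := pow_le_one₀ (by positivity) hzk
  rw [abs_le] at hs
  have hm1 := mul_le_mul_of_nonneg_right hs.1 ho.le
  have hm2 := mul_le_mul_of_nonneg_right hs.2 ho.le
  have e2 : z * horR z N N * one = z * one * (horR z N N * one) / one := by field_simp
  constructor
  · have : ((zl * horL zl one N N / one : ℕ) : ℝ) ≤ z * horR z N N * one := by
      rw [e2]
      refine (nat_div_le _ _).trans ?_
      push_cast
      gcongr
    linarith
  · have a2 := le_nat_div (zh * horU zh one N N) h1
    have hp : 0 ≤ horR z N N := Finset.sum_nonneg fun j _ => by positivity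
    have : z * horR z N N * one ≤ ((zh * horU zh one N N : ℕ) : ℝ) / one := by
      rw [e2]
      push_cast
      gcongr
    push_cast at this a2 ⊢
    linarith

lemma two_sub_rα_bounds {one b : ℕ} (h1 : 0 < one)
    (hlo : b ^ 3 + 7 * b * one ^ 2 ≤ 5 * b ^ 2 * one + one ^ 3)
    (hhi : 5 * (b + 1) ^ 2 * one + one ^ 3 ≤ (b + 1) ^ 3 + 7 * (b + 1) * one ^ 2) (hb1 : b + 1 ≤ one) :
    (b : ℝ) ≤ (2 - rα) * one ∧ (2 - rα) * one ≤ b + 1 := by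
  have ho : (0 : ℝ) < one := by exact_mod_cast h1
  have hc := rα_cube
  have g1 := rα_gt
  have g2 := rα_lt
  set β := 2 - rα with hβ
  have hroot : β ^ 3 + 7 * β = 5 * β ^ 2 + 1 := by
    have : rα = 2 - β := by rw [hβ]; ring
    rw [this] at hc
    linarith
  -- `t ↦ t ^ 3 - 5 * t ^ 2 + 7 * t` is increasing on `[0, 1]`
  have key : ∀ s t : ℝ, 0 ≤ s → s < t → t ≤ 1 → s ^ 3 + 7 * s - 5 * s ^ 2 < t ^ 3 + 7 * t - 5 * t ^ 2 := by
    intro s t hs hst ht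
    have : 0 < (t - s) * ((1 - s) * (1 - t) + 4 * (1 - s) + (s - t) ^ 2 + 2 * (1 - t) + t * s) := by
      apply mul_pos (by linarith)
      have : 0 < 1 - s := by linarith
      have : 0 ≤ (1 - s) * (1 - t) := mul_nonneg this.le (by linarith)
      nlinarith [mul_nonneg hs (hs.trans hst.le)]
    nlinarith [mul_nonneg hs (hs.trans hst.le), mul_nonneg (sub_nonneg.2 hst.le) (sub_nonneg.2 ht), mul_nonneg (sub_nonneg.2 hst.le) (sub_nonneg.2 (hst.le.trans ht)),
      mul_nonneg (mul_nonneg (sub_nonneg.2 hst.le) (sub_nonneg.2 (hst.le.trans ht))) (sub_nonneg.2 ht)]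
  have hβ0 : 0 ≤ β := by rw [hβ]; linarith
  have hβ1 : β ≤ 1 := by rw [hβ]; linarith
  have hloR : (b : ℝ) ^ 3 + 7 * b * one ^ 2 ≤ 5 * b ^ 2 * one + one ^ 3 := by exact_mod_cast hlo
  have hhiR : 5 * ((b : ℝ) + 1) ^ 2 * one + one ^ 3 ≤ (b + 1) ^ 3 + 7 * (b + 1) * one ^ 2 := by exact_mod_cast hhi
  have hbR : ((b : ℝ) + 1) ≤ one := by exact_mod_cast hb1
  constructor
  · rw [← div_le_iff₀ ho]
    by_contra hcon
    push Not at hcon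
    have := key β (b / one) hβ0 hcon (by rw [div_le_one ho]; linarith)
    have e : ((b : ℝ) / one) ^ 3 + 7 * (b / one) - 5 * (b / one) ^ 2 ≤ 1 := by
      have : ((b : ℝ) / one) ^ 3 + 7 * (b / one) - 5 * (b / one) ^ 2 = (b ^ 3 + 7 * b * one ^ 2 - 5 * b ^ 2 * one) / one ^ 3 := by
        field_simp
      rw [this, div_le_one (by positivity)]
      linarith
    linarith
  · rw [← le_div_iff₀ ho]
    by_contra hcon
    push Not at hcon
    have := key (((b : ℝ) + 1) / one) β (by positivity) hcon hβ1
    have e : 1 ≤ (((b : ℝ) + 1) / one) ^ 3 + 7 * ((b + 1) / one) - 5 * ((b + 1) / one) ^ 2 := by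
      have : (((b : ℝ) + 1) / one) ^ 3 + 7 * ((b + 1) / one) - 5 * ((b + 1) / one) ^ 2
          = ((b + 1) ^ 3 + 7 * (b + 1) * one ^ 2 - 5 * (b + 1) ^ 2 * one) / one ^ 3 := by
        field_simp
      rw [this, one_le_div (by positivity)]
      linarith
    linarith

namespace Lg

/-- The unit of the fixed-point computations. -/
def one : ℕ := 2 ^ 6400

/-- The integer part of `(2 - α) * one`. -/
def b : ℕ := 6280929504535495479472931536036929293055812450975499256204516411694686562730930122728507688311637441025089386839099494460093874852217987298109878500778258448700197562655339834125882909162491405084183283485715503939599022985876614755851722011309622162844868529346263846681662312734498364706504384510355426424715911577189546092082662888459547058460567087976079743090901269474523368294009733865022490640692392341035992158674634922670938626168292109434865778083736810187375758105506124106184208314633664091157638473746607237657501186185199265267517444012645905925961067899050296774087227190315380147581681374911198217025923989229246236811690669225104089643540210120573902665380697371384924685860601664563653198661718417182592078515062942419969678697951130381617345872119001729215877009041197742398641487695144792452923768389455048641611166249824589206840437150084591465960864172380158625734192698880965772449900414765629500486362198513478556672228978746483752796843879280713722897709987839921174143669513231775842621313929229130650532058817757176353690817675017838001956562830042910597881407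43370952144305914036523449816601694136676641174207098551193675997170076653099826455405381278991465176068542477624216884675954033568785668885875560913203845679911623767162516518315870180743370608959139935348188181725247979738521409317545805026628855491114456884689550562640563792983010818951701208142216127791411269716368651691106462569655181955154405172809828695180236949618413409562708717981236068237561603974310108354974668257702371795265354412216189353286539918154395373264266591827909868788655794649198138188264746255112402630460615137635576808172758130912494092839375027593189371872674628374585387513426136529150602042132182940184735878686652977029557822532438755115101411525636870733310801983981329742673434949211269491701864786149527444754409552352829715209368740269213225387468207371135005912860076268188257802128676239053460996503

/-- Fixed-point value of `1 - α ^ 9 / 243`. -/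
def za : ℕ := (213 * b * one - 31 * one ^ 2 - 44 * b ^ 2) / (243 * one)
/-- Fixed-point value of `1 - δ / 3 = (2 - α) ^ 2 / 3`. -/
def zd : ℕ := b ^ 2 / (3 * one)

/-- Lower bound for `-log (1 - z)`. -/
noncomputable def lowr (z N : ℕ) : ℕ := z * horL z one N N / one - 1
/-- Upper bound for `-log (1 - z)`. -/
noncomputable def uppr (z N : ℕ) : ℕ := z * horU z one N N / one + 2

/-- Bounds for `8 log 2 - 5 log 3`. -/
noncomputable def uL : ℕ := lowr (13 * one / 256) 1510
noncomputable def uH : ℕ := uppr (13 * one / 256) 1510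
/-- Bounds for `2 log 3 - 3 log 2`. -/
noncomputable def vL : ℕ := lowr (one / 9) 2020
noncomputable def vH : ℕ := uppr (one / 9 + 1) 2020
/-- Bounds for `5 log 3 - 9 log α`. -/
noncomputable def wL : ℕ := lowr (za - 1) 960
noncomputable def wH : ℕ := uppr (za + 2) 960
/-- Bounds for `log 3 - log δ`. -/
noncomputable def tL : ℕ := lowr (zd - 1) 960
noncomputable def tH : ℕ := uppr (zd + 2) 960

set_option exponentiation.threshold 100000

lemma one_pos : 0 < one := by unfold one; positivity

lemma mlog {z : ℝ} {zl zh k N : ℕ} (hk : 2 ≤ k) (hz : 0 ≤ z) (hzk : z * k ≤ 1)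
    (hl : (zl : ℝ) ≤ z * one) (hh : z * one ≤ zh) (hN : one ≤ k ^ N) :
    (lowr zl N : ℝ) ≤ -Real.log (1 - z) * one ∧ -Real.log (1 - z) * one ≤ uppr zh N := by
  obtain ⟨h1, h2⟩ := mlog_bounds one_pos hk hz hzk hl hh hN
  refine ⟨?_, h2⟩
  have hz1 : z < 1 := by
    have : (2 : ℝ) ≤ k := by exact_mod_cast hk
    nlinarith
  have hn : 0 ≤ -Real.log (1 - z) * one := by
    have := Real.log_nonpos (x := 1 - z) (by linarith) (by linarith)
    have : (0 : ℝ) ≤ one := Nat.cast_nonneg _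
    nlinarith
  unfold lowr
  rcases Nat.eq_zero_or_pos (zl * horL zl one N N / one) with h0 | h0
  · rw [h0]; simpa using hn
  · rw [Nat.cast_sub h0]
    push_cast at h1 ⊢
    linarith

lemma cast_aux {a o : ℕ} (h : a * 256 = 13 * o) : (a : ℝ) * 256 = 13 * o := by exact_mod_cast h

lemma u_bounds : (uL : ℝ) ≤ (8 * Real.log 2 - 5 * Real.log 3) * one ∧ (8 * Real.log 2 - 5 * Real.log 3) * one ≤ uH := by
  have e : (8 * Real.log 2 - 5 * Real.log 3) = -Real.log (1 - 13 / 256) := by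
    rw [show (1 - 13 / 256 : ℝ) = 3 ^ 5 / 2 ^ 8 by norm_num, Real.log_div (by norm_num) (by norm_num), Real.log_pow, Real.log_pow]
    push_cast
    ring
  rw [e, uL, uH]
  refine mlog (k := 19) (by norm_num) (by norm_num) (by norm_num) ?_ ?_ (by decide +kernel)
  · refine (nat_div_le _ _).trans ?_
    push_cast
    linarith
  · have h : 13 * one / 256 * 256 = 13 * one := by decide +kernel
    have h := cast_aux h
    linarith

lemma v_bounds : (vL : ℝ) ≤ (2 * Real.log 3 - 3 * Real.log 2) * one ∧ (2 * Real.log 3 - 3 * Real.log 2) * one ≤ vH := by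
  have e : (2 * Real.log 3 - 3 * Real.log 2) = -Real.log (1 - 1 / 9) := by
    rw [show (1 - 1 / 9 : ℝ) = 2 ^ 3 / 3 ^ 2 by norm_num, Real.log_div (by norm_num) (by norm_num), Real.log_pow, Real.log_pow]
    push_cast
    ring
  rw [e, vL, vH]
  refine mlog (k := 9) (by norm_num) (by norm_num) (by norm_num) ?_ ?_ (by decide +kernel)
  · refine (nat_div_le _ _).trans ?_
    push_cast
    linarith
  · have := le_nat_div one (show 0 < 9 by norm_num)
    push_cast at this ⊢
    linarith

lemma b_bounds : (b : ℝ) ≤ (2 - rα) * one ∧ (2 - rα) * one ≤ b + 1 :=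
  two_sub_rα_bounds one_pos (by decide +kernel) (by decide +kernel) (by decide +kernel)

lemma w_bounds : (wL : ℝ) ≤ (5 * Real.log 3 - 9 * Real.log rα) * one ∧ (5 * Real.log 3 - 9 * Real.log rα) * one ≤ wH := by
  have hα := rα_pos
  have g1 := rα_gt
  have g2 := rα_lt
  set β := 2 - rα with hβ
  have e : (5 * Real.log 3 - 9 * Real.log rα) = -Real.log (1 - (213 * β - 31 - 44 * β ^ 2) / 243) := by
    have : 1 - (213 * β - 31 - 44 * β ^ 2) / 243 = rα ^ 9 / 3 ^ 5 := by
      have h9 : rα ^ 9 = 44 * rα ^ 2 + 37 * rα + 24 := by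
        have hc := rα_cube
        calc rα ^ 9 = (rα ^ 3) ^ 3 := by ring
          _ = (1 + rα + rα ^ 2) ^ 3 := by rw [hc]
          _ = 44 * rα ^ 2 + 37 * rα + 24 := by
            linear_combination (rα ^ 3 + 4 * rα ^ 2 + 11 * rα + 23) * hc
      rw [h9, hβ]
      ring
    rw [this, Real.log_div (by positivity) (by norm_num), Real.log_pow, Real.log_pow]
    push_cast
    ring
  rw [e, wL, wH]
  obtain ⟨b1, b2⟩ := b_bounds
  have b0 : (0 : ℝ) ≤ b := Nat.cast_nonneg _
  have ho : (0 : ℝ) < one := by exact_mod_cast one_pos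
  have hβ0 : 0 ≤ β := by rw [hβ]; linarith
  have s1 : (b : ℝ) ^ 2 ≤ (β * one) ^ 2 := by gcongr
  have s2 : (β * one) ^ 2 ≤ ((b : ℝ) + 1) ^ 2 := by gcongr
  refine mlog (k := 105) (by norm_num) ?_ ?_ ?_ ?_ (by decide +kernel)
  · rw [hβ]; nlinarith
  · rw [hβ]; push_cast; nlinarith
  · have h : 243 * (za - 1) * one + 31 * one ^ 2 + 44 * (b + 1) ^ 2 ≤ 213 * b * one := by decide +kernel
    have h : 243 * ((za - 1 : ℕ) : ℝ) * one + 31 * one ^ 2 + 44 * (b + 1) ^ 2 ≤ 213 * b * one := by exact_mod_cast h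
    refine le_of_mul_le_mul_right ?_ ho
    nlinarith [mul_le_mul_of_nonneg_right b1 ho.le]
  · have h : 213 * (b + 1) * one ≤ 243 * (za + 2) * one + 31 * one ^ 2 + 44 * b ^ 2 := by decide +kernel
    have h : 213 * ((b : ℝ) + 1) * one ≤ 243 * ((za + 2 : ℕ) : ℝ) * one + 31 * one ^ 2 + 44 * b ^ 2 := by exact_mod_cast h
    refine le_of_mul_le_mul_right ?_ ho
    nlinarith [mul_le_mul_of_nonneg_right b2 ho.le]

lemma t_bounds : (tL : ℝ) ≤ (Real.log 3 - Real.log rδ) * one ∧ (Real.log 3 - Real.log rδ) * one ≤ tH := by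
  have g1 := rα_gt
  have g2 := rα_lt
  set β := 2 - rα with hβ
  have e : (Real.log 3 - Real.log rδ) = -Real.log (1 - β ^ 2 / 3) := by
    have : 1 - β ^ 2 / 3 = rδ / 3 := by
      rw [hβ, rδ]
      ring
    rw [this, Real.log_div rδ_pos.ne' (by norm_num)]
    ring
  rw [e, tL, tH]
  obtain ⟨b1, b2⟩ := b_bounds
  have b0 : (0 : ℝ) ≤ b := Nat.cast_nonneg _
  have ho : (0 : ℝ) < one := by exact_mod_cast one_pos
  have hβ0 : 0 ≤ β := by rw [hβ]; linarith
  have s1 : (b : ℝ) ^ 2 ≤ (β * one) ^ 2 := by gcongr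
  have s2 : (β * one) ^ 2 ≤ ((b : ℝ) + 1) ^ 2 := by gcongr
  refine mlog (k := 105) (by norm_num) ?_ ?_ ?_ ?_ (by decide +kernel)
  · positivity
  · rw [hβ]; push_cast; nlinarith
  · have h : 3 * (zd - 1) * one ≤ b ^ 2 := by decide +kernel
    have h : 3 * ((zd - 1 : ℕ) : ℝ) * one ≤ b ^ 2 := by exact_mod_cast h
    refine le_of_mul_le_mul_right ?_ ho
    nlinarith
  · have h : (b + 1) ^ 2 ≤ 3 * (zd + 2) * one := by decide +kernel
    have h : ((b : ℝ) + 1) ^ 2 ≤ 3 * ((zd + 2 : ℕ) : ℝ) * one := by exact_mod_cast h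
    refine le_of_mul_le_mul_right ?_ ho
    nlinarith

end Lg

namespace Lg

noncomputable def l2L : ℕ := 2 * uL + 5 * vL
noncomputable def l2H : ℕ := 2 * uH + 5 * vH
noncomputable def l3L : ℕ := 3 * uL + 8 * vL
noncomputable def l3H : ℕ := 3 * uH + 8 * vH
noncomputable def laL : ℕ := (5 * l3L - wH) / 9
noncomputable def laH : ℕ := (5 * l3H - wL) / 9 + 1
noncomputable def ldL : ℕ := l3L - tH
noncomputable def ldH : ℕ := l3H - tL

lemma l2_bounds : (l2L : ℝ) ≤ Real.log 2 * one ∧ Real.log 2 * one ≤ l2H := by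
  obtain ⟨a, b⟩ := u_bounds
  obtain ⟨c, d⟩ := v_bounds
  unfold l2L l2H
  push_cast
  constructor <;> linarith

lemma l3_bounds : (l3L : ℝ) ≤ Real.log 3 * one ∧ Real.log 3 * one ≤ l3H := by
  obtain ⟨a, b⟩ := u_bounds
  obtain ⟨c, d⟩ := v_bounds
  unfold l3L l3H
  push_cast
  constructor <;> linarith

lemma cast_sub_le {a b : ℕ} {r : ℝ} (h : (a : ℝ) - b ≤ r) (hr : 0 ≤ r) : ((a - b : ℕ) : ℝ) ≤ r := by
  rcases le_total a b with h' | h'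
  · rw [Nat.sub_eq_zero_of_le h']; simpa using hr
  · rw [Nat.cast_sub h']; exact h

lemma le_cast_sub {a b : ℕ} {r : ℝ} (h : r ≤ (a : ℝ) - b) : r ≤ ((a - b : ℕ) : ℝ) := by
  have : a ≤ a - b + b := by omega
  have : (a : ℝ) ≤ ((a - b : ℕ) : ℝ) + b := by exact_mod_cast this
  linarith

lemma la_bounds_aux {one l3L l3H wL wH : ℕ} (h1 : 0 < one) (h3 : (l3L : ℝ) ≤ Real.log 3 * one ∧ Real.log 3 * one ≤ l3H)
    (hw : (wL : ℝ) ≤ (5 * Real.log 3 - 9 * Real.log rα) * one ∧ (5 * Real.log 3 - 9 * Real.log rα) * one ≤ wH) :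
    (((5 * l3L - wH) / 9 : ℕ) : ℝ) ≤ Real.log rα * one ∧ Real.log rα * one ≤ ((5 * l3H - wL) / 9 + 1 : ℕ) := by
  obtain ⟨a, b⟩ := h3
  obtain ⟨c, d⟩ := hw
  have hp := log_rα_pos
  have ho : (0 : ℝ) < one := by exact_mod_cast h1
  have hp : 0 < Real.log rα * one := by positivity
  constructor
  · refine (nat_div_le _ _).trans ?_
    rw [div_le_iff₀ (by norm_num)]
    apply cast_sub_le _ (by positivity)
    push_cast
    linarith
  · have h1 := le_nat_div (5 * l3H - wL) (show 0 < 9 by norm_num)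
    have h2 : Real.log rα * one * 9 ≤ ((5 * l3H - wL : ℕ) : ℝ) := by
      apply le_cast_sub
      push_cast
      linarith
    push_cast at h1 ⊢
    linarith

lemma la_bounds : (laL : ℝ) ≤ Real.log rα * one ∧ Real.log rα * one ≤ laH := la_bounds_aux one_pos l3_bounds w_bounds

lemma ld_bounds_aux {one l3L l3H tL tH : ℕ} (h1 : 0 < one) (h3 : (l3L : ℝ) ≤ Real.log 3 * one ∧ Real.log 3 * one ≤ l3H)
    (ht : (tL : ℝ) ≤ (Real.log 3 - Real.log rδ) * one ∧ (Real.log 3 - Real.log rδ) * one ≤ tH) :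
    ((l3L - tH : ℕ) : ℝ) ≤ Real.log rδ * one ∧ Real.log rδ * one ≤ ((l3H - tL : ℕ) : ℝ) := by
  obtain ⟨a, b⟩ := h3
  obtain ⟨c, d⟩ := ht
  have ho : (0 : ℝ) < one := by exact_mod_cast h1
  have hp : 0 < Real.log rδ := Real.log_pos (by linarith [rδ_bounds.1])
  constructor
  · apply cast_sub_le _ (by positivity)
    linarith
  · apply le_cast_sub
    linarith

lemma ld_bounds : (ldL : ℝ) ≤ Real.log rδ * one ∧ Real.log rδ * one ≤ ldH := ld_bounds_aux one_pos l3_bounds t_bounds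

lemma two_sided {q p A a l h l' h' E : ℝ} (hq : 0 ≤ q) (hp : 0 ≤ p) (h1 : l ≤ A) (h2 : A ≤ h) (h3 : l' ≤ a) (h4 : a ≤ h')
    (h5 : q * h ≤ p * l' + E) (h6 : p * h' ≤ q * l + E) : |q * A - p * a| ≤ E := by
  have := mul_le_mul_of_nonneg_left h1 hq
  have := mul_le_mul_of_nonneg_left h2 hq
  have := mul_le_mul_of_nonneg_left h3 hp
  have := mul_le_mul_of_nonneg_left h4 hp
  rw [abs_le]
  constructor <;> linarith

lemma far {ℓ r : ℝ} {M : ℤ} {ρ : ℝ} (h1 : ρ ≤ r) (h2 : r + ρ ≤ ℓ) (hρ : 0 ≤ ρ) : ρ ≤ |r + M * ℓ| := by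
  rcases le_or_gt 0 M with h | h
  · have : (0 : ℝ) ≤ M := by exact_mod_cast h
    refine le_trans ?_ (le_abs_self _)
    nlinarith
  · have : (M : ℝ) ≤ -1 := by exact_mod_cast (by omega : M ≤ -1)
    refine le_trans ?_ (neg_le_abs _)
    nlinarith

theorem gap_aux {one l2L l2H l3L l3H laL laH ldL ldH : ℕ} (h1 : 0 < one)
    (hl2 : (l2L : ℝ) ≤ Real.log 2 * one ∧ Real.log 2 * one ≤ l2H)
    (hl3 : (l3L : ℝ) ≤ Real.log 3 * one ∧ Real.log 3 * one ≤ l3H)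
    (hla : (laL : ℝ) ≤ Real.log rα * one ∧ Real.log rα * one ≤ laH)
    (hld : (ldL : ℝ) ≤ Real.log rδ * one ∧ Real.log rδ * one ≤ ldH)
    {q p₁ p₂ p₃ E R B S G : ℕ}
    (h : q * l2H ≤ p₁ * laL + E ∧ p₁ * laH ≤ q * l2L + E ∧ q * l3H ≤ p₂ * laL + E ∧ p₂ * laH ≤ q * l3L + E ∧
      p₃ * laH + R ≤ q * ldL ∧ q * ldH + R ≤ (p₃ + 1) * laL ∧ 2 * B * E + S ≤ R ∧
      34 * q * one * 10000 ^ (G + 1) < 10 * S * 18392 ^ (G + 1))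
    {cc : ℤ} {n x y : Fin 4 → ℕ} (H : Quad cc n x y) (hB : n 0 ≤ B) : n 0 ≤ n 3 + G := by
  obtain ⟨c1, c2, c3, c4, c5, c6, c7, c8⟩ := h
  obtain ⟨d, hd, hd3⟩ := H.gap
  have hlam := H.lam0_le hd hd3
  by_contra hcon
  have hdG : G + 1 ≤ d := by omega
  have ho : (0 : ℝ) < one := by exact_mod_cast h1
  obtain ⟨a1, a2⟩ := hl2
  obtain ⟨a3, a4⟩ := hl3
  obtain ⟨a5, a6⟩ := hla
  obtain ⟨a7, a8⟩ := hld
  have c1 : (q : ℝ) * l2H ≤ p₁ * laL + E := by exact_mod_cast c1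
  have c2 : (p₁ : ℝ) * laH ≤ q * l2L + E := by exact_mod_cast c2
  have c3 : (q : ℝ) * l3H ≤ p₂ * laL + E := by exact_mod_cast c3
  have c4 : (p₂ : ℝ) * laH ≤ q * l3L + E := by exact_mod_cast c4
  have c5 : (p₃ : ℝ) * laH + R ≤ q * ldL := by exact_mod_cast c5
  have c6 : (q : ℝ) * ldH + R ≤ (p₃ + 1) * laL := by exact_mod_cast c6
  have c7 : 2 * (B : ℝ) * E + S ≤ R := by exact_mod_cast c7
  have c8 : 34 * (q : ℝ) * one * 10000 ^ (G + 1) < 10 * S * 18392 ^ (G + 1) := by exact_mod_cast c8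
  have q0 : (0 : ℝ) ≤ q := Nat.cast_nonneg _
  have p10 : (0 : ℝ) ≤ p₁ := Nat.cast_nonneg _
  have p20 : (0 : ℝ) ≤ p₂ := Nat.cast_nonneg _
  have p30 : (0 : ℝ) ≤ p₃ := Nat.cast_nonneg _
  have E0 : (0 : ℝ) ≤ E := Nat.cast_nonneg _
  set A2 := Real.log 2 * one with hA2
  set A3 := Real.log 3 * one with hA3
  set Aa := Real.log rα * one with hAa
  set Ad := Real.log rδ * one with hAd
  have e2 : |q * A2 - p₁ * Aa| ≤ E := two_sided q0 p10 a1 a2 a5 a6 c1 c2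
  have e3 : |q * A3 - p₂ * Aa| ≤ E := two_sided q0 p20 a3 a4 a5 a6 c3 c4
  have f1 : (R : ℝ) ≤ q * Ad - p₃ * Aa := by
    have := mul_le_mul_of_nonneg_left a7 q0
    have := mul_le_mul_of_nonneg_left a6 p30
    linarith
  have f2 : q * Ad - p₃ * Aa + R ≤ Aa := by
    have := mul_le_mul_of_nonneg_left a8 q0
    have := mul_le_mul_of_nonneg_left a5 (show (0 : ℝ) ≤ p₃ + 1 by linarith)
    linarith
  have hfar := far (ℓ := Aa) (r := q * Ad - p₃ * Aa) (M := (x 0 * p₁ + y 0 * p₂ + p₃ : ℤ) - q * n 0 ) (ρ := R)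
    f1 f2 (Nat.cast_nonneg _)
  have hx : (x 0 : ℝ) ≤ B := by exact_mod_cast (H.x_le 0).trans hB
  have hy : (y 0 : ℝ) ≤ B := by exact_mod_cast (H.y_le 0).trans hB
  have x0 : (0 : ℝ) ≤ x 0 := Nat.cast_nonneg _
  have y0 : (0 : ℝ) ≤ y 0 := Nat.cast_nonneg _
  have hS : (S : ℝ) ≤ |lam0 (n 0) (x 0) (y 0)| * (q * one) := by
    have e : lam0 (n 0) (x 0) (y 0) * (q * one) =
        (q * Ad - p₃ * Aa + (((x 0 * p₁ + y 0 * p₂ + p₃ : ℤ) - q * n 0 : ℤ) : ℝ) * Aa)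
          + (x 0 * (q * A2 - p₁ * Aa) + y 0 * (q * A3 - p₂ * Aa)) := by
      rw [lam0, hA2, hA3, hAa, hAd]
      push_cast
      ring
    have h0 : (0 : ℝ) ≤ q * one := by positivity
    rw [← abs_of_nonneg h0, ← abs_mul, e]
    have t1 : |(x 0 : ℝ) * (q * A2 - p₁ * Aa)| ≤ B * E := by
      rw [abs_mul, abs_of_nonneg x0]
      gcongr
    have t2 : |(y 0 : ℝ) * (q * A3 - p₂ * Aa)| ≤ B * E := by
      rw [abs_mul, abs_of_nonneg y0]
      gcongr
    have t3 := abs_add_le ((x 0 : ℝ) * (q * A2 - p₁ * Aa)) (y 0 * (q * A3 - p₂ * Aa))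
    have t4 := abs_sub_abs_le_abs_add (q * Ad - p₃ * Aa + (((x 0 * p₁ + y 0 * p₂ + p₃ : ℤ) - q * n 0 : ℤ) : ℝ) * Aa)
      (x 0 * (q * A2 - p₁ * Aa) + y 0 * (q * A3 - p₂ * Aa))
    linarith
  have hpow : (1.8392 : ℝ) ^ (G + 1) ≤ rα ^ d := by
    calc (1.8392 : ℝ) ^ (G + 1) ≤ rα ^ (G + 1) := by gcongr; exact rα_gt.le
      _ ≤ rα ^ d := pow_le_pow_right₀ rα_one.le hdG
  have hfin : (S : ℝ) * 1.8392 ^ (G + 1) ≤ 3.4 * (q * one) := by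
    calc (S : ℝ) * 1.8392 ^ (G + 1) ≤ |lam0 (n 0) (x 0) (y 0)| * (q * one) * rα ^ d := by gcongr
      _ = |lam0 (n 0) (x 0) (y 0)| * rα ^ d * (q * one) := by ring
      _ ≤ _ := by gcongr
  rw [show (1.8392 : ℝ) = 18392 / 10000 by norm_num, div_pow, ← mul_div_assoc, div_le_iff₀ (by positivity)] at hfin
  linarith

/-- A certificate that `q * log 2` and `q * log 3` are within `E / one` of integer multiples of `log α`,
while `q * log δ` is at distance at least `R / one` from all of them. -/
def Cert (q p₁ p₂ p₃ E R B S G : ℕ) : Prop :=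
  q * l2H ≤ p₁ * laL + E ∧ p₁ * laH ≤ q * l2L + E ∧ q * l3H ≤ p₂ * laL + E ∧ p₂ * laH ≤ q * l3L + E ∧
  p₃ * laH + R ≤ q * ldL ∧ q * ldH + R ≤ (p₃ + 1) * laL ∧ 2 * B * E + S ≤ R ∧
  34 * q * one * 10000 ^ (G + 1) < 10 * S * 18392 ^ (G + 1)

theorem Cert.gap {q p₁ p₂ p₃ E R B S G : ℕ} (h : Cert q p₁ p₂ p₃ E R B S G)
    {cc : ℤ} {n x y : Fin 4 → ℕ} (H : Quad cc n x y) (hB : n 0 ≤ B) : n 0 ≤ n 3 + G :=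
  gap_aux one_pos l2_bounds l3_bounds la_bounds ld_bounds h H hB

end Lg

set_option exponentiation.threshold 100000

lemma Quad.Num2.mono {A J gg B B' : ℕ} (h : Quad.Num2 A J gg B) (hB : B' ≤ B) : Quad.Num2 A J gg B' :=
  ⟨h.hJ1, h.hgg1, le_trans (by gcongr) h.hgg, h.hJ, h.hw⟩

lemma Quad.pass_num {cc : ℤ} {n x y : Fin 4 → ℕ} (H : Quad cc n x y) {B G Z m J gg B' : ℕ} (hB : n 0 < B) (hG : n 0 ≤ n 3 + G)
    (hZ1 : 1 ≤ Z) (hZ : 468 * Z * ((12 * G + 48) + B + 1) ≤ 2 ^ Z) (hm : 219024 * (12 * G + 48) * Z ^ 2 ≤ m)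
    (hN : Quad.Num2 (4 * m + (G + 2) + G + 5) J gg B)
    (hf : 2 * bU 2 (4 * m + (G + 2) + G + 5) 3 J gg + 10 * m < B') : n 0 < B' :=
  (H.glue hG hZ1 (le_trans (by gcongr) hZ) hm (hN.mono hB.le)).trans_lt hf

lemma Lg.cert2048 : Lg.Cert
    266056488043131614312228678546865161741548104395840350129827893870076481495028269571925856352936657258082978301896462704610834386605018792205288551970422576234771587068937775009337728265497295223676611030603623213740736577544315176528704881970805514591690688138324129006300295963422677220742163518037166579439511161501662231117248735537370557736704796588464022533506512443068628338847874594967087104995469262060998134491446405956104450039591154091243738272102877266515206381850190466564227527523541123304747579935776090436088270785854564206982508460231043961236161722424370475691955776356073077121070624266346023609919751488828047244453263595415815540371027893326958292014558323730272556928353737435850186041223580424429733717434609097943379624157967260810872192613430235480540627070484546869592322084512294623492695264017751695714471508852360252454702004951648301656240740232555793367271750410704104383463180777537388118816465110175033809116119970958922238133908730170977950865392064325216542350528041329243009290078307525644012307629231936067074098152404376991486028428286435041425421518428927750294770724817348246251150284796618890540494451879284164137988507845617330162682598286102158330068545914213692365536629043442625257016286583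
    302630462348824627244772284541439430383425386586897747083218794153095362899700797559939803908724774197010691735855414261292801865928481254893156682270888837941842568308774687517739072416960551779272346341799546102355193330536637370935733139912255685725477262488216882946578915427182067890125300911193018179056739221526489207184908439262050543783249552889910915066870523270396491010973916719808119871955201842035605004650469045329692632107315093881021837615078279141578219388200152583057531433256385138386218677829093537039243390590230035535010841308745697720796551120258164729032408172205400804746407759642440557867091937882911992916093078952769899551557381224379701666900224786789143436885776073603295531706972197519677968566124020873726206643084767271832128387383645652836420201566253403048804379828919650313512747567488274650440663189680889819086108695544572072165645778252466271110357546939948612911029026539360174291697491120375519057104197886922869547320477530091829546520752227284965775829107627365173174913559791776562921509011845334848881234486993703868923320544988912003131900552942350330394055830101835533731041201444589087581164687784734582493744859875237236022262559648985352100307882654639848873515110178865229460570592146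
    479657934398792781878500276452694858039883055408705907571300495198676639584732666584729007932583242561508905954474902516119820002372906700954360717484639000341305337498548244488699417572422682009210057349004342982826343521775381042619533464243212482971224908074520451457547371655087656981147627071318437400972587212713413233287829807302942595379713380951818151784977509545361649348341877562271756152758971767399747615431626414128246022479627457242185884232386132247582526500422598879833439293941221922948942799312140964626109015395264849643595012462883402247065691454541800607696863198253790697364308075019800296712969545124403747127663216803130421238488138106948015025462054064421872855374202810241910613531506983482750590577748818469409751976832226047987092187846020451420728486926597796977232732020578622860892080102092109901452868382262930292749012507412253247484732385055379405990405786988424049538465980843825434124469686443323487403319456216208965753326578439809729351791313579918557010487758095197491542660827622146670100604084364863349870695621224578926992805752980436761087934619127781463340529363314075286447683923571984779899055042190980846664482146152214802259737795151665186658813146572255721552976367405397424426623390004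
    475882685815526246490611377660162781873972723884980412539117525190431377229018621284314306266618528036351303321040972613023471903318853786898746444571676727893133854327777968898399248365122915806135356539701748825275270179290583167074935973932562865724248562517203697074768959248866156609905305795005551564605442489660515504862750528431595143709649176717620383761660128057852666892441038146369967130254291854219603074913970770460619858372261563688859625881543379494256050354014743492923579439272533283220910849471651604457123785284306235437545459004428812991256865507423068313715329666367309904438760322064597122781676188701710388225368587397822595337406960121541038273041760004744887840772099081814805563158204240924290177661913142968833381501539146926034185588898657085600229352761684602572944638291237126154601113094177106958558190889171638599588864062590810149537682490248945038248748664216035887034331090090111374361864954793598273051495826460971034543815600891466734327282656158439572691167385501142971751521802779044063652651962427396080022746918599233529399323565805177825166145301041789884478596885422184620494424059861004713613295419638623940311692493091699001451741357601020983427389120002640489816710003369393167526896624342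
    (Lg.one / 2 ^ 2052) (Lg.one / 2 ^ 2) (2 ^ 2048) (Lg.one / 2 ^ 3) 4673 := by
  unfold Lg.Cert
  decide +kernel

lemma Quad.gap2048 {cc : ℤ} {n x y : Fin 4 → ℕ} (H : Quad cc n x y) : n 0 ≤ n 3 + 4673 :=
  Lg.cert2048.gap H H.pass1.le

theorem Quad.pass2 {cc : ℤ} {n x y : Fin 4 → ℕ} (H : Quad cc n x y) : n 0 < 2 ^ 401 :=
  H.pass_num (Z := 2068) (m := 52570413247233024) (J := 251) (gg := 2160) H.pass1 H.gap2048
    (by decide +kernel) (by decide +kernel) (by decide +kernel) ⟨by decide +kernel, by decide +kernel, by decide +kernel, by decide +kernel, by decide +kernel⟩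
    (by decide +kernel)

lemma Lg.cert401 : Lg.Cert
    1188737414936403624570414205771605705211344481970490750138296868488237505886553386258278836498535180587499379413462851579659242358456977832336844431488056898840851074887103802480123564235459859074473112398061086575903943162526579293200445511757
    1352149523356972311253794441001971874051610960278498581456624558259205687786304138376009435716606592466846127131928883428795486757565763632493135328012397101284975399620460711904663283879338897367347617516293872809703841318936349022693187184591
    2143106289888786213894199520190653635996554603896802194612036050962785802536073971255581302807353335062626873738214185779017484084364356897192208624337127723807382009188781118186711750782393591749592693970877941078769880946217817175165673971814
    2126238521413668075363456845083354819493558729814829596541787644295627330647430992936051871835559286498854081664528379351106587910482431020391479064027557013772949813411656596144798129937041073802238202676687347668377606276130919706176340419815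
    (Lg.one / 2 ^ 405) (Lg.one / 2 ^ 2) (2 ^ 401) (Lg.one / 2 ^ 3) 923 := by
  unfold Lg.Cert
  decide +kernel

lemma Quad.gap401 {cc : ℤ} {n x y : Fin 4 → ℕ} (H : Quad cc n x y) : n 0 ≤ n 3 + 923 :=
  Lg.cert401.gap H H.pass2.le

theorem Quad.pass3 {cc : ℤ} {n x y : Fin 4 → ℕ} (H : Quad cc n x y) : n 0 < 2 ^ 370 :=
  H.pass_num (Z := 419) (m := 427740854089536) (J := 232) (gg := 504) H.pass2 H.gap401
    (by decide +kernel) (by decide +kernel) (by decide +kernel) ⟨by decide +kernel, by decide +kernel, by decide +kernel, by decide +kernel, by decide +kernel⟩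
    (by decide +kernel)

lemma Lg.cert370 : Lg.Cert
    3085791379515021443346539282904977883890622780464675493956784318473198272150127772107413413245890677646441093500141972653314684712494615556158337195205038645894951672715586210384731928701817460016180129006466903361412372011471
    3509985713046234576462521206898645766083640914912274320337254990568902115084232318004417020137700553409160213903812862209216944785555294121679371211933549596955548292682508030785410658364142172119683302977919777155655060987611
    5563195733245290463674080382690481314415347814254480594506418993314766074662750829825956800770597075887002790457191413689105145077821522525205382660976403049980690118425010550179443984905484528616859853912299180005409147068727
    5519409431999813605857281239284153047847373257887915087127579343807200522741149055216390849025190413042643215690961702838538485656952489567387728393248507710162945023804328639533923182431173474209263172274858942559488923887665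
    (Lg.one / 2 ^ 375) (Lg.one / 2 ^ 3) (2 ^ 370) (Lg.one / 2 ^ 4) 858 := by
  unfold Lg.Cert
  decide +kernel

lemma Quad.gap370 {cc : ℤ} {n x y : Fin 4 → ℕ} (H : Quad cc n x y) : n 0 ≤ n 3 + 858 :=
  Lg.cert370.gap H H.pass3.le

/-! ### A verified computation of the solutions of a congruence -/

namespace PAdic

/-- `force n k = k n`; the recursor on `n` makes the kernel evaluate `n` to a numeral before it enters `k`. -/
noncomputable def force (n : Nat) (k : Nat → Bool) : Bool := Nat.rec (k 0) (fun m _ => k (Nat.succ m)) n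

/-- The precomputed data for a list of lifting steps. A step at level `j` with window `q` carries `sp = per * p ^ j`,
`pj = p ^ (j + 1)`, and the coordinates of `(Θ - 1) / pj` for `Θ = α ^ sp`; all but the last one also carry the table
`tbl` of the elements `(Θ ^ d - 1) / pj`, `d < q`, packed into one number, and `m` with `u ^ m` the inverse of `u`
modulo `q`. -/
inductive Lv where
  | last (q sp pj t0 t1 t2 : Nat) : Lv
  | cons (q m sp pj tbl t0 t1 t2 : Nat) (tl : Lv) : Lv

/-- Newton iteration for the inverse of `u` modulo `q`, passed to the continuation. -/
noncomputable def inv (q u n : Nat) : Nat → (Nat → Bool) → Bool :=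
  Nat.rec (fun x k => k x)
    (fun _ ih x k => force (Nat.mod (Nat.mul x (Nat.sub (Nat.add q 2) (Nat.mod (Nat.mul u x) q))) q) fun x' => ih x' k) n

/-- Lifting of the class of `r`. With `F n = T (n + g) - T n`, the arguments `h, f1, f2` stand for `F r / pj`,
`F (r + 1)`, `F (r + 2)` modulo `P`; the answer `true` excludes all `n < B` of the class. Table entries have
`L` bits. -/
noncomputable def chain (P L B pve : Nat) (l : Lv) : Nat → Nat → Nat → Nat → Bool :=
  Lv.rec
    (fun q sp pj t0 t1 t2 r h f1 f2 =>
      force (Nat.add (Nat.add (Nat.mul t0 (Nat.mul pj h)) (Nat.mul t1 f1)) (Nat.mul t2 f2)) fun D =>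
      Bool.rec false
        (force (Nat.mod (Nat.div D pve) q) fun u =>
        inv q u 7 u fun x =>
        Bool.rec false
          (Bool.rec true
            (force (Nat.mod (Nat.mul (Nat.div h pve) (Nat.sub q x)) q) fun t =>
            force (Nat.add r (Nat.mul sp t)) fun r' => Bool.or (Nat.ble B r') (Nat.ble r' 2))
            (Nat.beq (Nat.mod h pve) 0))
          (Nat.beq (Nat.mod (Nat.mul x u) q) 1))
        (Nat.beq (Nat.mod D pve) 0))
    (fun q m sp pj tbl t0 t1 t2 _ ih r h f1 f2 =>
      force (Nat.add (Nat.add (Nat.mul t0 (Nat.mul pj h)) (Nat.mul t1 f1)) (Nat.mul t2 f2)) fun D =>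
      Bool.rec false
        (force (Nat.mod (Nat.div D pve) q) fun u =>
        force (Nat.mod (Nat.pow u m) q) fun x =>
        Bool.rec false
          (Bool.rec true
            (force (Nat.mod (Nat.mul (Nat.div h pve) (Nat.sub q x)) q) fun t =>
            force (Nat.shiftRight tbl (Nat.mul (Nat.sub (Nat.sub q 1) t) (Nat.mul 3 L))) fun w =>
            force (Nat.mod w (Nat.pow 2 L)) fun a =>
            force (Nat.mod (Nat.shiftRight w L) (Nat.pow 2 L)) fun b =>
            force (Nat.mod (Nat.shiftRight w (Nat.mul 2 L)) (Nat.pow 2 L)) fun c =>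
            force (Nat.add (Nat.mul pj h) (Nat.add f1 f2)) fun f3 =>
            force (Nat.mod (Nat.add h (Nat.add (Nat.add (Nat.mul a (Nat.mul pj h)) (Nat.mul b f1)) (Nat.mul c f2))) P)
              fun h' =>
            Bool.rec false
              (force (Nat.add r (Nat.mul sp t)) fun r' =>
              force (Nat.div h' q) fun h'' =>
              force (Nat.mod (Nat.add f1 (Nat.mul pj
                (Nat.add (Nat.add (Nat.mul a f1) (Nat.mul b f2)) (Nat.mul c f3)))) P) fun g1 =>
              force (Nat.mod (Nat.add f2 (Nat.mul pj
                (Nat.add (Nat.add (Nat.mul a f2) (Nat.mul b f3)) (Nat.mul c (Nat.add f1 (Nat.add f2 f3)))))) P)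
                fun g2 =>
              ih r' h'' g1 g2)
              (Nat.beq (Nat.mod h' q) 0))
            (Nat.beq (Nat.mod h pve) 0))
          (Nat.beq (Nat.mod (Nat.mul x u) q) 1))
        (Nat.beq (Nat.mod D pve) 0)) l

/-- Runs through the classes `r = N - n, …, N - 1`, lifting those not excluded modulo `pc`. -/
noncomputable def scan (P L B pj pc pve pve' N : Nat) (l : Lv) (n : Nat) : Nat → Nat → Nat → Bool :=
  Nat.rec (fun _ _ _ => true)
    (fun n ih f0 f1 f2 =>
      Bool.rec false
        (force (Nat.mod (Nat.add f0 (Nat.add f1 f2)) P) fun f3 => ih f1 f2 f3)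
        (Bool.rec true
          (force (Nat.div f0 pj) fun h => force (Nat.sub N (Nat.succ n)) fun r =>
            Bool.or (chain P L B pve l r h f1 f2) (chain P L B pve' l r h f1 f2))
          (Nat.beq (Nat.mod f0 pc) 0))) n

/-- Runs through `G` consecutive gaps `g`, where `t0, t1, t2` are `T g, T (g + 1), T (g + 2)` modulo `P`. -/
noncomputable def gaps (P L B pj pv pv' pE N : Nat) (l : Lv) (G : Nat) : Nat → Nat → Nat → Bool :=
  Nat.rec (fun _ _ _ => true)
    (fun _ ih t0 t1 t2 =>
      force (Nat.mod (Nat.add t1 (Nat.sub P 1)) P) fun f1 =>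
      force (Nat.mod (Nat.add t2 (Nat.sub P 1)) P) fun f2 =>
      force (Nat.gcd t0 (Nat.gcd f1 (Nat.gcd f2 pE))) fun pe =>
      force (Nat.mul pj pe) fun pc =>
      force (Nat.mul pv pe) fun pve =>
      force (Nat.mul pv' pe) fun pve' =>
      Bool.rec false
        (force (Nat.mod (Nat.add t0 (Nat.add t1 t2)) P) fun t3 => ih t1 t2 t3)
        (scan P L B pj pc pve pve' N l N t0 f1 f2)) G

/-- Passes `T g, T (g + 1), T (g + 2)` modulo `P` to the continuation. -/
noncomputable def trib (P g : Nat) : (Nat → Nat → Nat → Bool) → Bool :=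
  Nat.rec (fun k => k 0 1 1)
    (fun _ ih k => ih fun t0 t1 t2 => force (Nat.mod (Nat.add t0 (Nat.add t1 t2)) P) fun t3 => k t1 t2 t3) g

/-- For `x, y, z` and `a, b, c` the coordinates of `η` and `θ` in `ℤ[α]`, passes the coordinates of
`η + θ + s * (η * θ)` modulo `P` to the continuation; thus `1 + s * η` is replaced by `(1 + s * η) * (1 + s * θ)`. -/
noncomputable def step (P s x y z a b c : Nat) (k : Nat → Nat → Nat → Bool) : Bool :=
  force (Nat.add (Nat.mul y c) (Nat.mul z b)) fun s3 =>
  force (Nat.mul z c) fun s4 =>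
  force (Nat.mod (Nat.add (Nat.add x a) (Nat.mul s (Nat.add (Nat.mul x a) (Nat.add s3 s4)))) P) fun x' =>
  force (Nat.mod (Nat.add (Nat.add y b) (Nat.mul s (Nat.add (Nat.add (Nat.mul x b) (Nat.mul y a))
    (Nat.add s3 (Nat.mul 2 s4))))) P) fun y' =>
  force (Nat.mod (Nat.add (Nat.add z c) (Nat.mul s (Nat.add (Nat.add (Nat.mul x c) (Nat.add (Nat.mul y b) (Nat.mul z a)))
    (Nat.add s3 (Nat.mul 2 s4))))) P) fun z' => k x' y' z'

/-- Passes the packed table of `((1 + s * θ) ^ d - 1) / s`, `d < n`, and the coordinates of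
`((1 + s * θ) ^ n - 1) / s` to the continuation, where `a, b, c` are the coordinates of `θ`. -/
noncomputable def table (P L s a b c n : Nat) : (Nat → Nat → Nat → Nat → Bool) → Bool :=
  Nat.rec (fun k => k 0 0 0 0)
    (fun _ ih k => ih fun tbl x y z =>
      force (Nat.add x (Nat.mul (Nat.pow 2 L) (Nat.add y (Nat.mul (Nat.pow 2 L)
        (Nat.add z (Nat.mul (Nat.pow 2 L) tbl)))))) fun tbl' =>
      step P s x y z a b c fun x' y' z' => k tbl' x' y' z') n

/-- Passes the quotients of `a, b, c` by `q` to the continuation if they are integers. -/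
noncomputable def divide (q a b c : Nat) (k : Nat → Nat → Nat → Bool) : Bool :=
  Bool.rec false
    (force (Nat.div a q) fun a' => force (Nat.div b q) fun b' => force (Nat.div c q) fun c' => k a' b' c')
    (Nat.beq (Nat.mod (Nat.gcd a (Nat.gcd b c)) q) 0)

/-- Passes the lifting data for the windows `p ^ k`, `k` in `ks`, and the last window `p ^ kl`, starting from the level `j` with
`sp = per * p ^ j`, `pj = p ^ (j + 1)`, and `a, b, c` the coordinates of `(α ^ sp - 1) / pj`. -/
noncomputable def levels (p P L kl : Nat) (ks : List Nat) : Nat → Nat → Nat → Nat → Nat → (Lv → Bool) → Bool :=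
  List.rec (fun sp pj a b c K => force (Nat.pow p kl) fun q => K (Lv.last q sp pj a b c))
    (fun k _ ih sp pj a b c K =>
      force (Nat.pow p k) fun q =>
      force (Nat.sub (Nat.sub q (Nat.div q p)) 1) fun m =>
      table P L pj a b c q fun tbl x y z =>
      divide q x y z fun a' b' c' =>
      force (Nat.mul sp q) fun sp' =>
      force (Nat.mul pj q) fun pj' =>
      ih sp' pj' a' b' c' fun tl => K (Lv.cons q m sp pj tbl a b c tl)) ks

/-- The whole verification for the gaps `g0, …, g0 + G - 1`, the prime `p` with `α ^ per ≡ 1` modulo `p`, the starting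
level `j`, and the two admitted valuations `v`, `v'` of the derivative. -/
noncomputable def check (p per K L B j v v' E kl : Nat) (ks : List Nat) (g0 G : Nat) : Bool :=
  force (Nat.pow p K) fun P =>
  force (Nat.mul per (Nat.pow p j)) fun sp =>
  force (Nat.pow p (Nat.succ j)) fun pj =>
  force (Nat.pow p v) fun pv =>
  force (Nat.pow p v') fun pv' =>
  force (Nat.pow p E) fun pE =>
  table P L 1 (Nat.sub P 1) 1 0 sp fun _ x y z =>
  divide pj x y z fun a b c =>
  levels p P L kl ks sp pj a b c fun l =>
  trib P g0 fun t0 t1 t2 => gaps P L B pj pv pv' pE sp l G t0 t1 t2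

/-! ### Soundness of the `p`-adic computation -/

lemma force_eq (n : ℕ) (k : ℕ → Bool) : force n k = k n := by cases n <;> rfl

lemma rec_false {b A : Bool} (h : (Bool.rec false A b : Bool) = true) : b = true ∧ A = true := by
  cases b <;> simp_all

lemma rec_true {b A : Bool} (h : (Bool.rec true A b : Bool) = true) : b = true → A = true := by
  cases b <;> simp_all

/-- The element of `ℤ[α]` with coordinates `x, y, z`. -/
def tri (x y z : ℕ) : Tri := ⟨x, y, z⟩

/-- `W ≡ 1 + s (x + y α + z α²)` modulo `P`. -/
def Eta (P s x y z : ℕ) (W : Tri) : Prop := (P : Tri) ∣ W - 1 - s * tri x y z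

lemma tri_mod (P X Y Z : ℕ) : (P : Tri) ∣ tri X Y Z - tri (X % P) (Y % P) (Z % P) := by
  have key : ∀ a : ℕ, (a : ℤ) - (a % P : ℕ) = P * (a / P : ℕ) := fun a => by
    have := Nat.mod_add_div a P
    zify at this
    push_cast
    linarith
  refine ⟨tri (X / P) (Y / P) (Z / P), ?_⟩
  ext <;> simp [tri]
  · simpa using key X
  · simpa using key Y
  · simpa using key Z

lemma dvd_phi {P : ℕ} {w : Tri} (h : (P : Tri) ∣ w) : (P : ℤ) ∣ Tri.phi w := by
  obtain ⟨v, rfl⟩ := h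
  exact ⟨Tri.phi v, by have := Tri.phi_intMul P v; push_cast at this; exact this⟩

lemma phi_mul (w x : Tri) :
    Tri.phi (w * x) = x.a * Tri.phi w + x.b * Tri.phi (w * Tri.al) + x.c * Tri.phi (w * Tri.al ^ 2) := by
  simp [Tri.phi, Tri.al, pow_two]; ring

lemma phi_mul_tri (w : Tri) (x y z : ℕ) :
    Tri.phi (w * tri x y z) = x * Tri.phi w + y * Tri.phi (w * Tri.al) + z * Tri.phi (w * Tri.al ^ 2) :=
  phi_mul w _

lemma step_spec {P s x y z a b c : ℕ} (hP : 0 < P) {W W' : Tri} (h : Eta P s x y z W) (h' : Eta P s a b c W') :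
    ∃ x' y' z', (∀ k, step P s x y z a b c k = k x' y' z') ∧ Eta P s x' y' z' (W * W') ∧ x' < P ∧ y' < P ∧ z' < P := by
  refine ⟨_, _, _, fun k => by simp only [step, force_eq]; rfl, ?_, Nat.mod_lt _ hP, Nat.mod_lt _ hP, Nat.mod_lt _ hP⟩
  set X := Nat.add (Nat.add x a) (Nat.mul s (Nat.add (Nat.mul x a) (Nat.add (Nat.add (Nat.mul y c) (Nat.mul z b))
    (Nat.mul z c)))) with hX
  set Y := Nat.add (Nat.add y b) (Nat.mul s (Nat.add (Nat.add (Nat.mul x b) (Nat.mul y a))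
    (Nat.add (Nat.add (Nat.mul y c) (Nat.mul z b)) (Nat.mul 2 (Nat.mul z c))))) with hY
  set Z := Nat.add (Nat.add z c) (Nat.mul s (Nat.add (Nat.add (Nat.mul x c) (Nat.add (Nat.mul y b) (Nat.mul z a)))
    (Nat.add (Nat.add (Nat.mul y c) (Nat.mul z b)) (Nat.mul 2 (Nat.mul z c))))) with hZ
  have h1 : tri X Y Z = tri x y z + tri a b c + s * (tri x y z * tri a b c) := by
    ext <;> simp [tri, hX, hY, hZ, -mul_eq_mul_left_iff] <;> ring
  have h2 := tri_mod P X Y Z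
  obtain ⟨u, hu⟩ := h
  obtain ⟨v, hv⟩ := h'
  obtain ⟨t, ht⟩ := h2
  have e1 : W = 1 + s * tri x y z + P * u := by linear_combination hu
  have e2 : W' = 1 + s * tri a b c + P * v := by linear_combination hv
  refine ⟨u * W' + v * (1 + s * tri x y z) + s * t, ?_⟩
  have e3 : tri (X % P) (Y % P) (Z % P) = tri X Y Z - P * t := by linear_combination -ht
  change W * W' - 1 - s * tri (X % P) (Y % P) (Z % P) = _
  rw [e3, h1, e2, e1]
  ring

/-- The entry `d` of a packed table `tbl` with `n` entries represents `W`. -/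
def Entry (P L s tbl n d : ℕ) (W : Tri) : Prop :=
  Eta P s ((tbl >>> ((n - 1 - d) * (3 * L))) % 2 ^ L) (((tbl >>> ((n - 1 - d) * (3 * L))) >>> L) % 2 ^ L)
    (((tbl >>> ((n - 1 - d) * (3 * L))) >>> (2 * L)) % 2 ^ L) W

lemma table_spec {P L s a b c : ℕ} (hP : 0 < P) (hL : P ≤ 2 ^ L) {W : Tri} (h : Eta P s a b c W) (n : ℕ) :
    ∃ tbl x y z, (∀ k, table P L s a b c n k = k tbl x y z) ∧ Eta P s x y z (W ^ n) ∧ (x < P ∧ y < P ∧ z < P) ∧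
      ∀ d < n, Entry P L s tbl n d (W ^ d) := by
  induction n with
  | zero =>
    refine ⟨0, 0, 0, 0, fun k => rfl, ?_, ⟨hP, hP, hP⟩, fun d hd => absurd hd (Nat.not_lt_zero d)⟩
    refine ⟨0, ?_⟩
    ext <;> simp [tri]
  | succ n ih =>
    obtain ⟨tbl, x, y, z, h1, h2, ⟨hx, hy, hz⟩, h3⟩ := ih
    obtain ⟨x', y', z', h4, h5, h6⟩ := step_spec hP h2 h
    refine ⟨x + 2 ^ L * (y + 2 ^ L * (z + 2 ^ L * tbl)), x', y', z', fun k => ?_, ?_, h6, fun d hd => ?_⟩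
    · have : table P L s a b c (n + 1) k = table P L s a b c n fun tbl x y z =>
        force (Nat.add x (Nat.mul (Nat.pow 2 L) (Nat.add y (Nat.mul (Nat.pow 2 L)
        (Nat.add z (Nat.mul (Nat.pow 2 L) tbl)))))) fun tbl' =>
      step P s x y z a b c fun x' y' z' => k tbl' x' y' z' := rfl
      rw [this, h1, force_eq, h4]
      rfl
    · rw [pow_succ]; exact h5
    · have hp : 0 < 2 ^ L := by positivity
      have s1 : ∀ u v : ℕ, u < 2 ^ L → (u + 2 ^ L * v) / 2 ^ L = v := fun u v hu => by
        rw [Nat.add_mul_div_left _ _ hp, Nat.div_eq_of_lt hu, zero_add]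
      have s2 : ∀ u v : ℕ, u < 2 ^ L → (u + 2 ^ L * v) % 2 ^ L = u := fun u v hu => by
        rw [Nat.add_mul_mod_self_left, Nat.mod_eq_of_lt hu]
      have hx := hx.trans_le hL
      have hy := hy.trans_le hL
      have hz := hz.trans_le hL
      rcases Nat.lt_succ_iff_lt_or_eq.mp hd with hd | rfl
      · have e : (n + 1 - 1 - d) * (3 * L) = 3 * L + (n - 1 - d) * (3 * L) := by
          have : n + 1 - 1 - d = 1 + (n - 1 - d) := by omega
          rw [this]; ring
        have := h3 d hd
        unfold Entry at this ⊢
        rw [e, Nat.shiftRight_add]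
        have e2 : (x + 2 ^ L * (y + 2 ^ L * (z + 2 ^ L * tbl))) >>> (3 * L) = tbl := by
          rw [show 3 * L = L + L + L by ring, Nat.shiftRight_add, Nat.shiftRight_add, Nat.shiftRight_eq_div_pow,
            Nat.shiftRight_eq_div_pow, Nat.shiftRight_eq_div_pow, s1 _ _ hx, s1 _ _ hy, s1 _ _ hz]
        rw [e2]
        exact this
      · unfold Entry
        simp only [Nat.add_sub_cancel, Nat.sub_self, zero_mul, Nat.shiftRight_zero]
        rw [show 2 * L = L + L by ring, Nat.shiftRight_add, Nat.shiftRight_eq_div_pow,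
            Nat.shiftRight_eq_div_pow, s1 _ _ hx, s1 _ _ hy, s2 _ _ hx, s2 _ _ hy, s2 _ _ hz]
        exact h2

lemma divide_spec {q a b c : ℕ} {k : ℕ → ℕ → ℕ → Bool} (h : divide q a b c k = true) :
    ∃ a' b' c', a = q * a' ∧ b = q * b' ∧ c = q * c' ∧ k a' b' c' = true := by
  obtain ⟨h1, h2⟩ := rec_false h
  simp only [force_eq] at h2
  have h1 : Nat.gcd a (Nat.gcd b c) % q = 0 := Nat.eq_of_beq_eq_true h1
  have h1 := Nat.dvd_of_mod_eq_zero h1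
  have ha := h1.trans (Nat.gcd_dvd_left _ _)
  have hb := h1.trans ((Nat.gcd_dvd_right _ _).trans (Nat.gcd_dvd_left _ _))
  have hc := h1.trans ((Nat.gcd_dvd_right _ _).trans (Nat.gcd_dvd_right _ _))
  exact ⟨a / q, b / q, c / q, (Nat.mul_div_cancel' ha).symm, (Nat.mul_div_cancel' hb).symm,
    (Nat.mul_div_cancel' hc).symm, h2⟩

lemma eta_divide {P s q a b c : ℕ} {W : Tri} (h : Eta P s (q * a) (q * b) (q * c) W) : Eta P (s * q) a b c W := by
  have : ((s * q : ℕ) : Tri) * tri a b c = s * tri (q * a) (q * b) (q * c) := by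
    ext <;> simp [tri, -mul_eq_mul_left_iff] <;> ring
  unfold Eta at h ⊢
  rwa [this]

/-- The numerical conditions on a list of windows that make the lifting steps valid. -/
def Sched (p per K B V E kl : ℕ) : List ℕ → ℕ → Bool
  | [], j => decide (kl + V ≤ j + 1 ∧ j + 1 + kl + V + E ≤ K ∧ B ≤ per * p ^ j * p ^ kl)
  | k :: ks, j => decide (k + V ≤ j + 1 ∧ j + 1 + k + V + E ≤ K) && Sched p per K B V E kl ks (j + k)

/-- The lifting data are what they stand for, from the level `j` on. -/
def Valid (p per K L B V E : ℕ) : Lv → ℕ → Prop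
  | Lv.last q sp pj t0 t1 t2, j => ∃ k, q = p ^ k ∧ sp = per * p ^ j ∧ pj = p ^ (j + 1) ∧ k + V ≤ j + 1 ∧
      j + 1 + k + V + E ≤ K ∧ B ≤ sp * q ∧ Eta (p ^ K) pj t0 t1 t2 (Tri.al ^ sp)
  | Lv.cons q _ sp pj tbl t0 t1 t2 tl, j => ∃ k, q = p ^ k ∧ sp = per * p ^ j ∧ pj = p ^ (j + 1) ∧ k + V ≤ j + 1 ∧
      j + 1 + k + V + E ≤ K ∧ Eta (p ^ K) pj t0 t1 t2 (Tri.al ^ sp) ∧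
      (∀ d < q, Entry (p ^ K) L pj tbl q d ((Tri.al ^ sp) ^ d)) ∧ Valid p per K L B V E tl (j + k)

lemma levels_spec {p per K L B V E kl : ℕ} (hp : 0 < p) (hL : p ^ K ≤ 2 ^ L) (ks : List ℕ) :
    ∀ (j a b c : ℕ) (f : Lv → Bool), Eta (p ^ K) (p ^ (j + 1)) a b c (Tri.al ^ (per * p ^ j)) →
      Sched p per K B V E kl ks j = true →
      levels p (p ^ K) L kl ks (per * p ^ j) (p ^ (j + 1)) a b c f = true → ∃ l, Valid p per K L B V E l j ∧ f l = true := by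
  have hP : 0 < p ^ K := by positivity
  induction ks with
  | nil =>
    intro j a b c f h1 h2 h3
    simp only [Sched, decide_eq_true_eq] at h2
    have h3 : force (Nat.pow p kl) (fun q => f (Lv.last q (per * p ^ j) (p ^ (j + 1)) a b c)) = true := h3
    rw [force_eq] at h3
    exact ⟨Lv.last (p ^ kl) (per * p ^ j) (p ^ (j + 1)) a b c, ⟨kl, rfl, rfl, rfl, h2.1, h2.2.1, h2.2.2, h1⟩, h3⟩
  | cons k ks ih =>
    intro j a b c f h1 h2 h3
    simp only [Sched, Bool.and_eq_true, decide_eq_true_eq] at h2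
    have h3 : force (Nat.pow p k) (fun q => force (Nat.sub (Nat.sub q (Nat.div q p)) 1) fun m =>
      table (p ^ K) L (p ^ (j + 1)) a b c q fun tbl x y z => divide q x y z fun a' b' c' =>
      force (Nat.mul (per * p ^ j) q) fun sp' => force (Nat.mul (p ^ (j + 1)) q) fun pj' =>
      levels p (p ^ K) L kl ks sp' pj' a' b' c' fun tl => f (Lv.cons q m (per * p ^ j) (p ^ (j + 1)) tbl a b c tl)) = true := h3
    simp only [force_eq, show Nat.pow p k = p ^ k from rfl] at h3
    obtain ⟨tbl, x, y, z, e1, e2, -, e3⟩ := table_spec hP hL h1 (p ^ k)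
    rw [e1] at h3
    obtain ⟨a', b', c', rfl, rfl, rfl, h4⟩ := divide_spec h3
    have e2 := eta_divide e2
    have q1 : Nat.mul (per * p ^ j) (p ^ k) = per * p ^ (j + k) := by
      change per * p ^ j * p ^ k = _; ring
    have q2 : Nat.mul (p ^ (j + 1)) (p ^ k) = p ^ (j + k + 1) := by
      change p ^ (j + 1) * p ^ k = _; ring
    rw [q1, q2] at h4
    have q2' : p ^ (j + 1) * p ^ k = p ^ (j + k + 1) := q2
    rw [q2', ← pow_mul, mul_assoc, ← pow_add] at e2
    obtain ⟨l, hl1, hl2⟩ := ih (j + k) a' b' c' _ e2 h2.2 h4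
    exact ⟨Lv.cons _ _ _ _ tbl a b c l, ⟨k, rfl, rfl, rfl, h2.1.1, h2.1.2, h1, e3, hl1⟩, hl2⟩

end PAdic

namespace PAdic

lemma one_add_pow (x : Tri) (t : ℕ) : ∃ y, (1 + x) ^ t = 1 + t * x + x ^ 2 * y := by
  induction t with
  | zero => exact ⟨0, by simp⟩
  | succ t ih =>
    obtain ⟨y, hy⟩ := ih
    refine ⟨y + x * y + t, ?_⟩
    rw [pow_succ, hy]
    push_cast
    ring

lemma al_pow_one {p per : ℕ} (hper : ∃ u, Tri.al ^ per = 1 + (p : Tri) * u) (j : ℕ) :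
    ∃ u, Tri.al ^ (per * p ^ j) = 1 + ((p ^ (j + 1) : ℕ) : Tri) * u := by
  induction j with
  | zero => simpa using hper
  | succ j ih =>
    obtain ⟨u, hu⟩ := ih
    obtain ⟨y, hy⟩ := one_add_pow (((p ^ (j + 1) : ℕ) : Tri) * u) p
    refine ⟨u + (p : Tri) ^ j * u ^ 2 * y, ?_⟩
    rw [pow_succ, ← mul_assoc, pow_mul, hu, hy]
    push_cast
    ring

/-- The first-order Taylor expansion behind one lifting step: if `w W ^ t` is annihilated modulo `p ^ K`, then `t`
satisfies a linear congruence modulo `p ^ (v + k) * pe`. -/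
lemma lift {p j v k E K pe a b c h f1 f2 t : ℕ} (hp : 0 < p) {W w κ r : Tri} (hw : w = κ * r)
    (hW : ∃ u, W = 1 + ((p ^ (j + 1) : ℕ) : Tri) * u) (he : Eta (p ^ K) (p ^ (j + 1)) a b c W)
    (hκ : ∀ x, (pe : ℤ) ∣ Tri.phi (κ * x)) (hpe : pe ∣ p ^ E) (hv : k + v ≤ j + 1) (hK : j + 1 + k + v + E ≤ K)
    (h0 : ((p ^ K : ℕ) : ℤ) ∣ ((p ^ (j + 1) * h : ℕ) : ℤ) - Tri.phi w) (h1 : ((p ^ K : ℕ) : ℤ) ∣ f1 - Tri.phi (w * Tri.al))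
    (h2 : ((p ^ K : ℕ) : ℤ) ∣ f2 - Tri.phi (w * Tri.al ^ 2)) (hn : ((p ^ K : ℕ) : ℤ) ∣ Tri.phi (w * W ^ t)) :
    ((p ^ v * pe * p ^ k : ℕ) : ℤ) ∣ h + t * ((a * (p ^ (j + 1) * h) + b * f1 + c * f2 : ℕ) : ℤ) := by
  obtain ⟨u, hu⟩ := hW
  obtain ⟨y, hy⟩ := one_add_pow (((p ^ (j + 1) : ℕ) : Tri) * u) t
  rw [← hu] at hy
  have hQP : ((p ^ (j + 1) * (p ^ v * pe * p ^ k) : ℕ) : ℤ) ∣ ((p ^ K : ℕ) : ℤ) := by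
    obtain ⟨e, he⟩ := hpe
    refine Int.natCast_dvd_natCast.mpr ((Dvd.intro e ?_ : _ ∣ p ^ (j + 1 + k + v + E)).trans (pow_dvd_pow p hK))
    rw [show p ^ (j + 1 + k + v + E) = p ^ (j + 1 + k + v) * p ^ E by ring, he]
    ring
  -- `w (W - 1) ≡ p ^ (j + 1) (a + b α + c α ^ 2) w` modulo `p ^ K`
  have e1 : ((p ^ K : ℕ) : ℤ) ∣ Tri.phi (w * (((p ^ (j + 1) : ℕ) : Tri) * u)) -
      ((p ^ (j + 1) : ℕ) : ℤ) * Tri.phi (w * tri a b c) := by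
    have h := dvd_phi (he.mul_left w)
    have e : w * (W - 1 - ((p ^ (j + 1) : ℕ) : Tri) * tri a b c) = w * (((p ^ (j + 1) : ℕ) : Tri) * u) -
        ((((p ^ (j + 1) : ℕ) : ℤ) : Tri)) * (w * tri a b c) := by
      rw [hu]; push_cast; ring
    rwa [e, Tri.phi_sub, Tri.phi_intMul] at h
  have e2 : ((p ^ (j + 1) * (p ^ v * pe * p ^ k) : ℕ) : ℤ) ∣
      Tri.phi (w * ((((p ^ (j + 1) : ℕ) : Tri) * u) ^ 2 * y)) := by
    have e : w * ((((p ^ (j + 1) : ℕ) : Tri) * u) ^ 2 * y) =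
        (((p ^ (j + 1) * p ^ (j + 1) : ℕ) : ℤ) : Tri) * (κ * (r * u ^ 2 * y)) := by
      rw [hw]; push_cast; ring
    rw [e, Tri.phi_intMul]
    have h3 : ((p ^ (j + 1) * (p ^ v * pe * p ^ k) : ℕ) : ℤ) ∣ ((p ^ (j + 1) * p ^ (j + 1) : ℕ) : ℤ) * pe := by
      obtain ⟨d, hd⟩ := pow_dvd_pow p hv
      refine ⟨d, ?_⟩
      have hd : (p : ℤ) ^ (j + 1) = p ^ k * p ^ v * d := by rw [← pow_add]; exact_mod_cast hd
      push_cast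
      linear_combination (p : ℤ) ^ (j + 1) * pe * hd
    exact h3.trans (mul_dvd_mul_left _ (hκ _))
  have e3 : Tri.phi (w * W ^ t) = Tri.phi w + t * Tri.phi (w * (((p ^ (j + 1) : ℕ) : Tri) * u)) +
      Tri.phi (w * ((((p ^ (j + 1) : ℕ) : Tri) * u) ^ 2 * y)) := by
    rw [hy, show w * (1 + t * (((p ^ (j + 1) : ℕ) : Tri) * u) + (((p ^ (j + 1) : ℕ) : Tri) * u) ^ 2 * y) =
      w + (((t : ℕ) : ℤ) : Tri) * (w * (((p ^ (j + 1) : ℕ) : Tri) * u)) +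
      w * ((((p ^ (j + 1) : ℕ) : Tri) * u) ^ 2 * y) by push_cast; ring, Tri.phi_add, Tri.phi_add, Tri.phi_intMul]
  rw [phi_mul_tri] at e1
  have e1 := hQP.trans e1
  have h0 := hQP.trans h0
  have h1 := hQP.trans h1
  have h2 := hQP.trans h2
  have hn := hQP.trans hn
  rw [e3] at hn
  have key : ((p ^ (j + 1) * (p ^ v * pe * p ^ k) : ℕ) : ℤ) ∣
      ((p ^ (j + 1) : ℕ) : ℤ) * (h + t * ((a * (p ^ (j + 1) * h) + b * f1 + c * f2 : ℕ) : ℤ)) := by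
    obtain ⟨s0, s0'⟩ := h0
    obtain ⟨s1, s1'⟩ := h1
    obtain ⟨s2, s2'⟩ := h2
    obtain ⟨s3, s3'⟩ := hn
    obtain ⟨s4, s4'⟩ := e1
    obtain ⟨s5, s5'⟩ := e2
    refine ⟨s0 + s3 - s5 - t * s4 + t * (p ^ (j + 1) : ℕ) * (a * s0 + b * s1 + c * s2), ?_⟩
    push_cast at *
    linear_combination s0' + s3' - s5' - t * s4' + t * (p : ℤ) ^ (j + 1) * (a * s0' + b * s1' + c * s2')
  have hp' : ((p ^ (j + 1) : ℕ) : ℤ) ≠ 0 := by positivity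
  rw [Nat.cast_mul] at key
  exact Int.dvd_of_mul_dvd_mul_left hp' key

/-- Solving the linear congruence of `lift`. -/
lemma solve {m q D h t x u : ℕ} (hm : 0 < m) (hD : D % m = 0) (hu : D / m % q = u)
    (hx : x < q) (hxu : x * u % q = 1) (H : ((m * q : ℕ) : ℤ) ∣ h + t * (D : ℤ)) :
    h % m = 0 ∧ t % q = h / m * (q - x) % q := by
  have H : m * q ∣ h + t * D := by exact_mod_cast H
  obtain ⟨d, rfl⟩ := Nat.dvd_of_mod_eq_zero hD
  have h1 : m ∣ h := (Nat.dvd_add_left ((dvd_mul_right m d).mul_left t)).mp ((dvd_mul_right m q).trans H)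
  obtain ⟨e, rfl⟩ := h1
  refine ⟨Nat.mul_mod_right _ _, ?_⟩
  rw [Nat.mul_div_cancel_left _ hm]
  rw [Nat.mul_div_cancel_left _ hm] at hu
  have H : q ∣ e + t * d := by
    refine Nat.dvd_of_mul_dvd_mul_left hm ?_
    rwa [mul_add, show m * (t * d) = t * (m * d) by ring]
  have hu' : (d : ZMod q) = u := by
    rw [← hu]; simp
  have hxu' : (x : ZMod q) * u = 1 := by
    have : ((x * u : ℕ) : ZMod q) = ((x * u % q : ℕ) : ZMod q) := by simp
    rw [hxu] at this
    push_cast at this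
    exact this
  have H' : (e : ZMod q) + t * d = 0 := by
    have := (ZMod.natCast_eq_zero_iff _ _).mpr H
    exact_mod_cast this
  have : ((t : ℕ) : ZMod q) = ((e * (q - x) : ℕ) : ZMod q) := by
    rw [Nat.cast_mul, Nat.cast_sub hx.le, ZMod.natCast_self]
    rw [hu'] at H'
    linear_combination x * H' - t * hxu'
  exact (ZMod.natCast_eq_natCast_iff' _ _ _).mp this

lemma inv_spec (q u : ℕ) (hq : 0 < q) (n : ℕ) : ∀ x, x < q → ∃ y, y < q ∧ ∀ k, inv q u n x k = k y := by
  induction n with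
  | zero => exact fun x hx => ⟨x, hx, fun k => rfl⟩
  | succ n ih =>
    intro x hx
    obtain ⟨y, hy, h⟩ := ih _ (Nat.mod_lt (x * (q + 2 - u * x % q)) hq)
    refine ⟨y, hy, fun k => ?_⟩
    have : inv q u (n + 1) x k = force (x * (q + 2 - u * x % q) % q) fun x' => inv q u n x' k := rfl
    rw [this, force_eq, h]

/-- `f0, f1, f2` are `φ w, φ (w α), φ (w α ^ 2)` modulo `P`. -/
def Vals (P : ℕ) (w : Tri) (f0 f1 f2 : ℕ) : Prop :=
  (P : ℤ) ∣ f0 - Tri.phi w ∧ (P : ℤ) ∣ f1 - Tri.phi (w * Tri.al) ∧ (P : ℤ) ∣ f2 - Tri.phi (w * Tri.al ^ 2)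

lemma dvd_sub_mod (P X : ℕ) : (P : ℤ) ∣ X - (X % P : ℕ) := by
  refine ⟨(X / P : ℕ), ?_⟩
  have := Nat.mod_add_div X P
  zify at this
  push_cast
  linarith

lemma phi_al_three (w : Tri) :
    Tri.phi (w * Tri.al ^ 3) = Tri.phi w + Tri.phi (w * Tri.al) + Tri.phi (w * Tri.al ^ 2) := by
  have := Tri.phi_rec w
  rw [mul_comm w (Tri.al ^ 3), mul_comm w (Tri.al ^ 2), mul_comm w Tri.al, this]; ring

lemma Vals.next {P f0 f1 f2 : ℕ} {w : Tri} (h : Vals P w f0 f1 f2) :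
    Vals P (w * Tri.al) f1 f2 ((f0 + (f1 + f2)) % P) := by
  obtain ⟨h0, h1, h2⟩ := h
  refine ⟨h1, by rw [mul_assoc, ← pow_two]; exact h2, ?_⟩
  rw [mul_assoc, ← pow_succ', phi_al_three]
  have h3 := dvd_sub_mod P (f0 + (f1 + f2))
  have h4 := (h0.add (h1.add h2)).sub h3
  have e : (((f0 + (f1 + f2)) % P : ℕ) : ℤ) - (Tri.phi w + Tri.phi (w * Tri.al) + Tri.phi (w * Tri.al ^ 2)) =
      f0 - Tri.phi w + (f1 - Tri.phi (w * Tri.al) + (f2 - Tri.phi (w * Tri.al ^ 2))) -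
      (((f0 + (f1 + f2) : ℕ) : ℤ) - ((f0 + (f1 + f2)) % P : ℕ)) := by
    rw [Nat.cast_add, Nat.cast_add]; ring
  rw [e]
  exact h4

lemma Vals.trans {P s a b c h f1 f2 : ℕ} {w W : Tri} (H : Vals P w (s * h) f1 f2) (hW : Eta P s a b c W) :
    Vals P (w * W) (s * ((h + (a * (s * h) + b * f1 + c * f2)) % P))
      ((f1 + s * (a * f1 + b * f2 + c * (s * h + (f1 + f2)))) % P)
      ((f2 + s * (a * f2 + b * (s * h + (f1 + f2)) + c * (f1 + (f2 + (s * h + (f1 + f2)))))) % P) := by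
  have key : ∀ x : Tri, (P : ℤ) ∣ Tri.phi (w * W * x) - (Tri.phi (w * x) + s * (a * Tri.phi (w * x) +
      b * Tri.phi (w * x * Tri.al) + c * Tri.phi (w * x * Tri.al ^ 2))) := fun x => by
    have h1 := dvd_phi (hW.mul_left (w * x))
    rw [show w * x * (W - 1 - s * tri a b c) = w * W * x - (w * x + ((s : ℤ) : Tri) * (w * x * tri a b c)) by
      push_cast; ring, Tri.phi_sub, Tri.phi_add, Tri.phi_intMul, phi_mul_tri] at h1
    exact h1
  obtain ⟨h0, h1, h2⟩ := H
  have k0 := key 1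
  have k1 := key Tri.al
  have k2 := key (Tri.al ^ 2)
  rw [mul_one, mul_one] at k0
  rw [show w * Tri.al * Tri.al = w * Tri.al ^ 2 by ring, show w * Tri.al * Tri.al ^ 2 = w * Tri.al ^ 3 by ring,
    phi_al_three] at k1
  rw [show w * Tri.al ^ 2 * Tri.al = w * Tri.al ^ 3 by ring,
    show w * Tri.al ^ 2 * Tri.al ^ 2 = w * Tri.al * Tri.al ^ 3 by ring, phi_al_three, phi_al_three,
    show w * Tri.al * Tri.al = w * Tri.al ^ 2 by ring, show w * Tri.al * Tri.al ^ 2 = w * Tri.al ^ 3 by ring,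
    phi_al_three] at k2
  obtain ⟨s0, s0'⟩ := h0
  obtain ⟨s1, s1'⟩ := h1
  obtain ⟨s2, s2'⟩ := h2
  obtain ⟨u0, u0'⟩ := k0
  obtain ⟨u1, u1'⟩ := k1
  obtain ⟨u2, u2'⟩ := k2
  have m0 := dvd_sub_mod P (h + (a * (s * h) + b * f1 + c * f2))
  have m1 := dvd_sub_mod P (f1 + s * (a * f1 + b * f2 + c * (s * h + (f1 + f2))))
  have m2 := dvd_sub_mod P (f2 + s * (a * f2 + b * (s * h + (f1 + f2)) + c * (f1 + (f2 + (s * h + (f1 + f2))))))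
  set M0 := (h + (a * (s * h) + b * f1 + c * f2)) % P
  set M1 := (f1 + s * (a * f1 + b * f2 + c * (s * h + (f1 + f2)))) % P
  set M2 := (f2 + s * (a * f2 + b * (s * h + (f1 + f2)) + c * (f1 + (f2 + (s * h + (f1 + f2)))))) % P
  obtain ⟨r0, r0'⟩ := m0
  obtain ⟨r1, r1'⟩ := m1
  obtain ⟨r2, r2'⟩ := m2
  push_cast at *
  refine ⟨⟨s0 - s * r0 - u0 + s * (a * s0 + b * s1 + c * s2), ?_⟩,
    ⟨s1 - r1 - u1 + s * (a * s1 + b * s2 + c * (s0 + s1 + s2)), ?_⟩,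
    ⟨s2 - r2 - u2 + s * (a * s2 + b * (s0 + s1 + s2) + c * (s1 + s2 + (s0 + s1 + s2))), ?_⟩⟩
  · push_cast
    linear_combination s0' - s * r0' - u0' + s * (a * s0' + b * s1' + c * s2')
  · linear_combination s1' - r1' - u1' + s * (a * s1' + b * s2' + c * (s0' + s1' + s2'))
  · linear_combination s2' - r2' - u2' + s * (a * s2' + b * (s0' + s1' + s2') + c * (s1' + s2' + (s0' + s1' + s2')))

lemma chain_cons {P L B pve q m sp pj tbl t0 t1 t2 r h f1 f2 : ℕ} {tl : Lv} (hq : 0 < q)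
    (hc : chain P L B pve (Lv.cons q m sp pj tbl t0 t1 t2 tl) r h f1 f2 = true) :
    ∃ x, (t0 * (pj * h) + t1 * f1 + t2 * f2) % pve = 0 ∧ x < q ∧
      x * ((t0 * (pj * h) + t1 * f1 + t2 * f2) / pve % q) % q = 1 ∧ (h % pve = 0 → ∀ t, t = h / pve * (q - x) % q →
      ∀ w, w = tbl >>> ((q - 1 - t) * (3 * L)) → ∀ a, a = w % 2 ^ L → ∀ b, b = (w >>> L) % 2 ^ L →
      ∀ c, c = (w >>> (2 * L)) % 2 ^ L → ∃ y, (h + (a * (pj * h) + b * f1 + c * f2)) % P = q * y ∧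
      chain P L B pve tl (r + sp * t) y ((f1 + pj * (a * f1 + b * f2 + c * (pj * h + (f1 + f2)))) % P)
        ((f2 + pj * (a * f2 + b * (pj * h + (f1 + f2)) + c * (f1 + (f2 + (pj * h + (f1 + f2)))))) % P) = true) := by
  replace hc : (
      force (Nat.add (Nat.add (Nat.mul t0 (Nat.mul pj h)) (Nat.mul t1 f1)) (Nat.mul t2 f2)) fun D =>
      Bool.rec false
        (force (Nat.mod (Nat.div D pve) q) fun u =>
        force (Nat.mod (Nat.pow u m) q) fun x =>
        Bool.rec false
          (Bool.rec true
            (force (Nat.mod (Nat.mul (Nat.div h pve) (Nat.sub q x)) q) fun t =>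
            force (Nat.shiftRight tbl (Nat.mul (Nat.sub (Nat.sub q 1) t) (Nat.mul 3 L))) fun w =>
            force (Nat.mod w (Nat.pow 2 L)) fun a =>
            force (Nat.mod (Nat.shiftRight w L) (Nat.pow 2 L)) fun b =>
            force (Nat.mod (Nat.shiftRight w (Nat.mul 2 L)) (Nat.pow 2 L)) fun c =>
            force (Nat.add (Nat.mul pj h) (Nat.add f1 f2)) fun f3 =>
            force (Nat.mod (Nat.add h (Nat.add (Nat.add (Nat.mul a (Nat.mul pj h)) (Nat.mul b f1)) (Nat.mul c f2))) P)
              fun h' =>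
            Bool.rec false
              (force (Nat.add r (Nat.mul sp t)) fun r' =>
              force (Nat.div h' q) fun h'' =>
              force (Nat.mod (Nat.add f1 (Nat.mul pj
                (Nat.add (Nat.add (Nat.mul a f1) (Nat.mul b f2)) (Nat.mul c f3)))) P) fun g1 =>
              force (Nat.mod (Nat.add f2 (Nat.mul pj
                (Nat.add (Nat.add (Nat.mul a f2) (Nat.mul b f3)) (Nat.mul c (Nat.add f1 (Nat.add f2 f3)))))) P)
                fun g2 =>
              chain P L B pve tl r' h'' g1 g2)
              (Nat.beq (Nat.mod h' q) 0))
            (Nat.beq (Nat.mod h pve) 0))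
          (Nat.beq (Nat.mod (Nat.mul x u) q) 1))
        (Nat.beq (Nat.mod D pve) 0)) = true := hc
  rw [force_eq] at hc
  obtain ⟨c1, hc⟩ := rec_false hc
  rw [force_eq, force_eq] at hc
  obtain ⟨c2, hc⟩ := rec_false hc
  have hc := rec_true hc
  refine ⟨_, Nat.eq_of_beq_eq_true c1, Nat.mod_lt _ hq, Nat.eq_of_beq_eq_true c2, ?_⟩
  rintro d1 t rfl w rfl a rfl b rfl c rfl
  replace hc := hc (by rw [show Nat.mod h pve = 0 from d1]; rfl)
  rw [force_eq, force_eq, force_eq, force_eq, force_eq, force_eq, force_eq] at hc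
  obtain ⟨c3, hc⟩ := rec_false hc
  rw [force_eq, force_eq, force_eq, force_eq] at hc
  exact ⟨_, (Nat.mul_div_cancel' (Nat.dvd_of_mod_eq_zero (Nat.eq_of_beq_eq_true c3))).symm, hc⟩

/-- If `chain` answers `true`, then no `n` with `3 ≤ n < B` in the class of `r` satisfies `p ^ K ∣ φ (κ α ^ n)`, provided
the valuation of the derivative is the one encoded in `pve`. -/
lemma chain_sound {p per K L B V E v pe : ℕ} (hp : 0 < p) (hper : ∃ u, Tri.al ^ per = 1 + (p : Tri) * u) {κ : Tri}
    (hκ : ∀ x, (pe : ℤ) ∣ Tri.phi (κ * x)) (hpe : pe ∣ p ^ E) (hv : v ≤ V) (l : Lv) :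
    ∀ j r h f1 f2 t : ℕ, Valid p per K L B V E l j → Vals (p ^ K) (κ * Tri.al ^ r) (p ^ (j + 1) * h) f1 f2 →
      chain (p ^ K) L B (p ^ v * pe) l r h f1 f2 = true →
      ((p ^ K : ℕ) : ℤ) ∣ Tri.phi (κ * Tri.al ^ (r + per * p ^ j * t)) → 3 ≤ r + per * p ^ j * t → B ≤ r + per * p ^ j * t := by
  have hpe0 : 0 < pe := Nat.pos_of_dvd_of_pos hpe (by positivity)
  have hm : 0 < p ^ v * pe := by positivity
  induction l with
  | last q sp pj t0 t1 t2 =>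
    intro j r h f1 f2 t hV hF hc hn h3
    obtain ⟨k, rfl, rfl, rfl, a1, a2, a3, a4⟩ := hV
    have hq : 0 < p ^ k := by positivity
    simp only [chain, force_eq] at hc
    obtain ⟨c1, hc⟩ := rec_false hc
    obtain ⟨x, hx, hi⟩ := inv_spec (p ^ k) (Nat.mod (Nat.div (Nat.add (Nat.add (Nat.mul t0 (Nat.mul (p ^ (j + 1)) h))
      (Nat.mul t1 f1)) (Nat.mul t2 f2)) (p ^ v * pe)) (p ^ k)) hq 7 _ (Nat.mod_lt _ hq)
    erw [hi] at hc
    obtain ⟨c2, hc⟩ := rec_false hc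
    have hc := rec_true hc
    have hl := lift (t := t) hp rfl (al_pow_one hper j) a4 hκ hpe (v := v) (k := k) (by omega) (by omega)
      hF.1 hF.2.1 hF.2.2 (by rw [mul_assoc, ← pow_mul, ← pow_add]; exact hn)
    obtain ⟨d1, d2⟩ := solve hm (Nat.eq_of_beq_eq_true c1) rfl hx (Nat.eq_of_beq_eq_true c2) hl
    have hc := hc (by rw [show Nat.mod h (p ^ v * pe) = 0 from d1]; rfl)
    have hc : B ≤ r + per * p ^ j * (h / (p ^ v * pe) * (p ^ k - x) % p ^ k) ∨
      r + per * p ^ j * (h / (p ^ v * pe) * (p ^ k - x) % p ^ k) ≤ 2 := by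
      rcases Bool.or_eq_true_iff.mp hc with hc | hc
      · exact Or.inl (Nat.le_of_ble_eq_true hc)
      · exact Or.inr (Nat.le_of_ble_eq_true hc)
    rw [← d2] at hc
    have e := Nat.mod_add_div t (p ^ k)
    have e2 : r + per * p ^ j * t = r + per * p ^ j * (t % p ^ k) + per * p ^ j * p ^ k * (t / p ^ k) := by
      conv_lhs => rw [← e]
      ring
    rcases hc with hc | hc
    · rw [e2]; omega
    · rw [e2] at h3 ⊢
      rcases Nat.eq_zero_or_pos (t / p ^ k) with h0 | h0
      · rw [h0] at h3; omega
      · have := Nat.mul_le_mul_left (per * p ^ j * p ^ k) h0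
        simp only [Nat.succ_eq_add_one, zero_add, mul_one] at this
        omega
  | cons q m sp pj tbl t0 t1 t2 tl ih =>
    intro j r h f1 f2 t hV hF hc hn h3
    obtain ⟨k, rfl, rfl, rfl, a1, a2, a4, a5, a6⟩ := hV
    have hq : 0 < p ^ k := by positivity
    obtain ⟨x, c1, hx, c2, hc⟩ := chain_cons hq hc
    have hl := lift (t := t) hp rfl (al_pow_one hper j) a4 hκ hpe (v := v) (k := k) (by omega) (by omega)
      hF.1 hF.2.1 hF.2.2 (by rw [mul_assoc, ← pow_mul, ← pow_add]; exact hn)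
    obtain ⟨d1, d2⟩ := solve hm c1 rfl hx c2 hl
    obtain ⟨y, hy, hc⟩ := hc d1 _ d2 _ rfl _ rfl _ rfl _ rfl
    have e := Nat.mod_add_div t (p ^ k)
    have hF := hF.trans (a5 (t % p ^ k) (Nat.mod_lt t hq))
    rw [hy, ← mul_assoc, mul_assoc κ, ← pow_mul, ← pow_add, ← pow_add, show j + 1 + k = j + k + 1 by ring] at hF
    have e2 : r + per * p ^ j * t = r + per * p ^ j * (t % p ^ k) + per * p ^ (j + k) * (t / p ^ k) := by
      conv_lhs => rw [← e]
      ring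
    rw [e2] at hn h3 ⊢
    exact ih (j + k) _ y _ _ _ a6 hF hc hn h3

end PAdic

namespace PAdic

lemma scan_sound {p per K L B V E v v' pe j : ℕ} (hp : 0 < p) (hper : ∃ u, Tri.al ^ per = 1 + (p : Tri) * u) {κ : Tri}
    (hκ : ∀ x, (pe : ℤ) ∣ Tri.phi (κ * x)) (hpe : pe ∣ p ^ E) (hv : v ≤ V) (hv' : v' ≤ V) (hK : j + 1 + E ≤ K) {l : Lv}
    (hl : Valid p per K L B V E l j) (m : ℕ) :
    ∀ f0 f1 f2 n : ℕ, m ≤ per * p ^ j → Vals (p ^ K) (κ * Tri.al ^ (per * p ^ j - m)) f0 f1 f2 →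
      scan (p ^ K) L B (p ^ (j + 1)) (p ^ (j + 1) * pe) (p ^ v * pe) (p ^ v' * pe) (per * p ^ j) l m f0 f1 f2 = true →
      per * p ^ j - m ≤ n % (per * p ^ j) → 0 < per * p ^ j → ((p ^ K : ℕ) : ℤ) ∣ Tri.phi (κ * Tri.al ^ n) →
      3 ≤ n → B ≤ n := by
  induction m with
  | zero =>
    intro f0 f1 f2 n _ _ _ h1 h2
    exact absurd (Nat.mod_lt n h2) (by omega)
  | succ m ih =>
    intro f0 f1 f2 n hm hF hs h1 h2 hn h3
    replace hs : (Bool.rec false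
        (force (Nat.mod (Nat.add f0 (Nat.add f1 f2)) (p ^ K)) fun f3 =>
          scan (p ^ K) L B (p ^ (j + 1)) (p ^ (j + 1) * pe) (p ^ v * pe) (p ^ v' * pe) (per * p ^ j) l m f1 f2 f3)
        (Bool.rec true
          (force (Nat.div f0 (p ^ (j + 1))) fun h => force (Nat.sub (per * p ^ j) (Nat.succ m)) fun r =>
            Bool.or (chain (p ^ K) L B (p ^ v * pe) l r h f1 f2) (chain (p ^ K) L B (p ^ v' * pe) l r h f1 f2))
          (Nat.beq (Nat.mod f0 (p ^ (j + 1) * pe)) 0)) : Bool) = true := hs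
    obtain ⟨c, hs⟩ := rec_false hs
    rw [force_eq] at hs
    rcases Nat.eq_or_lt_of_le h1 with h | h
    · set r := per * p ^ j - (m + 1) with hr
      have e := Nat.mod_add_div n (per * p ^ j)
      rw [← h] at e
      generalize n / (per * p ^ j) = t at e
      subst e
      -- `φ (κ α ^ n) ≡ φ (κ α ^ r)` modulo `p ^ (j + 1) * pe`
      have hd : p ^ (j + 1) * pe ∣ f0 := by
        obtain ⟨u, hu⟩ := al_pow_one hper j
        obtain ⟨y, hy⟩ := one_add_pow (((p ^ (j + 1) : ℕ) : Tri) * u) t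
        rw [← hu, ← pow_mul] at hy
        have e1 : κ * Tri.al ^ (r + per * p ^ j * t) = κ * Tri.al ^ r +
            (((p ^ (j + 1) : ℕ) : ℤ) : Tri) * (κ * (Tri.al ^ r * (t * u + ((p ^ (j + 1) : ℕ) : Tri) * u ^ 2 * y))) := by
          rw [pow_add, hy]; push_cast; ring
        rw [e1, Tri.phi_add, Tri.phi_intMul] at hn
        have e2 : ((p ^ (j + 1) * pe : ℕ) : ℤ) ∣ ((p ^ K : ℕ) : ℤ) := by
          refine Int.natCast_dvd_natCast.mpr (((mul_dvd_mul_left _ hpe).trans ?_).trans (pow_dvd_pow p hK))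
          rw [← pow_add]
        have e3 : ((p ^ (j + 1) * pe : ℕ) : ℤ) ∣ ((p ^ (j + 1) : ℕ) : ℤ) *
            Tri.phi (κ * (Tri.al ^ r * (t * u + ((p ^ (j + 1) : ℕ) : Tri) * u ^ 2 * y))) := by
          rw [Nat.cast_mul]
          exact mul_dvd_mul_left _ (hκ _)
        have e4 := (Int.dvd_add_left e3).mp (e2.trans hn)
        have e5 := (e2.trans hF.1).add e4
        rw [sub_add_cancel] at e5
        exact_mod_cast e5
      have c := rec_true c (by rw [show Nat.mod f0 (p ^ (j + 1) * pe) = 0 from Nat.mod_eq_zero_of_dvd hd]; rfl)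
      rw [force_eq, force_eq] at c
      have e6 : p ^ (j + 1) * (f0 / p ^ (j + 1)) = f0 := Nat.mul_div_cancel' ((dvd_mul_right _ _).trans hd)
      rw [← e6] at hF
      rcases Bool.or_eq_true_iff.mp c with c | c
      · exact chain_sound hp hper hκ hpe hv l j r _ f1 f2 t hl hF c hn h3
      · exact chain_sound hp hper hκ hpe hv' l j r _ f1 f2 t hl hF c hn h3
    · have hF := hF.next
      have e : per * p ^ j - (m + 1) + 1 = per * p ^ j - m := by omega
      rw [mul_assoc, ← pow_succ, e] at hF
      exact ih _ _ _ n (by omega) hF hs (by omega) h2 hn h3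

lemma vals_sub_one {P t0 t1 t2 g : ℕ} (hP : 0 < P) (h : Vals P (Tri.al ^ g) t0 t1 t2) :
    Vals P (Tri.al ^ g - 1) t0 ((t1 + (P - 1)) % P) ((t2 + (P - 1)) % P) := by
  obtain ⟨h0, h1, h2⟩ := h
  have q0 : Tri.phi 1 = 0 := by simp [Tri.phi]
  have q1 : Tri.phi Tri.al = 1 := by simp [Tri.phi, Tri.al]
  have q2 : Tri.phi (Tri.al ^ 2) = 1 := Tri.phi_al_pow 2
  have key : ∀ (t : ℕ) (x : ℤ), (P : ℤ) ∣ t - x → (P : ℤ) ∣ ((t + (P - 1)) % P : ℕ) - (x - 1) := fun t x hx => by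
    have h3 := (hx.sub (dvd_sub_mod P (t + (P - 1)))).add (dvd_refl (P : ℤ))
    have e : (((t + (P - 1)) % P : ℕ) : ℤ) - (x - 1) =
        t - x - (((t + (P - 1) : ℕ) : ℤ) - ((t + (P - 1)) % P : ℕ)) + P := by
      rw [Nat.cast_add, Nat.cast_sub hP]; push_cast; ring
    rwa [e]
  refine ⟨by rw [Tri.phi_sub, q0, sub_zero]; exact h0, ?_, ?_⟩
  · rw [sub_mul, one_mul, Tri.phi_sub, q1]
    exact key _ _ h1
  · rw [sub_mul, one_mul, Tri.phi_sub, q2]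
    exact key _ _ h2

lemma gaps_sound {p per K L B V E v v' j : ℕ} (hp : 0 < p) (hper : ∃ u, Tri.al ^ per = 1 + (p : Tri) * u)
    (hv : v ≤ V) (hv' : v' ≤ V) (hK : j + 1 + E ≤ K) (h0 : 0 < per) {l : Lv} (hl : Valid p per K L B V E l j) (G : ℕ) :
    ∀ g t0 t1 t2, Vals (p ^ K) (Tri.al ^ g) t0 t1 t2 →
      gaps (p ^ K) L B (p ^ (j + 1)) (p ^ v) (p ^ v') (p ^ E) (per * p ^ j) l G t0 t1 t2 = true →
      ∀ g' n, g ≤ g' → g' < g + G → 3 ≤ n → ((p ^ K : ℕ) : ℤ) ∣ Tri.phi ((Tri.al ^ g' - 1) * Tri.al ^ n) → B ≤ n := by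
  have hP : 0 < p ^ K := by positivity
  induction G with
  | zero => intro g _ _ _ _ _ g' n h1 h2; omega
  | succ G ih =>
    intro g t0 t1 t2 hF hc g' n h1 h2 h3 hn
    replace hc : (force (Nat.mod (Nat.add t1 (Nat.sub (p ^ K) 1)) (p ^ K)) fun f1 =>
      force (Nat.mod (Nat.add t2 (Nat.sub (p ^ K) 1)) (p ^ K)) fun f2 =>
      force (Nat.gcd t0 (Nat.gcd f1 (Nat.gcd f2 (p ^ E)))) fun pe =>
      force (Nat.mul (p ^ (j + 1)) pe) fun pc =>
      force (Nat.mul (p ^ v) pe) fun pve =>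
      force (Nat.mul (p ^ v') pe) fun pve' =>
      Bool.rec false
        (force (Nat.mod (Nat.add t0 (Nat.add t1 t2)) (p ^ K)) fun t3 =>
          gaps (p ^ K) L B (p ^ (j + 1)) (p ^ v) (p ^ v') (p ^ E) (per * p ^ j) l G t1 t2 t3)
        (scan (p ^ K) L B (p ^ (j + 1)) pc pve pve' (per * p ^ j) l (per * p ^ j) t0 f1 f2)) = true := hc
    rw [force_eq, force_eq, force_eq, force_eq, force_eq, force_eq] at hc
    obtain ⟨c, hc⟩ := rec_false hc
    rw [force_eq] at hc
    rcases Nat.eq_or_lt_of_le h1 with rfl | h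
    · have hW := vals_sub_one hP hF
      set f1 := (t1 + (p ^ K - 1)) % p ^ K with hf1
      set f2 := (t2 + (p ^ K - 1)) % p ^ K with hf2
      set pe := Nat.gcd t0 (Nat.gcd f1 (Nat.gcd f2 (p ^ E))) with hpe
      have g0 : pe ∣ t0 := Nat.gcd_dvd_left _ _
      have g0' : pe ∣ Nat.gcd f1 (Nat.gcd f2 (p ^ E)) := Nat.gcd_dvd_right _ _
      have g1 : pe ∣ f1 := g0'.trans (Nat.gcd_dvd_left _ _)
      have g1' : pe ∣ Nat.gcd f2 (p ^ E) := g0'.trans (Nat.gcd_dvd_right _ _)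
      have g2 : pe ∣ f2 := g1'.trans (Nat.gcd_dvd_left _ _)
      have g3 : pe ∣ p ^ E := g1'.trans (Nat.gcd_dvd_right _ _)
      have g4 : (pe : ℤ) ∣ ((p ^ K : ℕ) : ℤ) := Int.natCast_dvd_natCast.mpr (g3.trans (pow_dvd_pow p (by omega)))
      have key : ∀ (f : ℕ) (x : ℤ), pe ∣ f → ((p ^ K : ℕ) : ℤ) ∣ f - x → (pe : ℤ) ∣ x := fun f x h1 h2 => by
        have := (Int.natCast_dvd_natCast.mpr h1).sub (g4.trans h2)
        rwa [sub_sub_cancel] at this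
      have hκ : ∀ x, (pe : ℤ) ∣ Tri.phi ((Tri.al ^ g - 1) * x) := fun x => by
        rw [phi_mul]
        exact (((key _ _ g0 hW.1).mul_left _).add ((key _ _ g1 hW.2.1).mul_left _)).add ((key _ _ g2 hW.2.2).mul_left _)
      have hsp : 0 < per * p ^ j := by positivity
      exact scan_sound hp hper hκ g3 hv hv' hK hl (per * p ^ j) t0 f1 f2 n le_rfl
        (by rw [Nat.sub_self, pow_zero, mul_one]; exact hW) c (by rw [Nat.sub_self]; exact Nat.zero_le _) hsp hn h3
    · have hF := hF.next
      rw [← pow_succ] at hF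
      exact ih (g + 1) _ _ _ hF hc g' n h (by omega) h3 hn

lemma trib_spec (P g : ℕ) : ∃ t0 t1 t2, (∀ k, trib P g k = k t0 t1 t2) ∧ Vals P (Tri.al ^ g) t0 t1 t2 := by
  induction g with
  | zero =>
    refine ⟨0, 1, 1, fun k => rfl, ?_⟩
    have q0 : Tri.phi 1 = 0 := by simp [Tri.phi]
    have q1 : Tri.phi Tri.al = 1 := by simp [Tri.phi, Tri.al]
    have q2 : Tri.phi (Tri.al ^ 2) = 1 := Tri.phi_al_pow 2
    simp [Vals, q0, q1, q2]
  | succ g ih =>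
    obtain ⟨t0, t1, t2, h1, h2⟩ := ih
    refine ⟨_, _, _, fun k => ?_, by rw [pow_succ]; exact h2.next⟩
    have : trib P (g + 1) k = trib P g fun t0 t1 t2 =>
      force (Nat.mod (Nat.add t0 (Nat.add t1 t2)) P) fun t3 => k t1 t2 t3 := rfl
    rw [this, h1, force_eq]
    rfl

lemma eta_al {P : ℕ} (hP : 0 < P) : Eta P 1 (P - 1) 1 0 Tri.al := by
  refine ⟨-1, ?_⟩
  ext <;> simp [tri, Tri.al, Nat.cast_sub hP]
  ring

/-- If the computation succeeds, then `T (n + g) ≡ T n` modulo `p ^ K` has no solution with `3 ≤ n < B` for the gaps `g`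
in question. -/
lemma check_sound {p per K L B j v v' E kl g0 G : ℕ} {ks : List ℕ} (V : ℕ) (hp : 0 < p)
    (hper : ∃ u, Tri.al ^ per = 1 + (p : Tri) * u) (h0 : 0 < per) (hL : p ^ K ≤ 2 ^ L) (hv : v ≤ V) (hv' : v' ≤ V)
    (hK : j + 1 + E ≤ K) (hs : Sched p per K B V E kl ks j = true)
    (h : check p per K L B j v v' E kl ks g0 G = true) {g n : ℕ} (h1 : g0 ≤ g) (h2 : g < g0 + G) (h3 : 3 ≤ n)
    (hn : ((p ^ K : ℕ) : ℤ) ∣ T (n + g) - T n) : B ≤ n := by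
  have hP : 0 < p ^ K := by positivity
  unfold check at h
  simp only [force_eq] at h
  obtain ⟨tbl, x, y, z, e1, e2, -, -⟩ := table_spec hP hL (eta_al hP) (per * p ^ j)
  replace h : (table (p ^ K) L 1 (p ^ K - 1) 1 0 (per * p ^ j) fun _ x y z =>
    divide (p ^ (j + 1)) x y z fun a b c => levels p (p ^ K) L kl ks (per * p ^ j) (p ^ (j + 1)) a b c fun l =>
    trib (p ^ K) g0 fun t0 t1 t2 =>
    gaps (p ^ K) L B (p ^ (j + 1)) (p ^ v) (p ^ v') (p ^ E) (per * p ^ j) l G t0 t1 t2) = true := h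
  rw [e1] at h
  obtain ⟨a, b, c, rfl, rfl, rfl, h'⟩ := divide_spec h
  have e3 := eta_divide e2
  rw [one_mul] at e3
  obtain ⟨l, hl, h⟩ := levels_spec hp hL ks j a b c _ e3 hs h'
  obtain ⟨t0, t1, t2, e4, e5⟩ := trib_spec (p ^ K) g0
  rw [e4] at h
  refine gaps_sound hp hper hv hv' hK h0 hl G g0 t0 t1 t2 e5 h g n h1 h2 h3 ?_
  rw [sub_mul, one_mul, ← pow_add, Tri.phi_sub, Tri.phi_al_pow, Tri.phi_al_pow, add_comm g n]
  exact hn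

end PAdic

set_option exponentiation.threshold 100000
set_option maxRecDepth 100000

/-! ### The last two rounds of the reduction -/

namespace PAdic

lemma two_big {g n : ℕ} (h1 : 1 ≤ g) (h2 : g ≤ 858) (h3 : 3 ≤ n) (hn : ((2 ^ 396 : ℕ) : ℤ) ∣ T (n + g) - T n) : 2 ^ 370 ≤ n :=
  check_sound (j := 3) (v := 0) (v' := 0) (E := 10) (kl := 192) (ks := 4 :: List.replicate 31 6) (G := 858) (L := 396) 0
    (by norm_num) al_four (by norm_num) le_rfl le_rfl le_rfl (by norm_num) (by decide +kernel) (by decide +kernel) h1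
    (by omega) h3 hn

lemma three_big {g n : ℕ} (h1 : 1 ≤ g) (h2 : g ≤ 858) (h3 : 3 ≤ n) (hn : ((3 ^ 252 : ℕ) : ℤ) ∣ T (n + g) - T n) : 2 ^ 370 ≤ n :=
  check_sound (j := 2) (v := 1) (v' := 2) (E := 6) (kl := 121) (ks := 1 :: 2 :: List.replicate 39 3) (G := 858) (L := 400) 2
    (by norm_num) al_thirteen (by norm_num) (by norm_num) (by norm_num) le_rfl (by norm_num) (by decide +kernel)
    (by decide +kernel) h1 (by omega) h3 hn

lemma two_small {g n : ℕ} (h1 : 1 ≤ g) (h2 : g ≤ 36) (h3 : 3 ≤ n) (hn : ((2 ^ 31 : ℕ) : ℤ) ∣ T (n + g) - T n) : 2 ^ 12 ≤ n :=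
  check_sound (j := 3) (v := 0) (v' := 0) (E := 5) (kl := 12) (ks := [4, 6]) (G := 36) (L := 35) 0
    (by norm_num) al_four (by norm_num) (by norm_num) le_rfl le_rfl (by norm_num) (by decide +kernel) (by decide +kernel) h1
    (by omega) h3 hn

lemma three_small {g n : ℕ} (h1 : 1 ≤ g) (h2 : g ≤ 36) (h3 : 3 ≤ n) (hn : ((3 ^ 21 : ℕ) : ℤ) ∣ T (n + g) - T n) : 2 ^ 12 ≤ n :=
  check_sound (j := 2) (v := 1) (v' := 2) (E := 3) (kl := 7) (ks := [1, 2, 3]) (G := 36) (L := 40) 2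
    (by norm_num) al_thirteen (by norm_num) (by norm_num) (by norm_num) le_rfl (by norm_num) (by decide +kernel)
    (by decide +kernel) h1 (by omega) h3 hn

end PAdic

lemma Lg.cert12 : Lg.Cert
    97421612
    110813864
    175635819
    174253440
    (Lg.one / 2 ^ 17) (Lg.one / 2 ^ 3) (2 ^ 12) (Lg.one / 2 ^ 4) 36 := by
  unfold Lg.Cert
  decide +kernel

/-- Among the three largest indices at most one has `x i ≥ K₂` and at most one has `y i ≥ K₃`, so one of them has both
exponents small. -/
lemma Quad.round {cc : ℤ} {n x y : Fin 4 → ℕ} (H : Quad cc n x y) {G B K₂ K₃ m : ℕ} (hG : n 0 ≤ n 3 + G) (hB : n 0 < B)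
    (h2 : ∀ {g n : ℕ}, 1 ≤ g → g ≤ G → 3 ≤ n → ((2 ^ K₂ : ℕ) : ℤ) ∣ T (n + g) - T n → B ≤ n)
    (h3 : ∀ {g n : ℕ}, 1 ≤ g → g ≤ G → 3 ≤ n → ((3 ^ K₃ : ℕ) : ℤ) ∣ T (n + g) - T n → B ≤ n)
    (hm2 : K₂ ≤ m + 1) (hm3 : K₃ ≤ m + 1) : n 0 ≤ 4 * m + 6 + G := by
  have hn0 : ∀ j, n j ≤ n 0 := fun j => H.anti.antitone (Fin.zero_le j)
  have pair2 : ∀ i j : Fin 4, i < j → x i ≤ m ∨ x j ≤ m := fun i j hij => by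
    by_contra! hcon
    have a1 := H.anti hij
    have a2 := H.le_gap hG i j
    have a3 := h2 (g := n i - n j) (n := n j) (by omega) (by omega) (H.three_le j) (by
      rw [show n j + (n i - n j) = n i by omega, H.sub_eq i j]
      push_cast
      exact ((pow_dvd_pow 2 (by omega)).mul_right _).sub ((pow_dvd_pow 2 (by omega)).mul_right _))
    have := hn0 j
    omega
  have pair3 : ∀ i j : Fin 4, i < j → y i ≤ m ∨ y j ≤ m := fun i j hij => by
    by_contra! hcon
    have a1 := H.anti hij
    have a2 := H.le_gap hG i j
    have a3 := h3 (g := n i - n j) (n := n j) (by omega) (by omega) (H.three_le j) (by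
      rw [show n j + (n i - n j) = n i by omega, H.sub_eq i j]
      push_cast
      exact ((pow_dvd_pow 3 (by omega)).mul_left _).sub ((pow_dvd_pow 3 (by omega)).mul_left _))
    have := hn0 j
    omega
  have key : ∃ i : Fin 4, i < 3 ∧ x i ≤ m ∧ y i ≤ m := by
    have a1 := pair2 0 1 (by decide)
    have a2 := pair2 0 2 (by decide)
    have a3 := pair2 1 2 (by decide)
    have b1 := pair3 0 1 (by decide)
    have b2 := pair3 0 2 (by decide)
    have b3 := pair3 1 2 (by decide)
    by_cases c0 : x 0 ≤ m ∧ y 0 ≤ m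
    · exact ⟨0, by decide, c0⟩
    by_cases c1 : x 1 ≤ m ∧ y 1 ≤ m
    · exact ⟨1, by decide, c1⟩
    exact ⟨2, by decide, by omega, by omega⟩
  obtain ⟨i, hi, hx, hy⟩ := key
  have h1 := H.le_of_small hi hx hy
  have h2 := H.le_gap hG 0 i
  omega

lemma Quad.final {cc : ℤ} {n x y : Fin 4 → ℕ} (H : Quad cc n x y) : n 0 ≤ 162 := by
  have h1 := H.round (m := 395) H.gap370 H.pass3 PAdic.two_big PAdic.three_big (by norm_num) (by norm_num)
  have h2 : n 0 < 2 ^ 12 := by omega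
  exact H.round (m := 30) (Lg.cert12.gap H h2.le) h2 PAdic.two_small PAdic.three_small (by norm_num) (by norm_num)

theorem reduced_bound_pos_c (c : ℤ) (hc : 1 ≤ c)
    (n x y n₁ x₁ y₁ n₂ x₂ y₂ n₃ x₃ y₃ : ℕ)
    (hne : n ≠ 1) (hne₁ : n₁ ≠ 1) (hne₂ : n₂ ≠ 1) (hne₃ : n₃ ≠ 1)
    (hord₁ : n₁ < n) (hord₂ : n₂ < n₁) (hord₃ : n₃ < n₂)
    (h : T n - 2 ^ x * 3 ^ y = c) (h₁ : T n₁ - 2 ^ x₁ * 3 ^ y₁ = c)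
    (h₂ : T n₂ - 2 ^ x₂ * 3 ^ y₂ = c) (h₃ : T n₃ - 2 ^ x₃ * 3 ^ y₃ = c) :
    n ≤ 962 ∧ x < 834 ∧ y < 527 := by
  have H : Quad c ![n, n₁, n₂, n₃] ![x, x₁, x₂, x₃] ![y, y₁, y₂, y₃] := by
    refine ⟨hc, ?_, fun i => ?_⟩
    · rw [Fin.strictAnti_iff_succ_lt]
      intro i
      fin_cases i
      · exact hord₁
      · exact hord₂
      · exact hord₃
    · fin_cases i
      · exact h
      · exact h₁
      · exact h₂
      · exact h₃
  have h1 : n ≤ 162 := H.final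
  have h2 : x ≤ n := H.x_le 0
  have h3 : y ≤ n := H.y_le 0
  omega
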